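/- Let (u,v) be an entire solution of the system with linear growth. Then (u,v) is one-dimensional: there exist a unit vector e ∈ ℝⁿ and functions f, g : ℝ → ℝ such that u(x) = f(e·x) and v(x) = g(e·x) for all x ∈ ℝⁿ. -/

import Mathlib

/-!
The proof is quantitative and uses Gaussian averages: `Ex x r f` is the mean of `f (x + r Z)` for a
standard Gaussian `Z`, so that no boundary terms occur in integrations by parts and all growth
conditions are polynomial.

*Frequency.* With `Hh` the average of `u² + v²`, the Gaussian Almgren quotient `Nn` (scaled energy
over `Hh`) is nondecreasing in the scale (`Sol.N_mono`), and linear growth forces it to be at most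
one (`Sol.N_le_one`). Where the frequency is small one of the components is large and the other is
exponentially small (`dominant_region`), so the smaller one is bounded at the centre. Applied at the
scale where the frequency around a given point first reaches a small threshold, beyond which `Hh`
grows by a power, this shows that `min (u, v)` is of lower order than `√Hh` (`min_bound`).

*Flatness.* Call a scale centred if `u` and `v` have equal averages there. At a centred scale a
truncation of `u - v` almost saturates the Gaussian Poincaré inequality, because the frequency is at
most one. The spectral gap above the linear functions (`gauss_gap`, `stab`) makes `u - v` close in
mean square to a linear function `⟪a, ·⟫`, and `(u, v)` close to its positive and negative parts,
with an error that gains a power of `Hh` (`flat`). Centred scales exist at arbitrarily large radii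
(`exists_centred`).

*Blow-down.* Halving the scale around a point where `u = v` and recentring changes the slope `a` by
an amount controlled by a negative power of the scale (`descend`, `chain`). These amounts are
summable, so there is a single nonzero slope `a`, the same around all points of `{u = v}`, uniformly
at all large scales (`Sol.blowdown`). Consequently the pair is uniformly close to
`(⟪a, ·⟫⁺, ⟪a, ·⟫⁻)`, in the relevant sense, away from the nodal set (`Sol.env`).

*Sliding.* For `τ` with `⟪a, τ⟫ > 0`, the translates satisfy `u (x + s τ) ≥ u x` and
`v (x + s τ) ≤ v x`: for large `s` this follows from the asymptotics (`Dir.start`), and `s` can be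
decreased to zero (`Dir.push`, `Dir.all`) since the maximum principle reduces the comparison to the
region where both `u` and the translate of `v` are bounded, and there the ordering is strict with a
uniform gap (`Dir.gap`). Letting `τ` tend to the hyperplane orthogonal to `a` from both sides shows
that `u` and `v` are invariant under translations orthogonal to `a`.
-/

open MeasureTheory Metric Set
open scoped RealInnerProductSpace ENNReal

/-- Euclidean space `ℝⁿ`. -/
abbrev Euc (n : ℕ) := EuclideanSpace ℝ (Fin n)

/-- The Laplacian `Δu` of a function `u : ℝⁿ → ℝ`. -/
noncomputable def lap {n : ℕ} (u : Euc n → ℝ) (x : Euc n) : ℝ :=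
  ∑ i : Fin n,
    fderiv ℝ (fun y => fderiv ℝ u y (EuclideanSpace.single i 1)) x (EuclideanSpace.single i 1)

/-- The divergence `div Y = Σ_α ∂Y^α/∂x_α` of a vector field `Y`. -/
noncomputable def vdiv {n : ℕ} (Y : Euc n → Euc n) (x : Euc n) : ℝ :=
  ∑ i : Fin n, fderiv ℝ Y x (EuclideanSpace.single i 1) i

/-- `DY(p,q)(x) = Σ_{α,β} (∂Y^α/∂x_β)(x) p_α q_β`. -/
noncomputable def DYbil {n : ℕ} (Y : Euc n → Euc n) (p q x : Euc n) : ℝ :=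
  ∑ α : Fin n, ∑ β : Fin n,
    fderiv ℝ Y x (EuclideanSpace.single β 1) α * p α * q β

/-- The rescaled function `u_κ(x) = R⁻¹ u(x₀ + R x)` (with `κ = R⁴`). -/
noncomputable def resc {n : ℕ} (u : Euc n → ℝ) (x₀ : Euc n) (R : ℝ) (x : Euc n) : ℝ :=
  R⁻¹ * u (x₀ + R • x)

namespace PhaseSep
open ProbabilityTheory Filter Topology

/-! ### Functions of polynomial growth -/

section PolynomialGrowth

variable {V : Type*} [NormedAddCommGroup V]

/-- Continuous real functions bounded by a polynomial in the norm. -/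
def PG (f : V → ℝ) : Prop :=
  Continuous f ∧ ∃ C : ℝ, ∃ k : ℕ, ∀ x, |f x| ≤ C * (1 + ‖x‖) ^ k

lemma PG.continuous {f : V → ℝ} (hf : PG f) : Continuous f := hf.1

lemma PG.mk' {f : V → ℝ} (hc : Continuous f) (C : ℝ) (k : ℕ)
    (h : ∀ x, |f x| ≤ C * (1 + ‖x‖) ^ k) : PG f := ⟨hc, C, k, h⟩

/-- The constant in the growth bound may be taken nonnegative and the exponent enlarged. -/
lemma PG.bound {f : V → ℝ} (hf : PG f) :
    ∃ C : ℝ, 0 ≤ C ∧ ∃ k : ℕ, ∀ m, k ≤ m → ∀ x, |f x| ≤ C * (1 + ‖x‖) ^ m := by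
  obtain ⟨_, C, k, h⟩ := hf
  have hC : 0 ≤ C := by
    have := (abs_nonneg _).trans (h 0)
    simpa using this
  refine ⟨C, hC, k, fun m hm x => (h x).trans ?_⟩
  have : (1:ℝ) ≤ 1 + ‖x‖ := by linarith [norm_nonneg x]
  gcongr

lemma PG.const (c : ℝ) : PG (fun _ : V => c) :=
  ⟨continuous_const, |c|, 0, fun x => by simp⟩

lemma PG.norm : PG (fun x : V => ‖x‖) :=
  ⟨continuous_norm, 1, 1, fun x => by simp⟩

lemma PG.add {f g : V → ℝ} (hf : PG f) (hg : PG g) : PG (fun x => f x + g x) := by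
  obtain ⟨C, hC, k, h⟩ := hf.bound
  obtain ⟨D, hD, l, h'⟩ := hg.bound
  refine ⟨hf.1.add hg.1, C + D, max k l, fun x => ?_⟩
  have h1 := h _ (le_max_left k l) x
  have h2 := h' _ (le_max_right k l) x
  calc |f x + g x| ≤ |f x| + |g x| := abs_add_le _ _
    _ ≤ _ := by rw [add_mul]; gcongr

lemma PG.mul {f g : V → ℝ} (hf : PG f) (hg : PG g) : PG (fun x => f x * g x) := by
  obtain ⟨C, hC, k, h⟩ := hf.bound
  obtain ⟨D, hD, l, h'⟩ := hg.bound
  refine ⟨hf.1.mul hg.1, C * D, k + l, fun x => ?_⟩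
  rw [abs_mul, pow_add]
  calc |f x| * |g x| ≤ (C * (1 + ‖x‖) ^ k) * (D * (1 + ‖x‖) ^ l) :=
        mul_le_mul (h _ le_rfl x) (h' _ le_rfl x) (abs_nonneg _) (by positivity)
    _ = _ := by ring

lemma PG.neg {f : V → ℝ} (hf : PG f) : PG (fun x => - f x) := by
  obtain ⟨hc, C, k, h⟩ := hf
  exact ⟨hc.neg, C, k, fun x => by rw [abs_neg]; exact h x⟩

lemma PG.sub {f g : V → ℝ} (hf : PG f) (hg : PG g) : PG (fun x => f x - g x) := by
  simpa [sub_eq_add_neg] using hf.add hg.neg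

lemma PG.cmul {f : V → ℝ} (c : ℝ) (hf : PG f) : PG (fun x => c * f x) := (PG.const c).mul hf

lemma PG.pow {f : V → ℝ} (hf : PG f) (m : ℕ) : PG (fun x => f x ^ m) := by
  induction m with
  | zero => simpa using PG.const (V := V) 1
  | succ m ih => simpa [pow_succ] using ih.mul hf

lemma PG.sum {ι : Type*} {s : Finset ι} {f : ι → V → ℝ} (hf : ∀ i, PG (f i)) :
    PG (fun x => ∑ i ∈ s, f i x) := by
  classical
  induction s using Finset.induction_on with
  | empty => simpa using PG.const (V := V) 0
  | insert a s ha ih => simpa [Finset.sum_insert ha] using (hf a).add ih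

lemma PG.of_le {f g : V → ℝ} (hg : PG g) (hc : Continuous f) (h : ∀ x, |f x| ≤ g x) : PG f := by
  obtain ⟨C, hC, k, h'⟩ := hg.bound
  exact ⟨hc, C, k, fun x => (h x).trans ((le_abs_self _).trans (h' k le_rfl x))⟩

lemma PG.abs {f : V → ℝ} (hf : PG f) : PG (fun x => |f x|) := by
  obtain ⟨hc, C, k, h⟩ := hf
  exact ⟨hc.abs, C, k, fun x => by rw [abs_abs]; exact h x⟩

lemma PG.max {f g : V → ℝ} (hf : PG f) (hg : PG g) : PG (fun x => max (f x) (g x)) := by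
  refine (hf.abs.add hg.abs).of_le (hf.1.max hg.1) fun x => ?_
  have h1 := abs_nonneg (f x); have h2 := abs_nonneg (g x)
  rcases max_cases (f x) (g x) with h | h <;> rw [h.1] <;> linarith

/-- Composition with a continuous map of at most linear growth. -/
lemma PG.comp {W : Type*} [NormedAddCommGroup W] {f : V → ℝ} (hf : PG f) {L : W → V}
    (hL : Continuous L) (A : ℝ) (hA : ∀ y, ‖L y‖ ≤ A * (1 + ‖y‖)) : PG (fun y => f (L y)) := by
  obtain ⟨C, hC, k, h⟩ := hf.bound
  have hA0 : 0 ≤ A := by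
    have := (norm_nonneg _).trans (hA 0)
    simpa using this
  refine ⟨hf.1.comp hL, C * (1 + A) ^ k, k, fun y => (h k le_rfl _).trans ?_⟩
  rw [mul_assoc, ← mul_pow]
  have : 1 + ‖L y‖ ≤ (1 + A) * (1 + ‖y‖) := by nlinarith [hA y, norm_nonneg y]
  gcongr

lemma PG.comp_aff [NormedSpace ℝ V] {f : V → ℝ} (hf : PG f) (x : V) (r : ℝ) :
    PG (fun y => f (x + r • y)) := by
  refine hf.comp (by fun_prop) (‖x‖ + |r|) fun y => ?_
  calc ‖x + r • y‖ ≤ ‖x‖ + |r| * ‖y‖ := by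
        simpa [norm_smul] using norm_add_le x (r • y)
    _ ≤ _ := by nlinarith [norm_nonneg x, norm_nonneg y, abs_nonneg r]

lemma PG.clm [NormedSpace ℝ V] (L : V →L[ℝ] ℝ) : PG (fun x => L x) := by
  refine ⟨L.continuous, ‖L‖, 1, fun x => ?_⟩
  have := L.le_opNorm x
  rw [Real.norm_eq_abs] at this
  nlinarith [norm_nonneg L, norm_nonneg x]

lemma PG.comp_clm {W : Type*} [NormedAddCommGroup W] [NormedSpace ℝ V] [NormedSpace ℝ W]
    {f : V → ℝ} (hf : PG f) (L : W →L[ℝ] V) : PG (fun y => f (L y)) := by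
  refine hf.comp L.continuous ‖L‖ fun y => (L.le_opNorm y).trans ?_
  gcongr; linarith

lemma PG.coord {n : ℕ} (i : Fin n) : PG (fun x : Euc n => x i) :=
  PG.clm (EuclideanSpace.proj i : Euc n →L[ℝ] ℝ)

lemma PG.inner {n : ℕ} (a : Euc n) : PG (fun x : Euc n => ⟪a, x⟫) :=
  by simpa only [innerSL_apply_apply] using PG.clm (V := Euc n) (innerSL ℝ a)

/-- All polynomially bounded functions are integrable for every Gaussian measure. -/
lemma PG.integrable [NormedSpace ℝ V] [MeasurableSpace V] [BorelSpace V]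
    [CompleteSpace V] [SecondCountableTopology V] {μ : Measure V} [IsGaussian μ]
    {f : V → ℝ} (hf : PG f) : Integrable f μ := by
  obtain ⟨C, hC, k, h⟩ := hf.bound
  have h0 : MemLp (fun x : V => ‖x‖) (k + 1 : ℕ) μ :=
    (IsGaussian.memLp_id μ (k + 1 : ℕ) (by simp)).norm
  have h00 : MemLp (fun x : V => (1:ℝ)) (k + 1 : ℕ) μ := memLp_const 1
  have h1 : MemLp (fun x : V => 1 + ‖x‖) (k + 1 : ℕ) μ := h00.add h0
  have h2 : Integrable (fun x : V => C * ‖1 + ‖x‖‖ ^ (k + 1)) μ :=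
    (h1.integrable_norm_pow (by simp)).const_mul C
  refine h2.mono' hf.1.aestronglyMeasurable (ae_of_all _ fun x => ?_)
  have := h (k + 1) (by omega) x
  rwa [Real.norm_eq_abs, Real.norm_of_nonneg (by positivity : (0:ℝ) ≤ 1 + ‖x‖)]

end PolynomialGrowth

/-! ### Partial derivatives -/

section Partial
variable {n : ℕ}

/-- The partial derivative `∂_i f`. -/
noncomputable def pd (i : Fin n) (f : Euc n → ℝ) (x : Euc n) : ℝ :=
  fderiv ℝ f x (EuclideanSpace.single i 1)

lemma lap_eq (f : Euc n → ℝ) (x : Euc n) : lap f x = ∑ i, pd i (pd i f) x := rfl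

lemma fderiv_apply_eq (f : Euc n → ℝ) (x y : Euc n) :
    fderiv ℝ f x y = ∑ i, y i * pd i f x := by
  have : y = ∑ i, y i • EuclideanSpace.single i (1:ℝ) := by
    ext j; simp [Finset.sum_apply, Pi.single_apply]
  conv_lhs => rw [this]
  simp [map_sum, pd]

lemma pd_add {f g : Euc n → ℝ} {x : Euc n} (i : Fin n) (hf : DifferentiableAt ℝ f x)
    (hg : DifferentiableAt ℝ g x) : pd i (fun y => f y + g y) x = pd i f x + pd i g x := by
  simp [pd, fderiv_fun_add hf hg]

lemma pd_sub {f g : Euc n → ℝ} {x : Euc n} (i : Fin n) (hf : DifferentiableAt ℝ f x)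
    (hg : DifferentiableAt ℝ g x) : pd i (fun y => f y - g y) x = pd i f x - pd i g x := by
  simp [pd, fderiv_fun_sub hf hg]

lemma pd_mul {f g : Euc n → ℝ} {x : Euc n} (i : Fin n) (hf : DifferentiableAt ℝ f x)
    (hg : DifferentiableAt ℝ g x) :
    pd i (fun y => f y * g y) x = f x * pd i g x + g x * pd i f x := by
  simp [pd, fderiv_fun_mul hf hg]

lemma pd_const (i : Fin n) (c : ℝ) (x : Euc n) : pd i (fun _ => c) x = 0 := by simp [pd]

lemma pd_cmul {f : Euc n → ℝ} {x : Euc n} (i : Fin n) (c : ℝ) (hf : DifferentiableAt ℝ f x) :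
    pd i (fun y => c * f y) x = c * pd i f x := by
  rw [pd_mul i (by fun_prop) hf, pd_const]; ring

lemma pd_sq {f : Euc n → ℝ} {x : Euc n} (i : Fin n) (hf : DifferentiableAt ℝ f x) :
    pd i (fun y => f y ^ 2) x = 2 * f x * pd i f x := by
  simp_rw [sq]; rw [pd_mul i hf hf]; ring

lemma pd_sum {ι : Type*} {s : Finset ι} {f : ι → Euc n → ℝ} {x : Euc n} (i : Fin n)
    (hf : ∀ j, DifferentiableAt ℝ (f j) x) :
    pd i (fun y => ∑ j ∈ s, f j y) x = ∑ j ∈ s, pd i (f j) x := by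
  simp only [pd]
  rw [fderiv_fun_sum (fun j _ => hf j)]; simp

lemma pd_comp_aff {f : Euc n → ℝ} (hf : Differentiable ℝ f) (i : Fin n) (x : Euc n) (r : ℝ)
    (y : Euc n) : pd i (fun y => f (x + r • y)) y = r * pd i f (x + r • y) := by
  have h1 : HasFDerivAt (fun y : Euc n => x + r • y) (r • ContinuousLinearMap.id ℝ (Euc n)) y :=
    ((hasFDerivAt_id y).const_smul r).const_add x
  have h2 := (hf (x + r • y)).hasFDerivAt.comp y h1
  unfold pd
  erw [h2.fderiv]
  simp

lemma pd_coord (i j : Fin n) (x : Euc n) : pd i (fun y : Euc n => y j) x = if i = j then 1 else 0 := by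
  have : HasFDerivAt (fun y : Euc n => y j) (EuclideanSpace.proj j : Euc n →L[ℝ] ℝ) x :=
    (EuclideanSpace.proj j : Euc n →L[ℝ] ℝ).hasFDerivAt
  unfold pd
  rw [this.fderiv]; simp [eq_comm]

lemma pd_inner (i : Fin n) (a x : Euc n) : pd i (fun y : Euc n => ⟪a, y⟫) x = a i := by
  have : HasFDerivAt (fun y : Euc n => ⟪a, y⟫) (innerSL ℝ a) x := (innerSL ℝ a).hasFDerivAt
  unfold pd
  rw [this.fderiv, innerSL_apply_apply, EuclideanSpace.inner_single_right]
  simp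

lemma contDiff_pd {f : Euc n → ℝ} {k m : WithTop ℕ∞} (hf : ContDiff ℝ k f) (h : m + 1 ≤ k) (i : Fin n) :
    ContDiff ℝ m (pd i f) := by
  unfold pd
  exact (hf.fderiv_right h).clm_apply contDiff_const

/-- `C¹` functions of polynomial growth together with their first derivatives. -/
structure P1 (f : Euc n → ℝ) : Prop where
  cd : ContDiff ℝ 1 f
  pg : PG f
  dpg : ∀ i, PG (pd i f)

lemma P1.diff {f : Euc n → ℝ} (hf : P1 f) : Differentiable ℝ f := hf.cd.differentiable (by simp)

lemma P1.const (c : ℝ) : P1 (fun _ : Euc n => c) :=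
  ⟨contDiff_const, PG.const c, fun i => by
    have : pd i (fun _ : Euc n => c) = fun _ => 0 := funext fun x => pd_const i c x
    rw [this]; exact PG.const 0⟩

lemma P1.add {f g : Euc n → ℝ} (hf : P1 f) (hg : P1 g) : P1 (fun x => f x + g x) :=
  ⟨hf.cd.add hg.cd, hf.pg.add hg.pg, fun i => by
    have : pd i (fun x => f x + g x) = fun x => pd i f x + pd i g x :=
      funext fun x => pd_add i (hf.diff x) (hg.diff x)
    rw [this]; exact (hf.dpg i).add (hg.dpg i)⟩

lemma P1.mul {f g : Euc n → ℝ} (hf : P1 f) (hg : P1 g) : P1 (fun x => f x * g x) :=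
  ⟨hf.cd.mul hg.cd, hf.pg.mul hg.pg, fun i => by
    have : pd i (fun x => f x * g x) = fun x => f x * pd i g x + g x * pd i f x :=
      funext fun x => pd_mul i (hf.diff x) (hg.diff x)
    rw [this]; exact (hf.pg.mul (hg.dpg i)).add (hg.pg.mul (hf.dpg i))⟩

lemma P1.cmul {f : Euc n → ℝ} (c : ℝ) (hf : P1 f) : P1 (fun x => c * f x) := (P1.const c).mul hf

lemma P1.sub {f g : Euc n → ℝ} (hf : P1 f) (hg : P1 g) : P1 (fun x => f x - g x) := by
  have := hf.add (hg.cmul (-1))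
  simpa [sub_eq_add_neg] using this

lemma P1.sq {f : Euc n → ℝ} (hf : P1 f) : P1 (fun x => f x ^ 2) := by
  simpa [_root_.sq] using hf.mul hf

lemma P1.sum {ι : Type*} {s : Finset ι} {f : ι → Euc n → ℝ} (hf : ∀ i, P1 (f i)) :
    P1 (fun x => ∑ i ∈ s, f i x) := by
  classical
  induction s using Finset.induction_on with
  | empty => simpa using P1.const (n := n) 0
  | insert a s ha ih => simpa [Finset.sum_insert ha] using (hf a).add ih

lemma P1.comp_aff {f : Euc n → ℝ} (hf : P1 f) (x : Euc n) (r : ℝ) :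
    P1 (fun y => f (x + r • y)) :=
  ⟨hf.cd.comp (by fun_prop), hf.pg.comp_aff x r, fun i => by
    have : pd i (fun y => f (x + r • y)) = fun y => r * pd i f (x + r • y) :=
      funext fun y => pd_comp_aff hf.diff i x r y
    rw [this]; exact ((hf.dpg i).comp_aff x r).cmul r⟩

lemma P1.coord (j : Fin n) : P1 (fun x : Euc n => x j) :=
  ⟨by fun_prop, PG.coord j, fun i => by
    have : pd i (fun x : Euc n => x j) = fun _ => if i = j then 1 else 0 :=
      funext fun y => pd_coord i j y
    rw [this]; exact PG.const _⟩

lemma P1.inner (a : Euc n) : P1 (fun x : Euc n => ⟪a, x⟫) :=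
  ⟨(contDiff_const (c := a)).inner ℝ contDiff_id, PG.inner a, fun i => by
    have : pd i (fun x : Euc n => ⟪a, x⟫) = fun _ => a i :=
      funext fun y => pd_inner i a y
    rw [this]; exact PG.const _⟩

end Partial

/-! ### Gaussian averages -/

section Gauss
variable {n : ℕ}

/-- The standard Gaussian measure of `ℝⁿ`. -/
noncomputable abbrev gam (n : ℕ) : Measure (Euc n) := stdGaussian (Euc n)

/-- The density of the standard Gaussian measure. -/
noncomputable def gd (x : Euc n) : ℝ := ((2 * Real.pi) ^ ((n:ℝ) / 2))⁻¹ * Real.exp (-‖x‖ ^ 2 / 2)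

/-- The Gaussian average of `f` with center `x` and standard deviation `r`. -/
noncomputable def Ex (x : Euc n) (r : ℝ) (f : Euc n → ℝ) : ℝ := ∫ y, f (x + r • y) ∂(gam n)

lemma gd_pos (x : Euc n) : 0 < gd x := by unfold gd; positivity

lemma gd_continuous : Continuous (gd (n := n)) := by unfold gd; fun_prop

lemma integrable_gd : Integrable (gd (n := n)) := by
  have h := (GaussianFourier.integrable_cexp_neg_mul_sq_norm_add (V := Euc n) (b := (1/2 : ℂ))
    (by norm_num) 0 0).norm
  refine (h.const_mul ((2 * Real.pi) ^ ((n:ℝ) / 2))⁻¹).congr (ae_of_all _ fun x => ?_)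
  have : (-(1/2:ℂ) * (‖x‖:ℂ) ^ 2 + 0 * ((⟪(0 : Euc n), x⟫ : ℝ) : ℂ)) = ((-‖x‖ ^ 2 / 2 : ℝ) : ℂ) := by
    push_cast; ring
  unfold gd
  simp only [this, ← Complex.ofReal_exp, Complex.norm_real, Real.norm_eq_abs, Real.abs_exp]

/-- The standard Gaussian measure has density `gd`: both sides have the same characteristic
function. -/
lemma gam_eq : gam n = volume.withDensity (fun x => ENNReal.ofReal (gd x)) := by
  have : IsFiniteMeasure (volume.withDensity (fun x : Euc n => ENNReal.ofReal (gd x))) :=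
    isFiniteMeasure_withDensity_ofReal integrable_gd.2
  refine Measure.ext_of_charFun (funext fun t => ?_)
  rw [charFun_stdGaussian, charFun_apply,
    integral_withDensity_eq_integral_toReal_smul (by
      exact (gd_continuous.measurable).ennreal_ofReal) (by simp)]
  have h := GaussianFourier.integral_cexp_neg_mul_sq_norm_add (V := Euc n) (b := (1/2 : ℂ))
    (by norm_num) Complex.I t
  have e : ∀ x : Euc n, (ENNReal.ofReal (gd x)).toReal • Complex.exp ((⟪x, t⟫ : ℝ) * Complex.I)
      = (((2 * Real.pi) ^ ((n:ℝ) / 2))⁻¹ : ℝ) *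
        Complex.exp (-(1/2) * (‖x‖:ℂ) ^ 2 + Complex.I * (⟪t, x⟫ : ℝ)) := by
    intro x
    rw [ENNReal.toReal_ofReal (gd_pos x).le, Complex.real_smul, gd, Complex.ofReal_mul, mul_assoc,
      Complex.ofReal_exp, ← Complex.exp_add, real_inner_comm t x]
    congr 2
    push_cast; ring
  simp_rw [e]
  rw [integral_const_mul, h]
  have h2 : ((Real.pi:ℂ) / (1/2)) ^ (((Module.finrank ℝ (Euc n) : ℕ) : ℂ) / 2)
      = (((2 * Real.pi) ^ ((n:ℝ) / 2) : ℝ) : ℂ) := by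
    rw [Complex.ofReal_cpow (by positivity)]
    simp only [finrank_euclideanSpace, Fintype.card_fin]
    push_cast
    congr 1; ring
  rw [h2, ← mul_assoc, ← Complex.ofReal_mul, inv_mul_cancel₀ (by positivity)]
  simp only [Complex.ofReal_one, one_mul, Complex.I_sq]
  congr 1; ring

lemma integral_gam (f : Euc n → ℝ) : ∫ x, f x ∂(gam n) = ∫ x, gd x * f x := by
  rw [gam_eq, integral_withDensity_eq_integral_toReal_smul
    (gd_continuous.measurable.ennreal_ofReal) (by simp)]
  refine integral_congr_ae (ae_of_all _ fun x => ?_)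
  simp [ENNReal.toReal_ofReal (gd_pos x).le]

lemma integrable_gam {f : Euc n → ℝ} : Integrable f (gam n) ↔ Integrable (fun x => gd x * f x) := by
  rw [gam_eq, integrable_withDensity_iff_integrable_smul'
    (gd_continuous.measurable.ennreal_ofReal) (by simp)]
  refine integrable_congr (ae_of_all _ fun x => ?_)
  simp [ENNReal.toReal_ofReal (gd_pos x).le]

lemma pd_gd (i : Fin n) (x : Euc n) : pd i gd x = - (x i * gd x) := by
  have h1 := (hasStrictFDerivAt_norm_sq x).hasFDerivAt
  have h2 : HasFDerivAt (fun y : Euc n => (-1/2:ℝ) * ‖y‖ ^ 2) ((-1/2:ℝ) • (2 • innerSL ℝ x)) x :=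
    h1.const_mul (-1/2:ℝ)
  have h3 := (h2.exp.const_mul ((2 * Real.pi) ^ ((n:ℝ) / 2))⁻¹)
  have e : (gd : Euc n → ℝ) =
      fun y => ((2 * Real.pi) ^ ((n:ℝ) / 2))⁻¹ * Real.exp ((-1/2:ℝ) * ‖y‖ ^ 2) := by
    ext y; unfold gd; congr 2; ring
  unfold pd
  rw [e, h3.fderiv]
  simp only [smul_apply, innerSL_apply_apply,
    EuclideanSpace.inner_single_right, smul_eq_mul]
  simp
  ring

lemma differentiable_gd : Differentiable ℝ (gd (n := n)) := by
  unfold gd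
  have : Differentiable ℝ (fun y : Euc n => ‖y‖ ^ 2) := (contDiff_norm_sq ℝ (n := 1)).differentiable (by simp)
  have h : Differentiable ℝ (fun y : Euc n => -‖y‖ ^ 2 / 2) := by fun_prop
  exact h.exp.const_mul _

/-- Gaussian integration by parts. -/
lemma gauss_ibp {f : Euc n → ℝ} (hf : P1 f) (i : Fin n) :
    ∫ y, pd i f y ∂(gam n) = ∫ y, y i * f y ∂(gam n) := by
  rw [integral_gam, integral_gam]
  have h1 : Integrable (fun x => gd x * pd i f x) := integrable_gam.1 (hf.dpg i).integrable
  have h2 : Integrable (fun x => gd x * (x i * f x)) :=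
    integrable_gam.1 ((PG.coord i).mul hf.pg).integrable
  have h3 : Integrable (fun x => gd x * f x) := integrable_gam.1 hf.pg.integrable
  have hp : ∀ x : Euc n, fderiv ℝ gd x (EuclideanSpace.single i 1) * f x
      = - (gd x * (x i * f x)) := fun x => by
    have := pd_gd i x
    unfold pd at this
    rw [this]; ring
  have := integral_mul_fderiv_eq_neg_fderiv_mul_of_integrable (μ := (volume : Measure (Euc n)))
    (f := gd) (g := f) (v := EuclideanSpace.single i 1) (by simp_rw [hp]; exact h2.neg) h1 h3
    (fun x _ => differentiable_gd x) (fun x _ => hf.diff x)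
  unfold pd
  rw [this]
  simp_rw [hp, integral_neg, neg_neg]

/-- Uniform polynomial domination of `f` along maps of linear growth. -/
lemma PG.unif {V W : Type*} [NormedAddCommGroup V] [NormedAddCommGroup W] {f : V → ℝ} (hf : PG f)
    {A : ℝ} (hA : 0 ≤ A) :
    ∃ B : W → ℝ, PG B ∧ (∀ y, 0 ≤ B y) ∧ ∀ z y, ‖z‖ ≤ A * (1 + ‖y‖) → |f z| ≤ B y := by
  obtain ⟨C, hC, k, h⟩ := hf.bound
  refine ⟨fun y => C * ((1 + A) * (1 + ‖y‖)) ^ k,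
    ((((PG.const 1).add PG.norm).cmul (1 + A)).pow k).cmul C, fun y => by positivity,
    fun z y hz => (h k le_rfl z).trans ?_⟩
  have : 1 + ‖z‖ ≤ (1 + A) * (1 + ‖y‖) := by nlinarith [norm_nonneg y]
  exact mul_le_mul_of_nonneg_left (pow_le_pow_left₀ (by positivity) this k) hC

/-- Differentiation under a Gaussian integral with polynomial domination. -/
lemma hasDerivAt_gauss {V : Type*} [NormedAddCommGroup V] [NormedSpace ℝ V] [MeasurableSpace V]
    [BorelSpace V] [CompleteSpace V] [SecondCountableTopology V] {μ : Measure V} [IsGaussian μ]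
    {F F' : ℝ → V → ℝ} {B : V → ℝ} (t : ℝ) (hF : ∀ s, PG (F s)) (hF' : PG (F' t)) (hB : PG B)
    (hb : ∀ s ∈ ball t 1, ∀ y, |F' s y| ≤ B y)
    (hd : ∀ s y, HasDerivAt (fun s => F s y) (F' s y) s) :
    HasDerivAt (fun s => ∫ y, F s y ∂μ) (∫ y, F' t y ∂μ) t :=
  (hasDerivAt_integral_of_dominated_loc_of_deriv_le (ball_mem_nhds t one_pos)
    (Eventually.of_forall fun s => (hF s).1.aestronglyMeasurable) (hF t).integrable
    hF'.1.aestronglyMeasurable (ae_of_all _ fun y s hs => hb s hs y) hB.integrable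
    (ae_of_all _ fun y s _ => hd s y)).2

lemma norm_aff_le (x y : Euc n) (r : ℝ) : ‖x + r • y‖ ≤ (‖x‖ + |r|) * (1 + ‖y‖) := by
  calc ‖x + r • y‖ ≤ ‖x‖ + |r| * ‖y‖ := by
        simpa [norm_smul] using norm_add_le x (r • y)
    _ ≤ _ := by nlinarith [norm_nonneg x, norm_nonneg y, abs_nonneg r]

lemma hasDerivAt_line {f : Euc n → ℝ} (hf : Differentiable ℝ f) (x y : Euc n) (r : ℝ) :
    HasDerivAt (fun r : ℝ => f (x + r • y)) (∑ i, y i * pd i f (x + r • y)) r := by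
  have h1 : HasDerivAt (fun r : ℝ => x + r • y) y r := by
    simpa using ((hasDerivAt_id r).smul_const y).const_add x
  have h2 := (hf (x + r • y)).hasFDerivAt.comp_hasDerivAt r h1
  rwa [fderiv_apply_eq] at h2

lemma PG.radial {f : Euc n → ℝ} (hf : P1 f) (x : Euc n) (r : ℝ) :
    PG (fun y => ∑ i, y i * pd i f (x + r • y)) :=
  PG.sum fun i => (PG.coord i).mul ((hf.dpg i).comp_aff x r)

/-- Derivative of Gaussian averages in the scale. -/
lemma hasDerivAt_Ex {f : Euc n → ℝ} (hf : P1 f) (x : Euc n) (r : ℝ) :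
    HasDerivAt (fun r => Ex x r f) (∫ y, ∑ i, y i * pd i f (x + r • y) ∂(gam n)) r := by
  have hA : 0 ≤ ‖x‖ + |r| + 1 := by positivity
  choose B hB hB0 hBb using fun i => (hf.dpg i).unif (W := Euc n) hA
  refine hasDerivAt_gauss (B := fun y => ∑ i, |y i| * B i y) r (fun s => hf.pg.comp_aff x s)
    (PG.radial hf x r) (PG.sum fun i => (PG.coord i).abs.mul (hB i)) ?_
    (fun s y => hasDerivAt_line hf.diff x y s)
  intro s hs y
  refine (Finset.abs_sum_le_sum_abs _ _).trans (Finset.sum_le_sum fun i _ => ?_)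
  rw [abs_mul]
  refine mul_le_mul_of_nonneg_left (hBb i _ _ ((norm_aff_le x y s).trans ?_)) (abs_nonneg _)
  have : |s| ≤ |r| + 1 := by
    have h := abs_sub_abs_le_abs_sub s r
    rw [mem_ball, Real.dist_eq] at hs; linarith
  have := norm_nonneg y
  exact mul_le_mul_of_nonneg_right (by linarith) (by positivity)

/-- Gaussian averages depend continuously on center and scale. -/
lemma continuous_Ex {f : Euc n → ℝ} (hf : PG f) :
    Continuous (fun p : Euc n × ℝ => Ex p.1 p.2 f) := by
  rw [continuous_iff_continuousAt]
  intro p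
  have hA : 0 ≤ ‖p.1‖ + |p.2| + 2 := by positivity
  obtain ⟨B, hB, hB0, hBb⟩ := hf.unif (W := Euc n) hA
  refine continuousAt_of_dominated (bound := B)
    (Eventually.of_forall fun q => (hf.comp_aff q.1 q.2).1.aestronglyMeasurable) ?_ hB.integrable
    (ae_of_all _ fun y => ?_)
  · filter_upwards [ball_mem_nhds p one_pos] with q hq
    refine ae_of_all _ fun y => hBb _ _ ((norm_aff_le q.1 y q.2).trans ?_)
    rw [mem_ball, Prod.dist_eq, max_lt_iff, dist_eq_norm, Real.dist_eq] at hq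
    have h1 := norm_sub_norm_le q.1 p.1
    have h2 := abs_sub_abs_le_abs_sub q.2 p.2
    have := norm_nonneg y
    exact mul_le_mul_of_nonneg_right (by linarith) (by positivity)
  · have : Continuous (fun q : Euc n × ℝ => f (q.1 + q.2 • y)) := hf.1.comp (by fun_prop)
    exact this.continuousAt

lemma continuous_Ex_r {f : Euc n → ℝ} (hf : PG f) (x : Euc n) : Continuous (fun r => Ex x r f) :=
  (continuous_Ex hf).comp (by fun_prop : Continuous fun r : ℝ => (x, r))

lemma continuous_Ex_x {f : Euc n → ℝ} (hf : PG f) (r : ℝ) : Continuous (fun x => Ex x r f) :=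
  (continuous_Ex hf).comp (by fun_prop : Continuous fun x : Euc n => (x, r))

lemma Ex_zero (f : Euc n → ℝ) (x : Euc n) : Ex x 0 f = f x := by simp [Ex]

lemma Ex_const (c : ℝ) (x : Euc n) (r : ℝ) : Ex x r (fun _ => c) = c := by simp [Ex]

lemma Ex_add {f g : Euc n → ℝ} (hf : PG f) (hg : PG g) (x : Euc n) (r : ℝ) :
    Ex x r (fun y => f y + g y) = Ex x r f + Ex x r g :=
  integral_add (hf.comp_aff x r).integrable (hg.comp_aff x r).integrable

lemma Ex_sub {f g : Euc n → ℝ} (hf : PG f) (hg : PG g) (x : Euc n) (r : ℝ) :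
    Ex x r (fun y => f y - g y) = Ex x r f - Ex x r g :=
  integral_sub (hf.comp_aff x r).integrable (hg.comp_aff x r).integrable

lemma Ex_cmul (c : ℝ) (f : Euc n → ℝ) (x : Euc n) (r : ℝ) :
    Ex x r (fun y => c * f y) = c * Ex x r f := integral_const_mul _ _

lemma Ex_sum {ι : Type*} {s : Finset ι} {f : ι → Euc n → ℝ} (hf : ∀ i, PG (f i)) (x : Euc n)
    (r : ℝ) : Ex x r (fun y => ∑ i ∈ s, f i y) = ∑ i ∈ s, Ex x r (f i) :=
  integral_finsetSum _ fun i _ => ((hf i).comp_aff x r).integrable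

lemma Ex_mono {f g : Euc n → ℝ} (hf : PG f) (hg : PG g) (h : ∀ y, f y ≤ g y) (x : Euc n) (r : ℝ) :
    Ex x r f ≤ Ex x r g :=
  integral_mono (hf.comp_aff x r).integrable (hg.comp_aff x r).integrable fun _ => h _

lemma Ex_nonneg {f : Euc n → ℝ} (h : ∀ y, 0 ≤ f y) (x : Euc n) (r : ℝ) : 0 ≤ Ex x r f :=
  integral_nonneg fun _ => h _

lemma Ex_aff (f : Euc n → ℝ) (x z : Euc n) (r s : ℝ) :
    Ex z s (fun y => f (x + r • y)) = Ex (x + r • z) (r * s) f := by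
  simp only [Ex, smul_add, smul_smul, add_assoc]

lemma Ex_std (f : Euc n → ℝ) (x : Euc n) (r : ℝ) :
    Ex x r f = Ex 0 1 (fun y => f (x + r • y)) := by
  rw [Ex_aff]; simp

/-- Cauchy–Schwarz for Gaussian averages. -/
lemma Ex_cs {f g : Euc n → ℝ} (hf : PG f) (hg : PG g) (x : Euc n) (r : ℝ) :
    Ex x r (fun y => f y * g y) ^ 2 ≤ Ex x r (fun y => f y ^ 2) * Ex x r (fun y => g y ^ 2) := by
  have key : ∀ t : ℝ, 0 ≤ Ex x r (fun y => g y ^ 2) * (t * t)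
      + (-2 * Ex x r (fun y => f y * g y)) * t + Ex x r (fun y => f y ^ 2) := by
    intro t
    have h : 0 ≤ Ex x r (fun y => (f y - t * g y) ^ 2) := Ex_nonneg (fun y => sq_nonneg _) x r
    have e : (fun y => (f y - t * g y) ^ 2) =
        fun y => (t * t) * g y ^ 2 + ((-2 * t) * (f y * g y) + f y ^ 2) := by ext y; ring
    rw [e, Ex_add ((hg.pow 2).cmul _) (((hf.mul hg).cmul _).add (hf.pow 2)),
      Ex_add ((hf.mul hg).cmul _) (hf.pow 2), Ex_cmul, Ex_cmul] at h
    linarith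
  have := discrim_le_zero key
  unfold discrim at this
  nlinarith

lemma Ex_sq_le {f : Euc n → ℝ} (hf : PG f) (x : Euc n) (r : ℝ) :
    Ex x r f ^ 2 ≤ Ex x r (fun y => f y ^ 2) := by
  have := Ex_cs hf (PG.const 1) x r
  simpa [Ex_const] using this

/-- Gaussian averages as Lebesgue integrals. -/
lemma Ex_lebesgue (f : Euc n → ℝ) (x : Euc n) {r : ℝ} (hr : 0 < r) :
    Ex x r f = (r ^ n)⁻¹ * ∫ z, gd (r⁻¹ • (z - x)) * f z := by
  unfold Ex
  rw [integral_gam]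
  have h := Measure.integral_comp_smul (volume : Measure (Euc n))
    (fun z => gd (r⁻¹ • z) * f (x + z)) r
  simp only [finrank_euclideanSpace, Fintype.card_fin, smul_smul, inv_mul_cancel₀ hr.ne',
    one_smul, smul_eq_mul] at h
  rw [h, abs_of_pos (by positivity)]
  congr 1
  rw [← integral_add_left_eq_self (fun z => gd (r⁻¹ • (z - x)) * f z) x]
  simp

/-- Comparison of Gaussian averages with different centers and scales. -/
lemma Ex_compare {f : Euc n → ℝ} (hf : PG f) (h0 : ∀ y, 0 ≤ f y) (x y : Euc n) {ρ r : ℝ}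
    (hρ : 0 < ρ) (hr : ρ < r) :
    Ex y ρ f ≤ (r / ρ) ^ n * Real.exp (‖x - y‖ ^ 2 / (2 * (r ^ 2 - ρ ^ 2))) * Ex x r f := by
  have hr0 : 0 < r := hρ.trans hr
  have hd : 0 < r ^ 2 - ρ ^ 2 := by nlinarith
  have hintg : ∀ (x : Euc n) {r : ℝ}, 0 < r → Integrable (fun z => gd (r⁻¹ • (z - x)) * f z) := by
    intro x r hr
    have h1 : Integrable (fun y => gd y * f (x + r • y)) :=
      integrable_gam.1 (hf.comp_aff x r).integrable
    have h2 := (integrable_comp_smul_iff volume (fun z => gd (r⁻¹ • z) * f (x + z)) hr.ne').1 (by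
      simpa [smul_smul, inv_mul_cancel₀ hr.ne'] using h1)
    have h3 := h2.comp_sub_right x
    simpa using h3
  rw [Ex_lebesgue f y hρ, Ex_lebesgue f x hr0]
  set c := Real.exp (‖x - y‖ ^ 2 / (2 * (r ^ 2 - ρ ^ 2)))
  have hp : ∀ z, gd (ρ⁻¹ • (z - y)) * f z ≤ c * (gd (r⁻¹ • (z - x)) * f z) := by
    intro z
    rw [← mul_assoc]
    refine mul_le_mul_of_nonneg_right ?_ (h0 z)
    unfold gd
    rw [mul_left_comm]
    refine mul_le_mul_of_nonneg_left ?_ (by positivity)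
    rw [← Real.exp_add, Real.exp_le_exp]
    simp only [norm_smul, norm_inv, Real.norm_eq_abs, abs_of_pos hρ, abs_of_pos hr0, mul_pow]
    have htri : ‖z - x‖ ≤ ‖z - y‖ + ‖x - y‖ := by
      rw [norm_sub_rev x y]; simpa using norm_add_le (z - y) (y - x)
    have hsq : ‖z - x‖ ^ 2 ≤ (‖z - y‖ + ‖x - y‖) ^ 2 := by gcongr
    have hcs : (‖z - y‖ + ‖x - y‖) ^ 2 / r ^ 2 ≤ ‖z - y‖ ^ 2 / ρ ^ 2 + ‖x - y‖ ^ 2 / (r ^ 2 - ρ ^ 2) := by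
      rw [div_add_div _ _ (by positivity) hd.ne', div_le_div_iff₀ (by positivity) (by positivity)]
      nlinarith [sq_nonneg (‖z - y‖ * (r ^ 2 - ρ ^ 2) - ‖x - y‖ * ρ ^ 2)]
    have h3 : ‖z - x‖ ^ 2 / r ^ 2 ≤ (‖z - y‖ + ‖x - y‖) ^ 2 / r ^ 2 := by gcongr
    have e1 : ‖x - y‖ ^ 2 / (2 * (r ^ 2 - ρ ^ 2)) = (‖x - y‖ ^ 2 / (r ^ 2 - ρ ^ 2)) / 2 := by
      field_simp
    rw [e1]
    have e2 : ρ⁻¹ ^ 2 * ‖z - y‖ ^ 2 = ‖z - y‖ ^ 2 / ρ ^ 2 := by field_simp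
    have e3 : r⁻¹ ^ 2 * ‖z - x‖ ^ 2 = ‖z - x‖ ^ 2 / r ^ 2 := by field_simp
    rw [e2, e3]
    linarith
  have hI := integral_mono (hintg y hρ) ((hintg x hr0).const_mul c) hp
  rw [integral_const_mul] at hI
  calc (ρ ^ n)⁻¹ * ∫ z, gd (ρ⁻¹ • (z - y)) * f z
      ≤ (ρ ^ n)⁻¹ * (c * ∫ z, gd (r⁻¹ • (z - x)) * f z) := by gcongr
    _ = _ := by rw [div_pow]; field_simp

end Gauss

/-! ### The Gaussian Poincaré inequality and its deficit -/

section Poincare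
variable {n : ℕ}

/-- The heat equation for Gaussian averages. -/
lemma hasDerivAt_Ex_lap {f : Euc n → ℝ} (hf : P1 f) (hf' : ∀ i, P1 (pd i f)) (x : Euc n) (r : ℝ) :
    HasDerivAt (fun r => Ex x r f) (r * Ex x r (lap f)) r := by
  convert hasDerivAt_Ex hf x r using 1
  have h1 : ∀ i, ∫ y, y i * pd i f (x + r • y) ∂(gam n) = r * Ex x r (pd i (pd i f)) := by
    intro i
    rw [← gauss_ibp ((hf' i).comp_aff x r) i]
    simp_rw [pd_comp_aff (hf' i).diff]
    rw [integral_const_mul]; rfl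
  rw [integral_finsetSum _ fun i _ => ((PG.coord i).mul ((hf.dpg i).comp_aff x r)).integrable]
  simp_rw [h1, ← Finset.mul_sum]
  congr 1
  exact Ex_sum (fun i => (hf' i).dpg i) x r

/-- The first component `cos α • X + sin α • Y` of a rotation of `(X, Y)`. -/
noncomputable def rt (α : ℝ) : Euc n × Euc n →L[ℝ] Euc n :=
  Real.cos α • ContinuousLinearMap.fst ℝ _ _ + Real.sin α • ContinuousLinearMap.snd ℝ _ _

lemma rt_apply (α : ℝ) (p : Euc n × Euc n) : rt α p = Real.cos α • p.1 + Real.sin α • p.2 := rfl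

lemma rt_zero (p : Euc n × Euc n) : rt 0 p = p.1 := by simp [rt_apply]

lemma rt_rotation (α β : ℝ) (p : Euc n × Euc n) :
    rt α (ContinuousLinearMap.rotation β p) = rt (α + β) p := by
  rw [rt_apply, rt_apply, ContinuousLinearMap.rotation_apply, Real.cos_add, Real.sin_add]
  module

lemma integral_rotation (β : ℝ) {K : Euc n × Euc n → ℝ} (hK : Continuous K) :
    ∫ p, K (ContinuousLinearMap.rotation β p) ∂((gam n).prod (gam n)) =
      ∫ p, K p ∂((gam n).prod (gam n)) := by
  have h := IsGaussian.map_rotation_eq_self (μ := gam n) (by simp) β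
  conv_rhs => rw [← h]
  rw [integral_map (by fun_prop) hK.aestronglyMeasurable]

lemma integral_rt (α : ℝ) {f : Euc n → ℝ} (hf : Continuous f) :
    ∫ p, f (rt α p) ∂((gam n).prod (gam n)) = ∫ y, f y ∂(gam n) := by
  have := integral_rotation (n := n) α (K := fun p => f (rt 0 p)) (by fun_prop)
  simp only [rt_rotation, zero_add, rt_zero] at this
  rw [this, integral_fun_fst]
  simp

/-- Covariances of rotated Gaussian vectors depend only on the angle. -/
lemma integral_rt_rt (α β : ℝ) {K : Euc n → Euc n → ℝ} (hK : Continuous (Function.uncurry K)) :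
    ∫ p, K (rt α p) (rt (α + β) p) ∂((gam n).prod (gam n)) =
      ∫ p, K p.1 (rt β p) ∂((gam n).prod (gam n)) := by
  have := integral_rotation (n := n) α (K := fun p => K (rt 0 p) (rt β p))
    (hK.comp (by fun_prop : Continuous fun p : Euc n × Euc n => (rt 0 p, rt β p)))
  simp only [rt_rotation, zero_add, rt_zero] at this
  rw [add_comm β α] at this
  exact this

lemma hasDerivAt_rt {f : Euc n → ℝ} (hf : Differentiable ℝ f) (p : Euc n × Euc n) (θ : ℝ) :
    HasDerivAt (fun θ => f (rt θ p))
      (∑ i, (rt (θ + Real.pi / 2) p) i * pd i f (rt θ p)) θ := by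
  have h1 : HasDerivAt (fun θ : ℝ => rt θ p) (rt (θ + Real.pi / 2) p) θ := by
    simp only [rt_apply, Real.cos_add_pi_div_two, Real.sin_add_pi_div_two]
    exact ((Real.hasDerivAt_cos θ).smul_const p.1).add ((Real.hasDerivAt_sin θ).smul_const p.2)
  have h2 := (hf (rt θ p)).hasFDerivAt.comp_hasDerivAt θ h1
  rwa [fderiv_apply_eq] at h2

lemma norm_rt_le (α : ℝ) (p : Euc n × Euc n) : ‖rt α p‖ ≤ 2 * (1 + ‖p‖) := by
  have h1 := norm_fst_le p
  have h2 := norm_snd_le p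
  have h3 := Real.abs_cos_le_one α
  have h4 := Real.abs_sin_le_one α
  rw [rt_apply]
  calc _ ≤ |Real.cos α| * ‖p.1‖ + |Real.sin α| * ‖p.2‖ := by
        simpa [norm_smul] using norm_add_le (Real.cos α • p.1) (Real.sin α • p.2)
    _ ≤ 1 * ‖p‖ + 1 * ‖p‖ := by gcongr
    _ ≤ _ := by linarith

lemma PG.rt {f : Euc n → ℝ} (hf : PG f) (α : ℝ) : PG (fun p : Euc n × Euc n => f (rt α p)) :=
  hf.comp_clm _

lemma PG.fst {f : Euc n → ℝ} (hf : PG f) : PG (fun p : Euc n × Euc n => f p.1) :=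
  hf.comp continuous_fst 1 fun y => by
    have := norm_fst_le y
    linarith

/-- The correlation `E[F(X) F(X_θ)]`, and minus its derivative divided by `sin θ`. -/
lemma hasDerivAt_corr {F : Euc n → ℝ} (hF : P1 F) (θ : ℝ) :
    HasDerivAt (fun θ => ∫ p : Euc n × Euc n, F p.1 * F (rt θ p) ∂((gam n).prod (gam n)))
      (- Real.sin θ * ∑ i, ∫ p : Euc n × Euc n, pd i F p.1 * pd i F (rt (-θ) p)
        ∂((gam n).prod (gam n))) θ := by
  choose B hB hB0 hBb using fun i => (hF.dpg i).unif (W := Euc n × Euc n) (A := 2) (by norm_num)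
  have hcoord : ∀ (i : Fin n) (α : ℝ), PG (fun p : Euc n × Euc n => (PhaseSep.rt α p) i) :=
    fun i α => (PG.coord i).rt α
  have hd := hasDerivAt_gauss (μ := (gam n).prod (gam n))
    (F := fun θ p => F p.1 * F (rt θ p))
    (F' := fun θ p => F p.1 * ∑ i, (rt (θ + Real.pi / 2) p) i * pd i F (rt θ p))
    (B := fun p => |F p.1| * ∑ i, (2 * (1 + ‖p‖)) * B i p) θ
    (fun s => hF.pg.fst.mul (hF.pg.rt s))
    (hF.pg.fst.mul (PG.sum fun i => (hcoord i _).mul ((hF.dpg i).rt θ)))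
    (hF.pg.fst.abs.mul (PG.sum fun i => (((PG.const 1).add PG.norm).cmul 2).mul (hB i)))
    (by
      intro s _ p
      rw [abs_mul]
      refine mul_le_mul_of_nonneg_left ?_ (abs_nonneg _)
      refine (Finset.abs_sum_le_sum_abs _ _).trans (Finset.sum_le_sum fun i _ => ?_)
      rw [abs_mul]
      have h1 : |(rt (s + Real.pi / 2) p) i| ≤ 2 * (1 + ‖p‖) :=
        (PiLp.norm_apply_le (rt (s + Real.pi / 2) p) i).trans (norm_rt_le _ p)
      exact mul_le_mul h1 (hBb i _ _ (norm_rt_le s p)) (abs_nonneg _) (by positivity))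
    (fun s p => (hasDerivAt_rt hF.diff p s).const_mul _)
  convert hd using 1
  -- rotate by `-θ`, so that the derivative becomes an integral to which parts apply in `Y`
  have hG : Continuous (fun p : Euc n × Euc n =>
      F (rt (-θ) p) * ∑ i, p.2 i * pd i F p.1) := by
    have hc := hF.pg.1
    have hc' := fun i => (hF.dpg i).1
    fun_prop
  have hrot := integral_rotation θ hG
  have e1 : ∀ p : Euc n × Euc n, (ContinuousLinearMap.rotation θ p).2 = rt (θ + Real.pi / 2) p := by
    intro p
    simp [rt_apply, Real.cos_add_pi_div_two, Real.sin_add_pi_div_two,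
      ContinuousLinearMap.rotation_apply]
  have e2 : ∀ p : Euc n × Euc n, (ContinuousLinearMap.rotation θ p).1 = rt θ p := fun p => rfl
  simp only [rt_rotation, neg_add_cancel, rt_zero, e1, e2] at hrot
  rw [hrot]
  have hPG : ∀ i, PG (fun p : Euc n × Euc n => pd i F p.1 * (p.2 i * F (rt (-θ) p))) := fun i =>
    (hF.dpg i).fst.mul (((PG.coord i).comp_clm (ContinuousLinearMap.snd ℝ _ _)).mul (hF.pg.rt _))
  have e3 : ∀ p : Euc n × Euc n, F (rt (-θ) p) * ∑ i, p.2 i * pd i F p.1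
      = ∑ i, pd i F p.1 * (p.2 i * F (rt (-θ) p)) := by
    intro p; rw [Finset.mul_sum]; exact Finset.sum_congr rfl fun i _ => by ring
  simp_rw [e3]
  rw [integral_finsetSum _ fun i _ => (hPG i).integrable, Finset.mul_sum]
  refine Finset.sum_congr rfl fun i _ => ?_
  have hPG2 : PG (fun p : Euc n × Euc n => pd i F p.1 * pd i F (rt (-θ) p)) :=
    (hF.dpg i).fst.mul ((hF.dpg i).rt _)
  rw [integral_prod _ (hPG i).integrable, integral_prod _ hPG2.integrable, ← integral_const_mul]
  refine integral_congr_ae (ae_of_all _ fun x => ?_)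
  simp only
  rw [integral_const_mul, integral_const_mul]
  have e4 : ∀ y, rt (-θ) (x, y) = Real.cos θ • x + (- Real.sin θ) • y := by
    intro y; simp [rt_apply]
  simp_rw [e4]
  rw [← gauss_ibp (hF.comp_aff (Real.cos θ • x) (-Real.sin θ)) i]
  simp_rw [pd_comp_aff hF.diff]
  rw [integral_const_mul]
  ring

/-- Lower bound of the deficit in the Gaussian Poincaré inequality by the variance of the
gradient. -/
lemma gauss_gap {F : Euc n → ℝ} (hF : P1 F) :
    ∑ i, (∫ y, pd i F y ^ 2 ∂(gam n) - (∫ y, pd i F y ∂(gam n)) ^ 2) ≤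
      8 * (∑ i, ∫ y, pd i F y ^ 2 ∂(gam n)
        - (∫ y, F y ^ 2 ∂(gam n) - (∫ y, F y ∂(gam n)) ^ 2)) := by
  set μ := (gam n).prod (gam n)
  set G := ∑ i, ∫ y, pd i F y ^ 2 ∂(gam n) with hGdef
  set S : ℝ → ℝ := fun θ => ∑ i, ∫ p : Euc n × Euc n, pd i F p.1 * pd i F (rt (-θ) p) ∂μ with hS
  set T : ℝ → ℝ := fun θ => ∑ i, ∫ p : Euc n × Euc n, (pd i F p.1 - pd i F (rt (-θ) p)) ^ 2 ∂μ
    with hT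
  set ψ : ℝ → ℝ := fun θ => ∫ p : Euc n × Euc n, F p.1 * F (rt θ p) ∂μ with hψ
  have hpf : ∀ i, PG (fun p : Euc n × Euc n => pd i F p.1) := fun i => (hF.dpg i).fst
  have hpr : ∀ i θ, PG (fun p : Euc n × Euc n => pd i F (rt θ p)) := fun i θ => (hF.dpg i).rt θ
  have hfst : ∀ {f : Euc n → ℝ}, ∫ p : Euc n × Euc n, f p.1 ∂μ = ∫ y, f y ∂(gam n) := by
    intro f; rw [integral_fun_fst]; simp
  have hST : ∀ θ, S θ = G - T θ / 2 := by
    intro θ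
    simp only [hS, hT, hGdef]
    rw [Finset.sum_div, ← Finset.sum_sub_distrib]
    refine Finset.sum_congr rfl fun i _ => ?_
    have e : ∀ p : Euc n × Euc n, (pd i F p.1 - pd i F (rt (-θ) p)) ^ 2 =
        (pd i F p.1 ^ 2 + pd i F (rt (-θ) p) ^ 2) - 2 * (pd i F p.1 * pd i F (rt (-θ) p)) :=
      fun p => by ring
    simp_rw [e]
    rw [integral_sub (((hpf i).pow 2).add ((hpr i _).pow 2)).integrable
      (((hpf i).mul (hpr i _)).cmul 2).integrable,
      integral_add ((hpf i).pow 2).integrable ((hpr i _).pow 2).integrable, integral_const_mul,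
      integral_rt (-θ) (f := fun y => pd i F y ^ 2) ((hF.dpg i).pow 2).1,
      hfst (f := fun y => pd i F y ^ 2)]
    ring
  have hT0 : ∀ θ, 0 ≤ T θ := fun θ =>
    Finset.sum_nonneg fun i _ => integral_nonneg fun p => sq_nonneg _
  have hTT : ∀ θ, T (Real.pi / 2) ≤ 2 * T θ + 2 * T (Real.pi / 2 - θ) := by
    intro θ
    simp only [hT]
    rw [Finset.mul_sum, Finset.mul_sum, ← Finset.sum_add_distrib]
    refine Finset.sum_le_sum fun i _ => ?_
    have hc := (hF.dpg i).1
    have h := integral_rt_rt (n := n) (-θ) (-(Real.pi / 2 - θ))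
      (K := fun x y => (pd i F x - pd i F y) ^ 2) (by
        simp only [Function.uncurry_def]; fun_prop)
    have e : -θ + -(Real.pi / 2 - θ) = -(Real.pi / 2) := by ring
    rw [e] at h
    rw [← h, ← integral_const_mul, ← integral_const_mul, ← integral_add]
    · refine integral_mono (((hpf i).sub (hpr i _)).pow 2).integrable
        (((((hpf i).sub (hpr i _)).pow 2).cmul 2).add
          ((((hpr i _).sub (hpr i _)).pow 2).cmul 2)).integrable fun p => ?_
      simp only
      nlinarith [sq_nonneg ((pd i F p.1 - pd i F (rt (-θ) p)) -
        (pd i F (rt (-θ) p) - pd i F (rt (-(Real.pi / 2)) p)))]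
    · exact ((((hpf i).sub (hpr i _)).pow 2).cmul 2).integrable
    · exact ((((hpr i _).sub (hpr i _)).pow 2).cmul 2).integrable
  have hcross : ∀ {f : Euc n → ℝ}, PG f → ∀ θ : ℝ, Real.cos θ = 0 →
      ∫ p : Euc n × Euc n, f p.1 * f (rt θ p) ∂μ = (∫ y, f y ∂(gam n)) ^ 2 := by
    intro f hf θ hθ
    have e : ∀ p : Euc n × Euc n, f p.1 * f (rt θ p) = f p.1 * f (Real.sin θ • p.2) := by
      intro p; simp [rt_apply, hθ]
    simp_rw [e]
    rw [integral_prod_mul (f := f) (g := fun y => f (Real.sin θ • y)), sq]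
    congr 1
    rw [← integral_rt θ hf.1]
    simp_rw [rt_apply, hθ]
    simp only [zero_smul, zero_add]
    rw [integral_fun_snd (f := fun y => f (Real.sin θ • y))]
    simp
  have hTpi : T (Real.pi / 2) = 2 * ∑ i, (∫ y, pd i F y ^ 2 ∂(gam n)
      - (∫ y, pd i F y ∂(gam n)) ^ 2) := by
    have h1 := hST (Real.pi / 2)
    have h2 : S (Real.pi / 2) = ∑ i, (∫ y, pd i F y ∂(gam n)) ^ 2 :=
      Finset.sum_congr rfl fun i _ => hcross (hF.dpg i) _ (by simp)
    rw [Finset.sum_sub_distrib]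
    linarith
  have hψ0 : ψ 0 = ∫ y, F y ^ 2 ∂(gam n) := by
    simp only [hψ, rt_zero]
    rw [← hfst (f := fun y => F y ^ 2)]
    simp_rw [sq]
  have hψpi : ψ (Real.pi / 2) = (∫ y, F y ∂(gam n)) ^ 2 := hcross hF.pg _ (by simp)
  have hψ' : ∀ θ, HasDerivAt ψ (- Real.sin θ * S θ) θ := fun θ => hasDerivAt_corr hF θ
  -- a monotone combination which pairs the angles `θ` and `π/2 - θ`
  set Θ : ℝ → ℝ := fun θ => ψ θ - ψ (Real.pi / 2 - θ) + (Real.sin θ - Real.cos θ) * G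
    + Real.cos θ * (T (Real.pi / 2) / 4) with hΘ
  have hΘ' : ∀ θ, HasDerivAt Θ (- Real.sin θ * S θ - (- Real.sin (Real.pi / 2 - θ) *
      S (Real.pi / 2 - θ)) * (-1) + (Real.cos θ - (- Real.sin θ)) * G
      + (- Real.sin θ) * (T (Real.pi / 2) / 4)) θ := by
    intro θ
    have h1 : HasDerivAt (fun θ => Real.pi / 2 - θ) (-1) θ := by
      simpa using (hasDerivAt_id θ).const_sub (Real.pi / 2)
    exact ((((hψ' θ).sub ((hψ' (Real.pi / 2 - θ)).comp θ h1)).add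
      (((Real.hasDerivAt_sin θ).sub (Real.hasDerivAt_cos θ)).mul_const G)).add
      ((Real.hasDerivAt_cos θ).mul_const _))
  have hmono : MonotoneOn Θ (Icc 0 (Real.pi / 4)) := by
    refine monotoneOn_of_deriv_nonneg (convex_Icc _ _)
      (fun θ _ => (hΘ' θ).continuousAt.continuousWithinAt)
      (fun θ _ => (hΘ' θ).differentiableAt.differentiableWithinAt) fun θ hθ => ?_
    rw [interior_Icc] at hθ
    rw [(hΘ' θ).deriv, Real.sin_pi_div_two_sub, hST, hST]
    have hs : 0 ≤ Real.sin θ := Real.sin_nonneg_of_nonneg_of_le_pi hθ.1.le (by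
      linarith [hθ.2, Real.pi_pos])
    have hsc : Real.sin θ ≤ Real.cos θ := by
      rw [← Real.sin_pi_div_two_sub]
      exact Real.sin_le_sin_of_le_of_le_pi_div_two (by linarith [hθ.1, Real.pi_pos])
        (by linarith [hθ.1]) (by linarith [hθ.2])
    nlinarith [hTT θ, hT0 θ, hT0 (Real.pi / 2 - θ), mul_nonneg (sub_nonneg.2 hsc)
      (hT0 (Real.pi / 2 - θ)), mul_nonneg hs (sub_nonneg.2 (hTT θ))]
  have hpi := Real.pi_pos
  have hfin := hmono (left_mem_Icc.2 (by positivity)) (right_mem_Icc.2 (by positivity))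
    (by positivity)
  simp only [hΘ] at hfin
  rw [show Real.pi / 2 - Real.pi / 4 = Real.pi / 4 by ring, Real.sin_pi_div_four,
    Real.cos_pi_div_four, Real.sin_zero, Real.cos_zero, sub_zero, hψ0, hψpi] at hfin
  have hsqrt : √2 ≤ 3 / 2 := by
    rw [Real.sqrt_le_left (by norm_num)]; norm_num
  have h0 := hT0 (Real.pi / 2)
  have h1 : √2 * T (Real.pi / 2) ≤ 3 / 2 * T (Real.pi / 2) := by gcongr
  rw [hTpi] at *
  linarith

/-- The Gaussian Poincaré inequality. -/
lemma gauss_poincare {F : Euc n → ℝ} (hF : P1 F) :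
    ∫ y, F y ^ 2 ∂(gam n) - (∫ y, F y ∂(gam n)) ^ 2 ≤ ∑ i, ∫ y, pd i F y ^ 2 ∂(gam n) := by
  have h := gauss_gap hF
  have : 0 ≤ ∑ i, (∫ y, pd i F y ^ 2 ∂(gam n) - (∫ y, pd i F y ∂(gam n)) ^ 2) := by
    refine Finset.sum_nonneg fun i _ => sub_nonneg.2 ?_
    have := Ex_sq_le (hF.dpg i) 0 1
    simpa [Ex] using this
  linarith

end Poincare

/-! ### The maximum principle and barriers -/

section MaxPrinciple
variable {n : ℕ}

lemma norm_sq_eq (x : Euc n) : ‖x‖ ^ 2 = ∑ i, x i ^ 2 := by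
  rw [EuclideanSpace.norm_sq_eq]; simp

lemma pdiff {f : Euc n → ℝ} (hf : ContDiff ℝ 2 f) (i : Fin n) :
    Differentiable ℝ (pd i f) :=
  (contDiff_pd (m := 1) hf (by norm_num) i).differentiable (by simp)

lemma diff2 {f : Euc n → ℝ} (hf : ContDiff ℝ 2 f) : Differentiable ℝ f :=
  hf.differentiable (by simp)

lemma lap_add {f g : Euc n → ℝ} (hf : ContDiff ℝ 2 f) (hg : ContDiff ℝ 2 g) (x : Euc n) :
    lap (fun y => f y + g y) x = lap f x + lap g x := by
  simp only [lap_eq]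
  rw [← Finset.sum_add_distrib]
  refine Finset.sum_congr rfl fun i _ => ?_
  have : pd i (fun y => f y + g y) = fun y => pd i f y + pd i g y :=
    funext fun y => pd_add i (diff2 hf y) (diff2 hg y)
  rw [this, pd_add i (pdiff hf i x) (pdiff hg i x)]

lemma lap_cmul {f : Euc n → ℝ} (c : ℝ) (hf : ContDiff ℝ 2 f) (x : Euc n) :
    lap (fun y => c * f y) x = c * lap f x := by
  simp only [lap_eq]
  rw [Finset.mul_sum]
  refine Finset.sum_congr rfl fun i _ => ?_
  have : pd i (fun y => c * f y) = fun y => c * pd i f y :=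
    funext fun y => pd_cmul i c (diff2 hf y)
  rw [this, pd_cmul i c (pdiff hf i x)]

lemma lap_sub {f g : Euc n → ℝ} (hf : ContDiff ℝ 2 f) (hg : ContDiff ℝ 2 g) (x : Euc n) :
    lap (fun y => f y - g y) x = lap f x - lap g x := by
  have h := lap_add hf (contDiff_const.mul hg : ContDiff ℝ 2 fun y => (-1:ℝ) * g y) x
  rw [lap_cmul (-1) hg] at h
  simpa [sub_eq_add_neg] using h

lemma lap_const (c : ℝ) (x : Euc n) : lap (fun _ => c) x = 0 := by
  simp only [lap_eq]
  refine Finset.sum_eq_zero fun i _ => ?_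
  have : pd i (fun _ : Euc n => c) = fun _ => 0 := funext fun y => pd_const i c y
  rw [this, pd_const]

lemma lap_comp_aff {f : Euc n → ℝ} (hf : ContDiff ℝ 2 f) (x : Euc n) (r : ℝ) (y : Euc n) :
    lap (fun y => f (x + r • y)) y = r ^ 2 * lap f (x + r • y) := by
  simp only [lap_eq]
  rw [Finset.mul_sum]
  refine Finset.sum_congr rfl fun i _ => ?_
  have : pd i (fun y => f (x + r • y)) = fun y => r * pd i f (x + r • y) :=
    funext fun y => pd_comp_aff (diff2 hf) i x r y
  rw [this, pd_cmul i r, pd_comp_aff (pdiff hf i)]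
  · ring
  · exact (pdiff hf i).comp (by fun_prop) y

lemma contDiff_aff (x : Euc n) (r : ℝ) {k : WithTop ℕ∞} : ContDiff ℝ k (fun y : Euc n => x + r • y) := by
  fun_prop

lemma pd_normsq (i : Fin n) (z x : Euc n) : pd i (fun y : Euc n => ‖y - z‖ ^ 2) x = 2 * (x i - z i) := by
  have h : HasFDerivAt (fun y : Euc n => y - z) (ContinuousLinearMap.id ℝ (Euc n)) x :=
    (hasFDerivAt_id x).sub_const z
  have := h.norm_sq
  unfold pd
  rw [this.fderiv]
  simp [EuclideanSpace.inner_single_right]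

lemma lap_exp (a : ℝ) (z x : Euc n) :
    lap (fun y : Euc n => Real.exp (a * ‖y - z‖ ^ 2)) x =
      (4 * a ^ 2 * ‖x - z‖ ^ 2 + 2 * a * n) * Real.exp (a * ‖x - z‖ ^ 2) := by
  have hN : Differentiable ℝ (fun y : Euc n => ‖y - z‖ ^ 2) :=
    (differentiable_id.sub_const z).norm_sq ℝ
  have hE : Differentiable ℝ (fun y : Euc n => Real.exp (a * ‖y - z‖ ^ 2)) :=
    (hN.const_mul a).exp
  have h1 : ∀ i, pd i (fun y : Euc n => Real.exp (a * ‖y - z‖ ^ 2)) =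
      fun y => (2 * a) * ((y i - z i) * Real.exp (a * ‖y - z‖ ^ 2)) := by
    intro i; funext y
    have h2 : pd i (fun y : Euc n => Real.exp (a * ‖y - z‖ ^ 2)) y =
        Real.exp (a * ‖y - z‖ ^ 2) * pd i (fun y => a * ‖y - z‖ ^ 2) y := by
      unfold pd
      rw [fderiv_exp ((hN.const_mul a) y)]; simp
    rw [h2, pd_cmul i a (hN y), pd_normsq]; ring
  simp only [lap_eq, h1]
  have h3 : ∀ i : Fin n, pd i (fun y : Euc n => (2 * a) * ((y i - z i) * Real.exp (a * ‖y - z‖ ^ 2))) x =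
      (4 * a ^ 2 * (x - z) i ^ 2 + 2 * a) * Real.exp (a * ‖x - z‖ ^ 2) := by
    intro i
    have hc : DifferentiableAt ℝ (fun y : Euc n => y i - z i) x := by fun_prop
    rw [pd_cmul i _ (hc.fun_mul (hE x)), pd_mul i hc (hE x), h1, pd_sub i (by fun_prop) (by fun_prop),
      pd_coord, pd_const]
    simp only [if_true, PiLp.sub_apply]; ring
  simp only [h3]
  rw [← Finset.sum_mul, Finset.sum_add_distrib, ← Finset.mul_sum, ← norm_sq_eq]
  simp; ring

lemma contDiff_exp_barrier (a : ℝ) (z : Euc n) {k : WithTop ℕ∞} :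
    ContDiff ℝ k (fun y : Euc n => Real.exp (a * ‖y - z‖ ^ 2)) :=
  ((contDiff_const.mul ((contDiff_id.sub contDiff_const).norm_sq ℝ))).exp

lemma pd2_nonpos_of_isLocalMax {f : Euc n → ℝ} (hf : ContDiff ℝ 2 f) {x : Euc n}
    (h : IsLocalMax f x) (i : Fin n) : pd i (pd i f) x ≤ 0 := by
  by_contra hc
  push Not at hc
  set e : Euc n := EuclideanSpace.single i 1 with he
  have hline : ∀ {g : Euc n → ℝ}, Differentiable ℝ g → ∀ t : ℝ,
      HasDerivAt (fun t : ℝ => g (x + t • e)) (pd i g (x + t • e)) t := by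
    intro g hg t
    have h1 : HasDerivAt (fun t : ℝ => x + t • e) e t := by
      simpa using ((hasDerivAt_id t).smul_const e).const_add x
    exact (hg (x + t • e)).hasFDerivAt.comp_hasDerivAt t h1
  set g : ℝ → ℝ := fun t => f (x + t • e) with hg
  have hd1 : deriv g = fun t => pd i f (x + t • e) := funext fun t => (hline (diff2 hf) t).deriv
  have hd2 : deriv (deriv g) 0 = pd i (pd i f) x := by
    rw [hd1, (hline (pdiff hf i) 0).deriv]; simp
  have hmax : IsLocalMax g 0 := by
    have : Tendsto (fun t : ℝ => x + t • e) (𝓝 0) (𝓝 x) := by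
      have : Continuous (fun t : ℝ => x + t • e) := by fun_prop
      simpa using this.tendsto 0
    have := this.eventually h
    simpa [IsLocalMax, IsMaxFilter, hg] using this
  have hmin : IsLocalMin g 0 :=
    isLocalMin_of_deriv_deriv_pos (by rw [hd2]; exact hc) hmax.deriv_eq_zero
      (hline (diff2 hf) 0).continuousAt
  have hconst : g =ᶠ[𝓝 0] fun _ => g 0 := by
    filter_upwards [hmax, hmin] with t h1 h2 using le_antisymm h1 h2
  have h3 : deriv g =ᶠ[𝓝 0] deriv (fun _ => g 0) := hconst.deriv
  have h4 := h3.deriv_eq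
  rw [hd2] at h4
  simp at h4
  exact hc.ne' h4

lemma lap_nonpos_of_isLocalMax {f : Euc n → ℝ} (hf : ContDiff ℝ 2 f) {x : Euc n}
    (h : IsLocalMax f x) : lap f x ≤ 0 :=
  Finset.sum_nonpos fun i _ => pd2_nonpos_of_isLocalMax hf h i

/-- The weak maximum principle on a compact set. -/
lemma max_principle {K : Set (Euc n)} (hK : IsCompact K) {g : Euc n → ℝ} (hg : ContDiff ℝ 2 g)
    (h : ∀ x ∈ K, 0 < g x → x ∈ interior K ∧ 0 < lap g x) : ∀ x ∈ K, g x ≤ 0 := by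
  intro x hx
  obtain ⟨z, hz, hmax⟩ := hK.exists_isMaxOn ⟨x, hx⟩ hg.continuous.continuousOn
  by_contra hc
  push Not at hc
  have hpos : 0 < g z := hc.trans_le (hmax hx)
  obtain ⟨h1, h2⟩ := h z hz hpos
  have := lap_nonpos_of_isLocalMax hg (hmax.isLocalMax (mem_interior_iff_mem_nhds.1 h1))
  linarith

/-- Reflection in the hyperplane `x_i = 0`. -/
noncomputable def refl (i : Fin n) : Euc n →L[ℝ] Euc n :=
  ContinuousLinearMap.id ℝ _ - (2:ℝ) • (EuclideanSpace.proj i : Euc n →L[ℝ] ℝ).smulRight (EuclideanSpace.single i 1)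

lemma refl_apply (i : Fin n) (x : Euc n) : refl i x = x - (2 * x i) • EuclideanSpace.single i 1 := by
  simp [refl, smul_smul]

lemma refl_coord (i j : Fin n) (x : Euc n) : refl i x j = if j = i then - x j else x j := by
  rw [refl_apply]
  by_cases h : j = i
  · subst h; simp; ring
  · simp [h]

lemma norm_refl (i : Fin n) (x : Euc n) : ‖refl i x‖ = ‖x‖ := by
  have : ‖refl i x‖ ^ 2 = ‖x‖ ^ 2 := by
    rw [norm_sq_eq, norm_sq_eq]
    refine Finset.sum_congr rfl fun j _ => ?_
    rw [refl_coord]; split_ifs <;> ring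
  exact (pow_left_inj₀ (norm_nonneg _) (norm_nonneg _) (by norm_num)).1 this

lemma pd_refl {f : Euc n → ℝ} (hf : Differentiable ℝ f) (i j : Fin n) (x : Euc n) :
    pd j (fun y => f (refl i y)) x = (if j = i then -1 else 1) * pd j f (refl i x) := by
  have h := (hf (refl i x)).hasFDerivAt.comp x (refl i).hasFDerivAt
  unfold pd
  erw [h.fderiv]
  have h2 : refl i (EuclideanSpace.single j 1) = (if j = i then (-1:ℝ) else 1) • EuclideanSpace.single j (1:ℝ) := by
    ext k
    rw [refl_coord]
    by_cases hji : j = i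
    · subst hji
      by_cases hk : k = j
      · subst hk; simp
      · simp [hk]
    · by_cases hk : k = i
      · subst hk
        have : ¬ (k = j) := fun h => hji h.symm
        simp [hji, this]
      · simp [hji, hk]
  show fderiv ℝ f (refl i x) (refl i (EuclideanSpace.single j 1)) = _
  rw [h2, map_smul, smul_eq_mul]

lemma lap_refl {f : Euc n → ℝ} (hf : ContDiff ℝ 2 f) (i : Fin n) (x : Euc n) :
    lap (fun y => f (refl i y)) x = lap f (refl i x) := by
  simp only [lap_eq]
  refine Finset.sum_congr rfl fun j _ => ?_
  have : pd j (fun y => f (refl i y)) = fun y => (if j = i then -1 else 1) * pd j f (refl i y) :=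
    funext fun y => pd_refl (diff2 hf) i j y
  rw [this, pd_cmul, pd_refl (pdiff hf j)]
  · split_ifs <;> ring
  · exact (pdiff hf j).comp (refl i).differentiable x

end MaxPrinciple

section Barriers
variable {n : ℕ}

lemma abs_coord_le (x : Euc n) (i : Fin n) : |x i| ≤ ‖x‖ := by
  simpa using PiLp.norm_apply_le x i

/-- One-sided form of the gradient estimate, by odd reflection and an explicit barrier on a
half ball. -/
lemma grad_aux {f : Euc n → ℝ} (hf : ContDiff ℝ 2 f) {d M N : ℝ} (hd : 0 < d)
    (hM : ∀ x, ‖x‖ ≤ d → |f x| ≤ M) (hN : ∀ x, ‖x‖ ≤ d → |lap f x| ≤ N) (i : Fin n) :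
    pd i f 0 ≤ n * M / d + N * d / 2 := by
  have hM0 : 0 ≤ M := (abs_nonneg _).trans (hM 0 (by simpa using hd.le))
  have hN0 : 0 ≤ N := (abs_nonneg _).trans (hN 0 (by simpa using hd.le))
  refine le_of_forall_pos_le_add fun ε hε => ?_
  set N' := N + 2 * ε / d with hN'
  have hNN' : N < N' := by rw [hN']; have : 0 < 2 * ε / d := by positivity
                           linarith
  set P : Euc n → ℝ := fun x => x i * (d - x i) with hP
  set Q : Euc n → ℝ := fun x => ‖x - 0‖ ^ 2 with hQ
  set c1 := M / d ^ 2 with hc1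
  set c2 := n * (M / d ^ 2) + N' / 2 with hc2
  set φ : Euc n → ℝ := fun x => (1/2) * (f x - f (refl i x)) with hφ
  set ψ : Euc n → ℝ := fun x => c1 * Q x + c2 * P x with hψ
  have hPc : ContDiff ℝ 2 P := by rw [hP]; fun_prop
  have hQc : ContDiff ℝ 2 Q := (contDiff_id.sub contDiff_const).norm_sq ℝ
  have hfr : ContDiff ℝ 2 (fun x => f (refl i x)) := hf.comp (refl i).contDiff
  have hφc : ContDiff ℝ 2 φ := contDiff_const.mul (hf.sub hfr)
  have hψc : ContDiff ℝ 2 ψ := (contDiff_const.mul hQc).add (contDiff_const.mul hPc)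
  have hpdP : ∀ j, pd j P = fun x => if j = i then d - 2 * x i else 0 := by
    intro j; funext x
    rw [hP, pd_mul j (by fun_prop) (by fun_prop), pd_sub j (by fun_prop) (by fun_prop), pd_const, pd_coord]
    split_ifs <;> ring
  have hpdQ : ∀ j, pd j Q = fun x => 2 * x j := by
    intro j; funext x; rw [hQ, pd_normsq]; simp
  have hlP : ∀ x, lap P x = -2 := by
    intro x
    simp only [lap_eq, hpdP]
    rw [Finset.sum_eq_single i]
    · simp only [if_true]
      rw [pd_sub i (by fun_prop) (by fun_prop), pd_const, pd_cmul i 2 (by fun_prop), pd_coord]; simp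
    · intro j _ hj; simp [hj, pd_const]
    · simp
  have hlQ : ∀ x, lap Q x = 2 * n := by
    intro x
    simp only [lap_eq, hpdQ]
    have : ∀ j : Fin n, pd j (fun x : Euc n => 2 * x j) x = 2 := by
      intro j; rw [pd_cmul j 2 (by fun_prop), pd_coord]; simp
    simp [this, mul_comm]
  have hlψ : ∀ x, lap ψ x = - N' := by
    intro x
    rw [hψ, lap_add (contDiff_const.mul hQc) (contDiff_const.mul hPc), lap_cmul _ hQc, lap_cmul _ hPc,
      hlP, hlQ]; ring
  have hlφ : ∀ x, ‖x‖ ≤ d → -N ≤ lap φ x := by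
    intro x hx
    rw [hφ, lap_cmul _ (hf.sub hfr), lap_sub hf hfr, lap_refl hf]
    have h1 := abs_le.1 (hN x hx)
    have h2 := abs_le.1 (hN (refl i x) (by rwa [norm_refl]))
    linarith [h1.1, h2.2]
  set K : Set (Euc n) := closedBall 0 d ∩ {x | 0 ≤ x i} with hK
  have hKc : IsCompact K := (isCompact_closedBall 0 d).inter_right
    (isClosed_le continuous_const (by fun_prop))
  have hmp := max_principle hKc (hφc.sub hψc) (fun x hx hpos => by
    have hxd : ‖x‖ ≤ d := by simpa using hx.1
    have hxi : 0 ≤ x i := hx.2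
    have hc : x i ≤ d := (le_abs_self _).trans ((abs_coord_le x i).trans hxd)
    have hposφ : ψ x < φ x := by linarith
    have hc1n : 0 ≤ c1 := by positivity
    have hc2n : 0 ≤ c2 := by have : 0 ≤ N' := by linarith
                             positivity
    have hP0 : 0 ≤ P x := mul_nonneg hxi (by linarith)
    have hi0 : 0 < x i := by
      rcases hxi.lt_or_eq with h | h
      · exact h
      · exfalso
        have hr : refl i x = x := by rw [refl_apply, ← h]; simp
        have h0 : φ x = 0 := by simp [hφ, hr]
        have : 0 ≤ ψ x := add_nonneg (mul_nonneg hc1n (sq_nonneg _)) (mul_nonneg hc2n hP0)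
        linarith
    have hd' : ‖x‖ < d := by
      rcases hxd.lt_or_eq with h | h
      · exact h
      · exfalso
        have h1 : φ x ≤ M := by
          have h1 := abs_le.1 (hM x hxd)
          have h2 := abs_le.1 (hM (refl i x) (by rwa [norm_refl]))
          simp only [hφ]; linarith [h1.2, h2.1]
        have h2 : M ≤ ψ x := by
          have : c1 * Q x = M := by simp only [hQ, hc1, sub_zero, h]; field_simp
          simp only [hψ, this]
          linarith [mul_nonneg hc2n hP0]
        linarith
    refine ⟨?_, ?_⟩
    · rw [mem_interior]
      refine ⟨ball 0 d ∩ {x | 0 < x i}, ?_, isOpen_ball.inter (isOpen_lt continuous_const (by fun_prop)), ?_⟩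
      · intro y hy; exact ⟨ball_subset_closedBall hy.1, le_of_lt (show 0 < y i from hy.2)⟩
      · exact ⟨by simpa using hd', hi0⟩
    · rw [lap_sub hφc hψc, hlψ]
      linarith [hlφ x hxd])
  -- compare the derivatives at the origin along the `i`-th axis
  set e : Euc n := EuclideanSpace.single i 1 with he
  have hline : ∀ {g : Euc n → ℝ}, Differentiable ℝ g →
      HasDerivAt (fun t : ℝ => g (t • e)) (pd i g 0) 0 := by
    intro g hg
    have h1 : HasDerivAt (fun t : ℝ => t • e) e 0 := by
      simpa using ((hasDerivAt_id (0:ℝ)).smul_const e)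
    have := (hg ((0:ℝ) • e)).hasFDerivAt.comp_hasDerivAt (0:ℝ) h1
    rw [zero_smul] at this
    exact this
  have h1 := hline (diff2 (hφc.sub hψc))
  have h0 : φ 0 - ψ 0 = 0 := by simp [hφ, hψ, hQ, hP]
  have h2 : pd i (fun x => φ x - ψ x) 0 ≤ 0 := by
    refine le_of_tendsto (hasDerivAt_iff_tendsto_slope_zero.1 h1 |>.mono_left
      (nhdsWithin_mono 0 (fun t (ht : t ∈ Ioi (0:ℝ)) => ne_of_gt ht))) ?_
    filter_upwards [Ioc_mem_nhdsGT hd] with t ht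
    have ht0 : 0 < t := ht.1
    have hmem : t • e ∈ K := by
      refine ⟨?_, ?_⟩
      · simp [he, norm_smul, abs_of_pos ht0]; exact ht.2
      · simp [he, ht0.le]
    have := hmp _ hmem
    simp only [zero_add, zero_smul, h0, sub_zero, smul_eq_mul]
    exact mul_nonpos_of_nonneg_of_nonpos (by positivity) this
  rw [pd_sub i (diff2 hφc 0) (diff2 hψc 0)] at h2
  have h3 : pd i φ 0 = pd i f 0 := by
    rw [hφ, pd_cmul i _ ((diff2 hf 0).fun_sub (diff2 hfr 0)), pd_sub i (diff2 hf 0) (diff2 hfr 0),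
      pd_refl (diff2 hf)]
    simp; ring
  have h4 : pd i ψ 0 = n * M / d + N * d / 2 + ε := by
    rw [hψ, pd_add i ((diff2 hQc 0).const_mul _) ((diff2 hPc 0).const_mul _),
      pd_cmul i _ (diff2 hQc 0), pd_cmul i _ (diff2 hPc 0), hpdP, hpdQ]
    simp only [if_true, PiLp.zero_apply, hc2, hN']
    field_simp; ring
  linarith

/-- Interior gradient estimate for Poisson's equation. -/
lemma grad_est {f : Euc n → ℝ} (hf : ContDiff ℝ 2 f) (x : Euc n) {d M N : ℝ} (hd : 0 < d)
    (hM : ∀ y, ‖y - x‖ ≤ d → |f y| ≤ M) (hN : ∀ y, ‖y - x‖ ≤ d → |lap f y| ≤ N) (i : Fin n) :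
    |pd i f x| ≤ n * M / d + N * d / 2 := by
  have hg : ContDiff ℝ 2 (fun y => f (x + (1:ℝ) • y)) := hf.comp (contDiff_aff x 1)
  have hpd : pd i (fun y => f (x + (1:ℝ) • y)) 0 = pd i f x := by
    rw [pd_comp_aff (diff2 hf)]; simp
  rw [abs_le]
  constructor
  · have := grad_aux (contDiff_const.mul hg : ContDiff ℝ 2 fun y => (-1:ℝ) * f (x + (1:ℝ) • y)) hd (M := M) (N := N)
      (fun y hy => by
        have := hM (x + (1:ℝ) • y) (by simpa using hy)
        simpa using this)
      (fun y hy => by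
        rw [lap_cmul _ hg, lap_comp_aff hf]
        have := hN (x + (1:ℝ) • y) (by simpa using hy)
        simpa using this) i
    rw [pd_cmul i _ (diff2 hg 0), hpd] at this
    linarith
  · have := grad_aux hg hd (M := M) (N := N)
      (fun y hy => hM _ (by simpa using hy))
      (fun y hy => by
        rw [lap_comp_aff hf]
        have := hN (x + (1:ℝ) • y) (by simpa using hy)
        simpa using this) i
    rwa [hpd] at this

/-- Exponential decay of subsolutions of `Δf ≥ k² f`. -/
lemma barrier_decay {f : Euc n → ℝ} (hn : 1 ≤ n) (hf : ContDiff ℝ 2 f) (x : Euc n) {ρ k S : ℝ} (hρ : 0 < ρ)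
    (hk : 0 < k) (hS : 0 ≤ S) (hfS : ∀ y, ‖y - x‖ ≤ ρ → f y ≤ S)
    (h : ∀ y, ‖y - x‖ ≤ ρ → 0 < f y → k ^ 2 * f y ≤ lap f y) :
    f x ≤ 3 * S * Real.exp (-(k * ρ / (4 * n))) := by
  have hn' : (1:ℝ) ≤ n := by exact_mod_cast hn
  by_cases hkρ : k * ρ < 1
  · have h1 : (1/3:ℝ) ≤ Real.exp (-(k * ρ / (4 * n))) := by
      have h2 : k * ρ / (4 * n) ≤ 1 / 4 := by
        rw [div_le_div_iff₀ (by positivity) (by norm_num)]; nlinarith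
      have := Real.add_one_le_exp (-(k * ρ / (4 * n)))
      linarith
    have h2 := hfS x (by simpa using hρ.le)
    nlinarith
  · push Not at hkρ
    set a := k / (4 * n * ρ) with ha
    have ha0 : 0 < a := by positivity
    have key : ∀ S', S < S' → f x ≤ S' * Real.exp (-(k * ρ / (4 * n))) := by
      intro S' hS'
      set c := S' * Real.exp (-(a * ρ ^ 2)) with hc
      have hc0 : 0 < c := mul_pos (by linarith) (Real.exp_pos _)
      set ψ : Euc n → ℝ := fun y => c * Real.exp (a * ‖y - x‖ ^ 2) with hψ
      have hE := contDiff_exp_barrier a x (k := 2)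
      have hψc : ContDiff ℝ 2 ψ := contDiff_const.mul hE
      have hmp := max_principle (isCompact_closedBall x ρ) (hf.sub hψc) (fun y hy hpos => by
        have hyd : ‖y - x‖ ≤ ρ := by simpa [dist_eq_norm] using hy
        have hψ0 : 0 < ψ y := mul_pos hc0 (Real.exp_pos _)
        have hd' : ‖y - x‖ < ρ := by
          rcases hyd.lt_or_eq with h | h
          · exact h
          · exfalso
            have : ψ y = S' := by
              simp only [hψ, hc, h]; rw [mul_assoc, ← Real.exp_add]; simp
            have := hfS y hyd
            linarith
        refine ⟨?_, ?_⟩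
        · rw [mem_interior]
          exact ⟨ball x ρ, ball_subset_closedBall, isOpen_ball, by simpa [dist_eq_norm] using hd'⟩
        · rw [lap_sub hf hψc, hψ, lap_cmul _ hE, lap_exp]
          have h1 := h y hyd (by linarith)
          have h2 : 4 * a ^ 2 * ‖y - x‖ ^ 2 + 2 * a * n ≤ k ^ 2 * (3/4) := by
            have e1 : 4 * a ^ 2 * ‖y - x‖ ^ 2 ≤ 4 * a ^ 2 * ρ ^ 2 := by gcongr
            have e2 : 4 * a ^ 2 * ρ ^ 2 = k ^ 2 / (4 * n ^ 2) := by
              rw [ha]; field_simp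
            have e3 : k ^ 2 / (4 * (n:ℝ) ^ 2) ≤ k ^ 2 / 4 := by
              apply div_le_div_of_nonneg_left (by positivity) (by norm_num); nlinarith
            have e4 : 2 * a * n = k / (2 * ρ) := by rw [ha]; field_simp; ring
            have e5 : k / (2 * ρ) ≤ k ^ 2 / 2 := by
              rw [div_le_div_iff₀ (by positivity) (by norm_num)]; nlinarith
            linarith
          have h3 : c * ((4 * a ^ 2 * ‖y - x‖ ^ 2 + 2 * a * n) * Real.exp (a * ‖y - x‖ ^ 2)) ≤
              k ^ 2 * (3/4) * ψ y := by
            have := mul_le_mul_of_nonneg_right h2 hψ0.le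
            simp only [hψ] at this ⊢; linarith
          have h4 : 0 < k ^ 2 := by positivity
          nlinarith) x (by simpa using hρ.le)
      have e : ψ x = S' * Real.exp (-(k * ρ / (4 * n))) := by
        simp only [hψ, hc, sub_self, norm_zero]
        have : a * ρ ^ 2 = k * ρ / (4 * n) := by rw [ha]; field_simp
        rw [this]; simp
      linarith
    have h1 : f x ≤ S * Real.exp (-(k * ρ / (4 * n))) := by
      refine le_of_forall_pos_le_add fun ε hε => ?_
      have := key (S + ε) (by linarith)
      have h2 : Real.exp (-(k * ρ / (4 * n))) ≤ 1 := by
        apply Real.exp_le_one_iff.2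
        have : 0 ≤ k * ρ / (4 * n) := by positivity
        linarith
      nlinarith
    have h2 := Real.exp_pos (-(k * ρ / (4 * n)))
    nlinarith

/-- A weak Harnack inequality: a lower bound on a small ball spreads, for supersolutions. -/
lemma weak_harnack {f : Euc n → ℝ} (hf : ContDiff ℝ 2 f) (x : Euc n) {ρ R C b A : ℝ} (hρ : 0 < ρ)
    (hC : 0 ≤ C) (hb : 0 < b) (hA : 0 < A) (hAC : C < 4 * A ^ 2 * ρ ^ 2 - 2 * A * n) (hR : 0 < R)
    (h0 : ∀ y, ‖y - x‖ ≤ R → 0 ≤ f y) (h1 : ∀ y, ‖y - x‖ ≤ R → lap f y ≤ C * f y)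
    (h2 : ∀ y, ‖y - x‖ ≤ ρ → b ≤ f y) (y : Euc n) (hy : ‖y - x‖ ≤ R / 2) :
    b * (Real.exp (-(A * R ^ 2 / 4)) - Real.exp (-(A * R ^ 2))) ≤ f y := by
  set E : Euc n → ℝ := fun y => Real.exp ((-A) * ‖y - x‖ ^ 2) with hE
  set κ := b * Real.exp (-(A * R ^ 2)) with hκ
  have hκ0 : 0 < κ := by positivity
  have hEc : ContDiff ℝ 2 E := contDiff_exp_barrier (-A) x
  set ψ : Euc n → ℝ := fun y => b * E y - κ with hψ
  have hψc : ContDiff ℝ 2 ψ := (contDiff_const.mul hEc).sub contDiff_const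
  have hmp := max_principle (isCompact_closedBall x R) (hψc.sub hf) (fun y hy hpos => by
    have hyd : ‖y - x‖ ≤ R := by simpa [dist_eq_norm] using hy
    have hE1 : E y ≤ 1 := Real.exp_le_one_iff.2 (by nlinarith [sq_nonneg ‖y - x‖])
    have hE0 : 0 < E y := Real.exp_pos _
    have hfy := h0 y hyd
    have hd' : ‖y - x‖ < R := by
      rcases hyd.lt_or_eq with h | h
      · exact h
      · exfalso
        have : ψ y = 0 := by
          simp only [hψ, hκ, hE, h]; ring_nf
        linarith
    have hρ' : ρ < ‖y - x‖ := by
      by_contra hc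
      push Not at hc
      have := h2 y hc
      have : ψ y ≤ b := by simp only [hψ]; nlinarith
      linarith
    refine ⟨?_, ?_⟩
    · rw [mem_interior]
      exact ⟨ball x R, ball_subset_closedBall, isOpen_ball, by simpa [dist_eq_norm] using hd'⟩
    · have h3 : lap ψ y = b * ((4 * A ^ 2 * ‖y - x‖ ^ 2 - 2 * A * n) * E y) := by
        rw [hψ, lap_sub (contDiff_const.mul hEc) contDiff_const, lap_cmul _ hEc, hE, lap_exp, lap_const]
        ring
      rw [lap_sub hψc hf, h3]
      have h4 := h1 y hyd
      have h5 : C < 4 * A ^ 2 * ‖y - x‖ ^ 2 - 2 * A * n := by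
        have : 4 * A ^ 2 * ρ ^ 2 ≤ 4 * A ^ 2 * ‖y - x‖ ^ 2 := by gcongr
        linarith
      have h6 : C * (b * E y) < b * ((4 * A ^ 2 * ‖y - x‖ ^ 2 - 2 * A * n) * E y) := by
        have := mul_lt_mul_of_pos_right h5 (mul_pos hb hE0)
        linarith
      have h7 : C * f y ≤ C * (b * E y) := by
        apply mul_le_mul_of_nonneg_left _ hC
        simp only [hψ] at hpos; linarith
      linarith) y (by simpa [dist_eq_norm] using hy.trans (by linarith))
  have h3 : Real.exp (-(A * R ^ 2 / 4)) ≤ E y := by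
    apply Real.exp_le_exp.2
    have : ‖y - x‖ ^ 2 ≤ (R / 2) ^ 2 := by gcongr
    nlinarith
  have h4 : b * Real.exp (-(A * R ^ 2 / 4)) ≤ b * E y := by gcongr
  simp only [hψ] at hmp
  rw [mul_sub]; linarith

end Barriers

/-! ### Entire solutions with linear growth -/

section Solutions
variable {n : ℕ}

/-- Entire positive solutions of linear growth. -/
structure Sol (u v : Euc n → ℝ) : Prop where
  cu : ContDiff ℝ (⊤ : ℕ∞) u
  cv : ContDiff ℝ (⊤ : ℕ∞) v
  pu : ∀ x, 0 < u x
  pv : ∀ x, 0 < v x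
  eu : ∀ x, lap u x = u x * v x ^ 2
  ev : ∀ x, lap v x = v x * u x ^ 2
  gr : ∃ C : ℝ, ∀ x, u x + v x ≤ C * (1 + ‖x‖)

lemma Sol.swap {u v : Euc n → ℝ} (h : Sol u v) : Sol v u :=
  ⟨h.cv, h.cu, h.pv, h.pu, h.ev, h.eu, by
    obtain ⟨C, hC⟩ := h.gr
    exact ⟨C, fun x => by rw [add_comm]; exact hC x⟩⟩

/-- The rescaled function `y ↦ r f(x + r y)`; the system is invariant under this scaling. -/
noncomputable def sc (x : Euc n) (r : ℝ) (f : Euc n → ℝ) : Euc n → ℝ := fun y => r * f (x + r • y)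

lemma sc_apply (x : Euc n) (r : ℝ) (f : Euc n → ℝ) (y : Euc n) : sc x r f y = r * f (x + r • y) := rfl

lemma Sol.c2u {u v : Euc n → ℝ} (h : Sol u v) : ContDiff ℝ 2 u :=
  contDiff_infty.1 h.cu 2
lemma Sol.c2v {u v : Euc n → ℝ} (h : Sol u v) : ContDiff ℝ 2 v :=
  contDiff_infty.1 h.cv 2

lemma Sol.sc {u v : Euc n → ℝ} (h : Sol u v) (x : Euc n) {r : ℝ} (hr : 0 < r) :
    Sol (sc x r u) (sc x r v) := by
  have key : ∀ {u v : Euc n → ℝ}, Sol u v → ∀ y, lap (PhaseSep.sc x r u) y =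
      PhaseSep.sc x r u y * PhaseSep.sc x r v y ^ 2 := by
    intro u v h y
    have hc : ContDiff ℝ 2 (fun y => u (x + r • y)) := h.c2u.comp (contDiff_aff x r)
    unfold PhaseSep.sc
    rw [lap_cmul _ hc, lap_comp_aff h.c2u, h.eu]; ring
  refine ⟨contDiff_const.mul (h.cu.comp (contDiff_aff x r)),
    contDiff_const.mul (h.cv.comp (contDiff_aff x r)), fun y => mul_pos hr (h.pu _),
    fun y => mul_pos hr (h.pv _), key h, key h.swap, ?_⟩
  obtain ⟨C, hC⟩ := h.gr
  have hC0 : 0 ≤ C := by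
    have := hC 0
    have h1 := h.pu 0; have h2 := h.pv 0
    simp at this; linarith
  refine ⟨r * (C * (1 + ‖x‖ + r)), fun y => ?_⟩
  have h1 := hC (x + r • y)
  have h2 : ‖x + r • y‖ ≤ ‖x‖ + r * ‖y‖ := by
    simpa [norm_smul, abs_of_pos hr] using norm_add_le x (r • y)
  simp only [PhaseSep.sc]
  have h3 : 1 + ‖x + r • y‖ ≤ (1 + ‖x‖ + r) * (1 + ‖y‖) := by
    nlinarith [norm_nonneg x, norm_nonneg y]
  calc r * u (x + r • y) + r * v (x + r • y) = r * (u (x + r • y) + v (x + r • y)) := by ring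
    _ ≤ r * (C * ((1 + ‖x‖ + r) * (1 + ‖y‖))) := by
        apply mul_le_mul_of_nonneg_left _ hr.le
        exact h1.trans (mul_le_mul_of_nonneg_left h3 hC0)
    _ = _ := by ring

lemma Sol.pgu {u v : Euc n → ℝ} (h : Sol u v) : PG u := by
  obtain ⟨C, hC⟩ := h.gr
  refine PG.mk' h.cu.continuous C 1 fun x => ?_
  rw [abs_of_pos (h.pu x), pow_one]
  linarith [hC x, h.pv x]

lemma Sol.pgv {u v : Euc n → ℝ} (h : Sol u v) : PG v := h.swap.pgu

/-- Polynomial growth of the gradient from polynomial growth of `f` and `Δf`. -/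
lemma PG.pd_of_lap {f : Euc n → ℝ} (hf : ContDiff ℝ 2 f) (h1 : PG f) (h2 : PG (lap f)) (i : Fin n) :
    PG (pd i f) := by
  obtain ⟨C, hC, k, hk⟩ := h1.bound
  obtain ⟨D, hD, l, hl⟩ := h2.bound
  have e : ∀ (m : ℕ) (x y : Euc n), ‖y - x‖ ≤ 1 → (1 + ‖y‖) ^ m ≤ 2 ^ m * (1 + ‖x‖) ^ m := by
    intro m x y hy
    rw [← mul_pow]
    have : ‖y‖ ≤ ‖x‖ + ‖y - x‖ := by simpa using norm_add_le x (y - x)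
    have := norm_nonneg x
    gcongr; linarith
  have hM : PG (fun x : Euc n => n * (C * 2 ^ k * (1 + ‖x‖) ^ k) + D * 2 ^ l * (1 + ‖x‖) ^ l) :=
    (((((PG.const 1).add PG.norm).pow k).cmul _).cmul _).add ((((PG.const 1).add PG.norm).pow l).cmul _)
  refine hM.of_le (pdiff hf i).continuous fun x => ?_
  have := grad_est hf x (d := 1) (M := C * 2 ^ k * (1 + ‖x‖) ^ k) (N := D * 2 ^ l * (1 + ‖x‖) ^ l)
    one_pos
    (fun y hy => (hk k le_rfl y).trans (by rw [mul_assoc]; exact mul_le_mul_of_nonneg_left (e k x y hy) hC))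
    (fun y hy => (hl l le_rfl y).trans (by rw [mul_assoc]; exact mul_le_mul_of_nonneg_left (e l x y hy) hD)) i
  have h3 : 0 ≤ D * 2 ^ l * (1 + ‖x‖) ^ l := by positivity
  linarith

lemma pd_comm {f : Euc n → ℝ} (hf : ContDiff ℝ 2 f) (i j : Fin n) (x : Euc n) :
    pd i (pd j f) x = pd j (pd i f) x := by
  have hs : IsSymmSndFDerivAt ℝ f x := hf.contDiffAt.isSymmSndFDerivAt (by simp)
  have hd : DifferentiableAt ℝ (fderiv ℝ f) x :=
    (hf.fderiv_right (m := 1) (by norm_num)).differentiable (by simp) x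
  have key : ∀ i j : Fin n, pd i (pd j f) x =
      fderiv ℝ (fderiv ℝ f) x (EuclideanSpace.single i 1) (EuclideanSpace.single j 1) := by
    intro i j
    unfold pd
    rw [fderiv_clm_apply hd (by fun_prop)]
    simp
  rw [key, key]
  exact hs _ _

lemma lap_pd {f : Euc n → ℝ} (hf : ContDiff ℝ 3 f) (i : Fin n) (x : Euc n) :
    lap (pd i f) x = pd i (lap f) x := by
  have hf2 : ContDiff ℝ 2 f := hf.of_le (by norm_num)
  have e : lap f = fun y => ∑ j, pd j (pd j f) y := rfl
  have hp : ∀ j, ContDiff ℝ 2 (pd j f) := contDiff_pd hf (by norm_num)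
  rw [e, pd_sum i fun j => pdiff (hp j) j x, lap_eq]
  refine Finset.sum_congr rfl fun j _ => ?_
  rw [show pd j (pd i f) = pd i (pd j f) from funext fun y => pd_comm hf2 j i y, pd_comm (hp j)]

lemma Sol.lapu_eq {u v : Euc n → ℝ} (h : Sol u v) : lap u = fun x => u x * v x ^ 2 := funext h.eu

lemma Sol.p1u {u v : Euc n → ℝ} (h : Sol u v) : P1 u :=
  ⟨h.c2u.of_le (by norm_num), h.pgu, fun i => PG.pd_of_lap h.c2u h.pgu
    (by rw [h.lapu_eq]; exact h.pgu.mul (h.pgv.pow 2)) i⟩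

lemma Sol.p1v {u v : Euc n → ℝ} (h : Sol u v) : P1 v := h.swap.p1u

lemma Sol.p1du {u v : Euc n → ℝ} (h : Sol u v) (i : Fin n) : P1 (pd i u) := by
  have h3 : ContDiff ℝ 3 u := contDiff_infty.1 h.cu 3
  have hc : ContDiff ℝ 2 (pd i u) := contDiff_pd h3 (by norm_num) i
  refine ⟨hc.of_le (by norm_num), h.p1u.dpg i, fun j => PG.pd_of_lap hc (h.p1u.dpg i) ?_ j⟩
  have : lap (pd i u) = pd i (fun x => u x * v x ^ 2) := by
    funext x; rw [lap_pd h3, h.lapu_eq]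
  rw [this]
  exact (h.p1u.mul h.p1v.sq).dpg i

lemma Sol.p1dv {u v : Euc n → ℝ} (h : Sol u v) (i : Fin n) : P1 (pd i v) := h.swap.p1du i

end Solutions

/-! ### Gaussian Almgren frequency -/

section Almgren
variable {n : ℕ}

/-- `|∇f|²`. -/
noncomputable def gsq (f : Euc n → ℝ) (y : Euc n) : ℝ := ∑ i, pd i f y ^ 2

/-- `y · ∇f(y)`. -/
noncomputable def rad (f : Euc n → ℝ) (y : Euc n) : ℝ := ∑ i, y i * pd i f y

/-- `E (u² + v²)`. -/
noncomputable def Hh (u v : Euc n → ℝ) (x : Euc n) (r : ℝ) : ℝ := Ex x r (fun y => u y ^ 2 + v y ^ 2)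

/-- The energy density `|∇u|² + |∇v|² + u²v²`. -/
noncomputable def edens (u v : Euc n → ℝ) (y : Euc n) : ℝ := gsq u y + gsq v y + u y ^ 2 * v y ^ 2

/-- The scaled Gaussian energy. -/
noncomputable def Dd (u v : Euc n → ℝ) (x : Euc n) (r : ℝ) : ℝ := r ^ 2 * Ex x r (edens u v)

/-- The Almgren frequency. -/
noncomputable def Nn (u v : Euc n → ℝ) (x : Euc n) (r : ℝ) : ℝ := Dd u v x r / Hh u v x r

lemma P1.gsq {f : Euc n → ℝ} (hf : ∀ i, P1 (pd i f)) : P1 (gsq f) := P1.sum fun i => (hf i).sq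

lemma P1.rad {f : Euc n → ℝ} (hf : ∀ i, P1 (pd i f)) : P1 (rad f) :=
  P1.sum fun i => (P1.coord i).mul (hf i)

lemma gsq_nonneg (f : Euc n → ℝ) (y : Euc n) : 0 ≤ gsq f y := Finset.sum_nonneg fun _ _ => sq_nonneg _

lemma edens_nonneg (u v : Euc n → ℝ) (y : Euc n) : 0 ≤ edens u v y := by
  unfold edens
  have := gsq_nonneg u y; have := gsq_nonneg v y; positivity

/-- Gaussian Pohozaev identity, from integrating by parts the products of `rad f` with the first
derivatives of `f`. -/
lemma pohozaev {f : Euc n → ℝ} (hf : ContDiff ℝ 2 f) (hf' : ∀ i, P1 (pd i f)) :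
    Ex 0 1 (rad (gsq f)) = 2 * Ex 0 1 (fun y => rad f y ^ 2)
      - 2 * Ex 0 1 (fun y => lap f y * rad f y) - 2 * Ex 0 1 (gsq f) := by
  have hF : ∀ j, P1 (fun y => pd j f y * rad f y) := fun j => (hf' j).mul (P1.rad hf')
  have hlap : PG (lap f) := PG.sum fun i => (hf' i).dpg i
  have hrad2 : PG (rad (gsq f)) := PG.sum fun i => (PG.coord i).mul ((P1.gsq hf').dpg i)
  have h1 : ∑ j, Ex 0 1 (pd j fun y => pd j f y * rad f y) = Ex 0 1 (fun y => rad f y ^ 2) := by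
    have : ∀ j, Ex 0 1 (pd j fun y => pd j f y * rad f y) =
        Ex 0 1 (fun y => y j * (pd j f y * rad f y)) := by
      intro j
      have := gauss_ibp (hF j) j
      simpa [Ex] using this
    simp only [this]
    rw [← Ex_sum fun j => (PG.coord j).mul (hF j).pg]
    congr 1; funext y
    simp only [← mul_assoc, ← Finset.sum_mul]
    rw [sq]; rfl
  have hpr : ∀ (j : Fin n) (y : Euc n), pd j (rad f) y = (∑ i, y i * pd i (pd j f) y) + pd j f y := by
    intro j y
    unfold rad
    rw [pd_sum j fun i => ((P1.coord i).mul (hf' i)).diff y]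
    have : ∀ i, pd j (fun y => y i * pd i f y) y = y i * pd i (pd j f) y + if j = i then pd i f y else 0 := by
      intro i
      rw [pd_mul j ((P1.coord i).diff y) ((hf' i).diff y), pd_coord, pd_comm hf]
      split_ifs <;> ring
    simp only [this, Finset.sum_add_distrib]
    simp
  have h2 : ∀ y, ∑ j, pd j (fun y => pd j f y * rad f y) y =
      (1/2) * rad (gsq f) y + (gsq f y + lap f y * rad f y) := by
    intro y
    have e1 : ∀ j, pd j (fun y => pd j f y * rad f y) y =
        (∑ i, y i * (pd j f y * pd i (pd j f) y)) + (pd j f y ^ 2 + pd j (pd j f) y * rad f y) := by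
      intro j
      rw [pd_mul j ((hf' j).diff y) ((P1.rad hf').diff y), hpr]
      rw [mul_add, Finset.mul_sum]
      have : ∀ i, pd j f y * (y i * pd i (pd j f) y) = y i * (pd j f y * pd i (pd j f) y) := fun i => by ring
      simp only [this]; ring
    have e2 : rad (gsq f) y = 2 * ∑ j, ∑ i, y i * (pd j f y * pd i (pd j f) y) := by
      unfold rad gsq
      rw [Finset.sum_comm, Finset.mul_sum]
      refine Finset.sum_congr rfl fun i _ => ?_
      rw [pd_sum i fun j => (hf' j).sq.diff y, Finset.mul_sum, Finset.mul_sum]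
      refine Finset.sum_congr rfl fun j _ => ?_
      rw [pd_sq i ((hf' j).diff y)]; ring
    simp only [e1, Finset.sum_add_distrib, ← Finset.sum_mul]
    rw [e2, ← lap_eq]
    unfold gsq; ring
  rw [← Ex_sum fun j => (hF j).dpg j] at h1
  simp only [h2] at h1
  rw [Ex_add (hrad2.cmul _) ((P1.gsq hf').pg.add (hlap.mul (P1.rad hf').pg)), Ex_cmul,
    Ex_add (P1.gsq hf').pg (hlap.mul (P1.rad hf').pg)] at h1
  linarith

variable {u v : Euc n → ℝ}

lemma Sol.p1gu (h : Sol u v) : P1 (gsq u) := P1.gsq h.p1du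
lemma Sol.p1gv (h : Sol u v) : P1 (gsq v) := P1.gsq h.p1dv
lemma Sol.p1e (h : Sol u v) : P1 (edens u v) := (h.p1gu.add h.p1gv).add (h.p1u.sq.mul h.p1v.sq)
lemma Sol.pgH (h : Sol u v) : PG (fun y => u y ^ 2 + v y ^ 2) := (h.pgu.pow 2).add (h.pgv.pow 2)
lemma Sol.pguv (h : Sol u v) : PG (fun y => u y ^ 2 * v y ^ 2) := (h.pgu.pow 2).mul (h.pgv.pow 2)

lemma Hh_swap (u v : Euc n → ℝ) (x : Euc n) (r : ℝ) : Hh v u x r = Hh u v x r := by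
  unfold Hh; simp only [add_comm]

lemma Dd_swap (u v : Euc n → ℝ) (x : Euc n) (r : ℝ) : Dd v u x r = Dd u v x r := by
  unfold Dd; congr 2; funext y; unfold edens; ring

lemma Nn_swap (u v : Euc n → ℝ) (x : Euc n) (r : ℝ) : Nn v u x r = Nn u v x r := by
  unfold Nn; rw [Hh_swap, Dd_swap]

lemma rad_line (f : Euc n → ℝ) :
    (∫ y, ∑ i, y i * pd i f ((0 : Euc n) + (1:ℝ) • y) ∂(gam n)) = Ex 0 1 (rad f) := by
  simp [Ex, rad]

lemma hasDerivAt_Ex_one {f : Euc n → ℝ} (hf : P1 f) :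
    HasDerivAt (fun r => Ex 0 r f) (Ex 0 1 (rad f)) 1 := by
  rw [← rad_line]; exact hasDerivAt_Ex hf 0 1

/-- `Δ(u²) = 2(|∇u|² + u²v²)`. -/
lemma Sol.lap_sq (h : Sol u v) (x : Euc n) :
    lap (fun y => u y ^ 2) x = 2 * (gsq u x + u x ^ 2 * v x ^ 2) := by
  rw [lap_eq]
  have : ∀ i, pd i (fun y => u y ^ 2) = fun y => 2 * u y * pd i u y := fun i => by
    funext y; exact pd_sq i (h.p1u.diff y)
  have h2 : ∀ i, pd i (pd i (fun y => u y ^ 2)) x = 2 * (pd i u x ^ 2) + 2 * u x * pd i (pd i u) x := by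
    intro i
    rw [this, pd_mul i ((h.p1u.diff x).const_mul 2) ((h.p1du i).diff x), pd_cmul i 2 (h.p1u.diff x)]; ring
  simp only [h2, Finset.sum_add_distrib, ← Finset.mul_sum]
  rw [← lap_eq, h.eu]; unfold gsq; ring

lemma Sol.hasDerivAt_sq (h : Sol u v) (x : Euc n) (r : ℝ) :
    HasDerivAt (fun r => Ex x r (fun y => u y ^ 2))
      (2 * r * Ex x r (fun y => gsq u y + u y ^ 2 * v y ^ 2)) r := by
  have := hasDerivAt_Ex_lap h.p1u.sq (fun i => by
    have e : pd i (fun y => u y ^ 2) = fun y => 2 * u y * pd i u y := by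
      funext y; exact pd_sq i (h.p1u.diff y)
    rw [e]; exact (h.p1u.cmul 2).mul (h.p1du i)) x r
  convert this using 1
  rw [funext h.lap_sq, Ex_cmul]; ring

lemma Sol.hasDerivAt_u (h : Sol u v) (x : Euc n) (r : ℝ) :
    HasDerivAt (fun r => Ex x r u) (r * Ex x r (fun y => u y * v y ^ 2)) r := by
  have := hasDerivAt_Ex_lap h.p1u h.p1du x r
  rwa [h.lapu_eq] at this

lemma Sol.hasDerivAt_H (h : Sol u v) (x : Euc n) (r : ℝ) :
    HasDerivAt (Hh u v x) (2 * r * (Ex x r (edens u v) + Ex x r (fun y => u y ^ 2 * v y ^ 2))) r := by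
  have h1 := (h.hasDerivAt_sq x r).add (h.swap.hasDerivAt_sq x r)
  have e : Hh u v x = (fun r => Ex x r (fun y => u y ^ 2)) + fun r => Ex x r (fun y => v y ^ 2) := by
    funext r; exact Ex_add (h.pgu.pow 2) (h.pgv.pow 2) x r
  rw [e]
  refine h1.congr_deriv ?_
  rw [← mul_add, ← Ex_add (h.p1gu.pg.add h.pguv) (h.p1gv.pg.add h.swap.pguv),
    ← Ex_add h.p1e.pg h.pguv]
  congr 2; funext y; unfold edens; ring

lemma Sol.H_pos (h : Sol u v) (x : Euc n) (r : ℝ) : 0 < Hh u v x r := by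
  unfold Hh Ex
  have hp : ∀ y, 0 < u (x + r • y) ^ 2 + v (x + r • y) ^ 2 := fun y => by
    have := h.pu (x + r • y); positivity
  rw [integral_pos_iff_support_of_nonneg (fun y => (hp y).le) (h.pgH.comp_aff x r).integrable]
  have : Function.support (fun y => u (x + r • y) ^ 2 + v (x + r • y) ^ 2) = univ := by
    ext y; simpa using (hp y).ne'
  rw [this]; simp

lemma Sol.D_nonneg (x : Euc n) (r : ℝ) : 0 ≤ Dd u v x r :=
  mul_nonneg (sq_nonneg _) (Ex_nonneg (edens_nonneg u v) x r)

lemma Sol.N_nonneg (h : Sol u v) (x : Euc n) (r : ℝ) : 0 ≤ Nn u v x r :=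
  div_nonneg (Sol.D_nonneg x r) (h.H_pos x r).le

lemma Sol.D_eq (h : Sol u v) (x : Euc n) (r : ℝ) : Dd u v x r = Nn u v x r * Hh u v x r := by
  unfold Nn; rw [div_mul_cancel₀ _ (h.H_pos x r).ne']

/-! ### Scaling -/

lemma pd_sc {f : Euc n → ℝ} (hf : Differentiable ℝ f) (x : Euc n) (r : ℝ) (i : Fin n) (y : Euc n) :
    pd i (sc x r f) y = r ^ 2 * pd i f (x + r • y) := by
  have hd : DifferentiableAt ℝ (fun y => f (x + r • y)) y := by
    have : Differentiable ℝ (fun y => f (x + r • y)) := hf.comp (by fun_prop)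
    exact this y
  unfold sc
  rw [pd_cmul i r hd, pd_comp_aff hf]; ring

lemma Ex_sc (f : Euc n → ℝ) (x : Euc n) (r : ℝ) (z : Euc n) (s : ℝ) :
    Ex z s (sc x r f) = r * Ex (x + r • z) (r * s) f := by
  unfold sc
  rw [Ex_cmul, Ex_aff]

lemma Hh_sc (x : Euc n) (r : ℝ) (z : Euc n) (s : ℝ) :
    Hh (sc x r u) (sc x r v) z s = r ^ 2 * Hh u v (x + r • z) (r * s) := by
  unfold Hh
  rw [← Ex_aff, ← Ex_cmul]
  congr 1; funext y; simp only [sc]; ring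

lemma Sol.Dd_sc (h : Sol u v) (x : Euc n) (r : ℝ) (z : Euc n) (s : ℝ) :
    Dd (PhaseSep.sc x r u) (PhaseSep.sc x r v) z s = r ^ 2 * Dd u v (x + r • z) (r * s) := by
  unfold Dd
  have : edens (PhaseSep.sc x r u) (PhaseSep.sc x r v) = fun y => r ^ 4 * edens u v (x + r • y) := by
    funext y
    unfold edens gsq
    simp only [pd_sc h.p1u.diff, pd_sc h.p1v.diff, mul_pow, ← Finset.mul_sum, sc_apply]
    ring
  rw [this, Ex_cmul, Ex_aff]; ring

lemma Sol.Nn_sc (h : Sol u v) (x : Euc n) {r : ℝ} (hr : 0 < r) (z : Euc n) (s : ℝ) :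
    Nn (PhaseSep.sc x r u) (PhaseSep.sc x r v) z s = Nn u v (x + r • z) (r * s) := by
  unfold Nn
  rw [h.Dd_sc, Hh_sc, mul_div_mul_left _ _ (by positivity)]

lemma rad_add {f g : Euc n → ℝ} (hf : P1 f) (hg : P1 g) (y : Euc n) :
    rad (fun y => f y + g y) y = rad f y + rad g y := by
  unfold rad
  rw [← Finset.sum_add_distrib]
  exact Finset.sum_congr rfl fun i _ => by rw [pd_add i (hf.diff y) (hg.diff y)]; ring

lemma rad_mul {f g : Euc n → ℝ} (hf : P1 f) (hg : P1 g) (y : Euc n) :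
    rad (fun y => f y * g y) y = f y * rad g y + g y * rad f y := by
  unfold rad
  rw [Finset.mul_sum, Finset.mul_sum, ← Finset.sum_add_distrib]
  exact Finset.sum_congr rfl fun i _ => by rw [pd_mul i (hf.diff y) (hg.diff y)]; ring

lemma rad_sq {f : Euc n → ℝ} (hf : P1 f) (y : Euc n) :
    rad (fun y => f y ^ 2) y = 2 * (f y * rad f y) := by
  simp only [sq]; rw [rad_mul hf hf]; ring

/-- Pohozaev identity for the energy density. The potential term cancels, because the right-hand
sides of the system are the partial derivatives of `u² v² / 2`. -/
lemma Sol.rad_e (h : Sol u v) :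
    Ex 0 1 (rad (edens u v)) = 2 * Ex 0 1 (fun y => rad u y ^ 2 + rad v y ^ 2)
      - 2 * Ex 0 1 (fun y => gsq u y + gsq v y) := by
  have hru := (P1.rad h.p1du).pg
  have hrv := (P1.rad h.p1dv).pg
  have hrr : ∀ {f : Euc n → ℝ}, P1 f → PG (rad f) := fun hf => PG.sum fun i => (PG.coord i).mul (hf.dpg i)
  have e1 : rad (edens u v) = fun y => (rad (gsq u) y + rad (gsq v) y) +
      2 * (lap u y * rad u y + lap v y * rad v y) := by
    funext y
    have := rad_add (h.p1gu.add h.p1gv) (h.p1u.sq.mul h.p1v.sq) y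
    rw [rad_add h.p1gu h.p1gv, rad_mul h.p1u.sq h.p1v.sq, rad_sq h.p1u, rad_sq h.p1v] at this
    rw [h.eu, h.ev]
    refine this.trans ?_
    ring
  have hlu : PG (lap u) := PG.sum fun i => (h.p1du i).dpg i
  have hlv : PG (lap v) := PG.sum fun i => (h.p1dv i).dpg i
  rw [e1, Ex_add ((hrr h.p1gu).add (hrr h.p1gv)) (((hlu.mul hru).add (hlv.mul hrv)).cmul 2),
    Ex_add (hrr h.p1gu) (hrr h.p1gv), Ex_cmul, Ex_add (hlu.mul hru) (hlv.mul hrv),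
    pohozaev h.c2u h.p1du, pohozaev h.c2v h.p1dv, Ex_add (hru.pow 2) (hrv.pow 2),
    Ex_add h.p1gu.pg h.p1gv.pg]
  ring

/-- The frequency at the origin is nondecreasing at scale one. -/
lemma Sol.deriv_N_one (h : Sol u v) : ∃ d : ℝ, 0 ≤ d ∧ HasDerivAt (Nn u v 0) d 1 := by
  have hru := (P1.rad h.p1du).pg
  have hrv := (P1.rad h.p1dv).pg
  set H := Hh u v 0 1 with hH
  set D := Ex 0 1 (edens u v) with hD
  set I := Ex 0 1 (fun y => u y ^ 2 * v y ^ 2) with hI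
  set A := Ex 0 1 (fun y => rad u y ^ 2 + rad v y ^ 2) with hA
  set B := Ex 0 1 (fun y => gsq u y + gsq v y) with hB
  have hDB : D = B + I := Ex_add (h.p1gu.pg.add h.p1gv.pg) h.pguv 0 1
  have hHpos : 0 < H := h.H_pos 0 1
  have hI0 : 0 ≤ I := Ex_nonneg (fun y => by positivity) 0 1
  have hD0 : 0 ≤ D := Ex_nonneg (edens_nonneg u v) 0 1
  have h1 : HasDerivAt (Hh u v 0) (2 * (D + I)) 1 := by
    simpa using h.hasDerivAt_H 0 1
  have h2 : HasDerivAt (Dd u v 0) (2 * I + 2 * A) 1 := by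
    have := ((hasDerivAt_id (1:ℝ)).pow 2).mul (hasDerivAt_Ex_one h.p1e)
    refine this.congr_deriv ?_
    rw [h.rad_e]
    simp
    rw [← hD]
    linarith
  have h3 := h1.unique (by
    have := (hasDerivAt_Ex_one (h.p1u.sq.add h.p1v.sq))
    exact this)
  have h3' : D + I = Ex 0 1 (fun y => u y * rad u y + v y * rad v y) := by
    have e : rad (fun y => u y ^ 2 + v y ^ 2) = fun y => 2 * (u y * rad u y + v y * rad v y) := by
      funext y; rw [rad_add h.p1u.sq h.p1v.sq, rad_sq h.p1u, rad_sq h.p1v]; ring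
    rw [e, Ex_cmul] at h3; linarith
  have hcs : (D + I) ^ 2 ≤ A * H := by
    have key : ∀ t : ℝ, 0 ≤ H * (t * t) + (-2 * (D + I)) * t + A := by
      intro t
      have hp : 0 ≤ Ex 0 1 (fun y => (rad u y - t * u y) ^ 2 + (rad v y - t * v y) ^ 2) :=
        Ex_nonneg (fun y => by positivity) 0 1
      have e : (fun y => (rad u y - t * u y) ^ 2 + (rad v y - t * v y) ^ 2) =
          fun y => (t * t) * (u y ^ 2 + v y ^ 2) + ((-2 * t) * (u y * rad u y + v y * rad v y)
            + (rad u y ^ 2 + rad v y ^ 2)) := by funext y; ring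
      have p1 := (h.pgu.mul hru).add (h.pgv.mul hrv)
      rw [e, Ex_add (h.pgH.cmul _) ((p1.cmul _).add ((hru.pow 2).add (hrv.pow 2))),
        Ex_add (p1.cmul _) ((hru.pow 2).add (hrv.pow 2)), Ex_cmul, Ex_cmul, ← h3'] at hp
      have hh : Ex 0 1 (fun y => u y ^ 2 + v y ^ 2) = H := rfl
      rw [hh] at hp
      linarith
    have := discrim_le_zero key
    unfold discrim at this
    nlinarith
  have hDd : Dd u v 0 1 = D := by simp [Dd, hD]
  refine ⟨_, ?_, h2.div h1 hHpos.ne'⟩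
  rw [hDd]
  refine div_nonneg ?_ (sq_nonneg _)
  rw [← hH]
  nlinarith [mul_nonneg hI0 hHpos.le, mul_nonneg hI0 hD0, mul_nonneg hI0 hI0]

lemma Sol.deriv_N (h : Sol u v) (x : Euc n) {r : ℝ} (hr : 0 < r) :
    ∃ d : ℝ, 0 ≤ d ∧ HasDerivAt (Nn u v x) d r := by
  obtain ⟨d, hd, hd'⟩ := (h.sc x hr).deriv_N_one
  have e : Nn u v x = fun s => Nn (PhaseSep.sc x r u) (PhaseSep.sc x r v) 0 (r⁻¹ * s) := by
    funext s; rw [h.Nn_sc x hr]; simp [mul_inv_cancel_left₀ hr.ne']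
  refine ⟨d * r⁻¹, by positivity, ?_⟩
  rw [e]
  have h1 : HasDerivAt (fun s : ℝ => r⁻¹ * s) r⁻¹ r := by
    simpa using (hasDerivAt_id r).const_mul r⁻¹
  have h2 : HasDerivAt (Nn (PhaseSep.sc x r u) (PhaseSep.sc x r v) 0) d (r⁻¹ * r) := by
    rwa [inv_mul_cancel₀ hr.ne']
  exact h2.comp r h1

lemma Sol.N_mono (h : Sol u v) (x : Euc n) : MonotoneOn (Nn u v x) (Ioi 0) := by
  refine monotoneOn_of_deriv_nonneg (convex_Ioi 0) ?_ ?_ ?_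
  · intro r hr
    obtain ⟨d, _, hd⟩ := h.deriv_N x hr
    exact hd.continuousAt.continuousWithinAt
  · rw [interior_Ioi]
    intro r hr
    obtain ⟨d, _, hd⟩ := h.deriv_N x hr
    exact hd.differentiableAt.differentiableWithinAt
  · rw [interior_Ioi]
    intro r hr
    obtain ⟨d, hd0, hd⟩ := h.deriv_N x hr
    rwa [hd.deriv]

/-- The factor is between two and four because the potential counts twice in `r H′` relative to
its weight in the energy. -/
lemma Sol.H_deriv_bounds (h : Sol u v) (x : Euc n) (r : ℝ) : ∃ d, HasDerivAt (Hh u v x) d r ∧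
    2 * Nn u v x r * Hh u v x r ≤ r * d ∧ r * d ≤ 4 * Nn u v x r * Hh u v x r := by
  refine ⟨_, h.hasDerivAt_H x r, ?_⟩
  have hD := h.D_eq x r
  unfold Dd at hD
  have hI0 : 0 ≤ Ex x r (fun y => u y ^ 2 * v y ^ 2) := Ex_nonneg (fun y => by positivity) x r
  have hI1 : Ex x r (fun y => u y ^ 2 * v y ^ 2) ≤ Ex x r (edens u v) :=
    Ex_mono h.pguv h.p1e.pg (fun y => by
      unfold edens; have := gsq_nonneg u y; have := gsq_nonneg v y; linarith) x r
  have h2 : 0 ≤ r ^ 2 := sq_nonneg r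
  constructor <;> nlinarith [mul_nonneg h2 hI0, mul_le_mul_of_nonneg_left hI1 h2]

lemma hasDerivAt_mul_rpow {F : ℝ → ℝ} {d r : ℝ} (hr : 0 < r) (p : ℝ) (hF : HasDerivAt F d r) :
    HasDerivAt (fun s => F s * s ^ (-p)) (r ^ (-p - 1) * (r * d - p * F r)) r := by
  have := hF.mul (Real.hasDerivAt_rpow_const (p := -p) (Or.inl hr.ne'))
  refine this.congr_deriv ?_
  have e : r ^ (-p) = r ^ (-p - 1) * r := by
    rw [Real.rpow_sub_one hr.ne']; field_simp
  rw [e]; ring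

/-- Monotonicity of the frequency gives a lower bound on the growth of `H`. -/
lemma Sol.H_lower (h : Sol u v) (x : Euc n) {r s : ℝ} (hr : 0 < r) (hs : r ≤ s) :
    (s / r) ^ (2 * Nn u v x r) * Hh u v x r ≤ Hh u v x s := by
  set p := 2 * Nn u v x r with hp
  have hm : MonotoneOn (fun t => Hh u v x t * t ^ (-p)) (Ici r) := by
    have hd : ∀ t, r ≤ t → ∃ d, 0 ≤ d ∧ HasDerivAt (fun t => Hh u v x t * t ^ (-p)) d t := by
      intro t ht
      have ht0 : 0 < t := hr.trans_le ht
      obtain ⟨d, hd, hd1, _⟩ := h.H_deriv_bounds x t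
      refine ⟨_, ?_, hasDerivAt_mul_rpow ht0 p hd⟩
      have hN := h.N_mono x hr ht0 ht
      have hH := h.H_pos x t
      refine mul_nonneg (Real.rpow_nonneg ht0.le _) ?_
      nlinarith
    refine monotoneOn_of_deriv_nonneg (convex_Ici r) ?_ ?_ ?_
    · intro t ht; obtain ⟨d, _, hd⟩ := hd t ht; exact hd.continuousAt.continuousWithinAt
    · rw [interior_Ici]; intro t ht; obtain ⟨d, _, hd⟩ := hd t (le_of_lt ht)
      exact hd.differentiableAt.differentiableWithinAt
    · rw [interior_Ici]; intro t ht; obtain ⟨d, hd0, hd⟩ := hd t (le_of_lt ht); rwa [hd.deriv]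
  have h1 := hm (mem_Ici.2 le_rfl) (mem_Ici.2 hs) hs
  have hs0 : 0 < s := hr.trans_le hs
  simp only at h1
  rw [Real.rpow_neg hr.le, Real.rpow_neg hs0.le, ← div_eq_mul_inv, ← div_eq_mul_inv,
    div_le_div_iff₀ (Real.rpow_pos_of_pos hr _) (Real.rpow_pos_of_pos hs0 _)] at h1
  rw [Real.div_rpow hs0.le hr.le, div_mul_eq_mul_div, div_le_iff₀ (Real.rpow_pos_of_pos hr _)]
  linarith

/-- Monotonicity of the frequency gives an upper bound on the growth of `H`. -/
lemma Sol.H_upper (h : Sol u v) (x : Euc n) {r s : ℝ} (hr : 0 < r) (hs : r ≤ s) :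
    Hh u v x s ≤ (s / r) ^ (4 * Nn u v x s) * Hh u v x r := by
  set p := 4 * Nn u v x s with hp
  have hm : AntitoneOn (fun t => Hh u v x t * t ^ (-p)) (Icc r s) := by
    have hd : ∀ t ∈ Icc r s, ∃ d, d ≤ 0 ∧ HasDerivAt (fun t => Hh u v x t * t ^ (-p)) d t := by
      intro t ht
      have ht0 : 0 < t := hr.trans_le ht.1
      obtain ⟨d, hd, _, hd1⟩ := h.H_deriv_bounds x t
      refine ⟨_, ?_, hasDerivAt_mul_rpow ht0 p hd⟩
      have hN := h.N_mono x ht0 (ht0.trans_le ht.2) ht.2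
      have hH := h.H_pos x t
      refine mul_nonpos_of_nonneg_of_nonpos (Real.rpow_nonneg ht0.le _) ?_
      nlinarith
    refine antitoneOn_of_deriv_nonpos (convex_Icc r s) ?_ ?_ ?_
    · intro t ht; obtain ⟨d, _, hd⟩ := hd t ht; exact hd.continuousAt.continuousWithinAt
    · intro t ht; obtain ⟨d, _, hd⟩ := hd t (interior_subset ht)
      exact hd.differentiableAt.differentiableWithinAt
    · intro t ht; obtain ⟨d, hd0, hd⟩ := hd t (interior_subset ht); rwa [hd.deriv]
  have h1 := hm (left_mem_Icc.2 hs) (right_mem_Icc.2 hs) hs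
  have hs0 : 0 < s := hr.trans_le hs
  simp only at h1
  rw [Real.rpow_neg hr.le, Real.rpow_neg hs0.le, ← div_eq_mul_inv, ← div_eq_mul_inv,
    div_le_div_iff₀ (Real.rpow_pos_of_pos hs0 _) (Real.rpow_pos_of_pos hr _)] at h1
  rw [Real.div_rpow hs0.le hr.le, div_mul_eq_mul_div, le_div_iff₀ (Real.rpow_pos_of_pos hr _)]
  linarith

/-- Linear growth forces the frequency to be at most one. -/
lemma Sol.N_le_one (h : Sol u v) (x : Euc n) {r : ℝ} (hr : 0 < r) : Nn u v x r ≤ 1 := by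
  by_contra hc
  push Not at hc
  obtain ⟨C, hC⟩ := h.gr
  have hub : ∃ B : ℝ, ∀ s, 1 ≤ s → Hh u v x s ≤ B * s ^ 2 := by
    set g : Euc n → ℝ := fun y => (C * (1 + ‖x‖) + C * ‖y‖) ^ 2 with hg
    have hgp : PG g := ((PG.const _).add (PG.norm.cmul C)).pow 2
    refine ⟨Ex 0 1 g, fun s hs => ?_⟩
    unfold Hh
    rw [Ex_std, mul_comm, ← Ex_cmul]
    refine Ex_mono (h.pgH.comp_aff x s) (hgp.cmul _) (fun y => ?_) 0 1
    have h1 := hC (x + s • y)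
    have hu := h.pu (x + s • y); have hv := h.pv (x + s • y)
    have h2 : ‖x + s • y‖ ≤ ‖x‖ + s * ‖y‖ := by
      simpa [norm_smul, abs_of_pos (by linarith : 0 < s)] using norm_add_le x (s • y)
    have hC0 : 0 ≤ C := by
      by_contra hc
      nlinarith [norm_nonneg (x + s • y)]
    have h3 : u (x + s • y) + v (x + s • y) ≤ s * (C * (1 + ‖x‖) + C * ‖y‖) := by
      have : C * (1 + ‖x + s • y‖) ≤ C * (s * (1 + ‖x‖ + ‖y‖)) := by
        apply mul_le_mul_of_nonneg_left _ hC0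
        nlinarith [norm_nonneg x, norm_nonneg y]
      linarith
    calc u (x + s • y) ^ 2 + v (x + s • y) ^ 2 ≤ (u (x + s • y) + v (x + s • y)) ^ 2 := by nlinarith
      _ ≤ (s * (C * (1 + ‖x‖) + C * ‖y‖)) ^ 2 := by gcongr
      _ = _ := by simp only [hg]; ring
  obtain ⟨B, hB⟩ := hub
  set q := 2 * Nn u v x r - 2 with hq
  have hq0 : 0 < q := by linarith
  have htend : Tendsto (fun t : ℝ => t ^ q) atTop atTop := tendsto_rpow_atTop hq0
  have hH := h.H_pos x r
  obtain ⟨t, ht, ht1, ht2⟩ := ((htend.eventually_gt_atTop (B * r ^ 2 / Hh u v x r)).and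
    ((eventually_ge_atTop 1).and (eventually_ge_atTop (1 / r)))).exists
  have h1 := h.H_lower x hr (s := r * t) (by nlinarith)
  have h2 := hB (r * t) (by rw [div_le_iff₀ hr] at ht2; linarith)
  rw [mul_div_cancel_left₀ _ hr.ne', show 2 * Nn u v x r = q + 2 by ring,
    Real.rpow_add (by linarith), Real.rpow_two] at h1
  rw [div_lt_iff₀ hH] at ht
  have : t ^ 2 * (B * r ^ 2) < t ^ 2 * (t ^ q * Hh u v x r) := by
    apply mul_lt_mul_of_pos_left ht; positivity
  nlinarith

lemma Sol.H_mono (h : Sol u v) (x : Euc n) : MonotoneOn (Hh u v x) (Ici 0) := by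
  refine monotoneOn_of_deriv_nonneg (convex_Ici 0) ?_ ?_ ?_
  · intro r _; exact (h.hasDerivAt_H x r).continuousAt.continuousWithinAt
  · intro r _; exact (h.hasDerivAt_H x r).differentiableAt.differentiableWithinAt
  · rw [interior_Ici]; intro r hr
    rw [(h.hasDerivAt_H x r).deriv]
    have h1 : 0 ≤ Ex x r (edens u v) := Ex_nonneg (edens_nonneg u v) x r
    have h2 : 0 ≤ Ex x r (fun y => u y ^ 2 * v y ^ 2) := Ex_nonneg (fun y => by positivity) x r
    have : (0:ℝ) < r := hr
    positivity

lemma Sol.H_ge (h : Sol u v) (x : Euc n) {r : ℝ} (hr : 0 ≤ r) : u x ^ 2 + v x ^ 2 ≤ Hh u v x r := by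
  have := h.H_mono x (mem_Ici.2 le_rfl) (mem_Ici.2 hr) hr
  simpa [Hh, Ex_zero] using this

lemma Sol.H_quad (h : Sol u v) (x : Euc n) {r s : ℝ} (hr : 0 < r) (hs : r ≤ s) :
    Hh u v x s ≤ (s / r) ^ 4 * Hh u v x r := by
  refine (h.H_upper x hr hs).trans (mul_le_mul_of_nonneg_right ?_ (h.H_pos x r).le)
  have h1 : (1:ℝ) ≤ s / r := by rwa [le_div_iff₀ hr, one_mul]
  have := Real.rpow_le_rpow_of_exponent_le h1 (show 4 * Nn u v x s ≤ (4:ℕ) by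
    have := h.N_le_one x (hr.trans_le hs); push_cast; linarith)
  rwa [Real.rpow_natCast] at this

/-- The frequency is controlled by one doubling of `H`. -/
lemma Sol.N_doubling (h : Sol u v) (x : Euc n) {r : ℝ} (hr : 0 < r) :
    Nn u v x r * Hh u v x r ≤ Hh u v x (2 * r) - Hh u v x r := by
  have h1 := h.H_lower x hr (s := 2 * r) (by linarith)
  rw [mul_div_cancel_right₀ _ hr.ne'] at h1
  have hN := h.N_nonneg x r
  have h2 : 1 + Nn u v x r ≤ (2:ℝ) ^ (2 * Nn u v x r) := by
    rw [Real.rpow_def_of_pos (by norm_num)]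
    have := Real.add_one_le_exp (Real.log 2 * (2 * Nn u v x r))
    have := Real.log_two_gt_d9
    nlinarith
  nlinarith [mul_le_mul_of_nonneg_right h2 (h.H_pos x r).le]

lemma Sol.Ex_mono_r (h : Sol u v) (x : Euc n) : MonotoneOn (fun r => Ex x r u) (Ici 0) := by
  refine monotoneOn_of_deriv_nonneg (convex_Ici 0) ?_ ?_ ?_
  · intro r _; exact (h.hasDerivAt_u x r).continuousAt.continuousWithinAt
  · intro r _; exact (h.hasDerivAt_u x r).differentiableAt.differentiableWithinAt
  · rw [interior_Ici]; intro r hr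
    rw [(h.hasDerivAt_u x r).deriv]
    refine mul_nonneg (le_of_lt hr) (Ex_nonneg (fun y => ?_) x r)
    have := h.pu y; positivity

/-- Subharmonicity of `u` in Gaussian form. -/
lemma Sol.u_le_Ex (h : Sol u v) (x : Euc n) {r : ℝ} (hr : 0 ≤ r) : u x ≤ Ex x r u := by
  have := h.Ex_mono_r x (mem_Ici.2 le_rfl) (mem_Ici.2 hr) hr
  simpa [Ex_zero] using this

end Almgren

/-! ### Points of low frequency -/

section LowFrequency
variable {n : ℕ} {u v : Euc n → ℝ}

lemma Ex_poincare {f : Euc n → ℝ} (hf : P1 f) (x : Euc n) (r : ℝ) :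
    Ex x r (fun y => f y ^ 2) - Ex x r f ^ 2 ≤ r ^ 2 * Ex x r (gsq f) := by
  have h := gauss_poincare (hf.comp_aff x r)
  simp_rw [pd_comp_aff hf.diff, mul_pow, integral_const_mul, ← Finset.mul_sum] at h
  refine h.trans (le_of_eq ?_)
  congr 1
  exact (Ex_sum (fun i => (hf.dpg i).pow 2) x r).symm

lemma Sol.I_le (h : Sol u v) (x : Euc n) (r : ℝ) :
    r ^ 2 * Ex x r (fun y => u y ^ 2 * v y ^ 2) ≤ Nn u v x r * Hh u v x r := by
  rw [← h.D_eq]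
  refine mul_le_mul_of_nonneg_left (Ex_mono h.pguv h.p1e.pg (fun y => ?_) x r) (sq_nonneg r)
  unfold edens; have := gsq_nonneg u y; have := gsq_nonneg v y; linarith

lemma Sol.var_le (h : Sol u v) (x : Euc n) (r : ℝ) :
    (Ex x r (fun y => u y ^ 2) - Ex x r u ^ 2) + (Ex x r (fun y => v y ^ 2) - Ex x r v ^ 2) ≤
      Nn u v x r * Hh u v x r := by
  have h1 := Ex_poincare h.p1u x r
  have h2 := Ex_poincare h.p1v x r
  rw [← h.D_eq]
  have h3 : Ex x r (gsq u) + Ex x r (gsq v) ≤ Ex x r (edens u v) := by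
    rw [← Ex_add h.p1gu.pg h.p1gv.pg]
    refine Ex_mono (h.p1gu.pg.add h.p1gv.pg) h.p1e.pg (fun y => ?_) x r
    unfold edens; nlinarith [sq_nonneg (u y * v y)]
  unfold Dd
  nlinarith [mul_le_mul_of_nonneg_left h3 (sq_nonneg r)]

lemma Sol.H_split (h : Sol u v) (x : Euc n) (r : ℝ) :
    Hh u v x r = Ex x r (fun y => u y ^ 2) + Ex x r (fun y => v y ^ 2) :=
  Ex_add (h.pgu.pow 2) (h.pgv.pow 2) x r

lemma Sol.Eu_pos (h : Sol u v) (x : Euc n) {r : ℝ} (hr : 0 ≤ r) : 0 < Ex x r u :=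
  (h.pu x).trans_le (h.u_le_Ex x hr)

/-- At scales with `ρ²H ≥ 1` and small frequency, the two averages nearly saturate `H` while their
product is small. -/
lemma Sol.seg_basic (h : Sol u v) (x : Euc n) {ρ s : ℝ} (hρ : 0 < ρ) (hs : 0 ≤ s)
    (hN : Nn u v x ρ ≤ s ^ 2) (hH : 1 ≤ ρ ^ 2 * Hh u v x ρ) :
    (1 - s ^ 2) * Hh u v x ρ ≤ Ex x ρ u ^ 2 + Ex x ρ v ^ 2 ∧
    2 * (Ex x ρ u * Ex x ρ v) ≤ (2 * s + s ^ 2) * Hh u v x ρ := by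
  have hHp := h.H_pos x ρ
  have h1 := h.var_le x ρ
  have h2 := h.H_split x ρ
  have h3 : Nn u v x ρ * Hh u v x ρ ≤ s ^ 2 * Hh u v x ρ := by gcongr
  have hA : (1 - s ^ 2) * Hh u v x ρ ≤ Ex x ρ u ^ 2 + Ex x ρ v ^ 2 := by nlinarith
  refine ⟨hA, ?_⟩
  have h4 := Ex_sq_le (h.pgu.add h.pgv) x ρ
  rw [Ex_add h.pgu h.pgv] at h4
  have e : (fun y => (u y + v y) ^ 2) = fun y => (u y ^ 2 + v y ^ 2) + 2 * (u y * v y) := by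
    funext y; ring
  rw [e, Ex_add h.pgH ((h.pgu.mul h.pgv).cmul 2), Ex_cmul] at h4
  have h5 : Ex x ρ (fun y => u y * v y) ≤ s * Hh u v x ρ := by
    have h6 := Ex_sq_le (h.pgu.mul h.pgv) x ρ
    simp only [mul_pow] at h6
    have h7 := h.I_le x ρ
    set I := Ex x ρ (fun y => u y ^ 2 * v y ^ 2)
    set w := Ex x ρ (fun y => u y * v y)
    have h8 : (ρ * w) ^ 2 ≤ (ρ * (s * Hh u v x ρ)) ^ 2 := by
      have a1 : ρ ^ 2 * w ^ 2 ≤ ρ ^ 2 * I := by gcongr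
      have a2 : s ^ 2 * Hh u v x ρ * 1 ≤ s ^ 2 * Hh u v x ρ * (ρ ^ 2 * Hh u v x ρ) := by gcongr
      nlinarith
    have h9 := abs_le_of_sq_le_sq h8 (by positivity)
    exact le_of_mul_le_mul_left ((le_abs_self _).trans h9) hρ
  have hh : Ex x ρ (fun y => u y ^ 2 + v y ^ 2) = Hh u v x ρ := rfl
  rw [hh] at h4
  nlinarith

lemma Sol.Esq_mono (h : Sol u v) (x : Euc n) :
    MonotoneOn (fun ρ => Ex x ρ (fun y => u y ^ 2)) (Ici 0) := by
  have hd2 := fun ρ => h.hasDerivAt_sq x ρ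
  refine monotoneOn_of_deriv_nonneg (convex_Ici 0) ?_ ?_ ?_
  · intro r _; exact (hd2 r).continuousAt.continuousWithinAt
  · intro r _; exact (hd2 r).differentiableAt.differentiableWithinAt
  · rw [interior_Ici]; intro r hr
    rw [(hd2 r).deriv]
    have : 0 ≤ Ex x r (fun y => gsq u y + u y ^ 2 * v y ^ 2) := Ex_nonneg (fun y => by
      have := gsq_nonneg u y; positivity) x r
    have : (0:ℝ) < r := hr
    positivity

/-- The loss of `E u` below the natural scale `r0 = 1 / M`, where `H(r0) = M²`. -/
lemma Sol.loss (h : Sol u v) {s r0 M : ℝ} (hs : 0 ≤ s) (hr0p : 0 < r0) (hM : M = r0⁻¹)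
    (hHM : Hh u v 0 r0 = M ^ 2) (hNρ : ∀ ρ, 0 < ρ → ρ ≤ r0 → Nn u v 0 ρ ≤ s ^ 2)
    (hbM : Ex 0 r0 v ≤ 2 * s * M) : Ex 0 r0 u - 3 * s ^ 2 * M ≤ u 0 := by
  have hMp : 0 < M := by rw [hM]; positivity
  set c := 3 * s ^ 2 * M ^ 2 with hc
  have hanti : AntitoneOn (fun ρ => Ex 0 ρ u - c * ρ) (Icc 0 r0) := by
    have hd : ∀ ρ, HasDerivAt (fun ρ => Ex 0 ρ u - c * ρ)
        (ρ * Ex 0 ρ (fun y => u y * v y ^ 2) - c) ρ := fun ρ => by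
      exact ((h.hasDerivAt_u 0 ρ).fun_sub ((hasDerivAt_id ρ).const_mul c)).congr_deriv (by simp)
    refine antitoneOn_of_deriv_nonpos (convex_Icc 0 r0) ?_ ?_ ?_
    · intro t _; exact (hd t).continuousAt.continuousWithinAt
    · intro t _; exact (hd t).differentiableAt.differentiableWithinAt
    · rw [interior_Icc]; intro ρ hρ
      rw [(hd ρ).deriv, sub_nonpos]
      have hI := h.I_le 0 ρ
      have hHρ : Hh u v 0 ρ ≤ M ^ 2 := by
        rw [← hHM]; exact h.H_mono 0 (mem_Ici.2 hρ.1.le) (mem_Ici.2 hr0p.le) hρ.2.le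
      have hHp := h.H_pos 0 ρ
      have hI2 : ρ ^ 2 * Ex 0 ρ (fun y => u y ^ 2 * v y ^ 2) ≤ s ^ 2 * M ^ 2 := by
        have : Nn u v 0 ρ * Hh u v 0 ρ ≤ s ^ 2 * M ^ 2 :=
          mul_le_mul (hNρ ρ hρ.1 (hρ.2.le)) hHρ hHp.le (sq_nonneg s)
        linarith
      have hv2 : Ex 0 ρ (fun y => v y ^ 2) ≤ 5 * s ^ 2 * M ^ 2 := by
        have m1 : Ex 0 ρ (fun y => v y ^ 2) ≤ Ex 0 r0 (fun y => v y ^ 2) := by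
          exact h.swap.Esq_mono 0 (mem_Ici.2 hρ.1.le) (mem_Ici.2 hr0p.le) hρ.2.le
        have m2 := h.var_le 0 r0
        have m3 : Nn u v 0 r0 * Hh u v 0 r0 ≤ s ^ 2 * M ^ 2 := by
          rw [hHM]; gcongr; exact hNρ r0 hr0p le_rfl
        have m4 := Ex_sq_le h.pgu 0 r0
        have m5 : Ex 0 r0 v ^ 2 ≤ (2 * s * M) ^ 2 := by have := (h.swap.Eu_pos 0 hr0p.le).le; gcongr
        nlinarith
      have hcs := Ex_cs (h.pgu.mul h.pgv) h.pgv 0 ρ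
      have e1 : (fun y => u y * v y * v y) = fun y => u y * v y ^ 2 := by funext y; ring
      have e2 : (fun y => (u y * v y) ^ 2) = fun y => u y ^ 2 * v y ^ 2 := by funext y; ring
      rw [e1, e2] at hcs
      have hV0 : 0 ≤ Ex 0 ρ (fun y => v y ^ 2) := Ex_nonneg (fun y => sq_nonneg _) 0 ρ
      have hsq : (ρ * Ex 0 ρ (fun y => u y * v y ^ 2)) ^ 2 ≤ c ^ 2 := by
        calc (ρ * Ex 0 ρ (fun y => u y * v y ^ 2)) ^ 2
            ≤ (ρ ^ 2 * Ex 0 ρ (fun y => u y ^ 2 * v y ^ 2)) * Ex 0 ρ (fun y => v y ^ 2) := by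
              rw [mul_pow, mul_assoc]; gcongr
          _ ≤ (s ^ 2 * M ^ 2) * (5 * s ^ 2 * M ^ 2) := by
              apply mul_le_mul hI2 hv2 hV0 (by positivity)
          _ ≤ c ^ 2 := by
              rw [hc]; nlinarith [sq_nonneg (s ^ 2 * M ^ 2)]
      exact (le_abs_self _).trans (abs_le_of_sq_le_sq hsq (by positivity))
  have := hanti (left_mem_Icc.2 hr0p.le) (right_mem_Icc.2 hr0p.le) hr0p.le
  simp only [Ex_zero, mul_zero, sub_zero] at this
  have e : c * r0 = 3 * s ^ 2 * M := by rw [hc, hM]; field_simp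
  rw [e] at this
  exact this

/-- Low frequency at scale one, with `H(1) ≥ 1`: the dominant component at scale one stays dominant
down to the centre, with a quantitative lower bound. -/
lemma Sol.lemmaE (h : Sol u v) {s : ℝ} (hs : 0 ≤ s) (hs8 : s ≤ 1 / 8)
    (hN : Nn u v 0 1 ≤ s ^ 2) (hH : 1 ≤ Hh u v 0 1) (hdom : Ex 0 1 v ≤ Ex 0 1 u) :
    ∃ M, 1 ≤ M ∧ Hh u v 0 1 ^ ((1 - 2 * s ^ 2) / 2) ≤ M ∧ M ^ 2 ≤ Hh u v 0 1 ∧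
      (1 - 3 * s) * M ≤ u 0 ∧ v 0 ≤ 2 * s * M := by
  have hcH : Continuous (Hh u v 0) := continuous_Ex_r h.pgH 0
  -- the natural scale
  obtain ⟨r0, hr0mem, hr0⟩ : ∃ r0 ∈ Icc (0:ℝ) 1, r0 ^ 2 * Hh u v 0 r0 = 1 := by
    have hc : ContinuousOn (fun r => r ^ 2 * Hh u v 0 r) (Icc 0 1) := by fun_prop
    have := intermediate_value_Icc (zero_le_one' ℝ) hc
    exact this ⟨by simp, by simpa using hH⟩
  have hr0p : 0 < r0 := by
    rcases hr0mem.1.lt_or_eq with h1 | h1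
    · exact h1
    · rw [← h1] at hr0; simp at hr0
  have hNρ : ∀ ρ, 0 < ρ → ρ ≤ 1 → Nn u v 0 ρ ≤ s ^ 2 := fun ρ h0 h1 =>
    (h.N_mono 0 h0 (mem_Ioi.2 one_pos) h1).trans hN
  have hbas : ∀ ρ, r0 ≤ ρ → ρ ≤ 1 → _ := fun ρ h0 h1 =>
    h.seg_basic 0 (hr0p.trans_le h0) hs (hNρ ρ (hr0p.trans_le h0) h1) (by
      rw [← hr0]
      have := h.H_mono 0 (mem_Ici.2 hr0p.le) (mem_Ici.2 (hr0p.le.trans h0)) h0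
      have := (h.H_pos 0 r0).le
      gcongr)
  have hne : ∀ ρ, r0 ≤ ρ → ρ ≤ 1 → Ex 0 ρ u - Ex 0 ρ v ≠ 0 := by
    intro ρ h0 h1 h2
    obtain ⟨b1, b2⟩ := hbas ρ h0 h1
    have h3 : Ex 0 ρ u = Ex 0 ρ v := by linarith
    rw [h3] at b1 b2
    have := h.H_pos 0 ρ
    nlinarith
  have hdom0 : Ex 0 r0 v < Ex 0 r0 u := by
    by_contra hc
    push Not at hc
    have hcont : ContinuousOn (fun ρ => Ex 0 ρ u - Ex 0 ρ v) (Icc r0 1) :=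
      ((continuous_Ex_r h.pgu 0).sub (continuous_Ex_r h.pgv 0)).continuousOn
    obtain ⟨ρ, hρ, hρ0⟩ := intermediate_value_Icc hr0mem.2 hcont
      (show (0:ℝ) ∈ _ from ⟨by linarith, by linarith⟩)
    exact hne ρ hρ.1 hρ.2 hρ0
  set M := r0⁻¹ with hM
  have hMp : 0 < M := by positivity
  have hHM : Hh u v 0 r0 = M ^ 2 := by
    rw [hM, inv_pow]; exact eq_inv_of_mul_eq_one_right hr0
  obtain ⟨b1, b2⟩ := hbas r0 le_rfl hr0mem.2
  rw [hHM] at b1 b2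
  set a := Ex 0 r0 u with ha
  set b := Ex 0 r0 v with hb
  have hbp : 0 < b := h.swap.Eu_pos 0 hr0p.le
  have hap : 0 < a := h.Eu_pos 0 hr0p.le
  have hs2 : s ^ 2 ≤ s / 8 := by nlinarith
  have haM : (2/3) * M ≤ a := by
    by_contra hc
    push Not at hc
    have : a ^ 2 < ((2/3) * M) ^ 2 := by gcongr
    have : b ^ 2 < a ^ 2 := by gcongr
    nlinarith [sq_nonneg M, sq_pos_of_pos hMp]
  have hbM : b ≤ 2 * s * M := by
    -- `2ab ≤ (2s + s²) M²` and `a ≥ (2/3) M` give a first bound, which improves `a`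
    have c1 : b ≤ (13 / 8) * s * M := by
      have : (2/3) * M * b ≤ a * b := by gcongr
      have : M * b ≤ M * ((13/8) * s * M) := by nlinarith [sq_nonneg M]
      exact le_of_mul_le_mul_left this hMp
    nlinarith
  have haM2 : (1 - 5 * s ^ 2) * M ≤ a := by
    by_contra hc
    push Not at hc
    have h0 : 0 ≤ 1 - 5 * s ^ 2 := by nlinarith
    have h1 : a ^ 2 < ((1 - 5 * s ^ 2) * M) ^ 2 := by gcongr
    have h2 : b ^ 2 ≤ (2 * s * M) ^ 2 := by gcongr
    have h3 : (1 - s ^ 2) * M ^ 2 < ((1 - 5 * s ^ 2) ^ 2 + 4 * s ^ 2) * M ^ 2 := by nlinarith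
    have h4 := lt_of_mul_lt_mul_right h3 (sq_nonneg M)
    nlinarith [sq_nonneg s]
  have hv0 : v 0 ≤ 2 * s * M := (h.swap.u_le_Ex 0 hr0p.le).trans hbM
  have hu0 : a - 3 * s ^ 2 * M ≤ u 0 :=
    h.loss hs hr0p hM hHM (fun ρ h0 h1 => hNρ ρ h0 (h1.trans hr0mem.2)) hbM
  have hu1 : (1 - 3 * s) * M ≤ u 0 := by nlinarith
  have hM1 : 1 ≤ M := by rw [hM]; exact (one_le_inv₀ hr0p).2 hr0mem.2
  have hMh : Hh u v 0 1 ^ ((1 - 2 * s ^ 2) / 2) ≤ M := by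
    have h1 := h.H_upper 0 hr0p hr0mem.2
    rw [one_div, ← hM, hHM] at h1
    have h2 : Hh u v 0 1 ≤ M ^ (2 + 4 * s ^ 2) := by
      refine h1.trans ?_
      rw [← Real.rpow_two, ← Real.rpow_add hMp]
      exact Real.rpow_le_rpow_of_exponent_le hM1 (by linarith)
    have h3 : 0 ≤ (1 - 2 * s ^ 2) / 2 := by nlinarith
    calc Hh u v 0 1 ^ ((1 - 2 * s ^ 2) / 2) ≤ (M ^ (2 + 4 * s ^ 2)) ^ ((1 - 2 * s ^ 2) / 2) :=
          Real.rpow_le_rpow (by linarith) h2 h3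
      _ = M ^ ((2 + 4 * s ^ 2) * ((1 - 2 * s ^ 2) / 2)) := by rw [← Real.rpow_mul hMp.le]
      _ ≤ M ^ (1:ℝ) := Real.rpow_le_rpow_of_exponent_le hM1 (by nlinarith [sq_nonneg (s ^ 2)])
      _ = M := Real.rpow_one M
  refine ⟨M, hM1, hMh, ?_, hu1, hv0⟩
  rw [← hHM]
  exact h.H_mono 0 (mem_Ici.2 hr0p.le) (mem_Ici.2 zero_le_one) hr0mem.2

end LowFrequency

/-! ### Comparison of scales and centres, and the minimum of the two components -/

section Compare
variable {n : ℕ}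

/-- Averages of nonnegative functions are controlled by those at a larger scale and a nearby
centre, with a constant independent of the function. -/
lemma Ex_cmp {ρ r : ℝ} (hρ : 0 < ρ) (hr : ρ < r) (K : ℝ) : ∃ C : ℝ, 1 ≤ C ∧
    ∀ f : Euc n → ℝ, PG f → (∀ y, 0 ≤ f y) → ∀ x y : Euc n, ‖x - y‖ ≤ K →
      Ex y ρ f ≤ C * Ex x r f := by
  refine ⟨(r / ρ) ^ n * Real.exp (K ^ 2 / (2 * (r ^ 2 - ρ ^ 2))), ?_, ?_⟩
  · have h1 : 1 ≤ (r / ρ) ^ n := one_le_pow₀ (by rw [le_div_iff₀ hρ]; linarith)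
    have h2 : 1 ≤ Real.exp (K ^ 2 / (2 * (r ^ 2 - ρ ^ 2))) := by
      apply Real.one_le_exp
      have : 0 < r ^ 2 - ρ ^ 2 := by nlinarith
      positivity
    exact one_le_mul_of_one_le_of_one_le h1 h2
  · intro f hf h0 x y hxy
    refine (Ex_compare hf h0 x y hρ hr).trans ?_
    have : 0 < r ^ 2 - ρ ^ 2 := by nlinarith
    have := Ex_nonneg h0 x r
    have : 0 < r := hρ.trans hr
    gcongr

/-- By doubling, `H` at different centres and scales is comparable, uniformly in the solution. -/
lemma Hh_cmp {s : ℝ} (hs : 0 < s) (K : ℝ) : ∃ C : ℝ, 1 ≤ C ∧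
    ∀ u v : Euc n → ℝ, Sol u v → ∀ z : Euc n, ‖z‖ ≤ K →
      Hh u v z s ≤ C * Hh u v 0 1 ∧ Hh u v 0 1 ≤ C * Hh u v z s := by
  obtain ⟨C1, h1, H1⟩ := Ex_cmp (n := n) hs (lt_add_one s) K
  obtain ⟨C2, h2, H2⟩ := Ex_cmp (n := n) one_pos (show (1:ℝ) < 1 + s by linarith) K
  refine ⟨max (C1 * (s + 1) ^ 4) (C2 * ((1 + s) / s) ^ 4), ?_, fun u v h z hz => ⟨?_, ?_⟩⟩
  · refine le_max_of_le_left (one_le_mul_of_one_le_of_one_le h1 (one_le_pow₀ (by linarith)))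
  · have a1 := H1 _ h.pgH (fun y => by positivity) 0 z (by simpa using hz)
    have a2 := h.H_quad 0 one_pos (show (1:ℝ) ≤ s + 1 by linarith)
    rw [div_one] at a2
    have hp := h.H_pos 0 1
    calc Hh u v z s ≤ C1 * Hh u v 0 (s + 1) := a1
      _ ≤ C1 * ((s + 1) ^ 4 * Hh u v 0 1) := by gcongr
      _ = (C1 * (s + 1) ^ 4) * Hh u v 0 1 := by ring
      _ ≤ _ := by gcongr; exact le_max_left _ _
  · have a1 := H2 _ h.pgH (fun y => by positivity) z 0 (by simpa using hz)
    have a2 := h.H_quad z hs (show s ≤ 1 + s by linarith)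
    have hp := h.H_pos z s
    calc Hh u v 0 1 ≤ C2 * Hh u v z (1 + s) := a1
      _ ≤ C2 * (((1 + s) / s) ^ 4 * Hh u v z s) := by gcongr
      _ = (C2 * ((1 + s) / s) ^ 4) * Hh u v z s := by ring
      _ ≤ _ := by gcongr; exact le_max_right _ _

lemma Nn_cmp {s : ℝ} (hs : 0 < s) (hs1 : s < 1) (K : ℝ) : ∃ C : ℝ, 1 ≤ C ∧
    ∀ u v : Euc n → ℝ, Sol u v → ∀ z : Euc n, ‖z‖ ≤ K → Nn u v z s ≤ C * Nn u v 0 1 := by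
  obtain ⟨C1, h1, H1⟩ := Ex_cmp (n := n) hs hs1 K
  obtain ⟨C2, h2, H2⟩ := Hh_cmp (n := n) hs K
  refine ⟨C1 * C2, one_le_mul_of_one_le_of_one_le h1 h2, fun u v h z hz => ?_⟩
  have a1 := H1 _ h.p1e.pg (edens_nonneg u v) 0 z (by simpa using hz)
  have a2 := (H2 u v h z hz).2
  have hp := h.H_pos z s
  have hD : Dd u v z s ≤ C1 * Dd u v 0 1 := by
    unfold Dd
    have := Ex_nonneg (edens_nonneg u v) z s
    have h3 : s ^ 2 ≤ 1 := by nlinarith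
    nlinarith
  rw [h.D_eq, h.D_eq] at hD
  have hN := h.N_nonneg 0 1
  refine le_of_mul_le_mul_right ?_ hp
  calc Nn u v z s * Hh u v z s ≤ C1 * (Nn u v 0 1 * Hh u v 0 1) := hD
    _ ≤ C1 * (Nn u v 0 1 * (C2 * Hh u v z s)) := by gcongr
    _ = _ := by ring

lemma pos_right_of_ne {φ : ℝ → ℝ} {a b : ℝ} (hab : a ≤ b) (hc : ContinuousOn φ (Icc a b))
    (hne : ∀ t ∈ Icc a b, φ t ≠ 0) (ha : 0 ≤ φ a) : 0 < φ b := by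
  by_contra hb
  push Not at hb
  obtain ⟨t, ht, h0⟩ := intermediate_value_Icc' hab hc ⟨hb, ha⟩
  exact hne t ht h0

lemma pos_left_of_ne {φ : ℝ → ℝ} {a b : ℝ} (hab : a ≤ b) (hc : ContinuousOn φ (Icc a b))
    (hne : ∀ t ∈ Icc a b, φ t ≠ 0) (hb : 0 ≤ φ b) : 0 < φ a := by
  by_contra ha
  push Not at ha
  obtain ⟨t, ht, h0⟩ := intermediate_value_Icc hab hc ⟨ha, hb⟩
  exact hne t ht h0

variable {u v : Euc n → ℝ}

/-- At low frequency, and when the coupling at scale `ρ` is not weak, the two phases cannot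
balance. -/
lemma Sol.seg_ne (h : Sol u v) (x : Euc n) {ρ : ℝ} (hρ : 0 < ρ)
    (hN : Nn u v x ρ ≤ 1 / 64) (hH : 1 ≤ ρ ^ 2 * Hh u v x ρ) : Ex x ρ u - Ex x ρ v ≠ 0 := by
  intro h2
  obtain ⟨b1, b2⟩ := h.seg_basic x (s := 1 / 8) hρ (by norm_num) (by norm_num; exact hN) hH
  have h3 : Ex x ρ u = Ex x ρ v := by linarith
  rw [h3] at b1 b2
  have := h.H_pos x ρ
  nlinarith

lemma Sol.u_le_sqrt (h : Sol u v) (x : Euc n) {r : ℝ} (hr : 0 ≤ r) : u x ≤ √(Hh u v x r) := by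
  apply Real.le_sqrt_of_sq_le
  have := h.H_ge x hr
  nlinarith [sq_nonneg (v x)]

/-- Low frequency and large `H` at the point `z` and scale one half, with the first component
dominant: a pointwise lower bound at `z`. -/
lemma Sol.lower_at (h : Sol u v) (z : Euc n) (hN : Nn u v z (1/2) ≤ 1 / 64)
    (hH : 4 ≤ Hh u v z (1/2)) (hdom : Ex z (1/2) v ≤ Ex z (1/2) u) :
    (Hh u v z (1/2) / 4) ^ (2/5 : ℝ) ≤ u z := by
  have hs := h.sc z (show (0:ℝ) < 1/2 by norm_num)
  obtain ⟨M, hM1, hM2, -, hM3, -⟩ := hs.lemmaE (s := 1/8) (by norm_num) (by norm_num)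
    (by rw [h.Nn_sc z (by norm_num)]; norm_num; simpa using hN)
    (by rw [Hh_sc]; simp only [smul_zero, add_zero, mul_one]; linarith)
    (by rw [Ex_sc, Ex_sc]; simp only [smul_zero, add_zero, mul_one]; linarith)
  rw [Hh_sc] at hM2
  simp only [smul_zero, add_zero, mul_one, sc_apply] at hM2 hM3
  have e : (1/2 : ℝ) ^ 2 * Hh u v z (1/2) = Hh u v z (1/2) / 4 := by ring
  rw [e] at hM2
  refine (Real.rpow_le_rpow_of_exponent_le (by linarith) (by norm_num)).trans (hM2.trans ?_)
  linarith

end Compare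

section MinBound
variable {n : ℕ}

/-- At a centre of low frequency and large `H`, one component is large in a neighbourhood and the
other one exponentially small. -/
lemma dominant_region (hn : 1 ≤ n) : ∃ ε : ℝ, 0 < ε ∧ ∃ C : ℝ, 1 ≤ C ∧ ∃ c : ℝ, 0 < c ∧
    ∀ u v : Euc n → ℝ, Sol u v → Nn u v 0 1 ≤ ε → C ≤ Hh u v 0 1 → Ex 0 1 v ≤ Ex 0 1 u →
    ∀ z : Euc n, ‖z‖ ≤ 1 / 4 → c * Hh u v 0 1 ^ (2/5 : ℝ) ≤ u z ∧
      v z ≤ C * √(Hh u v 0 1) * Real.exp (-(c * Hh u v 0 1 ^ (2/5 : ℝ))) := by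
  obtain ⟨C1, h1, H1⟩ := Hh_cmp (n := n) (show (0:ℝ) < 1/2 by norm_num) (1/2)
  obtain ⟨C2, h2, H2⟩ := Nn_cmp (n := n) (show (0:ℝ) < 1/2 by norm_num) (by norm_num) (1/2)
  set c0 : ℝ := (1 / (4 * C1)) ^ (2/5 : ℝ) with hc0
  have hc0p : 0 < c0 := by positivity
  have hn' : (1:ℝ) ≤ n := by exact_mod_cast hn
  refine ⟨1 / (64 * C2), by positivity, 4 * C1, by linarith, c0 / (16 * n), by positivity, ?_⟩
  intro u v h hN hH hdom
  have hN64 : C2 * Nn u v 0 1 ≤ 1 / 64 := by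
    calc C2 * Nn u v 0 1 ≤ C2 * (1 / (64 * C2)) := by gcongr
      _ = 1 / 64 := by field_simp
  have hN01 : Nn u v 0 1 ≤ 1 / 64 := by
    have := h.N_nonneg 0 1
    nlinarith
  have hHz : ∀ z : Euc n, ‖z‖ ≤ 1/2 → 4 ≤ Hh u v z (1/2) := fun z hz => by
    have := (H1 u v h z hz).2
    have : C1 * 4 ≤ C1 * Hh u v z (1/2) := by linarith
    exact le_of_mul_le_mul_left this (by linarith)
  have hNz : ∀ z : Euc n, ‖z‖ ≤ 1/2 → Nn u v z (1/2) ≤ 1 / 64 := fun z hz =>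
    (H2 u v h z hz).trans hN64
  -- dominance propagates from scale one to scale one half at the origin
  have hd0 : 0 < Ex 0 (1/2) u - Ex 0 (1/2) v := by
    refine pos_left_of_ne (φ := fun t => Ex 0 t u - Ex 0 t v) (b := 1) (by norm_num)
      ((continuous_Ex_r h.pgu 0).sub (continuous_Ex_r h.pgv 0)).continuousOn
      (fun t ht => ?_) (by linarith)
    have ht0 : 0 < t := by linarith [ht.1]
    refine h.seg_ne 0 ht0 ((h.N_mono 0 ht0 (mem_Ioi.2 one_pos) ht.2).trans hN01) ?_
    have a1 := hHz 0 (by simp)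
    have a2 := h.H_mono 0 (mem_Ici.2 (by norm_num : (0:ℝ) ≤ 1/2)) (mem_Ici.2 ht0.le) ht.1
    have a3 : (1/2 : ℝ) ^ 2 ≤ t ^ 2 := by have := ht.1; gcongr
    nlinarith
  -- and then to the neighbouring points
  have hdz : ∀ z : Euc n, ‖z‖ ≤ 1/2 → Ex z (1/2) v ≤ Ex z (1/2) u := fun z hz => by
    have := pos_right_of_ne (φ := fun t : ℝ => Ex (t • z) (1/2) u - Ex (t • z) (1/2) v)
      zero_le_one
      ((((continuous_Ex_x h.pgu (1/2)).comp (by fun_prop : Continuous fun t : ℝ => t • z))).sub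
      (((continuous_Ex_x h.pgv (1/2)).comp (by fun_prop : Continuous fun t : ℝ => t • z)))).continuousOn
      (fun t ht => by
        have htz : ‖t • z‖ ≤ 1/2 := by
          rw [norm_smul, Real.norm_of_nonneg ht.1]
          have := ht.2; have := norm_nonneg z; nlinarith [ht.1]
        refine h.seg_ne _ (by norm_num) (hNz _ htz) ?_
        have := hHz _ htz
        linarith) (by simpa using hd0.le)
    simp only [one_smul] at this
    linarith
  set X := Hh u v 0 1 ^ (2/5 : ℝ) with hX
  have hXp : 0 < X := Real.rpow_pos_of_pos (h.H_pos 0 1) _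
  have hu : ∀ z : Euc n, ‖z‖ ≤ 1/2 → c0 * X ≤ u z := fun z hz => by
    refine le_trans ?_ (h.lower_at z (hNz z hz) (hHz z hz) (hdz z hz))
    rw [hc0, hX, ← Real.mul_rpow (by positivity) (h.H_pos 0 1).le]
    refine Real.rpow_le_rpow (by have := h.H_pos 0 1; positivity) ?_ (by norm_num)
    have := (H1 u v h z hz).2
    rw [div_mul_eq_mul_div, one_mul, div_le_div_iff₀ (by positivity) (by norm_num)]
    linarith
  have hcc : c0 / (16 * n) ≤ c0 := div_le_self hc0p.le (by linarith)
  intro z hz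
  refine ⟨(mul_le_mul_of_nonneg_right hcc hXp.le).trans (hu z (by linarith)), ?_⟩
  have hball : ∀ y : Euc n, ‖y - z‖ ≤ 1/4 → ‖y‖ ≤ 1/2 := fun y hy => by
    have : ‖y‖ ≤ ‖y - z‖ + ‖z‖ := by simpa using norm_add_le (y - z) z
    linarith
  have hb := barrier_decay hn h.c2v z (ρ := 1/4) (k := c0 * X) (S := √(C1 * Hh u v 0 1))
    (by norm_num) (by positivity) (Real.sqrt_nonneg _) (fun y hy => by
      refine (h.swap.u_le_sqrt y (by norm_num : (0:ℝ) ≤ 1/2)).trans (Real.sqrt_le_sqrt ?_)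
      rw [Hh_swap]
      exact (H1 u v h y (hball y hy)).1) (fun y hy _ => by
      rw [h.ev, mul_comm]
      have := hu y (hball y hy)
      have := h.pv y
      gcongr)
  refine hb.trans ?_
  have e : -(c0 * X * (1/4) / (4 * n)) = -(c0 / (16 * n) * X) := by field_simp; ring
  rw [e, Real.sqrt_mul (by linarith)]
  have hsq : √C1 ≤ C1 := by
    rw [Real.sqrt_le_left (by linarith)]; nlinarith
  have := Real.sqrt_nonneg (Hh u v 0 1)
  have : 3 * (√C1 * √(Hh u v 0 1)) ≤ 4 * C1 * √(Hh u v 0 1) := by nlinarith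
  gcongr

/-- At a centre of low frequency the smaller component is universally bounded. -/
lemma min_le_of_lowfreq (hn : 1 ≤ n) : ∃ ε : ℝ, 0 < ε ∧ ∃ C : ℝ, 1 ≤ C ∧
    ∀ u v : Euc n → ℝ, Sol u v → Nn u v 0 1 ≤ ε → min (u 0) (v 0) ≤ C := by
  obtain ⟨ε, hε, C, hC, c, hc, H⟩ := dominant_region hn
  refine ⟨ε, hε, C + C * (2 / c ^ 2), by have : 0 ≤ C * (2 / c ^ 2) := by positivity
                                         linarith, ?_⟩
  have key : ∀ u v : Euc n → ℝ, Sol u v → Nn u v 0 1 ≤ ε → Ex 0 1 v ≤ Ex 0 1 u →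
      min (u 0) (v 0) ≤ C + C * (2 / c ^ 2) := by
    intro u v h hN hdom
    have hpos : 0 ≤ C * (2 / c ^ 2) := by positivity
    rcases le_total C (Hh u v 0 1) with hH | hH
    · refine (min_le_right _ _).trans (((H u v h hN hH hdom 0 (by norm_num)).2).trans ?_)
      set X := Hh u v 0 1 ^ (2/5 : ℝ) with hX
      have hH1 : 1 ≤ Hh u v 0 1 := hC.trans hH
      have hX1 : 1 ≤ X := Real.one_le_rpow hH1 (by norm_num)
      have hs : √(Hh u v 0 1) ≤ X ^ 2 := by
        rw [Real.sqrt_eq_rpow, hX, ← Real.rpow_natCast, ← Real.rpow_mul (by linarith)]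
        exact Real.rpow_le_rpow_of_exponent_le hH1 (by norm_num)
      have he : X ^ 2 * Real.exp (-(c * X)) ≤ 2 / c ^ 2 := by
        rw [Real.exp_neg, ← div_eq_mul_inv, div_le_div_iff₀ (Real.exp_pos _) (by positivity)]
        have := Real.quadratic_le_exp_of_nonneg (show 0 ≤ c * X by positivity)
        nlinarith [show 0 ≤ c * X by positivity]
      calc C * √(Hh u v 0 1) * Real.exp (-(c * X)) ≤ C * (X ^ 2) * Real.exp (-(c * X)) := by gcongr
        _ = C * (X ^ 2 * Real.exp (-(c * X))) := by ring
        _ ≤ C * (2 / c ^ 2) := by gcongr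
        _ ≤ _ := by linarith
    · refine (min_le_left _ _).trans ((h.u_le_sqrt 0 zero_le_one).trans ?_)
      have : √(Hh u v 0 1) ≤ √C := Real.sqrt_le_sqrt hH
      have : √C ≤ C := by rw [Real.sqrt_le_left (by linarith)]; nlinarith
      linarith
  intro u v h hN
  rcases le_total (Ex 0 1 v) (Ex 0 1 u) with hd | hd
  · exact key u v h hN hd
  · rw [min_comm]; exact key v u h.swap (by rwa [Nn_swap]) hd

lemma Sol.continuous_N {u v : Euc n → ℝ} (h : Sol u v) (x : Euc n) : Continuous (Nn u v x) := by
  unfold Nn Dd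
  refine Continuous.div ?_ (continuous_Ex_r h.pgH x) (fun r => (h.H_pos x r).ne')
  exact (continuous_pow 2).mul (continuous_Ex_r h.p1e.pg x)

/-- The minimum of the two components is of lower order than `√H`. -/
lemma min_bound (hn : 1 ≤ n) : ∃ ε : ℝ, 0 < ε ∧ ∃ C : ℝ, 1 ≤ C ∧
    ∀ u v : Euc n → ℝ, Sol u v → (min (u 0) (v 0)) ^ (2 + 2 * ε) ≤ C * Hh u v 0 1 := by
  obtain ⟨ε, hε, C, hC, H⟩ := min_le_of_lowfreq hn
  refine ⟨ε, hε, C ^ (2 * ε), Real.one_le_rpow hC (by positivity), fun u v h => ?_⟩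
  set m := min (u 0) (v 0) with hm
  have hmp : 0 < m := lt_min (h.pu 0) (h.pv 0)
  have hmH : ∀ r, 0 ≤ r → m ^ 2 ≤ Hh u v 0 r := fun r hr => by
    have h1 := h.H_ge 0 hr
    have h2 : m ^ 2 ≤ u 0 ^ 2 := by have := min_le_left (u 0) (v 0); gcongr
    nlinarith [sq_nonneg (v 0)]
  rw [Real.rpow_add hmp, Real.rpow_two]
  by_cases hN : Nn u v 0 1 ≤ ε
  · have h1 : m ^ (2 * ε) ≤ C ^ (2 * ε) := Real.rpow_le_rpow hmp.le (H u v h hN) (by positivity)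
    have h2 := hmH 1 zero_le_one
    have h3 : 0 < m ^ (2 * ε) := by positivity
    rw [mul_comm]
    exact mul_le_mul h1 h2 (by positivity) (by positivity)
  · push Not at hN
    obtain ⟨r, hr, hNr⟩ : ∃ r ∈ Icc (0:ℝ) 1, Nn u v 0 r = ε :=
      intermediate_value_Icc zero_le_one (h.continuous_N 0).continuousOn
        ⟨by simp [Nn, Dd, hε.le], hN.le⟩
    have hr0 : 0 < r := by
      rcases hr.1.lt_or_eq with h1 | h1
      · exact h1
      · rw [← h1] at hNr; simp [Nn, Dd] at hNr; linarith
    have h1 := H _ _ (h.sc 0 hr0) (by rw [h.Nn_sc 0 hr0]; simp [hNr])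
    simp only [sc_apply, smul_zero, add_zero] at h1
    rw [← mul_min_of_nonneg _ _ hr0.le, ← hm] at h1
    have h2 := h.H_lower 0 hr0 hr.2
    rw [hNr] at h2
    have h3 := hmH r hr0.le
    have h4 : m ≤ C * (1 / r) := by rw [mul_one_div, le_div_iff₀ hr0]; linarith
    have h5 : m ^ (2 * ε) ≤ C ^ (2 * ε) * (1 / r) ^ (2 * ε) := by
      rw [← Real.mul_rpow (by positivity) (by positivity)]
      exact Real.rpow_le_rpow hmp.le h4 (by positivity)
    calc m ^ 2 * m ^ (2 * ε) ≤ m ^ 2 * (C ^ (2 * ε) * (1 / r) ^ (2 * ε)) := by gcongr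
      _ = C ^ (2 * ε) * ((1 / r) ^ (2 * ε) * m ^ 2) := by ring
      _ ≤ C ^ (2 * ε) * ((1 / r) ^ (2 * ε) * Hh u v 0 r) := by gcongr
      _ ≤ C ^ (2 * ε) * Hh u v 0 1 := by gcongr

end MinBound

/-! ### Flatness at centred scales -/

section Moments
variable {n : ℕ}

lemma Ex01 (f : Euc n → ℝ) : Ex 0 1 f = ∫ y, f y ∂(gam n) := by
  unfold Ex; simp

/-- The first Gaussian moment vector `E[f(y) y]`. -/
noncomputable def av (f : Euc n → ℝ) : Euc n := WithLp.toLp 2 fun i => ∫ y, y i * f y ∂(gam n)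

lemma av_apply (f : Euc n → ℝ) (i : Fin n) : av f i = Ex 0 1 (fun y => y i * f y) := by
  rw [Ex01]; rfl

lemma inner_eq_sum (a b : Euc n) : ⟪a, b⟫ = ∑ i, a i * b i := by
  rw [PiLp.inner_apply]
  exact Finset.sum_congr rfl fun i _ => by simp [mul_comm]

lemma mom_one (i : Fin n) : Ex 0 1 (fun y : Euc n => y i) = 0 := by
  have := gauss_ibp (P1.const (n := n) 1) i
  simp only [pd_const, integral_zero, mul_one] at this
  rw [Ex01, ← this]

lemma mom_inner (b : Euc n) (f : Euc n → ℝ) (hf : PG f) :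
    Ex 0 1 (fun y => ⟪b, y⟫ * f y) = ⟪av f, b⟫ := by
  have e : (fun y : Euc n => ⟪b, y⟫ * f y) = fun y => ∑ i, b i * (y i * f y) := by
    funext y; rw [inner_eq_sum, Finset.sum_mul]
    exact Finset.sum_congr rfl fun i _ => by ring
  rw [e, Ex_sum (fun i => ((PG.coord i).mul hf).cmul _), inner_eq_sum]
  exact Finset.sum_congr rfl fun i _ => by rw [Ex_cmul, av_apply, mul_comm]

lemma av_inner (a : Euc n) : av (fun y => ⟪a, y⟫) = a := by
  ext i
  have := gauss_ibp (P1.inner a) i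
  simp only [pd_inner] at this
  rw [av_apply, Ex01, ← this]
  simp

lemma Ex_inner (a : Euc n) : Ex 0 1 (fun y => ⟪a, y⟫) = 0 := by
  have h := mom_inner a (fun _ => 1) (PG.const 1)
  simp only [mul_one] at h
  rw [h]
  have : av (fun _ : Euc n => (1:ℝ)) = 0 := by
    ext i; rw [av_apply]; simp only [mul_one]; rw [mom_one]; rfl
  rw [this, inner_zero_left]

lemma Ex_inner_sq (a : Euc n) : Ex 0 1 (fun y => ⟪a, y⟫ ^ 2) = ‖a‖ ^ 2 := by
  have h := mom_inner a (fun y => ⟪a, y⟫) (PG.inner a)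
  rw [av_inner, real_inner_self_eq_norm_sq] at h
  rw [← h]
  congr 1; funext y; ring

lemma Ex_inner_sq' (a z : Euc n) (s : ℝ) :
    Ex z s (fun y => ⟪a, y⟫ ^ 2) = ⟪a, z⟫ ^ 2 + s ^ 2 * ‖a‖ ^ 2 := by
  rw [Ex_std]
  have e : (fun y : Euc n => ⟪a, z + s • y⟫ ^ 2) =
      fun y => (⟪a, z⟫ ^ 2 + (2 * s * ⟪a, z⟫) * ⟪a, y⟫) + s ^ 2 * ⟪a, y⟫ ^ 2 := by
    funext y; rw [inner_add_right, inner_smul_right]; ring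
  rw [e, Ex_add ((PG.const _).add ((PG.inner a).cmul _)) (((PG.inner a).pow 2).cmul _),
    Ex_add (PG.const _) ((PG.inner a).cmul _), Ex_const, Ex_cmul, Ex_cmul, Ex_inner, Ex_inner_sq]
  ring

lemma proj_eq {f : Euc n → ℝ} (hf : PG f) (b : Euc n) :
    Ex 0 1 (fun y => (f y - ⟪b, y⟫) ^ 2) =
      Ex 0 1 (fun y => f y ^ 2) - 2 * ⟪av f, b⟫ + ‖b‖ ^ 2 := by
  have e : (fun y : Euc n => (f y - ⟪b, y⟫) ^ 2) =
      fun y => (f y ^ 2 - 2 * (⟪b, y⟫ * f y)) + ⟪b, y⟫ ^ 2 := by funext y; ring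
  rw [e, Ex_add ((hf.pow 2).sub (((PG.inner b).mul hf).cmul 2)) ((PG.inner b).pow 2),
    Ex_sub (hf.pow 2) (((PG.inner b).mul hf).cmul 2), Ex_cmul, mom_inner b f hf, Ex_inner_sq]

lemma proj_le {f : Euc n → ℝ} (hf : PG f) (b : Euc n) :
    Ex 0 1 (fun y => (f y - ⟪av f, y⟫) ^ 2) ≤ Ex 0 1 (fun y => (f y - ⟪b, y⟫) ^ 2) := by
  rw [proj_eq hf, proj_eq hf, real_inner_self_eq_norm_sq]
  have := norm_sub_sq_real (av f) b
  nlinarith [sq_nonneg ‖av f - b‖]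

/-- Quantitative stability of the Gaussian Poincaré inequality: a small deficit forces closeness to
an affine function. -/
lemma stab {F : Euc n → ℝ} (hF : P1 F) : ∃ b : Euc n,
    Ex 0 1 (fun y => (F y - ⟪b, y⟫) ^ 2) ≤
      8 * (Ex 0 1 (gsq F) - Ex 0 1 (fun y => F y ^ 2)) + 9 * Ex 0 1 F ^ 2 := by
  set b : Euc n := WithLp.toLp 2 fun i => ∫ y, pd i F y ∂(gam n) with hb
  refine ⟨b, ?_⟩
  have h1 := gauss_gap hF
  have hG : P1 (fun y => F y - ⟪b, y⟫) := hF.sub (P1.inner b)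
  have h2 := gauss_poincare hG
  have e1 : ∑ i, ∫ y, pd i (fun y => F y - ⟪b, y⟫) y ^ 2 ∂(gam n) =
      ∑ i, (∫ y, pd i F y ^ 2 ∂(gam n) - (∫ y, pd i F y ∂(gam n)) ^ 2) := by
    refine Finset.sum_congr rfl fun i _ => ?_
    have e2 : (fun y => pd i (fun y => F y - ⟪b, y⟫) y ^ 2) =
        fun y => (pd i F y ^ 2 - (2 * b i) * pd i F y) + b i ^ 2 := by
      funext y; rw [pd_sub i (hF.diff y) ((P1.inner b).diff y), pd_inner]; ring
    have e3 : b i = ∫ y, pd i F y ∂(gam n) := rfl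
    rw [e2, ← Ex01, Ex_add (((hF.dpg i).pow 2).sub ((hF.dpg i).cmul _)) (PG.const _),
      Ex_sub ((hF.dpg i).pow 2) ((hF.dpg i).cmul _), Ex_cmul, Ex_const, ← Ex01, ← Ex01, e3, ← Ex01]
    ring
  have e4 : ∑ i, ∫ y, pd i F y ^ 2 ∂(gam n) = Ex 0 1 (gsq F) := by
    have := Ex_sum (s := Finset.univ) (fun i => (hF.dpg i).pow 2) (0 : Euc n) 1
    simp only [← Ex01]; exact this.symm
  rw [e1] at h2
  rw [e4] at h1
  simp only [← Ex01] at h1 h2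
  rw [Ex_sub hF.pg (PG.inner b), Ex_inner, sub_zero] at h2
  nlinarith

end Moments

section Trunc
variable {n : ℕ}

lemma hasDerivAt_posSq (t : ℝ) : HasDerivAt (fun t : ℝ => (max t 0) ^ 2) (2 * max t 0) t := by
  rcases lt_trichotomy t 0 with h | h | h
  · have : (fun t : ℝ => (max t 0) ^ 2) =ᶠ[𝓝 t] fun _ => 0 := by
      filter_upwards [Iio_mem_nhds h] with s hs
      rw [max_eq_right (le_of_lt hs)]; norm_num
    rw [max_eq_right h.le, mul_zero]
    exact (hasDerivAt_const t 0).congr_of_eventuallyEq this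
  · subst h
    have hO : (fun t : ℝ => (max t 0) ^ 2) =O[𝓝 0] fun x => ‖x - 0‖ ^ 2 := by
      refine Asymptotics.IsBigO.of_bound 1 (Eventually.of_forall fun s => ?_)
      rcases le_total s 0 with hs | hs
      · rw [max_eq_right hs]; simp; positivity
      · rw [max_eq_left hs]; simp
    have := Asymptotics.IsBigO.hasFDerivAt (𝕜 := ℝ) hO (by norm_num)
    have h2 := this.hasDerivAt
    simpa using h2
  · have : (fun t : ℝ => (max t 0) ^ 2) =ᶠ[𝓝 t] fun t => t ^ 2 := by
      filter_upwards [Ioi_mem_nhds h] with s hs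
      rw [max_eq_left (le_of_lt hs)]
    rw [max_eq_left h.le]
    refine HasDerivAt.congr_of_eventuallyEq ?_ this
    simpa using hasDerivAt_pow 2 t

lemma contDiff_posSq : ContDiff ℝ 1 (fun t : ℝ => (max t 0) ^ 2) := by
  rw [contDiff_one_iff_deriv]
  refine ⟨fun t => (hasDerivAt_posSq t).differentiableAt, ?_⟩
  have : deriv (fun t : ℝ => (max t 0) ^ 2) = fun t => 2 * max t 0 :=
    funext fun t => (hasDerivAt_posSq t).deriv
  rw [this]; fun_prop

/-- A `C¹` truncation of `f` below the level `c`: it vanishes where `f ≤ c`, differs from `f` by at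
most `2c`, and has derivative at most one in `f`. -/
noncomputable def tr (f c : Euc n → ℝ) (y : Euc n) : ℝ := (max (f y - c y) 0) ^ 2 / f y

/-- The fraction of `f` above the level `c`. -/
noncomputable def qf (f c : Euc n → ℝ) (y : Euc n) : ℝ := max (f y - c y) 0 / f y

lemma qf_nonneg {f c : Euc n → ℝ} (hf : ∀ y, 0 < f y) (y : Euc n) : 0 ≤ qf f c y :=
  div_nonneg (le_max_right _ _) (hf y).le

lemma qf_le_one {f c : Euc n → ℝ} (hf : ∀ y, 0 < f y) (hc : ∀ y, 0 ≤ c y) (y : Euc n) :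
    qf f c y ≤ 1 := by
  unfold qf
  rw [div_le_one (hf y)]
  exact max_le (by linarith [hc y]) (hf y).le

lemma pd_tr {f c : Euc n → ℝ} (hf : P1 f) (hc : P1 c) (h0 : ∀ y, 0 < f y) (i : Fin n) (y : Euc n) :
    pd i (tr f c) y = qf f c y * (2 - qf f c y) * pd i f y - 2 * qf f c y * pd i c y := by
  have hd : HasFDerivAt (fun y => f y - c y) (fderiv ℝ f y - fderiv ℝ c y) y :=
    (hf.diff y).hasFDerivAt.sub (hc.diff y).hasFDerivAt
  have h1 := (hasDerivAt_posSq (f y - c y)).comp_hasFDerivAt (f := fun y => f y - c y) y hd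
  have ht : Differentiable ℝ (tr f c) := by
    have : ContDiff ℝ 1 (tr f c) := by
      unfold tr
      exact (contDiff_posSq.comp (hf.cd.sub hc.cd)).div hf.cd fun y => (h0 y).ne'
    exact this.differentiable (by norm_num)
  have e : (fun y => f y * tr f c y) = (fun t : ℝ => (max t 0) ^ 2) ∘ fun y => f y - c y := by
    funext y; have := (h0 y).ne'; simp only [tr, Function.comp]; field_simp
  have e1 := pd_mul i (hf.diff y) (ht y)
  have e2 : pd i (fun y => f y * tr f c y) y = 2 * max (f y - c y) 0 * (pd i f y - pd i c y) := by
    rw [e]; unfold pd; rw [h1.fderiv]; rfl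
  rw [e2] at e1
  have h0' := (h0 y).ne'
  have e3 : pd i (tr f c) y =
      (2 * max (f y - c y) 0 * (pd i f y - pd i c y) - tr f c y * pd i f y) / f y := by
    rw [e1]; field_simp; ring
  rw [e3]
  unfold tr qf
  field_simp
  ring

lemma P1.tr {f c : Euc n → ℝ} (hf : P1 f) (hc : P1 c) (h0 : ∀ y, 0 < f y) (hc0 : ∀ y, 0 ≤ c y) :
    P1 (tr f c) := by
  have hq : ∀ y, 0 ≤ qf f c y ∧ qf f c y ≤ 1 := fun y => ⟨qf_nonneg h0 y, qf_le_one h0 hc0 y⟩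
  have hqc : Continuous (qf f c) := by
    unfold qf
    exact ((hf.pg.continuous.sub hc.pg.continuous).max continuous_const).div hf.pg.continuous
      (fun y => (h0 y).ne')
  have hqp : PG (qf f c) := PG.of_le (PG.const 1) hqc fun y => by
    rw [abs_of_nonneg (hq y).1]; exact (hq y).2
  refine ⟨?_, ?_, fun i => ?_⟩
  · unfold PhaseSep.tr
    exact (contDiff_posSq.comp (hf.cd.sub hc.cd)).div hf.cd fun y => (h0 y).ne'
  · have e : PhaseSep.tr f c = fun y => qf f c y * (qf f c y * f y) := by
      funext y; unfold PhaseSep.tr qf; have := (h0 y).ne'; field_simp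
    rw [e]; exact hqp.mul (hqp.mul hf.pg)
  · have e : pd i (PhaseSep.tr f c) = fun y =>
        qf f c y * (2 - qf f c y) * pd i f y - 2 * qf f c y * pd i c y :=
      funext fun y => pd_tr hf hc h0 i y
    rw [e]
    exact ((hqp.mul ((PG.const 2).sub hqp)).mul (hf.dpg i)).sub ((hqp.cmul 2).mul (hc.dpg i))

lemma tr_bounds {f c : Euc n → ℝ} (h0 : ∀ y, 0 < f y) (hc0 : ∀ y, 0 ≤ c y) (y : Euc n) :
    0 ≤ tr f c y ∧ tr f c y ≤ f y ∧ f y - 2 * c y ≤ tr f c y := by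
  have hf := h0 y
  have hc := hc0 y
  unfold tr
  refine ⟨by positivity, ?_, ?_⟩
  · rw [div_le_iff₀ hf]
    rcases le_total (f y - c y) 0 with h | h
    · rw [max_eq_right h]; nlinarith
    · rw [max_eq_left h]; nlinarith
  · rw [le_div_iff₀ hf]
    rcases le_total (f y - c y) 0 with h | h
    · rw [max_eq_right h]; nlinarith
    · rw [max_eq_left h]; nlinarith

lemma tr_eq_zero {f c : Euc n → ℝ} {y : Euc n} (h : f y ≤ c y) : tr f c y = 0 ∧ qf f c y = 0 := by
  unfold tr qf
  rw [max_eq_right (by linarith)]; simp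

end Trunc

section Flat
variable {n : ℕ}

lemma P1.pow {f : Euc n → ℝ} (hf : P1 f) (m : ℕ) : P1 (fun x => f x ^ m) := by
  induction m with
  | zero => simpa using P1.const (n := n) 1
  | succ k ih => simpa only [pow_succ] using ih.mul hf

/-- A polynomial weight. -/
noncomputable def wt (y : Euc n) : ℝ := (2 + ‖y‖ ^ 2) ^ (n + 4)

lemma wt_ge (y : Euc n) : 1 ≤ wt y := one_le_pow₀ (by nlinarith [sq_nonneg ‖y‖])

lemma P1.wt : P1 (wt (n := n)) := by
  have e : PhaseSep.wt (n := n) = fun y => (2 + ∑ i, y i ^ 2) ^ (n + 4) := by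
    funext y; unfold PhaseSep.wt; rw [norm_sq_eq]
  rw [e]
  exact P1.pow ((P1.const 2).add (P1.sum fun i => (P1.coord i).sq)) (n + 4)

lemma trunc_point_grad {p r d q1 q2 η : ℝ} (h1 : 0 ≤ q1) (h1' : q1 ≤ 1) (h2 : 0 ≤ q2) (h2' : q2 ≤ 1)
    (hq : q1 = 0 ∨ q2 = 0) (hη : 0 < η) (hη1 : η ≤ 1) :
    (q1 * (2 - q1) * p - 2 * q1 * d - (q2 * (2 - q2) * r - 2 * q2 * d)) ^ 2 ≤
      (1 + η) * (p ^ 2 + r ^ 2) + 8 / η * d ^ 2 := by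
  have key : ∀ q p r : ℝ, 0 ≤ q → q ≤ 1 → (q * (2 - q) * p - 2 * q * d) ^ 2 ≤
      (1 + η) * (p ^ 2 + r ^ 2) + 8 / η * d ^ 2 := by
    intro q p r hq0 hq1
    set α := q * (2 - q) with hα
    have a0 : 0 ≤ α := mul_nonneg hq0 (by linarith)
    have a1 : α ≤ 1 := by nlinarith [sq_nonneg (1 - q)]
    -- `(αp - 2qd)² ≤ (1+η)(αp)² + (1 + 1/η)(2qd)²`
    have y : (α * p - 2 * q * d) ^ 2 ≤ (1 + η) * (α * p) ^ 2 + (1 + 1 / η) * (2 * q * d) ^ 2 := by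
      have e : (1 + η) * (α * p) ^ 2 + (1 + 1 / η) * (2 * q * d) ^ 2 - (α * p - 2 * q * d) ^ 2 =
          (η * (α * p) + 2 * q * d) ^ 2 / η := by field_simp; ring
      have : 0 ≤ (η * (α * p) + 2 * q * d) ^ 2 / η := by positivity
      linarith
    have b1 : (α * p) ^ 2 ≤ p ^ 2 + r ^ 2 := by
      have : α ^ 2 ≤ 1 := by nlinarith
      nlinarith [sq_nonneg p, sq_nonneg r]
    have b2 : (1 + 1 / η) * (2 * q * d) ^ 2 ≤ 8 / η * d ^ 2 := by
      have c1 : 1 + 1 / η ≤ 2 / η := by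
        rw [← sub_nonneg]
        have : 2 / η - (1 + 1 / η) = (1 - η) / η := by field_simp; ring
        rw [this]; exact div_nonneg (by linarith) hη.le
      have c2 : (2 * q * d) ^ 2 ≤ 4 * d ^ 2 := by
        have : q ^ 2 ≤ 1 := by nlinarith
        nlinarith [sq_nonneg d]
      calc (1 + 1 / η) * (2 * q * d) ^ 2 ≤ 2 / η * (4 * d ^ 2) := by gcongr
        _ = _ := by ring
    have : (1 + η) * (α * p) ^ 2 ≤ (1 + η) * (p ^ 2 + r ^ 2) := by gcongr
    linarith
  rcases hq with h | h
  · have := key q2 r p h2 h2'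
    subst h
    have e : (0 * (2 - 0) * p - 2 * 0 * d - (q2 * (2 - q2) * r - 2 * q2 * d)) ^ 2 =
      (q2 * (2 - q2) * r - 2 * q2 * d) ^ 2 := by ring
    rw [e, add_comm (p ^ 2)]; exact this
  · have := key q1 p r h1 h1'
    subst h
    have e : (q1 * (2 - q1) * p - 2 * q1 * d - (0 * (2 - 0) * r - 2 * 0 * d)) ^ 2 =
      (q1 * (2 - q1) * p - 2 * q1 * d) ^ 2 := by ring
    rw [e]; exact this

lemma P1.pg_gsq {f : Euc n → ℝ} (hf : P1 f) : PG (PhaseSep.gsq f) := PG.sum fun i => (hf.dpg i).pow 2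

/-- The difference of the truncations of the two components below the common level `c`. -/
noncomputable def trF (u v c : Euc n → ℝ) (y : Euc n) : ℝ := tr u c y - tr v c y

section
variable {u v c : Euc n → ℝ} {η : ℝ}

lemma P1.trF (h : Sol u v) (hcP : P1 c) (hc0 : ∀ y, 0 ≤ c y) : P1 (trF u v c) :=
  (h.p1u.tr hcP h.pu hc0).sub (h.p1v.tr hcP h.pv hc0)

/-- The truncated difference has energy at most `H` up to the error of the truncation; this uses
that the frequency is at most one. -/
lemma trF_energy (h : Sol u v) (hcP : P1 c) (hc0 : ∀ y, 0 ≤ c y) (hor : ∀ y, u y ≤ c y ∨ v y ≤ c y)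
    (hη : 0 < η) (hη1 : η ≤ 1) :
    Ex 0 1 (gsq (trF u v c)) ≤ (1 + η) * Hh u v 0 1 + 8 / η * Ex 0 1 (gsq c) := by
  have pt : ∀ y, gsq (trF u v c) y ≤ (1 + η) * (gsq u y + gsq v y) + 8 / η * gsq c y := by
    intro y
    unfold gsq
    rw [← Finset.sum_add_distrib, Finset.mul_sum, Finset.mul_sum, ← Finset.sum_add_distrib]
    refine Finset.sum_le_sum fun i _ => ?_
    have e : pd i (trF u v c) y = _ :=
      pd_sub i ((h.p1u.tr hcP h.pu hc0).diff y) ((h.p1v.tr hcP h.pv hc0).diff y)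
    rw [e, pd_tr h.p1u hcP h.pu, pd_tr h.p1v hcP h.pv]
    refine trunc_point_grad (qf_nonneg h.pu y) (qf_le_one h.pu hc0 y) (qf_nonneg h.pv y)
      (qf_le_one h.pv hc0 y) ?_ hη hη1
    rcases hor y with h1 | h1
    · exact Or.inl (tr_eq_zero h1).2
    · exact Or.inr (tr_eq_zero h1).2
  have p1 := (h.p1gu.pg.add h.p1gv.pg).cmul (1 + η)
  have p2 := hcP.pg_gsq.cmul (8 / η)
  have m := Ex_mono (P1.trF h hcP hc0).pg_gsq (p1.add p2) pt 0 1
  rw [Ex_add p1 p2, Ex_cmul, Ex_cmul] at m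
  have m2 : Ex 0 1 (fun y => gsq u y + gsq v y) ≤ Hh u v 0 1 := by
    have e1 : Ex 0 1 (fun y => gsq u y + gsq v y) ≤ Ex 0 1 (edens u v) :=
      Ex_mono (h.p1gu.pg.add h.p1gv.pg) h.p1e.pg (fun y => by
        unfold edens; have : 0 ≤ u y ^ 2 * v y ^ 2 := by positivity
        linarith) 0 1
    have e2 := h.D_eq 0 1
    have e3 := h.N_le_one 0 one_pos
    have e4 := h.H_pos 0 1
    unfold Dd at e2
    nlinarith
  refine m.trans ?_
  have : (1 + η) * Ex 0 1 (fun y => gsq u y + gsq v y) ≤ (1 + η) * Hh u v 0 1 := by gcongr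
  linarith

lemma trunc_young (hη : 0 < η) (c t : ℝ) : 4 * c * t ≤ η * t ^ 2 + 4 / η * c ^ 2 := by
  have e : η * t ^ 2 + 4 / η * c ^ 2 - 4 * c * t = (η * t - 2 * c) ^ 2 / η := by field_simp; ring
  have : 0 ≤ (η * t - 2 * c) ^ 2 / η := by positivity
  linarith

lemma trF_sq (h : Sol u v) (hcP : P1 c) (hc0 : ∀ y, 0 ≤ c y) (hor : ∀ y, u y ≤ c y ∨ v y ≤ c y)
    (hη : 0 < η) :
    (1 - η) * Hh u v 0 1 - 8 / η * Ex 0 1 (fun y => c y ^ 2) ≤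
      Ex 0 1 (fun y => trF u v c y ^ 2) := by
  have pt : ∀ y, (1 - η) * (u y ^ 2 + v y ^ 2) - 8 / η * c y ^ 2 ≤ trF u v c y ^ 2 := by
    intro y
    obtain ⟨a1, a2, a3⟩ := tr_bounds (c := c) h.pu hc0 y
    obtain ⟨b1, b2, b3⟩ := tr_bounds (c := c) h.pv hc0 y
    have hz : tr u c y * tr v c y = 0 := by
      rcases hor y with h1 | h1
      · rw [(tr_eq_zero h1).1, zero_mul]
      · rw [(tr_eq_zero h1).1, mul_zero]
    have s : ∀ t c T : ℝ, 0 ≤ t → 0 ≤ c → 0 ≤ T → t - 2 * c ≤ T → t ^ 2 - 4 * c * t ≤ T ^ 2 := by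
      intro t c T ht hc hT h1
      rcases le_total (t - 2 * c) 0 with h2 | h2
      · nlinarith [sq_nonneg T]
      · nlinarith
    have s1 := s _ _ _ (h.pu y).le (hc0 y) a1 a3
    have s2 := s _ _ _ (h.pv y).le (hc0 y) b1 b3
    have y1 := trunc_young hη (c y) (u y)
    have y2 := trunc_young hη (c y) (v y)
    have e : trF u v c y ^ 2 = tr u c y ^ 2 + tr v c y ^ 2 - 2 * (tr u c y * tr v c y) := by
      unfold trF; ring
    have e8 : 8 / η * c y ^ 2 = 2 * (4 / η * c y ^ 2) := by ring
    rw [e, hz, e8]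
    linarith
  have p1 := h.pgH.cmul (1 - η)
  have p2 := (hcP.pg.pow 2).cmul (8 / η)
  have m := Ex_mono (p1.sub p2) ((P1.trF h hcP hc0).pg.pow 2) pt 0 1
  rw [Ex_sub p1 p2, Ex_cmul, Ex_cmul] at m
  exact m

lemma w_sq (h : Sol u v) (hcP : P1 c) (hc0 : ∀ y, 0 ≤ c y) (hor : ∀ y, u y ≤ c y ∨ v y ≤ c y)
    (hη : 0 < η) :
    (1 - η) * Hh u v 0 1 - 8 / η * Ex 0 1 (fun y => c y ^ 2) ≤
      Ex 0 1 (fun y => (u y - v y) ^ 2) := by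
  have pt : ∀ y, (1 - η) * (u y ^ 2 + v y ^ 2) - 8 / η * c y ^ 2 ≤ (u y - v y) ^ 2 := by
    intro y
    have y1 := trunc_young hη (c y) (u y)
    have y2 := trunc_young hη (c y) (v y)
    have hp := h.pu y
    have hq := h.pv y
    have hcy := hc0 y
    have : u y * v y ≤ c y * (u y + v y) := by
      rcases hor y with h1 | h1 <;> nlinarith [mul_nonneg hcy hp.le, mul_nonneg hcy hq.le]
    have e8 : 8 / η * c y ^ 2 = 2 * (4 / η * c y ^ 2) := by ring
    rw [e8]
    nlinarith [mul_nonneg hcy hp.le, mul_nonneg hcy hq.le]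
  have p1 := h.pgH.cmul (1 - η)
  have p2 := (hcP.pg.pow 2).cmul (8 / η)
  have m := Ex_mono (p1.sub p2) ((h.pgu.sub h.pgv).pow 2) pt 0 1
  rw [Ex_sub p1 p2, Ex_cmul, Ex_cmul] at m
  exact m

/-- Truncation changes `u - v` by at most twice the level. -/
lemma trF_near (h : Sol u v) (hcP : P1 c) (hc0 : ∀ y, 0 ≤ c y) :
    Ex 0 1 (fun y => (trF u v c y - (u y - v y)) ^ 2) ≤ 4 * Ex 0 1 (fun y => c y ^ 2) := by
  rw [← Ex_cmul]
  refine Ex_mono (((P1.trF h hcP hc0).pg.sub (h.pgu.sub h.pgv)).pow 2) ((hcP.pg.pow 2).cmul 4)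
    (fun y => ?_) 0 1
  obtain ⟨a1, a2, a3⟩ := tr_bounds (c := c) h.pu hc0 y
  obtain ⟨b1, b2, b3⟩ := tr_bounds (c := c) h.pv hc0 y
  have hl : -(2 * c y) ≤ trF u v c y - (u y - v y) := by unfold trF; linarith
  have hr : trF u v c y - (u y - v y) ≤ 2 * c y := by unfold trF; linarith
  have := sq_le_sq' hl hr
  linarith
end

/-- Flatness from a weighted bound on `min (u, v)`. -/
lemma flat_aux : ∃ C : ℝ, 1 ≤ C ∧ ∀ (u v : Euc n → ℝ) (A η : ℝ), Sol u v → Ex 0 1 u = Ex 0 1 v →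
    0 < A → 0 < η → η ≤ 1 → (∀ y, min (u y) (v y) ≤ A * wt y) →
    Ex 0 1 (fun y => (u y - v y - ⟪av (fun y => u y - v y), y⟫) ^ 2) ≤
      C * (η * Hh u v 0 1 + A ^ 2 / η) ∧
    Hh u v 0 1 - C * (η * Hh u v 0 1 + A ^ 2 / η) ≤ Ex 0 1 (fun y => (u y - v y) ^ 2) ∧
    Ex 0 1 (fun y : Euc n => (A * wt y) ^ 2) ≤ C * (A ^ 2 / η) := by
  obtain ⟨W, hW⟩ : ∃ W, W = Ex (0 : Euc n) 1 (fun y => wt y ^ 2) := ⟨_, rfl⟩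
  obtain ⟨G, hG⟩ : ∃ G, G = Ex (0 : Euc n) 1 (gsq wt) := ⟨_, rfl⟩
  have hWp : 0 ≤ W := hW ▸ Ex_nonneg (fun y => sq_nonneg _) 0 1
  have hGp : 0 ≤ G := hG ▸ Ex_nonneg (gsq_nonneg _) 0 1
  refine ⟨1000 * (1 + W + G), by nlinarith, fun u v A η h hE hA hη hη1 hmin => ?_⟩
  obtain ⟨c, hc⟩ : ∃ c : Euc n → ℝ, c = fun y => A * wt y := ⟨_, rfl⟩
  have hcP : P1 c := hc ▸ P1.wt.cmul A
  have hc0 : ∀ y, 0 ≤ c y := fun y => by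
    rw [hc]; exact mul_nonneg hA.le (by linarith [wt_ge y])
  have hc2 : Ex 0 1 (fun y => c y ^ 2) = A ^ 2 * W := by
    rw [hW, ← Ex_cmul]; congr 1; funext y; simp only [hc]; ring
  have hcg : Ex 0 1 (gsq c) = A ^ 2 * G := by
    rw [hG, ← Ex_cmul]; congr 1; funext y
    unfold gsq
    rw [Finset.mul_sum]
    refine Finset.sum_congr rfl fun i _ => ?_
    rw [hc, pd_cmul i A (P1.wt.diff y)]; ring
  have hor : ∀ y, u y ≤ c y ∨ v y ≤ c y := fun y => by
    rw [hc]; exact min_le_iff.1 (hmin y)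
  obtain ⟨H, hH⟩ : ∃ H, H = Hh u v 0 1 := ⟨_, rfl⟩
  have hHp : 0 < H := hH ▸ h.H_pos 0 1
  obtain ⟨B, hB⟩ : ∃ B, B = A ^ 2 / η := ⟨_, rfl⟩
  have hBp : 0 ≤ B := by rw [hB]; positivity
  have hAB : A ^ 2 ≤ B := by rw [hB, le_div_iff₀ hη]; nlinarith [sq_nonneg A]
  have hBW : 0 ≤ B * W := by positivity
  have hBG : 0 ≤ B * G := by positivity
  have hηH : 0 ≤ η * H := by positivity
  have hAW : A ^ 2 * W ≤ B * W := by gcongr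
  have t1 := trF_energy h hcP hc0 hor hη hη1
  have t2 := trF_sq h hcP hc0 hor hη
  have t3 := w_sq h hcP hc0 hor hη
  have t4 := trF_near h hcP hc0
  rw [hcg, ← hH] at t1
  rw [hc2, ← hH] at t2 t3
  rw [hc2] at t4
  have eG : 8 / η * (A ^ 2 * G) = 8 * (B * G) := by rw [hB]; ring
  have eW : 8 / η * (A ^ 2 * W) = 8 * (B * W) := by rw [hB]; ring
  rw [eG] at t1
  rw [eW] at t2 t3
  have hFP := P1.trF h hcP hc0
  have hwp : PG (fun y => u y - v y) := h.pgu.sub h.pgv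
  have hEF : Ex 0 1 (trF u v c) ^ 2 ≤ 4 * (B * W) := by
    have e : Ex 0 1 (trF u v c) = Ex 0 1 (fun y => trF u v c y - (u y - v y)) := by
      rw [Ex_sub hFP.pg hwp, Ex_sub h.pgu h.pgv, hE]; ring
    rw [e]
    exact ((Ex_sq_le (hFP.pg.sub hwp) 0 1).trans t4).trans (by linarith)
  obtain ⟨b, hb⟩ := stab hFP
  have hstab : Ex 0 1 (fun y => (trF u v c y - ⟪b, y⟫) ^ 2) ≤
      16 * (η * H) + 64 * (B * G) + 64 * (B * W) + 36 * (B * W) := by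
    have e1 : (1 + η) * H = H + η * H := by ring
    have e2 : (1 - η) * H = H - η * H := by ring
    rw [e1] at t1
    rw [e2] at t2
    linarith
  have hC : 1000 * (1 + W + G) * (η * H + B) = 1000 * (η * H) + 1000 * (η * H * W) +
      1000 * (η * H * G) + 1000 * B + 1000 * (B * W) + 1000 * (B * G) := by ring
  have n1 := mul_nonneg hηH hWp
  have n2 := mul_nonneg hηH hGp
  rw [← hH, ← hB, hC]
  refine ⟨?_, ?_, ?_⟩
  · refine (proj_le hwp b).trans ?_
    have p1 := ((hFP.pg.sub hwp).pow 2).cmul 2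
    have p2 := ((hFP.pg.sub (PG.inner b)).pow 2).cmul 2
    have m := Ex_mono ((hwp.sub (PG.inner b)).pow 2) (p1.add p2) (fun y => by
        nlinarith [sq_nonneg ((trF u v c y - (u y - v y)) + (trF u v c y - ⟪b, y⟫))]) 0 1
    rw [Ex_add p1 p2, Ex_cmul, Ex_cmul] at m
    linarith
  · have e2 : (1 - η) * H = H - η * H := by ring
    rw [e2] at t3
    linarith
  · have e : Ex 0 1 (fun y : Euc n => (A * wt y) ^ 2) = A ^ 2 * W := by rw [← hc2, hc]
    rw [e]
    have : 1000 * (1 + W + G) * B = 1000 * B + 1000 * (B * W) + 1000 * (B * G) := by ring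
    rw [this]
    linarith

/-- Polynomial growth of `H` in the centre, from doubling. -/
lemma Hh_weight {u v : Euc n → ℝ} (h : Sol u v) (y : Euc n) :
    Hh u v y 1 ≤ 2 * wt y * Hh u v 0 1 := by
  set r := √(2 + ‖y‖ ^ 2) with hr
  have hr2 : r ^ 2 = 2 + ‖y‖ ^ 2 := Real.sq_sqrt (by positivity)
  have hr0 : 0 ≤ r := Real.sqrt_nonneg _
  have hr1 : 1 < r := by nlinarith [sq_nonneg ‖y‖]
  have c := Ex_compare h.pgH (fun z => by positivity) 0 y one_pos hr1
  have hq := h.H_quad 0 one_pos hr1.le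
  have he : Real.exp (‖(0 : Euc n) - y‖ ^ 2 / (2 * (r ^ 2 - 1 ^ 2))) ≤ 2 := by
    have e1 : ‖(0 : Euc n) - y‖ ^ 2 / (2 * (r ^ 2 - 1 ^ 2)) ≤ 1 / 2 := by
      rw [zero_sub, norm_neg, hr2, div_le_iff₀ (by nlinarith [sq_nonneg ‖y‖])]
      nlinarith [sq_nonneg ‖y‖]
    have e2 : Real.exp (1 / 2) ≤ 2 := by
      have := Real.exp_one_lt_d9
      have e3 : Real.exp (1 / 2) ^ 2 = Real.exp 1 := by rw [← Real.exp_nat_mul]; norm_num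
      nlinarith [Real.exp_pos (1 / 2)]
    exact (Real.exp_le_exp.2 e1).trans e2
  have hH := h.H_pos 0 1
  have hH' := h.H_pos 0 r
  have hw : r ^ n * r ^ 4 ≤ wt y := by
    unfold wt
    rw [← pow_add, ← hr2]
    exact pow_le_pow_left₀ hr0 (by nlinarith) _
  rw [div_one] at hq c
  change Hh u v y 1 ≤ r ^ n * _ * Hh u v 0 r at c
  calc Hh u v y 1 ≤ _ := c
    _ ≤ r ^ n * 2 * (r ^ 4 * Hh u v 0 1) := by gcongr
    _ = 2 * (r ^ n * r ^ 4) * Hh u v 0 1 := by ring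
    _ ≤ 2 * wt y * Hh u v 0 1 := by gcongr

/-- `min_bound` at an arbitrary point, in terms of `H` at the origin and a polynomial weight. -/
lemma min_weight (hn : 1 ≤ n) : ∃ θ : ℝ, 0 < θ ∧ θ < 1 ∧ ∃ C : ℝ, 1 ≤ C ∧
    ∀ u v : Euc n → ℝ, Sol u v → ∀ y, min (u y) (v y) ≤ C * Hh u v 0 1 ^ (θ / 2) * wt y := by
  obtain ⟨ε, hε, C, hC, hb⟩ := min_bound (n := n) hn
  refine ⟨1 / (1 + ε), by positivity, by rw [div_lt_one (by positivity)]; linarith, 2 * C,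
    by linarith, fun u v h y => ?_⟩
  have h1 := hb _ _ (h.sc y one_pos)
  rw [Hh_sc] at h1
  simp only [sc, one_mul, smul_zero, add_zero, one_smul, one_pow, mul_one] at h1
  have h2 := Hh_weight h y
  have hH := h.H_pos 0 1
  have hw := wt_ge y
  have hm : 0 < min (u y) (v y) := lt_min (h.pu y) (h.pv y)
  have h3 : min (u y) (v y) ^ (2 + 2 * ε) ≤ (2 * C) * Hh u v 0 1 * wt y := by
    calc _ ≤ _ := h1
      _ ≤ C * (2 * wt y * Hh u v 0 1) := by gcongr
      _ = _ := by ring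
  have hθ : (2 + 2 * ε) * (1 / (1 + ε) / 2) = 1 := by field_simp
  have hp : 0 ≤ 1 / (1 + ε) / 2 := by positivity
  have hp1 : 1 / (1 + ε) / 2 ≤ 1 := by
    have : 1 / (1 + ε) ≤ 1 := by rw [div_le_one (by positivity)]; linarith
    linarith
  have le1 : ∀ t : ℝ, 1 ≤ t → t ^ (1 / (1 + ε) / 2) ≤ t := fun t ht => by
    simpa using Real.rpow_le_rpow_of_exponent_le ht hp1
  calc min (u y) (v y) = (min (u y) (v y) ^ (2 + 2 * ε)) ^ (1 / (1 + ε) / 2) := by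
        rw [← Real.rpow_mul hm.le, hθ, Real.rpow_one]
    _ ≤ ((2 * C) * Hh u v 0 1 * wt y) ^ (1 / (1 + ε) / 2) :=
        Real.rpow_le_rpow (by positivity) h3 hp
    _ = (2 * C) ^ (1 / (1 + ε) / 2) * Hh u v 0 1 ^ (1 / (1 + ε) / 2) *
        wt y ^ (1 / (1 + ε) / 2) := by
        rw [Real.mul_rpow (by positivity) (by linarith), Real.mul_rpow (by positivity) hH.le]
    _ ≤ (2 * C) * Hh u v 0 1 ^ (1 / (1 + ε) / 2) * wt y := by
        gcongr
        · exact le1 _ (by linarith)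
        · exact le1 _ hw

/-- At a centred scale (equal averages of `u` and `v`) the pair is, in mean square and up to a
lower power of `H`, a two-plane solution `(⟪a, y⟫₊, ⟪a, y⟫₋)`. -/
lemma flat (hn : 1 ≤ n) : ∃ θ : ℝ, 0 < θ ∧ θ < 1 ∧ ∃ C : ℝ, 1 ≤ C ∧
    ∀ u v : Euc n → ℝ, Sol u v → Ex 0 1 u = Ex 0 1 v → 1 ≤ Hh u v 0 1 →
    ∀ a, a = av (fun y => u y - v y) →
      Ex 0 1 (fun y => (u y - max ⟪a, y⟫ 0) ^ 2) ≤ C * Hh u v 0 1 ^ θ ∧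
      Ex 0 1 (fun y => (v y - max (-⟪a, y⟫) 0) ^ 2) ≤ C * Hh u v 0 1 ^ θ ∧
      Ex 0 1 (fun y => (u y - v y - ⟪a, y⟫) ^ 2) ≤ C * Hh u v 0 1 ^ θ ∧
      ‖a‖ ^ 2 ≤ Hh u v 0 1 ∧ Hh u v 0 1 - C * Hh u v 0 1 ^ θ ≤ ‖a‖ ^ 2 := by
  obtain ⟨θ, hθ0, hθ1, C1, hC1, hm⟩ := min_weight (n := n) hn
  obtain ⟨C2, hC2, hf⟩ := flat_aux (n := n)
  refine ⟨(1 + θ) / 2, by linarith, by linarith, 4 * (C2 * (1 + C1 ^ 2)), by nlinarith,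
    fun u v h hE hH1 a ha => ?_⟩
  obtain ⟨H, hH⟩ : ∃ H, H = Hh u v 0 1 := ⟨_, rfl⟩
  rw [← hH] at hH1
  have hHp : 0 < H := by linarith
  obtain ⟨f1, f2, f3⟩ := hf u v (C1 * H ^ (θ / 2)) (H ^ ((θ - 1) / 2)) h hE (by positivity)
    (by positivity) (Real.rpow_le_one_of_one_le_of_nonpos hH1 (by linarith))
    (fun y => hH ▸ hm u v h y)
  rw [← ha, ← hH] at f1
  rw [← hH] at f2
  have e1 : H ^ ((θ - 1) / 2) * H = H ^ ((1 + θ) / 2) := by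
    conv_lhs => rw [← Real.rpow_one H, ← Real.rpow_mul hHp.le, ← Real.rpow_add hHp]
    congr 1; ring
  have e2 : (C1 * H ^ (θ / 2)) ^ 2 / H ^ ((θ - 1) / 2) = C1 ^ 2 * H ^ ((1 + θ) / 2) := by
    rw [mul_pow, ← Real.rpow_natCast (H ^ (θ / 2)), ← Real.rpow_mul hHp.le, mul_div_assoc,
      ← Real.rpow_sub hHp]
    congr 2; push_cast; ring
  rw [e1, e2] at f1 f2
  rw [e2] at f3
  obtain ⟨T, hT⟩ : ∃ T, T = H ^ ((1 + θ) / 2) := ⟨_, rfl⟩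
  have hTp : 0 < T := by rw [hT]; positivity
  rw [← hT] at f1 f2 f3
  rw [← hH, ← hT]
  have eq1 : C2 * (T + C1 ^ 2 * T) = C2 * (1 + C1 ^ 2) * T := by ring
  rw [eq1] at f1 f2
  obtain ⟨M, hM⟩ : ∃ M, M = C2 * (1 + C1 ^ 2) * T := ⟨_, rfl⟩
  have hMp : 0 < M := by rw [hM]; positivity
  have f3' : Ex 0 1 (fun y : Euc n => (C1 * H ^ (θ / 2) * wt y) ^ 2) ≤ M := by
    refine f3.trans ?_
    rw [hM]
    have : 0 ≤ C2 * T := by positivity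
    nlinarith
  have hM4 : 4 * (C2 * (1 + C1 ^ 2)) * T = 4 * M := by rw [hM]; ring
  rw [← hM] at f1 f2
  rw [hM4]
  have hwp : PG (fun y => u y - v y) := h.pgu.sub h.pgv
  have pe := proj_eq hwp a
  rw [← ha, real_inner_self_eq_norm_sq] at pe
  have p1 := ((hwp.sub (PG.inner a)).pow 2).cmul 2
  have p2 := ((P1.wt (n := n)).pg.cmul (C1 * H ^ (θ / 2))).pow 2 |>.cmul 2
  have hmx : PG (fun y : Euc n => max ⟪a, y⟫ 0) := (PG.inner a).max (PG.const 0)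
  have hmx' : PG (fun y : Euc n => max (-⟪a, y⟫) 0) := (PG.inner a).neg.max (PG.const 0)
  have key : ∀ (p : Euc n → ℝ), PG p → (∀ y, |p y| ≤ |u y - v y - ⟪a, y⟫| + min (u y) (v y)) →
      Ex 0 1 (fun y => p y ^ 2) ≤ 4 * M := by
    intro p hp hb
    have m := Ex_mono (hp.pow 2) (p1.add p2) (fun y => by
      have i1 := (hb y).trans (add_le_add_right (hH ▸ hm u v h y) _)
      have i2 : p y ^ 2 ≤ (|u y - v y - ⟪a, y⟫| + C1 * H ^ (θ / 2) * wt y) ^ 2 := by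
        rw [← sq_abs (p y)]; exact pow_le_pow_left₀ (abs_nonneg _) i1 2
      have i3 := sq_abs (u y - v y - ⟪a, y⟫)
      nlinarith [sq_nonneg (|u y - v y - ⟪a, y⟫| - C1 * H ^ (θ / 2) * wt y)]) 0 1
    rw [Ex_add p1 p2, Ex_cmul, Ex_cmul] at m
    linarith
  refine ⟨key _ (h.pgu.sub hmx) fun y => ?_, key _ (h.pgv.sub hmx') fun y => ?_, by linarith, ?_, ?_⟩
  · have e : u y = max (u y - v y) 0 + min (u y) (v y) := by
      rcases le_total (u y) (v y) with g | g
      · rw [max_eq_right (by linarith), min_eq_left g]; ring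
      · rw [max_eq_left (by linarith), min_eq_right g]; ring
    have e3 : |max (u y - v y) 0 - max ⟪a, y⟫ 0| ≤ |u y - v y - ⟪a, y⟫| :=
      abs_max_sub_max_le_abs _ _ _
    have hmp : 0 < min (u y) (v y) := lt_min (h.pu y) (h.pv y)
    calc |u y - max ⟪a, y⟫ 0| = |(max (u y - v y) 0 - max ⟪a, y⟫ 0) + min (u y) (v y)| := by
          congr 1; linarith
      _ ≤ _ := abs_add_le _ _
      _ ≤ _ := by rw [abs_of_pos hmp]; linarith
  · have e : v y = max (-(u y - v y)) 0 + min (u y) (v y) := by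
      rcases le_total (u y) (v y) with g | g
      · rw [max_eq_left (by linarith), min_eq_left g]; ring
      · rw [max_eq_right (by linarith), min_eq_right g]; ring
    have e3 : |max (-(u y - v y)) 0 - max (-⟪a, y⟫) 0| ≤ |u y - v y - ⟪a, y⟫| := by
      refine (abs_max_sub_max_le_abs _ _ _).trans_eq ?_
      rw [← abs_neg]; congr 1; ring
    have hmp : 0 < min (u y) (v y) := lt_min (h.pu y) (h.pv y)
    calc |v y - max (-⟪a, y⟫) 0| =
          |(max (-(u y - v y)) 0 - max (-⟪a, y⟫) 0) + min (u y) (v y)| := by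
          congr 1; linarith
      _ ≤ _ := abs_add_le _ _
      _ ≤ _ := by rw [abs_of_pos hmp]; linarith
  · have n0 := Ex_nonneg (f := fun y => (u y - v y - ⟪a, y⟫) ^ 2) (fun y => sq_nonneg _) 0 1
    have n1 : Ex 0 1 (fun y => (u y - v y) ^ 2) ≤ H := by
      rw [hH]
      exact Ex_mono (hwp.pow 2) h.pgH (fun y => by nlinarith [mul_pos (h.pu y) (h.pv y)]) 0 1
    linarith
  · linarith

end Flat

/-! ### Existence of centred scales -/

section Select
variable {n : ℕ}

lemma PG.Ex_smul {f : Euc n → ℝ} (hf : PG f) (a b : ℝ) : PG (fun p => Ex (a • p) b f) := by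
  obtain ⟨C, hC, k, hk⟩ := hf.bound
  have hb := hk k le_rfl
  have hq : PG (fun q : Euc n => (1 + ‖q‖) ^ k) := ((PG.const 1).add PG.norm).pow k
  refine PG.mk' ((continuous_Ex hf).comp (by fun_prop : Continuous fun p : Euc n => (a • p, b)))
    (C * (1 + |a| + |b|) ^ k * ∫ q, (1 + ‖q‖) ^ k ∂(gam n)) k fun p => ?_
  unfold Ex
  refine (abs_integral_le_integral_abs).trans ?_
  have e : C * (1 + |a| + |b|) ^ k * (∫ q, (1 + ‖q‖) ^ k ∂(gam n)) * (1 + ‖p‖) ^ k =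
      ∫ q, C * (1 + |a| + |b|) ^ k * (1 + ‖p‖) ^ k * (1 + ‖q‖) ^ k ∂(gam n) := by
    rw [integral_const_mul]; ring
  rw [e]
  refine integral_mono (hf.comp_aff (a • p) b).abs.integrable (hq.cmul _).integrable fun q => ?_
  refine (hb _).trans ?_
  rw [mul_assoc, mul_assoc, ← mul_pow, ← mul_pow]
  gcongr
  calc 1 + ‖a • p + b • q‖ ≤ 1 + (|a| * ‖p‖ + |b| * ‖q‖) := by
        have := norm_add_le (a • p) (b • q)
        rw [norm_smul, norm_smul, Real.norm_eq_abs, Real.norm_eq_abs] at this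
        linarith
    _ ≤ (1 + |a| + |b|) * ((1 + ‖p‖) * (1 + ‖q‖)) := by
        have h1 := norm_nonneg p
        have h2 := norm_nonneg q
        have h3 := abs_nonneg a
        have h4 := abs_nonneg b
        have h5 := mul_nonneg h1 h2
        nlinarith [mul_nonneg h3 h1, mul_nonneg h4 h1, mul_nonneg h3 h2, mul_nonneg h4 h2,
          mul_nonneg h3 h5, mul_nonneg h4 h5]

/-- The semigroup property of the heat flow, in terms of Gaussian averages. -/
lemma semigroup {f : Euc n → ℝ} (hf : PG f) {a b : ℝ} (hb : 0 < b) :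
    ∫ p, Ex (a • p) b f ∂(gam n) = Ex 0 (√(a ^ 2 + b ^ 2)) f := by
  set ρ := √(a ^ 2 + b ^ 2) with hρ
  have hρ2 : ρ ^ 2 = a ^ 2 + b ^ 2 := Real.sq_sqrt (by positivity)
  have hρ0 : 0 < ρ := Real.sqrt_pos.2 (by positivity)
  set β := Real.arccos (a / ρ) with hβ
  have hle : |a / ρ| ≤ 1 := by
    rw [abs_div, abs_of_pos hρ0, div_le_one hρ0]
    exact abs_le_of_sq_le_sq (by nlinarith) hρ0.le
  have hc : Real.cos β = a / ρ := Real.cos_arccos (abs_le.1 hle).1 (abs_le.1 hle).2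
  have hs : Real.sin β = b / ρ := by
    rw [hβ, Real.sin_arccos]
    have : 1 - (a / ρ) ^ 2 = (b / ρ) ^ 2 := by field_simp; linarith
    rw [this, Real.sqrt_sq (by positivity)]
  have hg : PG (fun y : Euc n => f (0 + ρ • y)) := hf.comp_aff 0 ρ
  have e1 := integral_rt β hg.continuous
  rw [integral_prod _ (hg.rt β).integrable] at e1
  unfold Ex
  rw [← e1]
  refine integral_congr_ae (ae_of_all _ fun p => integral_congr_ae (ae_of_all _ fun q => ?_))
  simp only [rt_apply, hc, hs, zero_add, smul_add, smul_smul]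
  congr 2 <;> congr 1 <;> field_simp

lemma gd_moment (p : Euc n) : ‖p‖ ^ 2 * gd p ≤ 2 * gd ((2 : ℝ)⁻¹ • p) := by
  have h : ∀ t : ℝ, 0 ≤ t → t * Real.exp (-(3 * t / 8)) ≤ 2 := fun t g => by
    rw [Real.exp_neg, ← div_eq_mul_inv, div_le_iff₀ (Real.exp_pos _)]
    have h1 : (3 * t / 16 + 1) ≤ Real.exp (3 * t / 16) := Real.add_one_le_exp _
    have h2 : Real.exp (3 * t / 8) = Real.exp (3 * t / 16) ^ 2 := by
      rw [← Real.exp_nat_mul]; congr 1; push_cast; ring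
    rw [h2]
    nlinarith [sq_nonneg (3 * t / 16 - 1)]
  have h1 := h (‖p‖ ^ 2) (sq_nonneg _)
  unfold gd
  rw [norm_smul, Real.norm_eq_abs, mul_left_comm, mul_left_comm 2]
  refine mul_le_mul_of_nonneg_left ?_ (by positivity)
  have e : Real.exp (-‖p‖ ^ 2 / 2) =
      Real.exp (-(3 * ‖p‖ ^ 2 / 8)) * Real.exp (-(|(2 : ℝ)⁻¹| * ‖p‖) ^ 2 / 2) := by
    rw [← Real.exp_add]; congr 1; rw [mul_pow, sq_abs]; ring
  rw [e, ← mul_assoc]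
  gcongr

lemma integrable_gd_mul {f : Euc n → ℝ} (hf : PG f) (x : Euc n) {r : ℝ} (hr : 0 < r) :
    Integrable (fun z => gd (r⁻¹ • (z - x)) * f z) := by
  have h1 : Integrable (fun y => gd y * f (x + r • y)) :=
    integrable_gam.1 (hf.comp_aff x r).integrable
  have h2 := (integrable_comp_smul_iff volume (fun z => gd (r⁻¹ • z) * f (x + z)) hr.ne').1 (by
    simpa [smul_smul, inv_mul_cancel₀ hr.ne'] using h1)
  have h3 := h2.comp_sub_right x
  simpa using h3

lemma second_moment {g : Euc n → ℝ} (hg : PG g) (h0 : ∀ y, 0 ≤ g y) :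
    Ex 0 1 (fun p => ‖p‖ ^ 2 * g p) ≤ 2 * (2 ^ n * Ex 0 2 g) := by
  rw [Ex_lebesgue _ _ one_pos, Ex_lebesgue _ _ two_pos, ← mul_assoc (2 ^ n),
    mul_inv_cancel₀ (by positivity), one_pow, inv_one, one_mul, one_mul, ← integral_const_mul]
  have i1 := integrable_gd_mul (((PG.norm (V := Euc n)).pow 2).mul hg) 0 one_pos
  rw [inv_one] at i1
  refine integral_mono i1 ((integrable_gd_mul hg 0 two_pos).const_mul 2) fun z => ?_
  have := mul_le_mul_of_nonneg_right (gd_moment z) (h0 z)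
  simp only [sub_zero, one_smul]
  linarith

/-- If `d` is at most `M f` on average at scale one and `f` is doubling, then some ball of radius
`δ` with centre at bounded distance inherits the inequality up to a factor two. -/
lemma exists_good {δ : ℝ} (hδ : 0 < δ) (hδ1 : δ < 1) : ∃ K : ℝ, 1 ≤ K ∧
    ∀ (d f : Euc n → ℝ) (M : ℝ), PG d → PG f → (∀ y, 0 ≤ d y) → (∀ y, 0 ≤ f y) → 0 < M →
    Ex 0 1 d ≤ M * Ex 0 1 f → Ex 0 2 f ≤ 64 * Ex 0 1 f → 0 < Ex 0 1 f →
    ∃ y, ‖y‖ ≤ K ∧ Ex y δ d ≤ 2 * M * Ex y δ f := by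
  set c : ℝ := 2 * (2 ^ n * 2 ^ n * 64) with hc
  have hc1 : 1 ≤ c := by
    have : (1 : ℝ) ≤ 2 ^ n := one_le_pow₀ (by norm_num)
    nlinarith
  refine ⟨2 * c, by linarith, fun d f M hd hf hd0 hf0 hM h1 h2 h3 => ?_⟩
  by_contra! hcon
  set κ := √(1 - δ ^ 2) with hκ
  have hκ2 : κ ^ 2 = 1 - δ ^ 2 := Real.sq_sqrt (by nlinarith)
  have hκ0 : 0 ≤ κ := Real.sqrt_nonneg _
  have hκ1 : κ ≤ 1 := by nlinarith
  set K := 2 * c with hK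
  have hKp : 0 < K := by linarith
  have gd' := hd.Ex_smul κ δ
  have gf' := hf.Ex_smul κ δ
  have gf0 : ∀ p : Euc n, 0 ≤ Ex (κ • p) δ f := fun p => Ex_nonneg hf0 _ _
  have pt : ∀ p : Euc n, 2 * M * Ex (κ • p) δ f - 2 * M / K ^ 2 * (‖p‖ ^ 2 * Ex (κ • p) δ f) ≤
      Ex (κ • p) δ d := by
    intro p
    have e : 2 * M * Ex (κ • p) δ f - 2 * M / K ^ 2 * (‖p‖ ^ 2 * Ex (κ • p) δ f) =
      (1 - (‖p‖ / K) ^ 2) * (2 * M * Ex (κ • p) δ f) := by field_simp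
    have hq : 0 ≤ 2 * M * Ex (κ • p) δ f := mul_nonneg (by linarith) (gf0 p)
    rw [e]
    rcases le_or_gt ‖p‖ K with hp | hp
    · have : ‖κ • p‖ ≤ K := by
        rw [norm_smul, Real.norm_eq_abs, abs_of_nonneg hκ0]
        nlinarith [norm_nonneg p]
      have := hcon _ this
      nlinarith [sq_nonneg (‖p‖ / K)]
    · have : 1 ≤ ‖p‖ / K := by rw [le_div_iff₀ hKp]; linarith
      have i1 : 1 - (‖p‖ / K) ^ 2 ≤ 0 := by nlinarith
      exact (mul_nonpos_of_nonpos_of_nonneg i1 hq).trans (Ex_nonneg hd0 _ _)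
  have p1 := gf'.cmul (2 * M)
  have p2 := (((PG.norm (V := Euc n)).pow 2).mul gf').cmul (2 * M / K ^ 2)
  have m := Ex_mono (p1.sub p2) gd' pt 0 1
  rw [Ex_sub p1 p2, Ex_cmul, Ex_cmul] at m
  have s1 : ∀ g : Euc n → ℝ, PG g → Ex 0 1 (fun p => Ex (κ • p) δ g) = Ex 0 1 g := by
    intro g hg
    have e := semigroup hg (a := κ) hδ
    have e1 : κ ^ 2 + δ ^ 2 = 1 := by linarith
    rw [e1, Real.sqrt_one] at e
    rw [← e]
    conv_lhs => unfold Ex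
    simp only [zero_add, one_smul]
    rfl
  have s2 : Ex 0 1 (fun p => ‖p‖ ^ 2 * Ex (κ • p) δ f) ≤ c * Ex 0 1 f := by
    have a1 := second_moment gf' gf0
    have a2 : Ex 0 2 (fun p => Ex (κ • p) δ f) = Ex 0 (√((2 * κ) ^ 2 + δ ^ 2)) f := by
      rw [← semigroup hf hδ]
      conv_lhs => unfold Ex
      simp only [zero_add, smul_smul, mul_comm κ]
      rfl
    have a3 : Ex 0 (√((2 * κ) ^ 2 + δ ^ 2)) f ≤ 2 ^ n * Ex 0 2 f := by
      set ρ := √((2 * κ) ^ 2 + δ ^ 2) with hρ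
      have hρ2 : ρ ^ 2 = 4 - 3 * δ ^ 2 := by
        rw [hρ, Real.sq_sqrt (by positivity)]; linarith
      have hρ0 : 0 ≤ ρ := Real.sqrt_nonneg _
      have hρ1 : 1 ≤ ρ := by nlinarith
      have hρ3 : ρ < 2 := by nlinarith
      have cc := Ex_compare hf hf0 0 0 (by linarith : 0 < ρ) hρ3
      rw [sub_self, norm_zero] at cc
      norm_num at cc
      refine cc.trans ?_
      have : 0 ≤ Ex 0 2 f := Ex_nonneg hf0 _ _
      gcongr
      rw [div_le_iff₀ (by linarith)]; linarith
    calc _ ≤ _ := a1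
      _ ≤ 2 * (2 ^ n * (2 ^ n * (64 * Ex 0 1 f))) := by rw [a2]; gcongr; exact a3.trans (by gcongr)
      _ = _ := by rw [hc]; ring
  rw [s1 f hf, s1 d hd] at m
  have : 2 * M / K ^ 2 * Ex 0 1 (fun p => ‖p‖ ^ 2 * Ex (κ • p) δ f) ≤ 2 * M / K ^ 2 * (c * Ex 0 1 f) := by
    gcongr
  have e : 2 * M / K ^ 2 * (c * Ex 0 1 f) = M * Ex 0 1 f * (1 / (2 * c)) := by
    rw [hK]; field_simp
  have hlt : 1 / (2 * c) ≤ 1 / 2 := by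
    apply one_div_le_one_div_of_le <;> linarith
  have hpos : 0 < M * Ex 0 1 f := by positivity
  nlinarith

end Select

section Zero
variable {n : ℕ}

lemma integrable_exp_third : Integrable (fun y : Euc n => Real.exp (‖y‖ ^ 2 / 3)) (gam n) := by
  rw [integrable_gam]
  have h := (GaussianFourier.integrable_cexp_neg_mul_sq_norm_add (V := Euc n) (b := (1/6 : ℂ))
    (by norm_num) 0 0).norm
  refine (h.const_mul ((2 * Real.pi) ^ ((n:ℝ) / 2))⁻¹).congr (ae_of_all _ fun x => ?_)
  have : (-(1/6:ℂ) * (‖x‖:ℂ) ^ 2 + 0 * ((⟪(0 : Euc n), x⟫ : ℝ) : ℂ)) = ((-‖x‖ ^ 2 / 6 : ℝ) : ℂ) := by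
    push_cast; ring
  unfold gd
  simp only [this, ← Complex.ofReal_exp, Complex.norm_real, Real.norm_eq_abs, Real.abs_exp]
  rw [mul_assoc, ← Real.exp_add]
  congr 2; ring

/-- A reverse Hölder inequality for the subharmonic function `u`. -/
lemma reverse_holder : ∃ C : ℝ, 1 ≤ C ∧ ∀ u v : Euc n → ℝ, Sol u v →
    Ex 0 (1 / 2) (fun y => u y ^ 2) ≤ C * Ex 0 1 u ^ 2 := by
  have hI : 0 ≤ ∫ y : Euc n, Real.exp (‖y‖ ^ 2 / 3) ∂(gam n) :=
    integral_nonneg fun y => (Real.exp_pos _).le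
  refine ⟨1 + 4 ^ n * ∫ y : Euc n, Real.exp (‖y‖ ^ 2 / 3) ∂(gam n), by
    have : (0 : ℝ) ≤ 4 ^ n := by positivity
    nlinarith [mul_nonneg this hI], fun u v h => ?_⟩
  have pt : ∀ y : Euc n, u (0 + (1 / 2 : ℝ) • y) ^ 2 ≤
      4 ^ n * Ex 0 1 u ^ 2 * Real.exp (‖y‖ ^ 2 / 3) := by
    intro y
    have a1 := h.u_le_Ex ((1 / 2 : ℝ) • y) (by norm_num : (0 : ℝ) ≤ 1 / 2)
    have a2 := Ex_compare h.pgu (fun z => (h.pu z).le) 0 ((1 / 2 : ℝ) • y)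
      (by norm_num : (0 : ℝ) < 1 / 2) (by norm_num : (1 / 2 : ℝ) < 1)
    have e1 : ‖(0 : Euc n) - (1 / 2 : ℝ) • y‖ ^ 2 / (2 * (1 ^ 2 - (1 / 2) ^ 2)) = ‖y‖ ^ 2 / 6 := by
      rw [zero_sub, norm_neg, norm_smul, mul_pow]; norm_num; ring
    rw [e1] at a2
    have a3 := a1.trans a2
    rw [zero_add]
    calc _ ≤ ((1 / (1 / 2)) ^ n * Real.exp (‖y‖ ^ 2 / 6) * Ex 0 1 u) ^ 2 :=
          pow_le_pow_left₀ (h.pu _).le a3 2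
      _ = _ := by
        have e2 : Real.exp (‖y‖ ^ 2 / 6) ^ 2 = Real.exp (‖y‖ ^ 2 / 3) := by
          rw [← Real.exp_nat_mul]; congr 1; push_cast; ring
        have e3 : (1 / (1 / 2) : ℝ) = 2 := by norm_num
        rw [mul_pow, mul_pow, e2, e3, ← pow_mul, mul_comm n 2, pow_mul]; norm_num; ring
  have m := integral_mono (μ := gam n) (((h.pgu.pow 2).comp_aff 0 (1 / 2)).integrable)
    (integrable_exp_third.const_mul (4 ^ n * Ex 0 1 u ^ 2)) pt
  rw [integral_const_mul] at m
  change Ex 0 (1 / 2) (fun y => u y ^ 2) ≤ _ at m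
  nlinarith [sq_nonneg (Ex 0 1 u)]

/-- If `v` has tiny energy relative to its mass and `u` dominates, the scale is bounded. -/
lemma zero_local : ∃ ζ : ℝ, 0 < ζ ∧ ∀ u v : Euc n → ℝ, Sol u v →
    Ex 0 1 (fun y => gsq v y + v y ^ 2 * u y ^ 2) ≤ ζ * Ex 0 1 (fun y => v y ^ 2) →
    Ex 0 1 v ≤ Ex 0 1 u → Hh u v 0 1 ≤ 1 := by
  obtain ⟨C, hC, hrh⟩ := reverse_holder (n := n)
  have hζ : 0 < 1 / (128 * (C + 4)) := by positivity
  have hζ' : 1 / (128 * (C + 4)) ≤ 1 / 4 := one_div_le_one_div_of_le (by norm_num) (by linarith)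
  refine ⟨1 / (128 * (C + 4)), hζ, fun u v h h1 h2 => ?_⟩
  set ζ := 1 / (128 * (C + 4)) with hζd
  obtain ⟨Hu, hHu⟩ : ∃ X, X = Ex 0 1 (fun y => u y ^ 2) := ⟨_, rfl⟩
  obtain ⟨Hv, hHv⟩ : ∃ X, X = Ex 0 1 (fun y => v y ^ 2) := ⟨_, rfl⟩
  obtain ⟨a, ha⟩ : ∃ X, X = Ex 0 1 u := ⟨_, rfl⟩
  obtain ⟨b, hb⟩ : ∃ X, X = Ex 0 1 v := ⟨_, rfl⟩
  obtain ⟨I, hI⟩ : ∃ X, X = Ex 0 1 (fun y => v y ^ 2 * u y ^ 2) := ⟨_, rfl⟩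
  obtain ⟨G, hG⟩ : ∃ X, X = Ex 0 1 (gsq v) := ⟨_, rfl⟩
  have hI0 : 0 ≤ I := hI ▸ Ex_nonneg (fun y => by positivity) _ _
  have hG0 : 0 ≤ G := hG ▸ Ex_nonneg (gsq_nonneg _) _ _
  have ha0 : 0 < a := ha ▸ (h.pu 0).trans_le (h.u_le_Ex 0 zero_le_one)
  have hb0 : 0 < b := hb ▸ (h.pv 0).trans_le (h.swap.u_le_Ex 0 zero_le_one)
  have hHu0 : 0 ≤ Hu := hHu ▸ Ex_nonneg (fun y => by positivity) _ _
  have hb2 : b ^ 2 ≤ Hv := by rw [hb, hHv]; exact Ex_sq_le h.pgv 0 1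
  have hpI : PG (fun y => v y ^ 2 * u y ^ 2) := (h.pgv.pow 2).mul (h.pgu.pow 2)
  rw [Ex_add h.p1gv.pg hpI, ← hI, ← hG, ← hHv] at h1
  have hvar : Hv - b ^ 2 ≤ G := by
    have := Ex_poincare h.p1v 0 1
    rw [← hHv, ← hb, ← hG] at this; linarith
  have hprod : a * b = Ex 0 1 (fun y => u y * v y) - Ex 0 1 (fun y => u y * (v y - b)) := by
    rw [← Ex_sub (h.pgu.mul h.pgv) (h.pgu.mul (h.pgv.sub (PG.const b))), ha, mul_comm, ← Ex_cmul]
    congr 1; funext y; ring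
  have c1 : Ex 0 1 (fun y => u y * v y) ^ 2 ≤ I := by
    refine (Ex_sq_le (h.pgu.mul h.pgv) 0 1).trans_eq ?_
    rw [hI]; congr 1; funext y; ring
  have c2 : Ex 0 1 (fun y => u y * (v y - b)) ^ 2 ≤ Hu * (Hv - b ^ 2) := by
    refine (Ex_cs h.pgu (h.pgv.sub (PG.const b)) 0 1).trans_eq ?_
    rw [← hHu]; congr 1
    have e : (fun y => (v y - b) ^ 2) = fun y => (v y ^ 2 - (2 * b) * v y) + b ^ 2 := by
      funext y; ring
    rw [e, Ex_add ((h.pgv.pow 2).sub (h.pgv.cmul (2 * b))) (PG.const _),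
      Ex_sub (h.pgv.pow 2) (h.pgv.cmul (2 * b)), Ex_cmul, Ex_const, ← hHv, ← hb]
    ring
  have c3 : (a * b) ^ 2 ≤ 2 * I + 2 * (Hu * (Hv - b ^ 2)) := by
    rw [hprod]
    nlinarith [sq_nonneg (Ex 0 1 (fun y => u y * v y) + Ex 0 1 (fun y => u y * (v y - b)))]
  have hHv0 : 0 < Hv := by nlinarith
  have c4 : Hv / 2 ≤ b ^ 2 := by nlinarith
  have c5 : a ^ 2 ≤ 4 * ζ * (1 + Hu) := by
    have s1 : Hu * (Hv - b ^ 2) ≤ Hu * (ζ * Hv) := by gcongr; linarith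
    have s2 : I ≤ ζ * Hv := by linarith
    have s3 : a ^ 2 * (Hv / 2) ≤ a ^ 2 * b ^ 2 := by gcongr
    have s4 : a ^ 2 * Hv ≤ (4 * ζ * (1 + Hu)) * Hv := by nlinarith
    exact le_of_mul_le_mul_right s4 hHv0
  have d1 := h.H_quad 0 (by norm_num : (0 : ℝ) < 1 / 2) (by norm_num : (1 / 2 : ℝ) ≤ 1)
  have d2 := hrh u v h
  have d3 : Ex 0 (1 / 2) (fun y => v y ^ 2) ≤ Hv := by
    rw [hHv]
    exact h.swap.Esq_mono 0 (mem_Ici.2 (by norm_num)) (mem_Ici.2 (by norm_num)) (by norm_num)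
  have d4 := h.H_split 0 (1 / 2)
  have d5 := h.H_split 0 1
  have d6 : b ^ 2 ≤ a ^ 2 := by rw [ha, hb]; exact pow_le_pow_left₀ (hb ▸ hb0.le) h2 2
  rw [← ha] at d2
  rw [← hHu, ← hHv] at d5
  norm_num at d1 d2 d3 d4
  have d7 : Hh u v 0 1 ≤ 16 * ((C + 4) * a ^ 2) := by nlinarith
  have d8 : 16 * ((C + 4) * a ^ 2) ≤ 16 * ((C + 4) * (4 * ζ * (1 + Hu))) := by gcongr
  have d9 : 16 * ((C + 4) * (4 * ζ * (1 + Hu))) = (1 + Hu) / 2 := by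
    rw [hζd]; field_simp; norm_num
  linarith

/-- If the mass of `v` does not grow too fast between scales `1` and `2` and the scale is large,
then `v` dominates at some comparable smaller scale nearby. -/
lemma zero_norm : ∃ δ : ℝ, 0 < δ ∧ ∃ K : ℝ, 1 ≤ K ∧ ∃ C : ℝ, ∀ u v : Euc n → ℝ, Sol u v →
    Ex 0 2 (fun y => v y ^ 2) ≤ 64 * Ex 0 1 (fun y => v y ^ 2) → C < Hh u v 0 1 →
    ∃ y, ‖y‖ ≤ K ∧ Ex y δ u < Ex y δ v := by
  obtain ⟨ζ, hζ, hloc⟩ := zero_local (n := n)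
  set M : ℝ := 2 ^ n * 32 with hM
  have hMp : 0 < M := by positivity
  obtain ⟨δ, hδ, hδ1, hδζ⟩ : ∃ δ : ℝ, 0 < δ ∧ δ < 1 ∧ 2 * M * δ ^ 2 ≤ ζ := by
    refine ⟨min (1 / 2) (ζ / (2 * M)), by positivity,
      (min_le_left _ _).trans_lt (by norm_num), ?_⟩
    set δ := min (1 / 2) (ζ / (2 * M))
    have h1 : δ ≤ ζ / (2 * M) := min_le_right _ _
    have h2 : δ ≤ 1 / 2 := min_le_left _ _
    have h0 : 0 < δ := by positivity
    rw [le_div_iff₀ (by positivity)] at h1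
    nlinarith
  obtain ⟨K, hK, hgood⟩ := exists_good (n := n) hδ hδ1
  obtain ⟨C, hC, hcmp⟩ := Hh_cmp (n := n) hδ K
  refine ⟨δ, hδ, K, hK, C / δ ^ 2, fun u v h h2 hbig => ?_⟩
  have pgd : PG (fun y => gsq v y + v y ^ 2 * u y ^ 2) :=
    h.p1gv.pg.add ((h.pgv.pow 2).mul (h.pgu.pow 2))
  have d0 : ∀ y, 0 ≤ gsq v y + v y ^ 2 * u y ^ 2 := fun y =>
    add_nonneg (gsq_nonneg v y) (by positivity)
  have hvp : 0 < Ex 0 1 (fun y => v y ^ 2) := by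
    have h1 := Ex_sq_le h.pgv 0 1
    have h2 := (h.pv 0).trans_le (h.swap.u_le_Ex 0 zero_le_one)
    have h3 : 0 < Ex 0 1 v ^ 2 := by positivity
    linarith
  have hen : Ex 0 1 (fun y => gsq v y + v y ^ 2 * u y ^ 2) ≤ M * Ex 0 1 (fun y => v y ^ 2) := by
    obtain ⟨r, hr, he⟩ := exists_hasDerivAt_eq_slope (fun r => Ex 0 r (fun y => v y ^ 2))
      (fun r => 2 * r * Ex 0 r (fun y => gsq v y + v y ^ 2 * u y ^ 2)) (by norm_num : (1 : ℝ) < 2)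
      (fun r _ => (h.swap.hasDerivAt_sq 0 r).continuousAt.continuousWithinAt)
      (fun r _ => h.swap.hasDerivAt_sq 0 r)
    have c := Ex_compare pgd d0 0 0 one_pos hr.1
    rw [sub_self, norm_zero] at c
    norm_num at c
    have hx := Ex_nonneg d0 0 r
    have hr2 : r ^ n ≤ 2 ^ n := pow_le_pow_left₀ (by linarith [hr.1]) hr.2.le n
    have c2 : Ex 0 1 (fun y => gsq v y + v y ^ 2 * u y ^ 2) ≤
        2 ^ n * Ex 0 r (fun y => gsq v y + v y ^ 2 * u y ^ 2) := c.trans (by gcongr)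
    have c3 : Ex 0 r (fun y => gsq v y + v y ^ 2 * u y ^ 2) ≤ 32 * Ex 0 1 (fun y => v y ^ 2) := by
      norm_num at he
      nlinarith [hr.1]
    rw [hM]
    calc _ ≤ _ := c2
      _ ≤ 2 ^ n * (32 * Ex 0 1 (fun y => v y ^ 2)) := by gcongr
      _ = _ := by ring
  obtain ⟨y, hy, hE⟩ := hgood _ _ M pgd (h.pgv.pow 2) d0 (fun y => sq_nonneg _) hMp hen h2 hvp
  refine ⟨y, hy, ?_⟩
  by_contra! hcon
  have hs := h.sc y hδ
  have k1 : Ex 0 1 (fun z => gsq (sc y δ v) z + sc y δ v z ^ 2 * sc y δ u z ^ 2) =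
      δ ^ 4 * Ex y δ (fun y => gsq v y + v y ^ 2 * u y ^ 2) := by
    have : (fun z => gsq (sc y δ v) z + sc y δ v z ^ 2 * sc y δ u z ^ 2) =
        fun z => δ ^ 4 * (fun y => gsq v y + v y ^ 2 * u y ^ 2) (y + δ • z) := by
      funext z
      unfold gsq
      simp only [pd_sc h.p1v.diff, mul_pow, ← Finset.mul_sum, sc_apply]
      ring
    rw [this, Ex_cmul, Ex_std _ y δ]
  have k2 : Ex 0 1 (fun z => sc y δ v z ^ 2) = δ ^ 2 * Ex y δ (fun y => v y ^ 2) := by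
    have : (fun z => sc y δ v z ^ 2) = fun z => δ ^ 2 * (fun y => v y ^ 2) (y + δ • z) := by
      funext z; simp only [sc_apply]; ring
    rw [this, Ex_cmul, Ex_std _ y δ]
  have k3 := hloc _ _ hs (by
    rw [k1, k2]
    have e0 : 0 ≤ Ex y δ (fun y => v y ^ 2) := Ex_nonneg (fun y => sq_nonneg _) _ _
    calc _ ≤ δ ^ 4 * (2 * M * Ex y δ (fun y => v y ^ 2)) := by gcongr
      _ = (2 * M * δ ^ 2) * (δ ^ 2 * Ex y δ (fun y => v y ^ 2)) := by ring
      _ ≤ _ := by gcongr) (by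
    rw [Ex_sc, Ex_sc, smul_zero, add_zero, mul_one]; gcongr)
  rw [Hh_sc, smul_zero, add_zero, mul_one] at k3
  have k4 := (hcmp u v h y hy).2
  rw [div_lt_iff₀ (by positivity)] at hbig
  nlinarith

/-- At arbitrarily large dyadic scales the mass of `v` grows by at most a factor `64`. -/
lemma Sol.doubling_scale {u v : Euc n → ℝ} (h : Sol u v) (k₀ : ℕ) : ∃ k : ℕ, k₀ ≤ k ∧
    Ex 0 (2 * 2 ^ k) (fun y => v y ^ 2) ≤ 64 * Ex 0 (2 ^ k) (fun y => v y ^ 2) := by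
  by_contra! hcon
  have g : ∀ j : ℕ, 64 ^ j * Ex 0 (2 ^ k₀) (fun y => v y ^ 2) ≤
      Ex 0 (2 ^ (k₀ + j)) (fun y => v y ^ 2) := by
    intro j
    induction j with
    | zero => simp
    | succ j ih =>
      have := hcon (k₀ + j) (by omega)
      rw [← pow_succ', add_assoc] at this
      calc _ = 64 * (64 ^ j * Ex 0 (2 ^ k₀) (fun y => v y ^ 2)) := by ring
        _ ≤ 64 * Ex 0 (2 ^ (k₀ + j)) (fun y => v y ^ 2) := by gcongr
        _ ≤ _ := this.le
  have hpos : 0 < Ex 0 (2 ^ k₀) (fun y => v y ^ 2) := by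
    have h1 := Ex_sq_le h.pgv 0 (2 ^ k₀)
    have h2 := (h.pv 0).trans_le (h.swap.u_le_Ex 0 (by positivity : (0 : ℝ) ≤ 2 ^ k₀))
    have h3 : 0 < Ex 0 (2 ^ k₀) v ^ 2 := by positivity
    linarith
  have up : ∀ j : ℕ, 64 ^ j * Ex 0 (2 ^ k₀) (fun y => v y ^ 2) ≤ 16 ^ j * Hh u v 0 (2 ^ k₀) := by
    intro j
    have q := h.H_quad 0 (by positivity : (0 : ℝ) < 2 ^ k₀) (pow_le_pow_right₀ (by norm_num)
      (by omega) : (2 : ℝ) ^ k₀ ≤ 2 ^ (k₀ + j))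
    have e : ((2 : ℝ) ^ (k₀ + j) / 2 ^ k₀) ^ 4 = 16 ^ j := by
      rw [pow_add, mul_div_cancel_left₀ _ (by positivity), ← pow_mul, mul_comm, pow_mul]; norm_num
    rw [e] at q
    have s := h.H_split 0 (2 ^ (k₀ + j))
    have n0 := Ex_nonneg (f := fun y => u y ^ 2) (fun y => sq_nonneg _) 0 (2 ^ (k₀ + j))
    linarith [g j]
  obtain ⟨j, hj⟩ := pow_unbounded_of_one_lt
    (Hh u v 0 (2 ^ k₀) / Ex 0 (2 ^ k₀) (fun y => v y ^ 2)) (by norm_num : (1 : ℝ) < 4)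
  rw [div_lt_iff₀ hpos] at hj
  have := up j
  have e : (64 : ℝ) ^ j = 16 ^ j * 4 ^ j := by rw [← mul_pow]; norm_num
  rw [e, mul_assoc] at this
  have := le_of_mul_le_mul_left this (by positivity)
  linarith

/-- There are arbitrarily large scales at which the second component has the larger average. -/
lemma Sol.v_dominates {u v : Euc n → ℝ} (h : Sol u v) {δ K C : ℝ} (hδ : 0 < δ)
    (hz : ∀ u v : Euc n → ℝ, Sol u v →
      Ex 0 2 (fun y => v y ^ 2) ≤ 64 * Ex 0 1 (fun y => v y ^ 2) → C < Hh u v 0 1 →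
      ∃ y, ‖y‖ ≤ K ∧ Ex y δ u < Ex y δ v) (R₀ : ℝ) :
    ∃ x r, R₀ ≤ r ∧ 0 < r ∧ ‖x‖ ≤ K / δ * r ∧ Ex x r u < Ex x r v := by
  obtain ⟨k₀, hk₀⟩ := pow_unbounded_of_one_lt
    (max 1 (max (R₀ / δ) (C / Hh u v 0 1))) (by norm_num : (1 : ℝ) < 2)
  obtain ⟨k, hk, hd⟩ := h.doubling_scale k₀
  set R : ℝ := 2 ^ k with hR
  have hRp : 0 < R := by positivity
  have hRk : max 1 (max (R₀ / δ) (C / Hh u v 0 1)) < R :=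
    hk₀.trans_le (pow_le_pow_right₀ (by norm_num) hk)
  rw [max_lt_iff, max_lt_iff] at hRk
  obtain ⟨hR1, hR2, hR3⟩ := hRk
  have hH := h.H_pos 0 1
  rw [div_lt_iff₀ hδ] at hR2
  rw [div_lt_iff₀ hH] at hR3
  have e : ∀ s : ℝ, Ex 0 s (fun z => PhaseSep.sc 0 R v z ^ 2) =
      R ^ 2 * Ex 0 (R * s) (fun y => v y ^ 2) := by
    intro s
    have : (fun z => PhaseSep.sc 0 R v z ^ 2) =
        fun z => R ^ 2 * (fun y => v y ^ 2) (0 + R • z) := by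
      funext z; simp only [sc_apply]; ring
    rw [this, Ex_cmul, Ex_aff (fun y => v y ^ 2) 0 0 R s]; simp
  obtain ⟨y, hy, hlt⟩ := hz _ _ (h.sc 0 hRp) (by
    rw [e, e, mul_one, mul_comm R 2]
    have : 0 < R ^ 2 := by positivity
    nlinarith) (by
    rw [Hh_sc, smul_zero, add_zero, mul_one]
    have := h.H_mono 0 (mem_Ici.2 zero_le_one) (mem_Ici.2 hRp.le) hR1.le
    have h2 : R * Hh u v 0 1 ≤ R ^ 2 * Hh u v 0 R := by
      have : R ≤ R ^ 2 := by nlinarith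
      gcongr
    linarith)
  rw [Ex_sc, Ex_sc, zero_add] at hlt
  refine ⟨R • y, R * δ, hR2.le, by positivity, ?_, lt_of_mul_lt_mul_left hlt hRp.le⟩
  rw [norm_smul, Real.norm_eq_abs, abs_of_pos hRp]
  have : K / δ * (R * δ) = R * K := by field_simp
  rw [this]; gcongr

/-- Arbitrarily large scales at which `u` and `v` have equal averages. -/
lemma exists_centred : ∃ K : ℝ, 1 ≤ K ∧ ∀ u v : Euc n → ℝ, Sol u v → ∀ R₀ : ℝ,
    ∃ x r, R₀ ≤ r ∧ 0 < r ∧ ‖x‖ ≤ K * r ∧ Ex x r u = Ex x r v := by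
  obtain ⟨δ, hδ, K, hK, C, hz⟩ := zero_norm (n := n)
  refine ⟨max 1 (K / δ), le_max_left _ _, fun u v h R₀ => ?_⟩
  obtain ⟨x, r, hr, hr0, hx, hlt⟩ := h.v_dominates hδ hz R₀
  obtain ⟨x', r', hr', hr0', hx', hlt'⟩ := h.swap.v_dominates hδ hz R₀
  set φ : ℝ → Euc n × ℝ := fun t => ((1 - t) • x + t • x', (1 - t) * r + t * r') with hφ
  have hφc : Continuous φ := by fun_prop
  have hc : Continuous fun t => Ex (φ t).1 (φ t).2 u - Ex (φ t).1 (φ t).2 v :=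
    ((continuous_Ex h.pgu).comp hφc).sub ((continuous_Ex h.pgv).comp hφc)
  have iv := intermediate_value_Icc (zero_le_one (α := ℝ)) hc.continuousOn
  obtain ⟨t, ht, he⟩ := iv (show (0 : ℝ) ∈ _ by
    simp only [hφ, sub_zero, one_smul, zero_smul, add_zero, one_mul, zero_mul, sub_self, zero_add]
    constructor <;> linarith)
  refine ⟨(φ t).1, (φ t).2, ?_, ?_, ?_, by simpa [sub_eq_zero] using he⟩
  · simp only [hφ]; nlinarith [ht.1, ht.2]
  · simp only [hφ]
    rcases eq_or_lt_of_le ht.1 with h0 | h0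
    · rw [← h0]; simpa using hr0
    · have := mul_pos h0 hr0'
      nlinarith [ht.2, mul_nonneg (sub_nonneg.2 ht.2) hr0.le]
  · have hb : ‖(φ t).1‖ ≤ K / δ * (φ t).2 := by
      simp only [hφ]
      calc _ ≤ (1 - t) * ‖x‖ + t * ‖x'‖ := by
            refine (norm_add_le _ _).trans_eq ?_
            rw [norm_smul, norm_smul, Real.norm_eq_abs, Real.norm_eq_abs,
              abs_of_nonneg (sub_nonneg.2 ht.2), abs_of_nonneg ht.1]
        _ ≤ (1 - t) * (K / δ * r) + t * (K / δ * r') := by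
            have := sub_nonneg.2 ht.2
            have := ht.1
            gcongr
        _ = _ := by ring
    refine hb.trans ?_
    have h2 : 0 ≤ (φ t).2 := by
      simp only [hφ]
      have := mul_nonneg (sub_nonneg.2 ht.2) hr0.le
      have := mul_nonneg ht.1 hr0'.le
      linarith
    exact mul_le_mul_of_nonneg_right (le_max_right _ _) h2

end Zero

/-! ### Pointwise consequences of flatness -/

section FlatPt
variable {n : ℕ} {u v : Euc n → ℝ}

/-- At unit scale, `(u, v)` is a solution which is `η`-close in the Gaussian `L²` norm, relative to
its size, to the pair `(⟪a, y⟫⁺, ⟪a, y⟫⁻)`, and its size is at least `1 / η`. -/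
structure Flat (η : ℝ) (a : Euc n) (u v : Euc n → ℝ) : Prop where
  sol : Sol u v
  fu : Ex 0 1 (fun y => (u y - max ⟪a, y⟫ 0) ^ 2) ≤ η * ‖a‖ ^ 2
  fv : Ex 0 1 (fun y => (v y - max (-⟪a, y⟫) 0) ^ 2) ≤ η * ‖a‖ ^ 2
  pos : 0 < ‖a‖
  big : 1 / η ≤ Hh u v 0 1
  up : Hh u v 0 1 ≤ 2 * ‖a‖ ^ 2
  lo : ‖a‖ ^ 2 ≤ Hh u v 0 1

lemma Flat.swap {η : ℝ} {a : Euc n} (h : Flat η a u v) : Flat η (-a) v u := by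
  have hs := Hh_swap (u := u) (v := v)
  refine ⟨h.sol.swap, ?_, ?_, by simpa using h.pos, ?_, ?_, ?_⟩
  · simpa using h.fv
  · simpa using h.fu
  · have := h.big; simpa [hs] using this
  · have := h.up; simpa [hs] using this
  · have := h.lo; simpa [hs] using this

lemma Flat.mono {η η' : ℝ} {a : Euc n} (hη : 0 < η) (hle : η ≤ η') (h : Flat η a u v) :
    Flat η' a u v := by
  have hb : η * ‖a‖ ^ 2 ≤ η' * ‖a‖ ^ 2 := by gcongr
  exact ⟨h.sol, h.fu.trans hb, h.fv.trans hb, h.pos,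
    (one_div_le_one_div_of_le hη hle).trans h.big, h.up, h.lo⟩

/-- A centred scale with large `H` is as flat as desired. -/
lemma flat_small (hn : 1 ≤ n) {η : ℝ} (hη : 0 < η) : ∃ M : ℝ, 1 ≤ M ∧
    ∀ u v : Euc n → ℝ, Sol u v → Ex 0 1 u = Ex 0 1 v → M ≤ Hh u v 0 1 →
      Flat η (av (fun y => u y - v y)) u v := by
  obtain ⟨θ, h0, h1, C, hC, hf⟩ := flat (n := n) hn
  have ht : Tendsto (fun x : ℝ => C * x ^ (-(1 - θ))) atTop (𝓝 (C * 0)) :=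
    (tendsto_rpow_neg_atTop (by linarith : 0 < 1 - θ)).const_mul C
  rw [mul_zero] at ht
  have hev : ∀ᶠ x : ℝ in atTop, C * x ^ (-(1 - θ)) < min (1 / 2) (η / 2) :=
    ht.eventually_lt_const (by positivity)
  obtain ⟨M, hM⟩ := eventually_atTop.1 hev
  refine ⟨max M (max 1 (1 / η)), (le_max_left _ _).trans (le_max_right _ _),
    fun u v h hE hH => ?_⟩
  obtain ⟨H, hHd⟩ : ∃ H, H = Hh u v 0 1 := ⟨_, rfl⟩
  rw [← hHd, max_le_iff, max_le_iff] at hH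
  obtain ⟨hH1, hH2, hH3⟩ := hH
  obtain ⟨f1, f2, f3, f4, f5⟩ := hf u v h hE (hHd ▸ hH2) _ rfl
  rw [← hHd] at f1 f2 f4 f5
  have hHp : 0 < H := by linarith
  have hb := hM H hH1
  have e : C * H ^ θ = (C * H ^ (-(1 - θ))) * H := by
    rw [mul_assoc, ← Real.rpow_add_one hHp.ne']; congr 2; ring
  have b1 : C * H ^ θ ≤ 1 / 2 * H := by
    rw [e]; exact mul_le_mul_of_nonneg_right (hb.le.trans (min_le_left _ _)) hHp.le
  have b2 : C * H ^ θ ≤ η / 2 * H := by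
    rw [e]; exact mul_le_mul_of_nonneg_right (hb.le.trans (min_le_right _ _)) hHp.le
  have up : H ≤ 2 * ‖av (fun y => u y - v y)‖ ^ 2 := by linarith
  have b3 : η / 2 * H ≤ η * ‖av (fun y => u y - v y)‖ ^ 2 := by nlinarith
  refine ⟨h, by linarith, by linarith, ?_, hHd ▸ hH3, hHd ▸ up, hHd ▸ f4⟩
  by_contra hc
  have : ‖av (fun y => u y - v y)‖ = 0 := le_antisymm (not_lt.1 hc) (norm_nonneg _)
  rw [this] at up
  norm_num at up
  linarith

lemma exp_beats {c B : ℝ} (hc : 0 < c) (hB : 0 < B) {δ : ℝ} (hδ : 0 < δ) : ∃ G₀ : ℝ, 1 ≤ G₀ ∧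
    ∀ G, G₀ ≤ G → 1 ≤ c * G ^ (2/5 : ℝ) ∧
      B * (G * (1 + B * G) ^ 2) * Real.exp (-(c * G ^ (2/5 : ℝ))) ≤ δ := by
  have h1 : Tendsto (fun G : ℝ => c * G ^ (2/5 : ℝ)) atTop atTop :=
    (tendsto_rpow_atTop (by norm_num)).const_mul_atTop hc
  have h2 := (Real.tendsto_pow_mul_exp_neg_atTop_nhds_zero 9).comp h1
  have h3 := h2.const_mul (B * (1 + B) ^ 2 / c ^ 9)
  rw [mul_zero] at h3
  obtain ⟨G₀, hG⟩ := eventually_atTop.1 ((h1.eventually_ge_atTop 1).and (h3.eventually_lt_const hδ))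
  refine ⟨max 1 G₀, le_max_left _ _, fun G hGG => ?_⟩
  have hG1 : 1 ≤ G := (le_max_left _ _).trans hGG
  obtain ⟨a1, a2⟩ := hG G ((le_max_right _ _).trans hGG)
  refine ⟨a1, le_trans ?_ a2.le⟩
  simp only [Function.comp]
  obtain ⟨t, ht⟩ : ∃ t, t = G ^ (2/5 : ℝ) := ⟨_, rfl⟩
  rw [← ht]
  have ht1 : G ≤ t ^ 3 := by
    rw [ht, ← Real.rpow_natCast, ← Real.rpow_mul (by linarith)]
    conv_lhs => rw [← Real.rpow_one G]
    exact Real.rpow_le_rpow_of_exponent_le hG1 (by norm_num)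
  have h4 : (1 + B * G) ≤ (1 + B) * G := by nlinarith
  have h5 : G * (1 + B * G) ^ 2 ≤ (1 + B) ^ 2 * t ^ 9 := by
    calc G * (1 + B * G) ^ 2 ≤ G * ((1 + B) * G) ^ 2 := by gcongr
      _ = (1 + B) ^ 2 * G ^ 3 := by ring
      _ ≤ (1 + B) ^ 2 * (t ^ 3) ^ 3 := by gcongr
      _ = _ := by ring
  calc B * (G * (1 + B * G) ^ 2) * Real.exp (-(c * t))
      ≤ B * ((1 + B) ^ 2 * t ^ 9) * Real.exp (-(c * t)) := by gcongr
    _ = _ := by field_simp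

lemma max_sq_le_of_inner {a y z : Euc n} (h : 0 ≤ ⟪a, z⟫) :
    (max (-⟪a, y⟫) 0) ^ 2 ≤ ⟪a, y - z⟫ ^ 2 := by
  rw [inner_sub_right]
  rcases le_total (-⟪a, y⟫) 0 with h1 | h1
  · rw [max_eq_right h1]; nlinarith [sq_nonneg (⟪a, y⟫ - ⟪a, z⟫)]
  · rw [max_eq_left h1]; nlinarith

lemma Ex_inner_sub_sq (a z : Euc n) (s : ℝ) :
    Ex z s (fun y => ⟪a, y - z⟫ ^ 2) = s ^ 2 * ‖a‖ ^ 2 := by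
  rw [Ex_std]
  have : (fun y => ⟪a, z + s • y - z⟫ ^ 2) = fun y : Euc n => s ^ 2 * ⟪a, y⟫ ^ 2 := by
    funext y; rw [add_sub_cancel_left, inner_smul_right]; ring
  rw [this, Ex_cmul, Ex_inner_sq]

lemma Ex_inner_at (a z : Euc n) (s : ℝ) : Ex z s (fun y => ⟪a, y⟫) = ⟪a, z⟫ := by
  rw [Ex_std]
  have : (fun y : Euc n => ⟪a, z + s • y⟫) = fun y : Euc n => ⟪a, z⟫ + s * ⟪a, y⟫ := by
    funext y; rw [inner_add_right, inner_smul_right]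
  rw [this, Ex_add (PG.const _) ((PG.inner a).cmul s), Ex_const, Ex_cmul, Ex_inner]; ring

/-- `L²` triangle inequality with a parameter. -/
lemma Ex_young {f g : Euc n → ℝ} (hf : PG f) (hg : PG g) {τ : ℝ} (hτ : 0 < τ) (x : Euc n) (r : ℝ) :
    Ex x r (fun y => f y ^ 2) ≤ (1 + τ) * Ex x r (fun y => g y ^ 2) +
      (1 + 1 / τ) * Ex x r (fun y => (f y - g y) ^ 2) := by
  rw [← Ex_cmul, ← Ex_cmul, ← Ex_add ((hg.pow 2).cmul _) (((hf.sub hg).pow 2).cmul _)]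
  refine Ex_mono (hf.pow 2) (((hg.pow 2).cmul _).add (((hf.sub hg).pow 2).cmul _)) (fun y => ?_) x r
  have e : (1 + τ) * g y ^ 2 + (1 + 1 / τ) * (f y - g y) ^ 2 - f y ^ 2 =
      (τ * g y - (f y - g y)) ^ 2 / τ := by field_simp; ring
  have : 0 ≤ (τ * g y - (f y - g y)) ^ 2 / τ := by positivity
  linarith

lemma young_up {τ t U V P Q u' v' X Y E : ℝ} (hτ : 0 < τ) (hτ1 : τ ≤ 1 / 2) (ht : 0 < t)
    (hX : 0 < X) (y1 : U ≤ (1 + τ) * P + t * u') (y2 : V ≤ (1 + τ) * Q + t * v')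
    (e1 : u' ≤ E) (e2 : v' ≤ E) (hPQ : P + Q = X + Y) (hY : Y ≤ τ * X) (hE : t * (2 * E) ≤ τ * X) :
    U + V ≤ (1 + 4 * τ) * X := by
  have k1 := mul_le_mul_of_nonneg_left e1 ht.le
  have k2 := mul_le_mul_of_nonneg_left e2 ht.le
  have k3 : (1 + τ) * (P + Q) ≤ (1 + τ) * (X + τ * X) := by
    rw [hPQ]; gcongr
  have k4 : τ * (τ * X) ≤ 1 / 2 * (τ * X) := by gcongr
  nlinarith

lemma young_lo {τ t U V P Q u' v' X Y E : ℝ} (hτ : 0 < τ) (hτ1 : τ ≤ 1 / 2) (ht : 0 < t)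
    (hUV : 0 < U + V) (y1 : P ≤ (1 + τ) * U + t * u') (y2 : Q ≤ (1 + τ) * V + t * v')
    (e1 : u' ≤ E) (e2 : v' ≤ E) (hPQ : P + Q = X + Y) (hY : 0 ≤ Y) (hE : t * (2 * E) ≤ τ * X) :
    X ≤ (1 + 4 * τ) * (U + V) := by
  have k1 := mul_le_mul_of_nonneg_left e1 ht.le
  have k2 := mul_le_mul_of_nonneg_left e2 ht.le
  have k7 : (1 - τ) * X ≤ (1 + τ) * (U + V) := by linarith
  have k8 : (1 + τ) * (U + V) ≤ (1 - τ) * ((1 + 4 * τ) * (U + V)) := by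
    have : 1 + τ ≤ (1 - τ) * (1 + 4 * τ) := by nlinarith
    rw [← mul_assoc]; gcongr
  exact le_of_mul_le_mul_left (k7.trans k8) (by linarith)

lemma Sol.dominates (h : Sol u v) {c ρ : ℝ} {a z : Euc n} (hc : 0 < c) (hρ0 : 0 < ρ)
    (hρc : ρ ≤ c / 8) (ha : 0 < ‖a‖) (hza : c * ‖a‖ ≤ ⟪a, z⟫)
    (eu : Ex z ρ (fun y => (u y - max ⟪a, y⟫ 0) ^ 2) ≤ c ^ 2 / 64 * ‖a‖ ^ 2)
    (ev : Ex z ρ (fun y => (v y - max (-⟪a, y⟫) 0) ^ 2) ≤ c ^ 2 / 64 * ‖a‖ ^ 2) :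
    Ex z ρ v ≤ Ex z ρ u := by
  have hp : PG (fun y : Euc n => max ⟪a, y⟫ 0) := (PG.inner a).max (PG.const 0)
  have hq : PG (fun y : Euc n => max (-⟪a, y⟫) 0) := (PG.inner a).neg.max (PG.const 0)
  have hpz : 0 ≤ ⟪a, z⟫ := le_trans (by positivity) hza
  have pi := ((PG.inner a).sub (PG.const ⟪a, z⟫)).pow 2
  have q1 : Ex z ρ (fun y => (max (-⟪a, y⟫) 0) ^ 2) ≤ ρ ^ 2 * ‖a‖ ^ 2 := by
    rw [← Ex_inner_sub_sq a z ρ]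
    refine Ex_mono (hq.pow 2) ?_ (fun y => max_sq_le_of_inner hpz) z ρ
    simpa only [inner_sub_right] using pi
  have y2 := Ex_young h.pgv hq one_pos z ρ
  have hρ2 : ρ ^ 2 ≤ c ^ 2 / 64 := by
    calc ρ ^ 2 ≤ (c / 8) ^ 2 := by gcongr
      _ = _ := by ring
  have hv2 : Ex z ρ (fun y => v y ^ 2) ≤ (c / 4 * ‖a‖) ^ 2 := by
    have : ρ ^ 2 * ‖a‖ ^ 2 ≤ c ^ 2 / 64 * ‖a‖ ^ 2 := by gcongr
    rw [mul_pow]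
    linarith
  have hv1 := abs_le_of_sq_le_sq ((Ex_sq_le h.pgv z ρ).trans hv2) (by positivity)
  have hu2 : Ex z ρ (fun y => u y - max ⟪a, y⟫ 0) ^ 2 ≤ (c / 8 * ‖a‖) ^ 2 := by
    refine (Ex_sq_le (h.pgu.sub hp) z ρ).trans (eu.trans ?_)
    rw [mul_pow]
    linarith
  have hu1 := abs_le_of_sq_le_sq hu2 (by positivity)
  rw [Ex_sub h.pgu hp] at hu1
  have m := Ex_mono (PG.inner a) hp (fun y => le_max_left _ _) z ρ
  rw [Ex_inner_at] at m
  have h1 := (abs_le.1 hu1).1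
  have h2 := (abs_le.1 hv1).2
  have h3 := mul_pos hc ha
  linarith

/-- Away from the zero plane, on the side where `u` dominates, the frequency is small. -/
lemma Flat.freq {ε c K : ℝ} (hε : 0 < ε) (hc : 0 < c) : ∃ ρ η : ℝ, 0 < ρ ∧ ρ < 1 / 2 ∧ 0 < η ∧
    ∀ (u v : Euc n → ℝ) (a : Euc n), Flat η a u v → ∀ z, ‖z‖ ≤ K → c * ‖a‖ ≤ ⟪a, z⟫ →
      Nn u v z ρ ≤ ε ∧ Ex z ρ v ≤ Ex z ρ u := by
  obtain ⟨τ, hτ0, hτ1, hτ2⟩ : ∃ τ : ℝ, 0 < τ ∧ τ ≤ 1 / 2 ∧ 16 * τ ≤ ε :=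
    ⟨min (1 / 2) (ε / 16), by positivity, min_le_left _ _, by
      have := min_le_right (1 / 2) (ε / 16); linarith⟩
  obtain ⟨ρ, hρ0, hρ1, hρ2⟩ : ∃ ρ : ℝ, 0 < ρ ∧ ρ < 1 / 2 ∧ 4 * ρ ≤ τ * c :=
    ⟨min (1 / 4) (τ * c / 4), by positivity, (min_le_left _ _).trans_lt (by norm_num), by
      have := min_le_right (1 / 4) (τ * c / 4); linarith⟩
  obtain ⟨C1, hC1, h1⟩ := Ex_cmp (n := n) hρ0 (by linarith : ρ < 1) K
  obtain ⟨C2, hC2, h2⟩ := Ex_cmp (n := n) (by linarith : 0 < 2 * ρ) (by linarith : 2 * ρ < 1) K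
  obtain ⟨η, hη0, hη1, hη2⟩ : ∃ η : ℝ, 0 < η ∧ (1 + 1 / τ) * (2 * ((C1 + C2) * η)) ≤ τ * c ^ 2 ∧
      (C1 + C2) * η ≤ c ^ 2 / 64 := by
    obtain ⟨Q, hQ⟩ : ∃ Q, Q = min (τ * c ^ 2 / (2 * (1 + 1 / τ))) (c ^ 2 / 64) := ⟨_, rfl⟩
    have hQp : 0 < Q := by rw [hQ]; positivity
    refine ⟨Q / (C1 + C2), by positivity, ?_, ?_⟩
    · rw [mul_div_cancel₀ _ (by linarith : C1 + C2 ≠ 0)]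
      have : Q ≤ τ * c ^ 2 / (2 * (1 + 1 / τ)) := hQ ▸ min_le_left _ _
      rw [le_div_iff₀ (by positivity)] at this
      linarith
    · rw [mul_div_cancel₀ _ (by linarith : C1 + C2 ≠ 0)]
      exact hQ ▸ min_le_right _ _
  refine ⟨ρ, η, hρ0, hρ1, hη0, fun u v a hF z hz hza => ?_⟩
  have h := hF.sol
  have ha := hF.pos
  have hp : PG (fun y : Euc n => max ⟪a, y⟫ 0) := (PG.inner a).max (PG.const 0)
  have hq : PG (fun y : Euc n => max (-⟪a, y⟫) 0) := (PG.inner a).neg.max (PG.const 0)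
  have hz' : ‖(0 : Euc n) - z‖ ≤ K := by simpa using hz
  obtain ⟨A, hA⟩ : ∃ A, A = ‖a‖ ^ 2 := ⟨_, rfl⟩
  have hAp : 0 < A := by rw [hA]; positivity
  -- both errors at a scale `s`
  have err : ∀ s C, (∀ f : Euc n → ℝ, PG f → (∀ y, 0 ≤ f y) → ∀ x y : Euc n, ‖x - y‖ ≤ K →
      Ex y s f ≤ C * Ex x 1 f) → 1 ≤ C → C ≤ C1 + C2 →
      Ex z s (fun y => (u y - max ⟪a, y⟫ 0) ^ 2) ≤ (C1 + C2) * η * A ∧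
      Ex z s (fun y => (v y - max (-⟪a, y⟫) 0) ^ 2) ≤ (C1 + C2) * η * A := by
    intro s C hs hC1 hC
    have e : ∀ X, X ≤ η * A → C * X ≤ (C1 + C2) * η * A := by
      intro X hX
      calc C * X ≤ C * (η * A) := by gcongr
        _ ≤ (C1 + C2) * (η * A) := by gcongr
        _ = _ := by ring
    exact ⟨(hs _ ((h.pgu.sub hp).pow 2) (fun _ => sq_nonneg _) 0 z hz').trans
        (e _ (hA ▸ hF.fu)),
      (hs _ ((h.pgv.sub hq).pow 2) (fun _ => sq_nonneg _) 0 z hz').trans (e _ (hA ▸ hF.fv))⟩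
  obtain ⟨e1u, e1v⟩ := err ρ C1 h1 hC1 (by linarith)
  obtain ⟨e2u, e2v⟩ := err (2 * ρ) C2 h2 hC2 (by linarith)
  have hpq : ∀ s, Ex z s (fun y => (max ⟪a, y⟫ 0) ^ 2) + Ex z s (fun y => (max (-⟪a, y⟫) 0) ^ 2) =
      ⟪a, z⟫ ^ 2 + s ^ 2 * A := by
    intro s
    rw [← Ex_add (hp.pow 2) (hq.pow 2), hA, ← Ex_inner_sq']
    congr 1; funext y
    rcases le_total (⟪a, y⟫) 0 with h0 | h0
    · rw [max_eq_right h0, max_eq_left (by linarith)]; ring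
    · rw [max_eq_left h0, max_eq_right (by linarith)]; ring
  have hHs : ∀ s, Hh u v z s = Ex z s (fun y => u y ^ 2) + Ex z s (fun y => v y ^ 2) := fun s =>
    Ex_add (h.pgu.pow 2) (h.pgv.pow 2) z s
  obtain ⟨X, hX⟩ : ∃ X, X = ⟪a, z⟫ ^ 2 := ⟨_, rfl⟩
  have hXc : c ^ 2 * A ≤ X := by
    rw [hX, hA, ← mul_pow]; exact pow_le_pow_left₀ (by positivity) hza 2
  have hXp : 0 < X := lt_of_lt_of_le (by positivity) hXc
  obtain ⟨E, hE⟩ : ∃ E, E = (C1 + C2) * η * A := ⟨_, rfl⟩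
  have hSX : (1 + 1 / τ) * (2 * E) ≤ τ * X := by
    have : (1 + 1 / τ) * (2 * E) = (1 + 1 / τ) * (2 * ((C1 + C2) * η)) * A := by rw [hE]; ring
    rw [this]
    calc _ ≤ τ * c ^ 2 * A := by gcongr
      _ = τ * (c ^ 2 * A) := by ring
      _ ≤ _ := by gcongr
  have hτi : 0 < 1 + 1 / τ := by positivity
  have hρX : 4 * ρ ^ 2 * A ≤ τ * X := by
    have : (4 * ρ) ^ 2 ≤ (τ * c) ^ 2 := pow_le_pow_left₀ (by positivity) hρ2 2
    have h3 : 4 * ρ ^ 2 ≤ τ * c ^ 2 := by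
      have : τ ^ 2 * c ^ 2 ≤ τ * c ^ 2 := by
        have : τ ^ 2 ≤ τ := by nlinarith
        gcongr
      nlinarith [sq_nonneg ρ]
    calc 4 * ρ ^ 2 * A ≤ τ * c ^ 2 * A := by gcongr
      _ = τ * (c ^ 2 * A) := by ring
      _ ≤ _ := by gcongr
  rw [← hE] at e1u e1v e2u e2v
  constructor
  · have up : Hh u v z (2 * ρ) ≤ (1 + 4 * τ) * X := by
      have y1 := Ex_young h.pgu hp hτ0 z (2 * ρ)
      have y2 := Ex_young h.pgv hq hτ0 z (2 * ρ)
      rw [hHs]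
      exact young_up hτ0 hτ1 hτi hXp y1 y2 e2u e2v ((hpq _).trans (by rw [← hX])) (by linarith) hSX
    have lo : X ≤ (1 + 4 * τ) * Hh u v z ρ := by
      have y1 := Ex_young hp h.pgu hτ0 z ρ
      have y2 := Ex_young hq h.pgv hτ0 z ρ
      have s1 : (fun y => (max ⟪a, y⟫ 0 - u y) ^ 2) = fun y => (u y - max ⟪a, y⟫ 0) ^ 2 := by
        funext y; ring
      have s2 : (fun y => (max (-⟪a, y⟫) 0 - v y) ^ 2) = fun y => (v y - max (-⟪a, y⟫) 0) ^ 2 := by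
        funext y; ring
      rw [s1] at y1
      rw [s2] at y2
      have hHp := h.H_pos z ρ
      rw [hHs] at hHp ⊢
      exact young_lo hτ0 hτ1 hτi hHp y1 y2 e1u e1v ((hpq _).trans (by rw [← hX])) (by positivity) hSX
    have hHp := h.H_pos z ρ
    have nd := h.N_doubling z hρ0
    have k9 : Hh u v z (2 * ρ) ≤ (1 + 16 * τ) * Hh u v z ρ := by
      calc _ ≤ (1 + 4 * τ) * X := up
        _ ≤ (1 + 4 * τ) * ((1 + 4 * τ) * Hh u v z ρ) := by gcongr
        _ = (1 + 4 * τ) ^ 2 * Hh u v z ρ := by ring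
        _ ≤ _ := by
          have : (1 + 4 * τ) ^ 2 ≤ 1 + 16 * τ := by nlinarith
          gcongr
    have : Nn u v z ρ * Hh u v z ρ ≤ ε * Hh u v z ρ := by nlinarith
    exact le_of_mul_le_mul_right this hHp
  · have hρc : ρ ≤ c / 8 := by
      have : τ * c ≤ 1 / 2 * c := by gcongr
      linarith
    have hE64 : E ≤ c ^ 2 / 64 * A := by rw [hE]; gcongr
    rw [hA] at hE64
    exact h.dominates hc hρ0 hρc ha hza (e1u.trans hE64) (e1v.trans hE64)

/-- Away from the zero plane, on the side where `u` dominates, `v` is tiny even against powers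
of `u`. -/
lemma Flat.tiny (hn : 1 ≤ n) {c δ : ℝ} (hc : 0 < c) (K : ℝ) (hδ : 0 < δ) : ∃ η : ℝ, 0 < η ∧
    ∀ (u v : Euc n → ℝ) (a : Euc n), Flat η a u v → ∀ z, ‖z‖ ≤ K → c * ‖a‖ ≤ ⟪a, z⟫ →
      1 ≤ u z ∧ v z * (1 + u z) ^ 2 ≤ δ := by
  obtain ⟨ε, hε, C, hC, k, hk, hD⟩ := dominant_region (n := n) hn
  obtain ⟨ρ, η, hρ0, hρ1, hη, hN⟩ := Flat.freq (n := n) (K := K) hε hc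
  obtain ⟨C', hC', hHc⟩ := Hh_cmp (n := n) hρ0 K
  obtain ⟨G₀, hG₀, hG⟩ := exp_beats hk (by positivity : 0 < C / ρ) hδ
  have hM : 0 < C' * (C + G₀) / ρ ^ 2 := by positivity
  refine ⟨min η (1 / (C' * (C + G₀) / ρ ^ 2)), by positivity, fun u v a hF z hz hza => ?_⟩
  have hF' := hF.mono (by positivity) (min_le_left _ _)
  have hb := (hF.mono (by positivity) (min_le_right _ _)).big
  rw [one_div_one_div] at hb
  have h := hF.sol
  obtain ⟨n1, n2⟩ := hN u v a hF' z hz hza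
  have hcmp := (hHc u v h z hz).2
  obtain ⟨G, hGd⟩ : ∃ G, G = ρ ^ 2 * Hh u v z ρ := ⟨_, rfl⟩
  have hGb : C + G₀ ≤ G := by
    have h1 := hb.trans hcmp
    rw [div_le_iff₀ (by positivity)] at h1
    have h2 : C' * (C + G₀) ≤ C' * G := by rw [hGd]; linarith
    exact le_of_mul_le_mul_left h2 (by linarith)
  have hsc := hD _ _ (h.sc z hρ0) (by rw [h.Nn_sc z hρ0]; simpa using n1)
    (by rw [Hh_sc, smul_zero, add_zero, mul_one, ← hGd]; linarith)
    (by rw [Ex_sc, Ex_sc, smul_zero, add_zero, mul_one]; gcongr) 0 (by simp)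
  rw [Hh_sc, sc_apply, sc_apply, smul_zero, add_zero, mul_one, ← hGd] at hsc
  obtain ⟨s1, s2⟩ := hsc
  obtain ⟨g1, g2⟩ := hG G (by linarith)
  have hup : 0 < u z := h.pu z
  have hvp : 0 < v z := h.pv z
  have hG1 : 1 ≤ G := by linarith
  have hsq : √G ≤ G := by
    rw [Real.sqrt_le_left (by linarith)]; nlinarith
  have hu : u z ≤ C / ρ * G := by
    have h1 := h.u_le_sqrt z hρ0.le
    have h2 : ρ * √(Hh u v z ρ) = √G := by
      rw [hGd, Real.sqrt_mul (sq_nonneg _), Real.sqrt_sq hρ0.le]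
    have h3 : u z * ρ ≤ C * G := by nlinarith
    rw [div_mul_eq_mul_div, le_div_iff₀ hρ0]; exact h3
  constructor
  · nlinarith
  · refine le_trans ?_ g2
    have hv : v z ≤ C / ρ * G * Real.exp (-(k * G ^ (2/5 : ℝ))) := by
      rw [div_mul_eq_mul_div, div_mul_eq_mul_div, le_div_iff₀ hρ0]
      calc v z * ρ = ρ * v z := by ring
        _ ≤ _ := s2
        _ ≤ _ := by gcongr
    calc v z * (1 + u z) ^ 2
        ≤ (C / ρ * G * Real.exp (-(k * G ^ (2/5 : ℝ)))) * (1 + C / ρ * G) ^ 2 := by gcongr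
      _ = _ := by ring

end FlatPt

section FlatPt2
variable {n : ℕ} {u v : Euc n → ℝ}

/-- Functions bounded below on a ball have a proportional Gaussian average. -/
lemma Ex_mass : ∃ κ : ℝ, 0 < κ ∧ ∀ f : Euc n → ℝ, PG f → (∀ y, 0 ≤ f y) → ∀ (z : Euc n) (r m : ℝ),
    0 < r → 0 ≤ m → (∀ y, ‖y - z‖ ≤ r → m ≤ f y) → κ * m ≤ Ex z r f := by
  have hφ : PG (fun y : Euc n => max (1 - ‖y‖) 0) := ((PG.const 1).sub PG.norm).max (PG.const 0)
  refine ⟨∫ y, max (1 - ‖y‖) 0 ∂(gam n), ?_, fun f hf h0 z r m hr hm hb => ?_⟩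
  · have hi := integrable_gam.1 (hφ.integrable (μ := gam n))
    rw [integral_gam]
    refine integral_pos_of_integrable_nonneg_nonzero (gd_continuous.mul hφ.continuous) hi
      (fun y => mul_nonneg (gd_pos y).le (le_max_right _ _)) (x := 0) ?_
    simp [(gd_pos (0 : Euc n)).ne']
  · rw [mul_comm, ← integral_const_mul]
    refine integral_mono (hφ.cmul m).integrable (hf.comp_aff z r).integrable fun y => ?_
    rcases le_total ‖y‖ 1 with hy | hy
    · have h1 : m ≤ f (z + r • y) := hb _ (by
        rw [add_sub_cancel_left, norm_smul, Real.norm_eq_abs, abs_of_pos hr]; nlinarith)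
      have h2 : max (1 - ‖y‖) 0 ≤ 1 := max_le (by linarith [norm_nonneg y]) zero_le_one
      calc m * max (1 - ‖y‖) 0 ≤ m * 1 := by gcongr
        _ ≤ _ := by linarith
    · simp only
      rw [max_eq_right (by linarith), mul_zero]; exact h0 _

/-- A bound on the partial derivatives in a ball gives a Lipschitz bound at its center. -/
lemma lip_of_pd {f : Euc n → ℝ} (hf : Differentiable ℝ f) (z : Euc n) {ρ L : ℝ}
    (hL : ∀ y, ‖y - z‖ ≤ ρ → ∀ i, |pd i f y| ≤ L) (y : Euc n) (hy : ‖y - z‖ ≤ ρ) :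
    |f y - f z| ≤ n * L * ‖y - z‖ := by
  have hb : ∀ x ∈ closedBall z ρ, ‖fderiv ℝ f x‖ ≤ n * L := by
    intro x hx
    rw [mem_closedBall, dist_eq_norm] at hx
    rcases Nat.eq_zero_or_pos n with h0 | h0
    · subst h0
      have : fderiv ℝ f x = 0 := by ext w; rw [Subsingleton.elim w 0]; simp
      simp [this]
    have hL0 : 0 ≤ L := (abs_nonneg _).trans (hL x hx ⟨0, h0⟩)
    refine ContinuousLinearMap.opNorm_le_bound _ (by positivity) fun w => ?_
    rw [fderiv_apply_eq, Real.norm_eq_abs]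
    calc |∑ i, w i * pd i f x| ≤ ∑ i, |w i * pd i f x| := Finset.abs_sum_le_sum_abs _ _
      _ ≤ ∑ _i : Fin n, ‖w‖ * L := Finset.sum_le_sum fun i _ => by
          rw [abs_mul]
          exact mul_le_mul (abs_coord_le w i) (hL x hx i) (abs_nonneg _) (norm_nonneg _)
      _ = n * L * ‖w‖ := by simp; ring
  have := (convex_closedBall z ρ).norm_image_sub_le_of_norm_fderiv_le
    (fun x _ => hf x) hb (mem_closedBall_self ((norm_nonneg _).trans hy))
    (by rw [mem_closedBall, dist_eq_norm]; exact hy)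
  simpa [Real.norm_eq_abs] using this

lemma contDiff_inner (a : Euc n) : ContDiff ℝ 2 (fun y : Euc n => ⟪a, y⟫) :=
  contDiff_const.inner ℝ contDiff_id

lemma lap_inner (a x : Euc n) : lap (fun y : Euc n => ⟪a, y⟫) x = 0 := by
  rw [lap_eq]
  refine Finset.sum_eq_zero fun i _ => ?_
  have : pd i (fun y : Euc n => ⟪a, y⟫) = fun _ => a i := funext fun y => pd_inner i a y
  rw [this, pd_const]

lemma inner_ball {a z y : Euc n} {c d : ℝ} (h : c * ‖a‖ ≤ ⟪a, z⟫) (hd : d ≤ c / 2)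
    (hy : ‖y - z‖ ≤ d) : c / 2 * ‖a‖ ≤ ⟪a, y⟫ := by
  have e : ⟪a, y⟫ = ⟪a, z⟫ + ⟪a, y - z⟫ := by rw [inner_sub_right]; ring
  have h1 := (abs_le.1 (abs_real_inner_le_norm a (y - z))).1
  have h2 : ‖a‖ * ‖y - z‖ ≤ ‖a‖ * (c / 2) := by gcongr; linarith
  nlinarith

lemma Flat.norm_ge {η : ℝ} {a : Euc n} (hη : 0 < η) (hη1 : η ≤ 1 / 2) (h : Flat η a u v) :
    1 ≤ ‖a‖ := by
  have h1 := h.big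
  have h2 := h.up
  have h3 : 2 ≤ 1 / η := by rw [le_div_iff₀ hη]; linarith
  nlinarith [norm_nonneg a]

lemma tiny_lap {U V δ : ℝ} (hU : 0 < U) (hV : 0 < V) (hδ : δ ≤ 1) (h : V * (1 + U) ^ 2 ≤ δ) :
    V ≤ δ ∧ U * V ^ 2 ≤ δ ∧ V * U ^ 2 ≤ δ := by
  have h1 : V * (1 + U) ^ 2 = V + 2 * (V * U) + V * U ^ 2 := by ring
  have h2 := mul_pos hV hU
  have h3 : 0 < V * U ^ 2 := by positivity
  have h4 : V ≤ δ := by linarith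
  refine ⟨h4, ?_, by linarith⟩
  have : U * V ^ 2 ≤ (V * U) * 1 := by
    have : V ≤ 1 := h4.trans hδ
    nlinarith
  linarith

/-- On the positive side of the plane, flatness in mean square implies uniform closeness of `u` to
the linear function. -/
lemma Flat.close (hn : 1 ≤ n) {c δ : ℝ} (hc : 0 < c) (K : ℝ) (hδ : 0 < δ) : ∃ η : ℝ, 0 < η ∧
    ∀ (u v : Euc n → ℝ) (a : Euc n), Flat η a u v → ∀ z, ‖z‖ ≤ K → c * ‖a‖ ≤ ⟪a, z⟫ →
      |u z - ⟪a, z⟫| ≤ δ * ‖a‖ := by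
  obtain ⟨η₁, hη₁, ht⟩ := Flat.tiny (n := n) hn (by positivity : 0 < c / 2) (K + 1) one_pos
  obtain ⟨B, hB, hH⟩ := Hh_cmp (n := n) one_pos (K + 1)
  obtain ⟨κ, hκ, hm⟩ := Ex_mass (n := n)
  obtain ⟨d, hd0, hd1, hdc⟩ : ∃ d : ℝ, 0 < d ∧ d ≤ 1 ∧ d ≤ c / 2 :=
    ⟨min 1 (c / 2), by positivity, min_le_left _ _, min_le_right _ _⟩
  obtain ⟨L, hL⟩ : ∃ L : ℝ, L = n * (2 * B) / (d / 2) + 1 := ⟨_, rfl⟩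
  have hLp : 0 < L := by rw [hL]; positivity
  obtain ⟨r, hr0, hr1, hr2⟩ : ∃ r : ℝ, 0 < r ∧ r ≤ d / 2 ∧ (n * L + 1) * r ≤ δ / 2 := by
    refine ⟨min (d / 2) (δ / 2 / (n * L + 1)), by positivity, min_le_left _ _, ?_⟩
    calc _ ≤ (n * L + 1) * (δ / 2 / (n * L + 1)) := by gcongr; exact min_le_right _ _
      _ = _ := by field_simp
  obtain ⟨C, hC, hcmp⟩ := Ex_cmp (n := n) hr0 (by linarith : r < 1) K
  obtain ⟨η₂, hη₂0, hη₂⟩ : ∃ η : ℝ, 0 < η ∧ C * η < κ * (δ ^ 2 / 4) := by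
    refine ⟨κ * (δ ^ 2 / 4) / (2 * C), by positivity, ?_⟩
    have : C * (κ * (δ ^ 2 / 4) / (2 * C)) = κ * (δ ^ 2 / 4) / 2 := by field_simp
    rw [this]; exact half_lt_self (by positivity)
  refine ⟨min (min η₁ η₂) (1 / 2), by positivity, fun u v a hF z hz hza => ?_⟩
  have hη0 : 0 < min (min η₁ η₂) (1 / 2 : ℝ) := by positivity
  have ha1 := hF.norm_ge hη0 (min_le_right _ _)
  have hF1 := hF.mono hη0 ((min_le_left _ _).trans (min_le_left _ _))
  have hF2 := hF.mono hη0 ((min_le_left _ _).trans (min_le_right _ _))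
  have h := hF.sol
  have near : ∀ y, ‖y - z‖ ≤ d → c / 2 * ‖a‖ ≤ ⟪a, y⟫ ∧ ‖y‖ ≤ K + 1 := fun y hy =>
    ⟨inner_ball hza hdc hy, by
      have := norm_add_le (y - z) z
      rw [sub_add_cancel] at this; linarith⟩
  have hu : ∀ y, ‖y - z‖ ≤ d → |u y| ≤ 2 * B * ‖a‖ := by
    intro y hy
    rw [abs_of_pos (h.pu y)]
    refine (h.u_le_sqrt y zero_le_one).trans ?_
    rw [Real.sqrt_le_left (by positivity)]
    have h1 := (hH u v h y (near y hy).2).1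
    have h2 : B * Hh u v 0 1 ≤ B * (2 * ‖a‖ ^ 2) := by gcongr; exact hF.up
    have h3 : B * (2 * ‖a‖ ^ 2) ≤ (2 * B * ‖a‖) ^ 2 := by
      have : B ≤ B ^ 2 := by nlinarith
      have : B * ‖a‖ ^ 2 ≤ B ^ 2 * ‖a‖ ^ 2 := by gcongr
      have : 0 ≤ B ^ 2 * ‖a‖ ^ 2 := by positivity
      nlinarith
    linarith
  have hl : ∀ y, ‖y - z‖ ≤ d → |lap u y| ≤ 1 := by
    intro y hy
    obtain ⟨t1, t2⟩ := ht u v a hF1 y (near y hy).2 (near y hy).1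
    rw [h.eu, abs_of_pos (mul_pos (h.pu y) (pow_pos (h.pv y) 2))]
    exact (tiny_lap (h.pu y) (h.pv y) le_rfl t2).2.1
  have hg : ∀ y, ‖y - z‖ ≤ d / 2 → ∀ i, |pd i u y| ≤ L * ‖a‖ := by
    intro y hy i
    have tri : ∀ x, ‖x - y‖ ≤ d / 2 → ‖x - z‖ ≤ d := fun x hx => by
      have := norm_sub_le_norm_sub_add_norm_sub x y z; linarith
    have := grad_est h.c2u y (by positivity : 0 < d / 2) (fun x hx => hu x (tri x hx))
      (fun x hx => hl x (tri x hx)) i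
    refine this.trans ?_
    rw [hL, add_mul]
    have e : n * (2 * B * ‖a‖) / (d / 2) = n * (2 * B) / (d / 2) * ‖a‖ := by ring
    rw [e]
    linarith
  have hlip := lip_of_pd (diff2 h.c2u) z hg
  by_contra hcon
  push Not at hcon
  have hp : PG (fun y : Euc n => max ⟪a, y⟫ 0) := (PG.inner a).max (PG.const 0)
  have low : ∀ y, ‖y - z‖ ≤ r → δ ^ 2 / 4 * ‖a‖ ^ 2 ≤ (u y - max ⟪a, y⟫ 0) ^ 2 := by
    intro y hy
    have hyd : ‖y - z‖ ≤ d := by linarith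
    rw [max_eq_left (le_trans (by positivity) (near y hyd).1)]
    have l1 := hlip y (hy.trans hr1)
    have l2 := abs_real_inner_le_norm a (y - z)
    rw [inner_sub_right] at l2
    have l3 : (n * L + 1) * ‖a‖ * ‖y - z‖ ≤ δ / 2 * ‖a‖ := by
      calc _ = ((n * L + 1) * ‖y - z‖) * ‖a‖ := by ring
        _ ≤ ((n * L + 1) * r) * ‖a‖ := by gcongr
        _ ≤ _ := by gcongr
    have l4 : |u z - ⟪a, z⟫| ≤ |u y - ⟪a, y⟫| + |u y - u z| + |⟪a, y⟫ - ⟪a, z⟫| := by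
      have e : u z - ⟪a, z⟫ = (u y - ⟪a, y⟫) - (u y - u z) + (⟪a, y⟫ - ⟪a, z⟫) := by ring
      rw [e]
      exact (abs_add_le _ _).trans (add_le_add_left (abs_sub _ _) _)
    have l5 : δ / 2 * ‖a‖ ≤ |u y - ⟪a, y⟫| := by nlinarith
    calc δ ^ 2 / 4 * ‖a‖ ^ 2 = (δ / 2 * ‖a‖) ^ 2 := by ring
      _ ≤ |u y - ⟪a, y⟫| ^ 2 := by gcongr
      _ = _ := sq_abs _
  have e1 := hm _ ((h.pgu.sub hp).pow 2) (fun _ => sq_nonneg _) z r _ hr0 (by positivity) low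
  have e2 := hcmp _ ((h.pgu.sub hp).pow 2) (fun _ => sq_nonneg _) 0 z (by simpa using hz)
  have e3 : C * Ex 0 1 (fun y => (u y - max ⟪a, y⟫ 0) ^ 2) ≤ C * (η₂ * ‖a‖ ^ 2) := by
    gcongr; exact hF2.fu
  have e4 : C * η₂ * ‖a‖ ^ 2 < κ * (δ ^ 2 / 4) * ‖a‖ ^ 2 := by
    have := hF.pos; gcongr
  linarith

/-- Pointwise description on the side where `u` dominates, away from the zero plane. -/
lemma Flat.point (hn : 1 ≤ n) {c δ : ℝ} (hc : 0 < c) (K : ℝ) (hδ : 0 < δ) : ∃ η : ℝ, 0 < η ∧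
    ∀ (u v : Euc n → ℝ) (a : Euc n), Flat η a u v → ∀ z, ‖z‖ ≤ K → c * ‖a‖ ≤ ⟪a, z⟫ →
      |u z - ⟪a, z⟫| ≤ δ * ‖a‖ ∧ 1 ≤ u z ∧ v z ≤ δ ∧ v z < u z ∧
      ∀ i, |pd i u z - a i| ≤ δ * ‖a‖ ∧ |pd i v z| ≤ δ := by
  obtain ⟨d, hd0, hd1, hdc⟩ : ∃ d : ℝ, 0 < d ∧ d ≤ 1 ∧ d ≤ c / 2 :=
    ⟨min 1 (c / 2), by positivity, min_le_left _ _, min_le_right _ _⟩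
  obtain ⟨s, hs0, hs1, hsδ, hs2⟩ : ∃ s : ℝ, 0 < s ∧ s ≤ 1 / 2 ∧ s ≤ δ ∧ n * s / d + s / 2 ≤ δ := by
    refine ⟨min (1 / 2) (δ / (n / d + 1)), by positivity, min_le_left _ _, ?_, ?_⟩
    · refine (min_le_right _ _).trans ?_
      rw [div_le_iff₀ (by positivity)]
      have : 0 ≤ δ * (n / d) := by positivity
      linarith
    · have h1 : (n / d + 1) * min (1 / 2) (δ / (n / d + 1)) ≤ δ := by
        calc _ ≤ (n / d + 1) * (δ / (n / d + 1)) := by gcongr; exact min_le_right _ _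
          _ = δ := by field_simp
      have h2 : 0 < min (1 / 2) (δ / (n / d + 1)) := by positivity
      have e : ∀ t : ℝ, n * t / d + t / 2 = (n / d + 1) * t - t / 2 := fun t => by ring
      rw [e]; linarith
  obtain ⟨η₁, hη₁, ht⟩ := Flat.tiny (n := n) hn (by positivity : 0 < c / 2) (K + 1) hs0
  obtain ⟨η₂, hη₂, hcl⟩ := Flat.close (n := n) hn (by positivity : 0 < c / 2) (K + 1) hs0
  refine ⟨min (min η₁ η₂) (1 / 2), by positivity, fun u v a hF z hz hza => ?_⟩
  have hη0 : 0 < min (min η₁ η₂) (1 / 2 : ℝ) := by positivity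
  have ha1 := hF.norm_ge hη0 (min_le_right _ _)
  have hF1 := hF.mono hη0 ((min_le_left _ _).trans (min_le_left _ _))
  have hF2 := hF.mono hη0 ((min_le_left _ _).trans (min_le_right _ _))
  have h := hF.sol
  have near : ∀ y, ‖y - z‖ ≤ d → c / 2 * ‖a‖ ≤ ⟪a, y⟫ ∧ ‖y‖ ≤ K + 1 := fun y hy =>
    ⟨inner_ball hza hdc hy, by
      have := norm_add_le (y - z) z
      rw [sub_add_cancel] at this; linarith⟩
  have tn : ∀ y, ‖y - z‖ ≤ d → 1 ≤ u y ∧ v y ≤ s ∧ u y * v y ^ 2 ≤ s ∧ v y * u y ^ 2 ≤ s := by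
    intro y hy
    obtain ⟨t1, t2⟩ := ht u v a hF1 y (near y hy).2 (near y hy).1
    exact ⟨t1, tiny_lap (h.pu y) (h.pv y) (by linarith) t2⟩
  have cl : ∀ y, ‖y - z‖ ≤ d → |u y - ⟪a, y⟫| ≤ s * ‖a‖ := fun y hy =>
    hcl u v a hF2 y (near y hy).2 (near y hy).1
  have hz0 : ‖z - z‖ ≤ d := by simpa using hd0.le
  obtain ⟨t1, t2, t3, t4⟩ := tn z hz0
  refine ⟨(cl z hz0).trans (by gcongr), t1, t2.trans hsδ, by linarith, fun i => ⟨?_, ?_⟩⟩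
  · have g := grad_est (h.c2u.sub (contDiff_inner a)) z hd0 (M := s * ‖a‖) (N := s)
      (fun y hy => cl y hy) (fun y hy => by
        have : lap (fun x => u x - ⟪a, x⟫) y = lap u y := by
          have := lap_sub h.c2u (contDiff_inner a) y
          rw [lap_inner, sub_zero] at this
          exact this
        rw [this, h.eu, abs_of_pos (mul_pos (h.pu y) (pow_pos (h.pv y) 2))]
        exact (tn y hy).2.2.1) i
    have e : pd i (fun x => u x - ⟪a, x⟫) z = pd i u z - a i := by
      have := pd_sub i (diff2 h.c2u z) (diff2 (contDiff_inner a) z)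
      rw [pd_inner] at this
      exact this
    rw [e] at g
    refine g.trans ?_
    have e1 : n * (s * ‖a‖) / d = n * s / d * ‖a‖ := by ring
    have e2 : s * d / 2 ≤ s / 2 * ‖a‖ := by nlinarith
    rw [e1]
    calc _ ≤ (n * s / d + s / 2) * ‖a‖ := by linarith
      _ ≤ _ := by gcongr
  · have g := grad_est h.c2v z hd0 (M := s) (N := s)
      (fun y hy => by rw [abs_of_pos (h.pv y)]; exact (tn y hy).2.1) (fun y hy => by
        rw [h.ev, abs_of_pos (mul_pos (h.pv y) (pow_pos (h.pu y) 2))]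
        exact (tn y hy).2.2.2) i
    refine g.trans ?_
    have e2 : s * d / 2 ≤ s / 2 := by nlinarith
    linarith

end FlatPt2

/-! ### Improvement of flatness and the blow-down limit -/

section Chain
variable {n : ℕ} {u v : Euc n → ℝ}

lemma av_add {f g : Euc n → ℝ} (hf : PG f) (hg : PG g) :
    av (fun y => f y + g y) = av f + av g := by
  ext i
  rw [PiLp.add_apply, av_apply, av_apply, av_apply,
    ← Ex_add ((PG.coord i).mul hf) ((PG.coord i).mul hg)]
  congr 1; funext y; ring

lemma av_cmul (c : ℝ) (f : Euc n → ℝ) : av (fun y => c * f y) = c • av f := by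
  ext i
  rw [PiLp.smul_apply, av_apply, av_apply, smul_eq_mul, ← Ex_cmul]
  congr 1; funext y; ring

lemma av_const (c : ℝ) : av (fun _ : Euc n => c) = 0 := by
  ext i
  rw [av_apply, PiLp.zero_apply]
  have : (fun y : Euc n => y i * c) = fun y => c * y i := by funext y; ring
  rw [this, Ex_cmul, mom_one, mul_zero]

lemma bessel {f : Euc n → ℝ} (hf : PG f) : ‖av f‖ ^ 2 ≤ Ex 0 1 (fun y => f y ^ 2) := by
  have h1 := proj_eq hf (av f)
  have h2 := Ex_nonneg (f := fun y : Euc n => (f y - ⟪av f, y⟫) ^ 2) (fun _ => sq_nonneg _) 0 1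
  rw [real_inner_self_eq_norm_sq] at h1
  linarith

/-- The slope of `u - v` at the ball of center `x` and radius `r`, in the Gaussian sense. -/
noncomputable def slope (u v : Euc n → ℝ) (x : Euc n) (r : ℝ) : Euc n :=
  (r ^ 2)⁻¹ • av (fun y => sc x r u y - sc x r v y)

lemma slope_av (u v : Euc n → ℝ) (x : Euc n) {r : ℝ} (hr : 0 < r) :
    av (fun y => sc x r u y - sc x r v y) = r ^ 2 • slope u v x r := by
  unfold slope
  rw [smul_smul, mul_inv_cancel₀ (by positivity), one_smul]

lemma sc_sc (x z : Euc n) (r s : ℝ) (f : Euc n → ℝ) :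
    sc z s (sc x r f) = sc (x + r • z) (r * s) f := by
  funext y
  simp only [sc_apply, smul_add, smul_smul, add_assoc]; ring

lemma slope_sc (u v : Euc n → ℝ) (x z : Euc n) {r s : ℝ} (hr : 0 < r) (hs : 0 < s) :
    slope (sc x r u) (sc x r v) z s = r ^ 2 • slope u v (x + r • z) (r * s) := by
  unfold slope
  rw [sc_sc, sc_sc, smul_smul]
  congr 1; field_simp

lemma Sol.slope_sq_le (h : Sol u v) (x : Euc n) {r : ℝ} (hr : 0 < r) :
    (r ^ 2 * ‖slope u v x r‖) ^ 2 ≤ r ^ 2 * Hh u v x r := by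
  have h1 := h.sc x hr
  have h2 := bessel (h1.pgu.sub h1.pgv)
  rw [slope_av u v x hr, norm_smul, Real.norm_eq_abs, abs_of_pos (by positivity)] at h2
  refine h2.trans ?_
  have h3 := Hh_sc (u := u) (v := v) x r 0 1
  rw [smul_zero, add_zero, mul_one] at h3
  rw [← h3]
  refine Ex_mono ((h1.pgu.sub h1.pgv).pow 2) h1.pgH (fun y => ?_) 0 1
  have := mul_pos (h1.pu y) (h1.pv y)
  nlinarith

/-- Near the zero plane of a flat pair there are centres balanced at half the scale. -/
lemma Flat.balance {K : ℝ} : ∃ η : ℝ, 0 < η ∧ ∀ (u v : Euc n → ℝ) (a : Euc n), Flat η a u v →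
    ∀ y, ‖y‖ ≤ K → |⟪a, y⟫| ≤ ‖a‖ / 8 →
      ∃ x, ‖x - y‖ ≤ 1 / 4 ∧ Ex x (1/2) u = Ex x (1/2) v := by
  obtain ⟨C, hC, hcmp⟩ := Ex_cmp (n := n) (by norm_num : (0:ℝ) < 1 / 2) (by norm_num : (1/2:ℝ) < 1)
    (K + 1)
  refine ⟨1 / (64 * 16 * C), by positivity, fun u v a hF y hy hya => ?_⟩
  have h := hF.sol
  have ha := hF.pos
  have hp : PG (fun y : Euc n => max ⟪a, y⟫ 0) := (PG.inner a).max (PG.const 0)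
  have hq : PG (fun y : Euc n => max (-⟪a, y⟫) 0) := (PG.inner a).neg.max (PG.const 0)
  have one : ∀ (f g : Euc n → ℝ), PG f → PG g →
      Ex 0 1 (fun y => (f y - g y) ^ 2) ≤ 1 / (64 * 16 * C) * ‖a‖ ^ 2 → ∀ z : Euc n, ‖z‖ ≤ K + 1 →
      |Ex z (1/2) f - Ex z (1/2) g| ≤ ‖a‖ / 32 := by
    intro f g hf hg hfg z hz
    rw [← Ex_sub hf hg]
    refine abs_le_of_sq_le_sq ((Ex_sq_le (hf.sub hg) z _).trans ?_) (by positivity)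
    refine (hcmp _ ((hf.sub hg).pow 2) (fun _ => sq_nonneg _) 0 z (by simpa using hz)).trans ?_
    calc C * Ex 0 1 (fun y => (f y - g y) ^ 2) ≤ C * (1 / (64 * 16 * C) * ‖a‖ ^ 2) := by gcongr
      _ = (‖a‖ / 32) ^ 2 := by field_simp; ring
  have key : ∀ z : Euc n, ‖z‖ ≤ K + 1 →
      |Ex z (1/2) u - Ex z (1/2) v - ⟪a, z⟫| ≤ ‖a‖ / 16 := by
    intro z hz
    have k1 := one _ _ h.pgu hp hF.fu z hz
    have k2 := one _ _ h.pgv hq hF.fv z hz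
    have k3 : Ex z (1/2) (fun y : Euc n => max ⟪a, y⟫ 0) - Ex z (1/2) (fun y => max (-⟪a, y⟫) 0) =
        ⟪a, z⟫ := by
      rw [← Ex_sub hp hq, ← Ex_inner_at a z (1/2)]
      congr 1; funext y
      rcases le_total (⟪a, y⟫) 0 with h0 | h0
      · rw [max_eq_right h0, max_eq_left (by linarith)]; ring
      · rw [max_eq_left h0, max_eq_right (by linarith)]; ring
    rw [abs_le] at k1 k2 ⊢
    constructor <;> linarith [k1.1, k1.2, k2.1, k2.2]
  obtain ⟨e, he⟩ : ∃ e, e = (‖a‖)⁻¹ • a := ⟨_, rfl⟩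
  have hen : ‖e‖ = 1 := by rw [he, norm_smul, norm_inv, norm_norm, inv_mul_cancel₀ ha.ne']
  have hae : ⟪a, e⟫ = ‖a‖ := by
    rw [he, inner_smul_right, real_inner_self_eq_norm_sq]; field_simp
  have hnorm : ∀ t : ℝ, |t| ≤ 1 / 4 → ‖y + t • e‖ ≤ K + 1 := by
    intro t ht
    refine (norm_add_le _ _).trans ?_
    rw [norm_smul, hen, Real.norm_eq_abs]; linarith
  have hin : ∀ t : ℝ, ⟪a, y + t • e⟫ = ⟪a, y⟫ + t * ‖a‖ := fun t => by
    rw [inner_add_right, inner_smul_right, hae]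
  have hcont : Continuous fun t : ℝ => Ex (y + t • e) (1/2) u - Ex (y + t • e) (1/2) v := by
    have hφ : Continuous fun t : ℝ => (y + t • e, (1/2 : ℝ)) := by fun_prop
    exact ((continuous_Ex h.pgu).comp hφ).sub ((continuous_Ex h.pgv).comp hφ)
  have iv := intermediate_value_Icc (by norm_num : (-(1/4) : ℝ) ≤ 1 / 4) hcont.continuousOn
  have k1 := key _ (hnorm (1/4) (by norm_num))
  have k2 := key _ (hnorm (-(1/4)) (by norm_num))
  rw [hin, abs_le] at k1 k2
  rw [abs_le] at hya
  obtain ⟨t, ht, h0⟩ := iv (show (0 : ℝ) ∈ _ by constructor <;> linarith [k1.1, k2.2, hya.1, hya.2])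
  refine ⟨y + t • e, ?_, by simpa [sub_eq_zero] using h0⟩
  rw [add_sub_cancel_left, norm_smul, hen, mul_one, Real.norm_eq_abs, abs_le]
  exact ht

/-- Halving the scale at a zero of `u - v`, and the change of slope. -/
lemma descend (hn : 1 ≤ n) (K : ℝ) : ∃ θ : ℝ, 0 < θ ∧ θ < 1 ∧ ∃ C₁ : ℝ, 1 ≤ C₁ ∧
    ∃ C₂ : ℝ, 1 ≤ C₂ ∧ ∀ u v : Euc n → ℝ, Sol u v → Ex 0 1 u = Ex 0 1 v →
    ∀ a, a = av (fun y => u y - v y) → C₁ ≤ ‖a‖ → ∀ y, ‖y‖ ≤ K → u y = v y →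
    ∃ x, ‖x - y‖ ≤ 1 / 4 ∧ Ex x (1/2) u = Ex x (1/2) v ∧
      ‖slope u v x (1/2) - a‖ ≤ C₂ * ‖a‖ ^ θ := by
  obtain ⟨θ, hθ0, hθ1, C, hC, hfl⟩ := flat (n := n) hn
  obtain ⟨η₁, hη₁, hbal⟩ := Flat.balance (n := n) (K := K)
  obtain ⟨η₂, hη₂, hpt⟩ := Flat.point (n := n) hn (by norm_num : (0:ℝ) < 1 / 8) K one_pos
  obtain ⟨M, hM, hsm⟩ := flat_small (n := n) hn (by positivity : 0 < min η₁ η₂)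
  obtain ⟨B, hB, hcmp⟩ := Ex_cmp (n := n) (by norm_num : (0:ℝ) < 1 / 2) (by norm_num : (1/2:ℝ) < 1)
    (K + 1)
  refine ⟨θ, hθ0, hθ1, M, hM, 2 * (2 * (B * C)), by nlinarith, fun u v h hE a ha haM y hy huv => ?_⟩
  have hw : PG (fun y => u y - v y) := h.pgu.sub h.pgv
  have haH : ‖a‖ ^ 2 ≤ Hh u v 0 1 := by
    rw [ha]; refine (bessel hw).trans (Ex_mono (hw.pow 2) h.pgH (fun y => ?_) 0 1)
    have := mul_pos (h.pu y) (h.pv y)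
    nlinarith
  have hHM : M ≤ Hh u v 0 1 := by nlinarith
  have hF := hsm u v h hE hHM
  rw [← ha] at hF
  have hF1 := hF.mono (by positivity) (min_le_left _ _)
  have hF2 := hF.mono (by positivity) (min_le_right _ _)
  have hya : |⟪a, y⟫| ≤ ‖a‖ / 8 := by
    by_contra hcon
    push Not at hcon
    rcases lt_abs.1 hcon with h1 | h1
    · have := (hpt u v a hF2 y hy (by linarith)).2.2.2.1
      linarith
    · have := (hpt v u (-a) hF2.swap y hy (by rw [norm_neg, inner_neg_left]; linarith)).2.2.2.1
      linarith
  obtain ⟨x, hx, hxE⟩ := hbal u v a hF1 y hy hya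
  refine ⟨x, hx, hxE, ?_⟩
  have hxn : ‖x‖ ≤ K + 1 := by
    have := norm_add_le (x - y) y
    rw [sub_add_cancel] at this; linarith
  have hg := (hw.sub (PG.inner a)).comp_aff x (1/2)
  obtain ⟨f1, f2, f3, f4, f5⟩ := hfl u v h hE (by linarith) a ha
  have e : slope u v x (1/2) - a = (2 : ℝ) • av (fun z => u (x + (1/2 : ℝ) • z) -
      v (x + (1/2 : ℝ) • z) - ⟪a, x + (1/2 : ℝ) • z⟫) := by
    have e1 : (fun z => sc x (1/2) u z - sc x (1/2) v z) = fun z =>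
        1 / 2 * (u (x + (1/2 : ℝ) • z) - v (x + (1/2 : ℝ) • z) - ⟪a, x + (1/2 : ℝ) • z⟫) +
        (1 / 2 * ⟪a, x⟫ + 1 / 4 * ⟪a, z⟫) := by
      funext z
      simp only [sc_apply, inner_add_right, inner_smul_right]; ring
    unfold slope
    rw [e1, av_add (hg.cmul _) ((PG.const _).add ((PG.inner a).cmul _)), av_cmul,
      av_add (PG.const _) ((PG.inner a).cmul _), av_const, av_cmul, av_inner, zero_add, smul_add,
      smul_smul, smul_smul]
    norm_num
  have hb := bessel hg
  have hs : Ex 0 1 (fun z => (u (x + (1/2 : ℝ) • z) - v (x + (1/2 : ℝ) • z) -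
      ⟪a, x + (1/2 : ℝ) • z⟫) ^ 2) ≤ B * (C * Hh u v 0 1 ^ θ) := by
    rw [← Ex_std (fun z => (u z - v z - ⟪a, z⟫) ^ 2) x (1/2)]
    refine (hcmp _ ((hw.sub (PG.inner a)).pow 2) (fun _ => sq_nonneg _) 0 x (by simpa using hxn)).trans ?_
    gcongr
  have hHθ : Hh u v 0 1 ^ θ ≤ 2 * (‖a‖ ^ θ) ^ 2 := by
    have hHp := h.H_pos 0 1
    calc Hh u v 0 1 ^ θ ≤ (2 * ‖a‖ ^ 2) ^ θ := Real.rpow_le_rpow hHp.le hF.up hθ0.le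
      _ = 2 ^ θ * (‖a‖ ^ 2) ^ θ := Real.mul_rpow (by norm_num) (by positivity)
      _ = 2 ^ θ * (‖a‖ ^ θ) ^ 2 := by
          rw [← Real.rpow_natCast, ← Real.rpow_natCast, ← Real.rpow_mul (norm_nonneg a),
            ← Real.rpow_mul (norm_nonneg a), mul_comm θ]
      _ ≤ 2 * (‖a‖ ^ θ) ^ 2 := by
          gcongr
          calc (2:ℝ) ^ θ ≤ 2 ^ (1:ℝ) := Real.rpow_le_rpow_of_exponent_le (by norm_num) hθ1.le
            _ = 2 := Real.rpow_one 2
  obtain ⟨T, hT⟩ : ∃ T, T = ‖a‖ ^ θ := ⟨_, rfl⟩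
  have hT0 : 0 ≤ T := by rw [hT]; positivity
  rw [← hT] at hHθ ⊢
  rw [e, norm_smul, Real.norm_eq_abs, abs_of_pos (by norm_num : (0:ℝ) < 2), mul_assoc]
  refine mul_le_mul_of_nonneg_left ?_ (by norm_num)
  refine (abs_le_of_sq_le_sq' ?_ (by positivity)).2
  refine hb.trans (hs.trans ?_)
  have hBC : 1 ≤ B * C := by nlinarith
  calc B * (C * Hh u v 0 1 ^ θ) = B * C * Hh u v 0 1 ^ θ := by ring
    _ ≤ B * C * (2 * T ^ 2) := by gcongr
    _ ≤ (2 * (B * C)) ^ 2 * T ^ 2 := by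
        have : B * C * 2 ≤ (2 * (B * C)) ^ 2 := by nlinarith
        calc _ = B * C * 2 * T ^ 2 := by ring
          _ ≤ _ := by gcongr
    _ = _ := by ring

/-- The scaled form of `descend`. -/
lemma descend_at (hn : 1 ≤ n) (K : ℝ) : ∃ θ : ℝ, 0 < θ ∧ θ < 1 ∧ ∃ C₁ : ℝ, 1 ≤ C₁ ∧
    ∃ C₂ : ℝ, 1 ≤ C₂ ∧ ∀ u v : Euc n → ℝ, Sol u v → ∀ x r, 0 < r → Ex x r u = Ex x r v →
    C₁ ≤ r ^ 2 * ‖slope u v x r‖ → ∀ y, ‖y - x‖ ≤ K * r → u y = v y →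
    ∃ x', ‖x' - y‖ ≤ 1 / 4 * r ∧ Ex x' (r / 2) u = Ex x' (r / 2) v ∧
      r ^ 2 * ‖slope u v x' (r / 2) - slope u v x r‖ ≤ C₂ * (r ^ 2 * ‖slope u v x r‖) ^ θ := by
  obtain ⟨θ, h0, h1, C₁, hC₁, C₂, hC₂, H⟩ := descend (n := n) hn K
  refine ⟨θ, h0, h1, C₁, hC₁, C₂, hC₂, fun u v h x r hr hE hA y hy huv => ?_⟩
  have hs := slope_av u v x hr
  have hnm : ∀ b : Euc n, ‖r ^ 2 • b‖ = r ^ 2 * ‖b‖ := fun b => by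
    rw [norm_smul, Real.norm_eq_abs, abs_of_pos (by positivity)]
  have hyx : x + r • (r⁻¹ • (y - x)) = y := by
    rw [smul_smul, mul_inv_cancel₀ hr.ne', one_smul, add_sub_cancel]
  obtain ⟨z, hz1, hz2, hz3⟩ := H _ _ (h.sc x hr) (by
      rw [Ex_sc, Ex_sc, smul_zero, add_zero, mul_one, hE]) _ rfl (by rw [hs, hnm]; exact hA)
    (r⁻¹ • (y - x)) (by
      rw [norm_smul, norm_inv, Real.norm_eq_abs, abs_of_pos hr, inv_mul_le_iff₀ hr]
      linarith) (by rw [sc_apply, sc_apply, hyx, huv])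
  refine ⟨x + r • z, ?_, ?_, ?_⟩
  · have : x + r • z - y = r • (z - r⁻¹ • (y - x)) := by
      rw [smul_sub, smul_smul, mul_inv_cancel₀ hr.ne', one_smul]; abel
    rw [this, norm_smul, Real.norm_eq_abs, abs_of_pos hr]; nlinarith
  · rw [Ex_sc, Ex_sc] at hz2
    have := mul_left_cancel₀ hr.ne' hz2
    rwa [mul_one_div] at this
  · rw [hs, slope_sc u v x z hr (by norm_num), ← smul_sub, hnm, hnm, mul_one_div] at hz3
    exact hz3

end Chain

section Blowdown
variable {n : ℕ} {u v : Euc n → ℝ}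

/-- The arithmetic of one dyadic step: the accumulated error `B·X^{-ν}` absorbs the new one. -/
lemma chain_arith {θ X α β rr C₂ B : ℝ} (h0 : 0 < θ) (h1 : θ < 1) (hX : 0 < X) (hα : 0 < α)
    (hrr : 0 < rr) (hXe : X = rr * α) (hβ : β ≤ 2 * α) (hβ0 : 0 ≤ β) (hC₂ : 0 < C₂) {d₁ d₂ : ℝ}
    (hB : B = 2 * C₂ / (4 ^ (1 - θ) - 1)) (hd₁ : d₁ ≤ B * X ^ (-(1 - θ)) * α)
    (hd₂ : rr * d₂ ≤ C₂ * (rr * β) ^ θ) :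
    d₂ + d₁ ≤ B * (X / 4) ^ (-(1 - θ)) * α := by
  have h4 : (1:ℝ) < 4 ^ (1 - θ) := Real.one_lt_rpow (by norm_num) (by linarith)
  have e1 : (rr * β) ^ θ ≤ (2 * X) ^ θ :=
    Real.rpow_le_rpow (by positivity) (by rw [hXe]; nlinarith) h0.le
  have e2 : (2 * X) ^ θ ≤ 2 * X ^ θ := by
    rw [Real.mul_rpow (by norm_num) hX.le]
    have : (2:ℝ) ^ θ ≤ 2 ^ (1:ℝ) := Real.rpow_le_rpow_of_exponent_le (by norm_num) h1.le
    rw [Real.rpow_one] at this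
    exact mul_le_mul_of_nonneg_right this (by positivity)
  have e3 : X ^ θ = X ^ (-(1 - θ)) * X := by
    rw [← Real.rpow_add_one hX.ne']; congr 1; ring
  have e4 : (X / 4) ^ (-(1 - θ)) = X ^ (-(1 - θ)) * 4 ^ (1 - θ) := by
    rw [Real.div_rpow hX.le (by norm_num), Real.rpow_neg (by norm_num : (0:ℝ) ≤ 4)]
    rw [div_inv_eq_mul]
  have hP : 0 < X ^ (-(1 - θ)) := by positivity
  have e5 : rr * d₂ ≤ rr * (2 * C₂ * X ^ (-(1 - θ)) * α) := by
    calc rr * d₂ ≤ C₂ * (rr * β) ^ θ := hd₂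
      _ ≤ C₂ * (2 * X ^ θ) := by gcongr; linarith
      _ = _ := by rw [e3]; nth_rewrite 2 [hXe]; ring
  have e6 := le_of_mul_le_mul_left e5 hrr
  have hBB : B * (4 ^ (1 - θ) - 1) = 2 * C₂ := by rw [hB]; field_simp [sub_ne_zero.2 h4.ne']
  have : B * (X / 4) ^ (-(1 - θ)) * α
      = 2 * C₂ * X ^ (-(1 - θ)) * α + B * X ^ (-(1 - θ)) * α := by
    rw [e4, ← hBB]; ring
  linarith

/-- Descending through the dyadic scales around a common zero `y`: the slope is almost constant
as long as the rescaled slope stays large. -/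
lemma chain (hn : 1 ≤ n) {K : ℝ} (hK : 1 / 2 ≤ K) : ∃ ν : ℝ, 0 < ν ∧ ∃ C₃ : ℝ, 1 ≤ C₃ ∧
    ∃ C₄ : ℝ, 0 < C₄ ∧ (∀ X, C₃ ≤ X → C₄ * X ^ (-ν) ≤ 1 / 2) ∧
    ∀ u v : Euc n → ℝ, Sol u v → ∀ x r, 0 < r → Ex x r u = Ex x r v →
    ∀ y, ‖y - x‖ ≤ K * r → u y = v y → ∀ i : ℕ, C₃ ≤ (r / 2 ^ i) ^ 2 * ‖slope u v x r‖ →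
    ∃ x', ‖y - x'‖ ≤ K * (r / 2 ^ i) ∧ Ex x' (r / 2 ^ i) u = Ex x' (r / 2 ^ i) v ∧
      ‖slope u v x' (r / 2 ^ i) - slope u v x r‖
        ≤ C₄ * ((r / 2 ^ i) ^ 2 * ‖slope u v x r‖) ^ (-ν) * ‖slope u v x r‖ := by
  obtain ⟨θ, h0, h1, C₁, hC₁, C₂, hC₂, H⟩ := descend_at (n := n) hn K
  have hν : 0 < 1 - θ := by linarith
  have h4 : (1:ℝ) < 4 ^ (1 - θ) := Real.one_lt_rpow (by norm_num) hν
  obtain ⟨B, hB⟩ : ∃ B, B = 2 * C₂ / (4 ^ (1 - θ) - 1) := ⟨_, rfl⟩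
  have hBpos : 0 < B := by rw [hB]; exact div_pos (by linarith) (by linarith)
  have hlim : Tendsto (fun X : ℝ => B * X ^ (-(1 - θ))) atTop (𝓝 (B * 0)) :=
    (tendsto_rpow_neg_atTop hν).const_mul B
  rw [mul_zero] at hlim
  obtain ⟨T, hT⟩ := eventually_atTop.1 (hlim.eventually_le_const (by norm_num : (0:ℝ) < 1 / 2))
  refine ⟨1 - θ, hν, max T (2 * C₁), le_max_of_le_right (by linarith), B, hBpos,
    fun X hX => hT X ((le_max_left _ _).trans hX), ?_⟩
  intro u v h x r hr hE y hy huv i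
  induction i with
  | zero =>
    intro hi
    refine ⟨x, by simpa using hy, by simpa using hE, ?_⟩
    simp only [pow_zero, div_one, sub_self, norm_zero]
    positivity
  | succ i ih =>
    intro hi
    obtain ⟨s, hs⟩ : ∃ s, s = r / 2 ^ i := ⟨_, rfl⟩
    have hs2 : r / 2 ^ (i + 1) = s / 2 := by rw [hs, pow_succ]; field_simp
    have hspos : 0 < s := by rw [hs]; positivity
    rw [hs2] at hi ⊢
    rw [← hs] at ih
    obtain ⟨α, hα⟩ : ∃ α, α = ‖slope u v x r‖ := ⟨_, rfl⟩
    rw [← hα] at hi ih ⊢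
    obtain ⟨X, hX⟩ : ∃ X, X = s ^ 2 * α := ⟨_, rfl⟩
    have hX4 : (s / 2) ^ 2 * α = X / 4 := by rw [hX]; ring
    rw [hX4] at hi ⊢
    rw [← hX] at ih
    have hTX : max T (2 * C₁) ≤ X := by
      have : (0:ℝ) ≤ max T (2 * C₁) := le_max_of_le_right (by linarith)
      linarith
    have hC1X : 2 * C₁ ≤ X := (le_max_right _ _).trans hTX
    have hXpos : 0 < X := by linarith
    have hαpos : 0 < α := by
      have : 0 ≤ α := hα ▸ norm_nonneg _
      rcases this.eq_or_lt with h | h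
      · rw [← h] at hX; linarith
      · exact h
    obtain ⟨x', hx1, hx2, hx3⟩ := ih hTX
    have hhalf : B * X ^ (-(1 - θ)) * α ≤ 1 / 2 * α :=
      mul_le_mul_of_nonneg_right (hT X ((le_max_left _ _).trans hTX)) hαpos.le
    have t1 : α - ‖slope u v x' s - slope u v x r‖ ≤ ‖slope u v x' s‖ := by
      have := norm_sub_norm_le (slope u v x r) (slope u v x' s)
      rw [norm_sub_rev] at this; linarith
    have t2 : ‖slope u v x' s‖ ≤ α + ‖slope u v x' s - slope u v x r‖ := by
      have := norm_sub_norm_le (slope u v x' s) (slope u v x r)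
      linarith
    obtain ⟨x'', hy1, hy2, hy3⟩ := H u v h x' s hspos hx2 (by
      have : s ^ 2 * (α / 2) ≤ s ^ 2 * ‖slope u v x' s‖ := by gcongr; linarith
      linarith) y hx1 huv
    refine ⟨x'', ?_, hy2, ?_⟩
    · rw [norm_sub_rev]; nlinarith
    · have := chain_arith h0 h1 hXpos hαpos (by positivity) hX (by linarith) (norm_nonneg _)
        (by linarith) hB hx3 hy3
      refine le_trans ?_ this
      have e : slope u v x'' (s / 2) - slope u v x r
        = (slope u v x'' (s / 2) - slope u v x' s) + (slope u v x' s - slope u v x r) := by abel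
      rw [e]; exact norm_add_le _ _

lemma Sol.exists_zero (h : Sol u v) {x : Euc n} {r : ℝ} (hr : 0 < r) (hE : Ex x r u = Ex x r v) :
    ∃ y, u y = v y := by
  obtain ⟨κ, hκ, Hκ⟩ := Ex_mass (n := n)
  -- a positive continuous function has positive Gaussian average
  have key : ∀ f : Euc n → ℝ, PG f → (∀ y, 0 < f y) → 0 < Ex x r f := by
    intro f hf hpos
    obtain ⟨z, hz, hzmin⟩ := (isCompact_closedBall x r).exists_isMinOn
      ⟨x, mem_closedBall_self hr.le⟩ hf.continuous.continuousOn
    have := Hκ f hf (fun y => (hpos y).le) x r (f z) hr (hpos z).le (fun y hy =>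
      hzmin (by rw [mem_closedBall, dist_eq_norm]; exact hy))
    exact lt_of_lt_of_le (mul_pos hκ (hpos z)) this
  by_contra hno
  push Not at hno
  have hcont : Continuous fun y => u y - v y := h.pgu.continuous.sub h.pgv.continuous
  have hEs : Ex x r (fun y => u y - v y) = 0 := by rw [Ex_sub h.pgu h.pgv, hE, sub_self]
  have hEs' : Ex x r (fun y => v y - u y) = 0 := by rw [Ex_sub h.pgv h.pgu, hE, sub_self]
  by_cases hp : ∀ y, 0 < u y - v y
  · exact absurd hEs (key _ (h.pgu.sub h.pgv) hp).ne'
  by_cases hq : ∀ y, 0 < v y - u y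
  · exact absurd hEs' (key _ (h.pgv.sub h.pgu) hq).ne'
  push Not at hp hq
  obtain ⟨y1, h1⟩ := hp
  obtain ⟨y2, h2⟩ := hq
  obtain ⟨y, hy⟩ := mem_range_of_exists_le_of_exists_ge hcont ⟨y1, h1⟩ ⟨y2, by linarith⟩
  exact hno y (sub_eq_zero.1 hy)

/-- Non-degeneracy: at a balanced scale the rescaled slope controls the scale. -/
lemma slope_low (hn : 1 ≤ n) (K : ℝ) : ∃ Q : ℝ, 1 ≤ Q ∧ ∀ u v : Euc n → ℝ, Sol u v →
    ∀ x r, 0 < r → Ex x r u = Ex x r v → ∀ y, ‖y - x‖ ≤ K * r →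
      r ^ 2 * u y ^ 2 ≤ Q * (1 + (r ^ 2 * ‖slope u v x r‖) ^ 2) := by
  obtain ⟨C, hC, HC⟩ := Hh_cmp (n := n) (s := 1) one_pos K
  obtain ⟨M, hM, HM⟩ := flat_small (n := n) hn (η := 1) one_pos
  refine ⟨C * (M + 2), by nlinarith, fun u v h x r hr hE y hy => ?_⟩
  have hyx : x + r • (r⁻¹ • (y - x)) = y := by
    rw [smul_smul, mul_inv_cancel₀ hr.ne', one_smul, add_sub_cancel]
  have h1 := (HC _ _ (h.sc x hr) (r⁻¹ • (y - x)) (by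
      rw [norm_smul, norm_inv, Real.norm_eq_abs, abs_of_pos hr, inv_mul_le_iff₀ hr]
      linarith)).1
  rw [Hh_sc, hyx, mul_one] at h1
  have h2 := h.H_ge y hr.le
  have h3 : r ^ 2 * u y ^ 2 ≤ C * Hh (sc x r u) (sc x r v) 0 1 := by
    refine le_trans ?_ h1
    exact mul_le_mul_of_nonneg_left (by nlinarith [sq_nonneg (v y)]) (by positivity)
  refine h3.trans ?_
  rw [mul_assoc]
  refine mul_le_mul_of_nonneg_left ?_ (by linarith)
  obtain ⟨W, hW⟩ : ∃ W, W = (r ^ 2 * ‖slope u v x r‖) ^ 2 := ⟨_, rfl⟩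
  have hW0 : 0 ≤ W := hW ▸ sq_nonneg _
  rcases le_total M (Hh (sc x r u) (sc x r v) 0 1) with hc | hc
  · have := (HM _ _ (h.sc x hr) (by
      rw [Ex_sc, Ex_sc, smul_zero, add_zero, mul_one, hE]) hc).up
    rw [slope_av u v x hr, norm_smul, Real.norm_eq_abs, abs_of_pos (by positivity), ← hW] at this
    rw [← hW]; nlinarith
  · rw [← hW]; nlinarith

lemma Sol.slope_up (h : Sol u v) (K : ℝ) : ∃ D : ℝ, ∀ x r, 1 ≤ r → ‖x‖ ≤ K * r →
    ‖slope u v x r‖ ^ 2 ≤ D := by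
  obtain ⟨C, hC⟩ := h.gr
  have hpg : PG (fun y : Euc n => C ^ 2 * (1 + K + ‖y‖) ^ 2) :=
    (((PG.const (1 + K)).add PG.norm).pow 2).cmul _
  refine ⟨Ex 0 1 (fun y : Euc n => C ^ 2 * (1 + K + ‖y‖) ^ 2), fun x r hr hx => ?_⟩
  have hr0 : 0 < r := by linarith
  have h1 := h.slope_sq_le x hr0
  have h2 : Hh u v x r ≤ r ^ 2 * Ex 0 1 (fun y : Euc n => C ^ 2 * (1 + K + ‖y‖) ^ 2) := by
    unfold Hh
    rw [Ex_std, ← Ex_cmul]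
    refine Ex_mono (((h.pgu.pow 2).add (h.pgv.pow 2)).comp_aff x r) (hpg.cmul _) (fun y => ?_) 0 1
    have g := hC (x + r • y)
    have hu := h.pu (x + r • y)
    have hv := h.pv (x + r • y)
    have hnm : 1 + ‖x + r • y‖ ≤ r * (1 + K + ‖y‖) := by
      have := norm_add_le x (r • y)
      rw [norm_smul, Real.norm_eq_abs, abs_of_pos hr0] at this
      nlinarith
    have hn0 : 0 ≤ ‖x + r • y‖ := norm_nonneg _
    have hC0 : 0 ≤ C := by
      by_contra hneg
      push Not at hneg
      nlinarith
    have g2 : u (x + r • y) + v (x + r • y) ≤ C * (r * (1 + K + ‖y‖)) :=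
      g.trans (mul_le_mul_of_nonneg_left hnm hC0)
    calc u (x + r • y) ^ 2 + v (x + r • y) ^ 2
        ≤ (u (x + r • y) + v (x + r • y)) ^ 2 := by nlinarith
      _ ≤ (C * (r * (1 + K + ‖y‖))) ^ 2 := pow_le_pow_left₀ (by linarith) g2 2
      _ = _ := by ring
  have h3 : r ^ 4 * ‖slope u v x r‖ ^ 2
      ≤ r ^ 4 * Ex 0 1 (fun y : Euc n => C ^ 2 * (1 + K + ‖y‖) ^ 2) := by
    have := mul_le_mul_of_nonneg_left h2 (by positivity : 0 ≤ r ^ 2)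
    nlinarith
  exact le_of_mul_le_mul_left h3 (by positivity)

end Blowdown

section Blowdown
variable {n : ℕ} {u v : Euc n → ℝ}

/-- The slopes at large balanced scales stay away from zero. -/
lemma Sol.slope_away (h : Sol u v) (hn : 1 ≤ n) {K : ℝ} (hK : 1 / 2 ≤ K) {y : Euc n}
    (huv : u y = v y) : ∃ α : ℝ, 0 < α ∧ ∃ R : ℝ, ∀ x r, R ≤ r → 0 < r → Ex x r u = Ex x r v →
      ‖y - x‖ ≤ K * r → α ≤ ‖slope u v x r‖ := by
  obtain ⟨ν, hν, C₃, hC₃, C₄, hC₄, hhalf, H⟩ := chain (n := n) hn hK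
  obtain ⟨Q, hQ, HQ⟩ := slope_low (n := n) hn K
  obtain ⟨b, hb⟩ : ∃ b, b = u y := ⟨_, rfl⟩
  have hbpos : 0 < b := hb ▸ h.pu y
  obtain ⟨T, hT⟩ : ∃ T, T = Q * (1 + (8 * C₃) ^ 2) / b ^ 2 := ⟨_, rfl⟩
  have hTpos : 0 < T := by rw [hT]; positivity
  have hTb : T * b ^ 2 = Q * (1 + (8 * C₃) ^ 2) := by rw [hT]; field_simp
  refine ⟨C₃ / T, by positivity, T + 1, fun x r hR hr hE hy => ?_⟩
  obtain ⟨A, hA⟩ : ∃ A, A = ‖slope u v x r‖ := ⟨_, rfl⟩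
  have hA0 : 0 ≤ A := hA ▸ norm_nonneg _
  rw [← hA]
  -- a scale whose rescaled slope is at most `8 C₃` is at most `√T`
  have small : ∀ X : ℝ, ∀ s : ℝ, 0 ≤ X → X ≤ 8 * C₃ → s ^ 2 * b ^ 2 ≤ Q * (1 + X ^ 2) →
      s ^ 2 ≤ T := by
    intro X s hX hX8 hs
    have : Q * (1 + X ^ 2) ≤ Q * (1 + (8 * C₃) ^ 2) := by gcongr
    exact le_of_mul_le_mul_right (by linarith) (by positivity : 0 < b ^ 2)
  have hX0 : C₃ ≤ r ^ 2 * A := by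
    by_contra hlt
    push Not at hlt
    have := small (r ^ 2 * A) r (by positivity) (by linarith) (by
      have := HQ u v h x r hr hE y hy
      rwa [← hA, ← hb] at this)
    nlinarith
  obtain ⟨i, hi1, hi2⟩ := exists_nat_pow_near (x := r ^ 2 * A / C₃) (y := 4)
    ((one_le_div (by linarith)).2 hX0) (by norm_num)
  have h4 : (r / 2 ^ i) ^ 2 = r ^ 2 / 4 ^ i := by
    rw [div_pow, ← pow_mul, mul_comm i 2, pow_mul]; norm_num
  have hXi1 : C₃ ≤ (r / 2 ^ i) ^ 2 * A := by
    rw [h4, div_mul_eq_mul_div, le_div_iff₀ (by positivity)]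
    rw [le_div_iff₀ (by linarith : 0 < C₃)] at hi1; linarith
  have hXi2 : (r / 2 ^ i) ^ 2 * A ≤ 4 * C₃ := by
    rw [h4, div_mul_eq_mul_div, div_le_iff₀ (by positivity)]
    rw [div_lt_iff₀ (by linarith : 0 < C₃)] at hi2
    rw [pow_succ (4:ℝ) i] at hi2; linarith
  obtain ⟨x', hx1, hx2, hx3⟩ := H u v h x r hr hE y hy huv i (by rw [← hA]; exact hXi1)
  rw [← hA] at hx3
  obtain ⟨s, hs⟩ : ∃ s, s = r / 2 ^ i := ⟨_, rfl⟩
  rw [← hs] at hx1 hx2 hx3 hXi1 hXi2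
  have hs0 : 0 < s := by rw [hs]; positivity
  have hslope : ‖slope u v x' s‖ ≤ 2 * A := by
    have h1 := norm_sub_norm_le (slope u v x' s) (slope u v x r)
    have h2 := mul_le_mul_of_nonneg_right (hhalf _ hXi1) hA0
    rw [← hA] at h1
    linarith
  have := small (s ^ 2 * ‖slope u v x' s‖) s (by positivity) (by nlinarith) (by
      have := HQ u v h x' s hs0 hx2 y hx1
      rwa [← hb] at this)
  rw [div_le_iff₀ hTpos]
  nlinarith

/-- **Blow-down.**  All large rescalings of `(u,v)` around points of the nodal set `{u = v}` are
close to the same one-dimensional profile `(⟪a,·⟫⁺, ⟪a,·⟫⁻)`. -/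
lemma Sol.blowdown (h : Sol u v) (hn : 1 ≤ n) : ∃ a : Euc n, a ≠ 0 ∧ ∃ K : ℝ, 1 ≤ K ∧
    (∃ y, u y = v y) ∧ ∀ η : ℝ, 0 < η → ∃ r₁ : ℝ, 0 < r₁ ∧ ∀ y, u y = v y → ∀ r, r₁ ≤ r →
      ∃ x' r', r ≤ r' ∧ r' ≤ 2 * r ∧ ‖y - x'‖ ≤ K * r' ∧ ∃ A : Euc n, ‖A - a‖ ≤ η ∧
        Flat η (r' ^ 2 • A) (PhaseSep.sc x' r' u) (PhaseSep.sc x' r' v) := by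
  obtain ⟨K₀, hK₀, HK⟩ := exists_centred (n := n)
  obtain ⟨K, hKe⟩ : ∃ K, K = K₀ + 1 := ⟨_, rfl⟩
  choose X R hR1 hR0 hX hE using fun j : ℕ => HK u v h (j + 1)
  obtain ⟨y₀, hy₀⟩ := h.exists_zero (hR0 0) (hE 0)
  obtain ⟨α, hα, R₁, Hα⟩ := h.slope_away hn (K := K) (by linarith) hy₀
  obtain ⟨D, HD⟩ := h.slope_up K₀
  have hRlim : ∀ T : ℝ, ∀ᶠ j in atTop, T ≤ R j := fun T => by
    obtain ⟨N, hN⟩ := exists_nat_ge T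
    filter_upwards [eventually_ge_atTop N] with j hj
    have : (N:ℝ) ≤ j := by exact_mod_cast hj
    linarith [hR1 j]
  have hdist : ∀ y : Euc n, ∀ᶠ j in atTop, ‖y - X j‖ ≤ K * R j := fun y => by
    filter_upwards [hRlim ‖y‖] with j hj
    have := norm_sub_le y (X j)
    have := hX j
    rw [hKe]; linarith
  have hlow : ∀ᶠ j in atTop, α ≤ ‖slope u v (X j) (R j)‖ := by
    filter_upwards [hRlim R₁, hdist y₀] with j h1 h2
    exact Hα _ _ h1 (hR0 j) (hE j) h2
  have hbd : ∀ j, slope u v (X j) (R j) ∈ closedBall (0 : Euc n) (max D 1) := fun j => by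
    have h1 := HD (X j) (R j) (by have := hR1 j; have : (0:ℝ) ≤ j := by positivity
                                  linarith) (hX j)
    rw [mem_closedBall_zero_iff]
    have h2 : D ≤ max D 1 := le_max_left _ _
    have h3 : 1 ≤ max D 1 := le_max_right _ _
    by_contra hlt
    push Not at hlt
    nlinarith
  obtain ⟨a, -, φ, hφ, hlim⟩ := tendsto_subseq_of_bounded isBounded_closedBall hbd
  have hφt := hφ.tendsto_atTop
  have haα : α ≤ ‖a‖ := ge_of_tendsto hlim.norm (hφt.eventually hlow)
  refine ⟨a, norm_pos_iff.1 (by linarith), K, by linarith, ⟨y₀, hy₀⟩, fun η hη => ?_⟩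
  obtain ⟨ν, hν, C₃, hC₃, C₄, hC₄, hhalf, H⟩ := chain (n := n) hn (K := K) (by linarith)
  obtain ⟨M, hM, HM⟩ := flat_small (n := n) hn hη
  -- the error `C₄ X^{-ν} · max D 1` is below `η / 2` for `X ≥ T`
  have hlim2 : Tendsto (fun X : ℝ => C₄ * X ^ (-ν)) atTop (𝓝 (C₄ * 0)) :=
    (tendsto_rpow_neg_atTop hν).const_mul C₄
  rw [mul_zero] at hlim2
  have hD1 : 0 < max D 1 := lt_of_lt_of_le one_pos (le_max_right _ _)
  obtain ⟨T, hT⟩ := eventually_atTop.1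
    (hlim2.eventually_le_const (by positivity : 0 < η / 2 / max D 1))
  obtain ⟨S, hS⟩ : ∃ S, S = max (max T C₃) (2 * M) := ⟨_, rfl⟩
  have hST : T ≤ S := by rw [hS]; exact (le_max_left _ _).trans (le_max_left _ _)
  have hSC : C₃ ≤ S := by rw [hS]; exact (le_max_right _ _).trans (le_max_left _ _)
  have hSM : 2 * M ≤ S := by rw [hS]; exact le_max_right _ _
  have hSα : 0 < S / α := by apply div_pos <;> linarith
  refine ⟨S / α + 1, by linarith, fun y hy r hr => ?_⟩
  have hr0 : 0 < r := by linarith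
  have hrS : S ≤ r ^ 2 * α := by
    have : S ≤ r * α := by
      rw [← div_le_iff₀ hα]; linarith
    nlinarith
  have ev := (hφt.eventually (hdist y)).and ((hφt.eventually hlow).and
    ((hφt.eventually (hRlim r)).and ((tendsto_iff_norm_sub_tendsto_zero.1 hlim).eventually_le_const
      (by positivity : 0 < η / 2))))
  obtain ⟨j, hj1, hj2, hj3, hj4⟩ := ev.exists
  simp only [Function.comp_apply] at hj4
  obtain ⟨x, hx⟩ : ∃ x, x = X (φ j) := ⟨_, rfl⟩
  obtain ⟨ρ, hρ⟩ : ∃ ρ, ρ = R (φ j) := ⟨_, rfl⟩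
  have hρ0 := hR0 (φ j)
  have hEj := hE (φ j)
  have hbj := hbd (φ j)
  rw [mem_closedBall_zero_iff] at hbj
  rw [← hx, ← hρ] at hj1 hj2 hj4 hEj hbj
  rw [← hρ] at hj3 hρ0
  obtain ⟨i, hi1, hi2⟩ := exists_nat_pow_near (x := ρ / r) (y := 2)
    ((one_le_div hr0).2 hj3) (by norm_num)
  have hs1 : r ≤ ρ / 2 ^ i := by
    rw [le_div_iff₀ (by positivity)]
    rw [le_div_iff₀ hr0] at hi1; linarith
  have hs2 : ρ / 2 ^ i ≤ 2 * r := by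
    rw [div_le_iff₀ (by positivity)]
    rw [div_lt_iff₀ hr0, pow_succ] at hi2; linarith
  obtain ⟨s, hs⟩ : ∃ s, s = ρ / 2 ^ i := ⟨_, rfl⟩
  rw [← hs] at hs1 hs2
  have hs0 : 0 < s := by linarith
  have hsX : S ≤ s ^ 2 * ‖slope u v x ρ‖ := by
    refine hrS.trans ?_
    gcongr
  obtain ⟨x', hx1, hx2, hx3⟩ := H u v h x ρ hρ0 hEj y hj1 hy i (by rw [← hs]; linarith)
  rw [← hs] at hx1 hx2 hx3
  have he := hT _ (hST.trans hsX)
  have hh := hhalf _ (hSC.trans hsX)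
  have hx4 : ‖slope u v x' s - slope u v x ρ‖ ≤ η / 2 := by
    refine hx3.trans ?_
    calc _ ≤ η / 2 / max D 1 * max D 1 := by gcongr
      _ = _ := by field_simp
  have hx5 : ‖slope u v x ρ‖ ≤ 2 * ‖slope u v x' s‖ := by
    have h1 := norm_sub_norm_le (slope u v x ρ) (slope u v x' s)
    rw [norm_sub_rev] at h1
    have h2 := mul_le_mul_of_nonneg_right hh (norm_nonneg (slope u v x ρ))
    linarith
  refine ⟨x', s, hs1, hs2, hx1, slope u v x' s, ?_, ?_⟩
  · have e : slope u v x' s - a = (slope u v x' s - slope u v x ρ) + (slope u v x ρ - a) := by abel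
    rw [e]; refine (norm_add_le _ _).trans ?_; linarith
  · rw [← slope_av u v x' hs0]
    refine HM _ _ (h.sc x' hs0) (by rw [Ex_sc, Ex_sc, smul_zero, add_zero, mul_one, hx2]) ?_
    rw [Hh_sc, smul_zero, add_zero, mul_one]
    refine le_trans ?_ (h.slope_sq_le x' hs0)
    have : M ≤ s ^ 2 * ‖slope u v x' s‖ := by nlinarith [sq_nonneg s]
    nlinarith

end Blowdown

/-! ### The solution away from and close to the nodal set -/

section Env
variable {n : ℕ} {u v : Euc n → ℝ}

/-- At `x` the first component is large with gradient `δ`-close to `a`, and the second component is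
`δ`-small together with its gradient. -/
structure Pos (a : Euc n) (δ : ℝ) (u v : Euc n → ℝ) (x : Euc n) : Prop where
  big : 1 / δ ≤ u x
  small : v x ≤ δ
  lt : v x < u x
  gu : ∀ i, |pd i u x - a i| ≤ δ
  gv : ∀ i, |pd i v x| ≤ δ

/-- Flatness at a large scale with slope near `a` gives `Pos` on the positive side of the plane. -/
lemma Flat.toPos (hn : 1 ≤ n) (a : Euc n) {c δ : ℝ} (hc : 0 < c) (L : ℝ) (hδ : 0 < δ) :
    ∃ η : ℝ, 0 < η ∧ ∃ r₁ : ℝ, 1 ≤ r₁ ∧ ∀ u v : Euc n → ℝ, Sol u v → ∀ (x' : Euc n) (r' : ℝ)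
      (A : Euc n), r₁ ≤ r' → ‖A - a‖ ≤ η → Flat η (r' ^ 2 • A) (sc x' r' u) (sc x' r' v) →
      ∀ x, ‖x - x'‖ ≤ L * r' → c * r' ≤ ⟪a, x - x'⟫ → Pos a δ u v x := by
  obtain ⟨α, hα⟩ : ∃ α, α = ‖a‖ + 1 := ⟨_, rfl⟩
  have hα1 : 1 ≤ α := by have := norm_nonneg a; linarith
  have hα0 : 0 < α := by linarith
  obtain ⟨δ', hδ'⟩ : ∃ δ', δ' = min (c / (4 * α)) (min (δ / (2 * α)) δ) := ⟨_, rfl⟩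
  have hd0 : 0 < δ' := by rw [hδ']; positivity
  have hd1 : δ' * α ≤ c / 4 := by
    have : δ' ≤ c / (4 * α) := by rw [hδ']; exact min_le_left _ _
    rw [le_div_iff₀ (by positivity)] at this; linarith
  have hd2 : δ' * α ≤ δ / 2 := by
    have : δ' ≤ δ / (2 * α) := by
      rw [hδ']; exact (min_le_right _ _).trans (min_le_left _ _)
    rw [le_div_iff₀ (by positivity)] at this; linarith
  have hd3 : δ' ≤ δ := by rw [hδ']; exact (min_le_right _ _).trans (min_le_right _ _)
  obtain ⟨η₀, hη₀, H⟩ := Flat.point (n := n) hn (c := c / (2 * α)) (δ := δ') (by positivity) L hd0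
  obtain ⟨η, hη⟩ : ∃ η, η = min (min η₀ 1) (min (δ / 2) (c / (2 * (|L| + 1)))) := ⟨_, rfl⟩
  have hη0 : 0 < η := by rw [hη]; positivity
  have hη1 : η ≤ η₀ := by rw [hη]; exact (min_le_left _ _).trans (min_le_left _ _)
  have hη2 : η ≤ 1 := by rw [hη]; exact (min_le_left _ _).trans (min_le_right _ _)
  have hη3 : η ≤ δ / 2 := by rw [hη]; exact (min_le_right _ _).trans (min_le_left _ _)
  have hη4 : η * (|L| + 1) ≤ c / 2 := by
    have : η ≤ c / (2 * (|L| + 1)) := by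
      rw [hη]; exact (min_le_right _ _).trans (min_le_right _ _)
    rw [le_div_iff₀ (by positivity)] at this; linarith
  refine ⟨η, hη0, max 1 (4 / (c * δ)), le_max_left _ _, ?_⟩
  intro u v h x' r A hr hAa hF x hx hcx
  have hr1 : 1 ≤ r := (le_max_left _ _).trans hr
  have hr2 : 4 / (c * δ) ≤ r := (le_max_right _ _).trans hr
  have hr0 : 0 < r := by linarith
  obtain ⟨z, hz⟩ : ∃ z : Euc n, z = r⁻¹ • (x - x') := ⟨_, rfl⟩
  have hxz : x' + r • z = x := by
    rw [hz, smul_smul, mul_inv_cancel₀ hr0.ne', one_smul, add_sub_cancel]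
  have hxz' : x - x' = r • z := by rw [← hxz]; abel
  have hzL : ‖z‖ ≤ L := by
    rw [hz, norm_smul, norm_inv, Real.norm_eq_abs, abs_of_pos hr0, inv_mul_le_iff₀ hr0]
    linarith
  have haz : c ≤ ⟪a, z⟫ := by
    rw [hxz', real_inner_smul_right] at hcx
    nlinarith
  have hAz : c / 2 ≤ ⟪A, z⟫ := by
    have e : ⟪A, z⟫ = ⟪a, z⟫ + ⟪A - a, z⟫ := by rw [inner_sub_left]; ring
    have e1 := (abs_le.1 (abs_real_inner_le_norm (A - a) z)).1
    have e2 : ‖A - a‖ * ‖z‖ ≤ η * (|L| + 1) := by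
      gcongr; linarith [le_abs_self L]
    linarith
  have hAα : ‖A‖ ≤ α := by
    have := norm_sub_norm_le A a
    linarith
  have hrA : ‖r ^ 2 • A‖ = r ^ 2 * ‖A‖ := by
    rw [norm_smul, Real.norm_eq_abs, abs_of_pos (by positivity)]
  have hrr : 1 ≤ r ^ 2 := by nlinarith
  have hδA : δ' * ‖A‖ ≤ δ' * α := by gcongr
  obtain ⟨p1, p2, p3, p4, p5⟩ := H _ _ _ (hF.mono hη0 hη1) z hzL (by
    rw [hrA, real_inner_smul_left]
    have : c / (2 * α) * ‖A‖ ≤ c / 2 := by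
      rw [div_mul_eq_mul_div, div_le_iff₀ (by positivity)]; nlinarith
    have e3 : r ^ 2 * (c / (2 * α) * ‖A‖) ≤ r ^ 2 * ⟪A, z⟫ :=
      mul_le_mul_of_nonneg_left (this.trans hAz) (by positivity)
    linarith)
  rw [sc_apply, hxz, hrA, real_inner_smul_left] at p1
  rw [sc_apply, hxz] at p3
  rw [sc_apply, sc_apply, hxz] at p4
  have hv := h.pv x
  refine ⟨?_, ?_, lt_of_mul_lt_mul_left p4 hr0.le, fun i => ?_, fun i => ?_⟩
  · have q1 := (abs_le.1 p1).1
    have q0 : r ^ 2 * (c / 4) ≤ r ^ 2 * (⟪A, z⟫ - δ' * ‖A‖) :=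
      mul_le_mul_of_nonneg_left (by linarith) (by positivity)
    have q2 : r * (c / 4 * r) ≤ r * u x := by linarith
    have q3 := le_of_mul_le_mul_left q2 hr0
    refine le_trans ?_ q3
    rw [div_le_iff₀ (by positivity)] at hr2
    rw [div_le_iff₀ hδ]; linarith
  · have : 1 * v x ≤ r * v x := mul_le_mul_of_nonneg_right hr1 hv.le
    linarith
  · have q := (p5 i).1
    rw [pd_sc (h.c2u.differentiable (by norm_num)), hxz, hrA] at q
    have e : r ^ 2 * pd i u x - (r ^ 2 • A) i = r ^ 2 * (pd i u x - A i) := by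
      simp only [PiLp.smul_apply, smul_eq_mul]; ring
    rw [e, abs_mul, abs_of_pos (by positivity : 0 < r ^ 2)] at q
    have q2 : |pd i u x - A i| ≤ δ' * ‖A‖ :=
      le_of_mul_le_mul_left (by linarith : r ^ 2 * _ ≤ r ^ 2 * _) (by positivity : 0 < r ^ 2)
    have q3 := abs_coord_le (A - a) i
    simp only [PiLp.sub_apply] at q3
    have e2 : pd i u x - a i = (pd i u x - A i) + (A i - a i) := by ring
    rw [e2]
    refine (abs_add_le _ _).trans ?_
    linarith
  · have q := (p5 i).2
    rw [pd_sc (h.c2v.differentiable (by norm_num)), hxz, abs_mul,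
      abs_of_pos (by positivity : 0 < r ^ 2)] at q
    have : 1 * |pd i v x| ≤ r ^ 2 * |pd i v x| := mul_le_mul_of_nonneg_right hrr (abs_nonneg _)
    linarith

/-- The nodal set is flat at all large scales around each of its points, with fixed normal `a`. -/
lemma Sol.scale (h : Sol u v) (hn : 1 ≤ n) : ∃ a : Euc n, a ≠ 0 ∧ (∃ y, u y = v y) ∧
    (∀ c L δ : ℝ, 0 < c → 0 < δ → ∃ r₁ : ℝ, 1 ≤ r₁ ∧ ∀ y, u y = v y → ∀ r, r₁ ≤ r →
      ∀ x, ‖x - y‖ ≤ L * r → (c * r ≤ ⟪a, x - y⟫ → Pos a δ u v x) ∧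
        (⟪a, x - y⟫ ≤ -(c * r) → Pos (-a) δ v u x)) ∧
    ∀ L : ℝ, ∃ B : ℝ, ∀ x y, u y = v y → ‖x - y‖ ≤ L → u x ≤ B ∧ v x ≤ B := by
  obtain ⟨a, ha, K, hK, hz, H⟩ := h.blowdown hn
  refine ⟨a, ha, hz, fun c L δ hc hδ => ?_, fun L => ?_⟩
  · have hc4 : 0 < c / 4 := by positivity
    obtain ⟨η₁, hη₁, r₁, hr₁, H₁⟩ := Flat.toPos hn a hc4 (|L| + K) hδ
    obtain ⟨η₂, hη₂, r₂, hr₂, H₂⟩ := Flat.toPos hn (-a) hc4 (|L| + K) hδ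
    obtain ⟨r₀, hr₀, H₀⟩ := H (min η₁ η₂) (lt_min hη₁ hη₂)
    refine ⟨max r₀ (max r₁ r₂), le_max_of_le_right (le_max_of_le_left hr₁), fun y hy r hr => ?_⟩
    have e0 : r₀ ≤ r := (le_max_left _ _).trans hr
    have e1 : r₁ ≤ r := (le_max_left _ _).trans ((le_max_right _ _).trans hr)
    have e2 : r₂ ≤ r := (le_max_right _ _).trans ((le_max_right _ _).trans hr)
    obtain ⟨x', r', h1, h2, h3, A, hA, hF⟩ := H₀ y hy r e0
    have hr0 : 0 < r := by linarith
    have hL0 := abs_nonneg L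
    have P : ∀ x, ‖x - x'‖ ≤ (|L| + K) * r' → c / 4 * r' ≤ ⟪a, x - x'⟫ → Pos a δ u v x :=
      H₁ u v h x' r' A (e1.trans h1) (hA.trans (min_le_left _ _))
        (hF.mono (lt_min hη₁ hη₂) (min_le_left _ _))
    have N : ∀ x, ‖x - x'‖ ≤ (|L| + K) * r' → c / 4 * r' ≤ ⟪-a, x - x'⟫ → Pos (-a) δ v u x :=
      H₂ v u h.swap x' r' (-A) (e2.trans h1)
        (by rw [← neg_add', norm_neg, ← sub_eq_add_neg]; exact hA.trans (min_le_right _ _))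
        (by rw [smul_neg]; exact (hF.mono (lt_min hη₁ hη₂) (min_le_right _ _)).swap)
    have hyL : ‖y - x'‖ ≤ (|L| + K) * r' := by nlinarith
    -- `y` itself is nodal, hence close to the hyperplane through `x'`
    have hy1 : ⟪a, y - x'⟫ < c / 4 * r' := by
      by_contra hcon
      push Not at hcon
      have := (P y hyL hcon).lt
      linarith
    have hy2 : -(c / 4 * r') < ⟪a, y - x'⟫ := by
      by_contra hcon
      push Not at hcon
      have := (N y hyL (by rw [inner_neg_left]; linarith)).lt
      linarith
    intro x hx
    have hsum : ⟪a, x - x'⟫ = ⟪a, x - y⟫ + ⟪a, y - x'⟫ := by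
      rw [← inner_add_right]; congr 1; abel
    have hxL : ‖x - x'‖ ≤ (|L| + K) * r' := by
      have e : x - x' = (x - y) + (y - x') := by abel
      rw [e]
      refine (norm_add_le _ _).trans ?_
      have : L * r ≤ |L| * r' := mul_le_mul (le_abs_self L) h1 hr0.le hL0
      linarith
    have hcr : c / 4 * r' ≤ c * r / 2 := by nlinarith
    refine ⟨fun hp => P x hxL (by linarith), fun hp => N x hxL ?_⟩
    rw [inner_neg_left]; linarith
  · obtain ⟨r₁, hr₁, H₁⟩ := H 1 one_pos
    obtain ⟨C, hC, HC⟩ := Hh_cmp (n := n) (s := 1) one_pos (|L| / r₁ + K)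
    obtain ⟨α, hα⟩ : ∃ α, α = ‖a‖ + 1 := ⟨_, rfl⟩
    have hα1 : 0 ≤ α := by have := norm_nonneg a; linarith
    obtain ⟨Q, hQ⟩ : ∃ Q, Q = 2 * C * ((2 * r₁) ^ 2 * α ^ 2) := ⟨_, rfl⟩
    have hQ0 : 0 ≤ Q := by rw [hQ]; positivity
    refine ⟨Q + 1, fun x y hy hxy => ?_⟩
    obtain ⟨x', r, h1, h2, h3, A, hA, hF⟩ := H₁ y hy r₁ le_rfl
    have hr0 : 0 < r := by linarith
    have hAα : ‖A‖ ≤ α := by have := norm_sub_norm_le A a; linarith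
    have hxx : x' + r • (r⁻¹ • (x - x')) = x := by
      rw [smul_smul, mul_inv_cancel₀ hr0.ne', one_smul, add_sub_cancel]
    have k1 := (HC _ _ (h.sc x' hr0) (r⁻¹ • (x - x')) (by
      rw [norm_smul, norm_inv, Real.norm_eq_abs, abs_of_pos hr0, inv_mul_le_iff₀ hr0]
      have e : x - x' = (x - y) + (y - x') := by abel
      rw [e]
      refine (norm_add_le _ _).trans ?_
      have : |L| ≤ r * (|L| / r₁) := by
        rw [mul_div_assoc', le_div_iff₀ hr₁]
        nlinarith [abs_nonneg L]
      have := le_abs_self L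
      linarith)).1
    rw [Hh_sc, hxx, mul_one] at k1
    have k2 := h.H_ge x hr0.le
    have k3 := hF.up
    rw [norm_smul, Real.norm_eq_abs, abs_of_pos (by positivity)] at k3
    have k4 : r ^ 2 * (u x ^ 2 + v x ^ 2) ≤ r ^ 2 * (2 * C * (r ^ 2 * ‖A‖ ^ 2)) := by
      calc r ^ 2 * (u x ^ 2 + v x ^ 2) ≤ r ^ 2 * Hh u v x r := by gcongr
        _ ≤ C * (2 * (r ^ 2 * ‖A‖) ^ 2) := k1.trans (by gcongr)
        _ = _ := by ring
    have k5 := le_of_mul_le_mul_left k4 (by positivity)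
    have k6 : 2 * C * (r ^ 2 * ‖A‖ ^ 2) ≤ Q := by
      rw [hQ]; gcongr
    have hu := h.pu x
    have hv := h.pv x
    constructor
    · by_contra hcon; push Not at hcon; nlinarith
    · by_contra hcon; push Not at hcon; nlinarith

end Env

section Env
variable {n : ℕ} {u v : Euc n → ℝ}

/-- The geometric information used by the sliding method: the behaviour of a solution far from,
near to, and transversally across the nodal set `{u = v}`, whose asymptotic normal is `a`. -/
structure Env (a : Euc n) (u v : Euc n → ℝ) : Prop where
  sol : Sol u v
  far : ∀ δ : ℝ, 0 < δ → ∃ L : ℝ, 0 < L ∧ ∀ x, (∀ y, u y = v y → L < ‖x - y‖) →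
    Pos a δ u v x ∨ Pos (-a) δ v u x
  near : ∀ L : ℝ, ∃ B : ℝ, ∀ x y, u y = v y → ‖x - y‖ ≤ L → u x ≤ B ∧ v x ≤ B
  dir : ∀ τ : Euc n, 0 < ⟪a, τ⟫ → ∀ L δ : ℝ, 0 < δ → ∃ s₁ : ℝ, 0 < s₁ ∧ ∀ x y, u y = v y →
    ‖x - y‖ ≤ L → ∀ s, s₁ ≤ s → Pos a δ u v (x + s • τ) ∧ Pos (-a) δ v u (x - s • τ)
  grad : ∃ Λ : ℝ, ∀ x i, |pd i u x| ≤ Λ ∧ |pd i v x| ≤ Λ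

lemma Env.swap {a : Euc n} (E : Env a u v) : Env (-a) v u := by
  refine ⟨E.sol.swap, fun δ hδ => ?_, fun L => ?_, fun τ hτ L δ hδ => ?_, ?_⟩
  · obtain ⟨L, hL, H⟩ := E.far δ hδ
    refine ⟨L, hL, fun x hx => ?_⟩
    rw [neg_neg]
    exact (H x fun y hy => hx y hy.symm).symm
  · obtain ⟨B, hB⟩ := E.near L
    exact ⟨B, fun x y hy hxy => (hB x y hy.symm hxy).symm⟩
  · obtain ⟨s, hs, H⟩ := E.dir (-τ) (by rw [inner_neg_right]; rwa [inner_neg_left] at hτ) L δ hδ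
    refine ⟨s, hs, fun x y hy hxy t ht => ?_⟩
    have := H x y hy.symm hxy t ht
    rw [smul_neg, ← sub_eq_add_neg, sub_neg_eq_add] at this
    rw [neg_neg]
    exact this.symm
  · obtain ⟨Λ, hΛ⟩ := E.grad
    exact ⟨Λ, fun x i => (hΛ x i).symm⟩

/-- Between a point with `v ≤ u` and a point with `u ≤ v` there is a nodal point. -/
lemma Sol.zero_between (h : Sol u v) {p q : Euc n} (hp : v p ≤ u p) (hq : u q ≤ v q) :
    ∃ y, u y = v y ∧ ∃ t ∈ Icc (0:ℝ) 1, y = p + t • (q - p) := by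
  have hc : Continuous fun t : ℝ => v (p + t • (q - p)) - u (p + t • (q - p)) :=
    (h.pgv.continuous.comp (by fun_prop)).sub (h.pgu.continuous.comp (by fun_prop))
  obtain ⟨t, ht, he⟩ := intermediate_value_Icc (zero_le_one' ℝ) hc.continuousOn
    (show (0:ℝ) ∈ Icc _ _ from by
      constructor
      · simp only [zero_smul, add_zero]; linarith
      · simp only [one_smul, add_sub_cancel]; linarith)
  exact ⟨_, by simp only at he; linarith, t, ht, rfl⟩

lemma Sol.env (h : Sol u v) (hn : 1 ≤ n) : ∃ a : Euc n, a ≠ 0 ∧ Env a u v := by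
  obtain ⟨a, ha, ⟨y₀, hy₀⟩, hsc, hnear⟩ := h.scale hn
  have hα : 0 < ‖a‖ := norm_pos_iff.2 ha
  have hfar : ∀ δ : ℝ, 0 < δ → ∃ L : ℝ, 0 < L ∧ ∀ x, (∀ y, u y = v y → L < ‖x - y‖) →
    Pos a δ u v x ∨ Pos (-a) δ v u x := by
    intro δ hδ
    obtain ⟨r₁, hr₁, H⟩ := hsc (‖a‖ / 4) 2 δ (by positivity) hδ
    refine ⟨r₁, by linarith, fun x hx => ?_⟩
    have hZc : IsClosed {y | u y = v y} := isClosed_eq h.pgu.continuous h.pgv.continuous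
    obtain ⟨y, hy, hyd⟩ := hZc.exists_infDist_eq_dist ⟨y₀, hy₀⟩ x
    have hmin : ∀ y', u y' = v y' → ‖x - y‖ ≤ ‖x - y'‖ := fun y' hy' => by
      rw [← dist_eq_norm, ← dist_eq_norm, ← hyd]; exact infDist_le_dist_of_mem hy'
    have hd := hx y hy
    obtain ⟨d, hde⟩ : ∃ d, d = ‖x - y‖ := ⟨_, rfl⟩
    rw [← hde] at hd hmin
    have hd0 : 0 < d := by linarith
    have HH := H y hy d hd.le
    by_cases c1 : ‖a‖ / 4 * d ≤ ⟪a, x - y⟫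
    · exact Or.inl ((HH x (by rw [← hde]; linarith)).1 c1)
    by_cases c2 : ⟪a, x - y⟫ ≤ -(‖a‖ / 4 * d)
    · exact Or.inr ((HH x (by rw [← hde]; linarith)).2 c2)
    exfalso
    push Not at c1 c2
    -- moving by `d/2` along the normal changes the phase, which forces a nodal point closer than `d`
    obtain ⟨e, he⟩ : ∃ e : Euc n, e = (d / 2 / ‖a‖) • a := ⟨_, rfl⟩
    have hen : ‖e‖ = d / 2 := by
      rw [he, norm_smul, Real.norm_eq_abs, abs_of_pos (by positivity)]; field_simp
    have hei : ⟪a, e⟫ = ‖a‖ * d / 2 := by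
      rw [he, real_inner_smul_right, real_inner_self_eq_norm_sq]; field_simp
    have p1 := (HH (x + e) (by
      rw [add_sub_right_comm]; refine (norm_add_le _ _).trans ?_; rw [← hde, hen]; linarith)).1
      (by rw [add_sub_right_comm, inner_add_right, hei]; linarith)
    have p2 := (HH (x - e) (by
      rw [sub_right_comm]; refine (norm_sub_le _ _).trans ?_; rw [← hde, hen]; linarith)).2
      (by rw [sub_right_comm, inner_sub_right, hei]; linarith)
    obtain ⟨y', hy', t, ht, hyt⟩ := h.zero_between p1.lt.le p2.lt.le
    have := hmin y' hy'
    have e1 : x - y' = (2 * t - 1) • e := by rw [hyt]; module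
    rw [e1, norm_smul, hen, Real.norm_eq_abs] at this
    have : |2 * t - 1| ≤ 1 := abs_le.2 ⟨by linarith [ht.1], by linarith [ht.2]⟩
    nlinarith
  refine ⟨a, ha, h, hfar, hnear, fun τ hτ L δ hδ => ?_, ?_⟩
  · obtain ⟨r₁, hr₁, H⟩ := hsc (⟪a, τ⟫ / 2) (1 + ‖τ‖) δ (by positivity) hδ
    refine ⟨max r₁ (max |L| (‖a‖ * |L| / (⟪a, τ⟫ / 2))), lt_max_of_lt_left (by linarith),
      fun x y hy hxy s hs => ?_⟩
    have s1 : r₁ ≤ s := (le_max_left _ _).trans hs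
    have s2 : |L| ≤ s := (le_max_left _ _).trans ((le_max_right _ _).trans hs)
    have s3 : ‖a‖ * |L| / (⟪a, τ⟫ / 2) ≤ s :=
      (le_max_right _ _).trans ((le_max_right _ _).trans hs)
    rw [div_le_iff₀ (by positivity)] at s3
    have hs0 : 0 < s := by linarith
    have hxL : ‖x - y‖ ≤ |L| := hxy.trans (le_abs_self L)
    have hin : |⟪a, x - y⟫| ≤ ‖a‖ * |L| :=
      (abs_real_inner_le_norm _ _).trans (by gcongr)
    have hin' := abs_le.1 hin
    have hst : ‖s • τ‖ = s * ‖τ‖ := by rw [norm_smul, Real.norm_eq_abs, abs_of_pos hs0]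
    constructor
    · refine (H y hy s s1 _ ?_).1 ?_
      · rw [add_sub_right_comm]; refine (norm_add_le _ _).trans ?_; rw [hst]; linarith
      · rw [add_sub_right_comm, inner_add_right, real_inner_smul_right]; linarith
    · refine (H y hy s s1 _ ?_).2 ?_
      · rw [sub_right_comm]; refine (norm_sub_le _ _).trans ?_; rw [hst]; linarith
      · rw [sub_right_comm, inner_sub_right, real_inner_smul_right]; linarith
  · obtain ⟨L, hL, HL⟩ := hfar 1 one_pos
    obtain ⟨B, hB⟩ := hnear (L + 1)
    refine ⟨max (‖a‖ + 1) (n * B / 1 + B * B ^ 2 * 1 / 2), fun x i => ?_⟩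
    by_cases hx : ∀ y, u y = v y → L < ‖x - y‖
    · have hai := abs_coord_le a i
      have key : |pd i u x| ≤ ‖a‖ + 1 ∧ |pd i v x| ≤ ‖a‖ + 1 := by
        rcases HL x hx with P | P
        · have g1 := P.gu i
          have g2 := P.gv i
          have := abs_sub_abs_le_abs_sub (pd i u x) (a i)
          exact ⟨by linarith, by linarith [norm_nonneg a]⟩
        · have g1 := P.gu i
          have g2 := P.gv i
          have := abs_sub_abs_le_abs_sub (pd i v x) ((-a) i)
          simp only [PiLp.neg_apply, abs_neg] at this g1
          exact ⟨by linarith [norm_nonneg a], by linarith⟩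
      exact ⟨le_max_of_le_left key.1, le_max_of_le_left key.2⟩
    · push Not at hx
      obtain ⟨y, hy, hxy⟩ := hx
      have hb : ∀ z, ‖z - x‖ ≤ 1 → u z ≤ B ∧ v z ≤ B := fun z hz => by
        refine hB z y hy ?_
        have e : z - y = (z - x) + (x - y) := by abel
        rw [e]; refine (norm_add_le _ _).trans ?_; linarith
      have B0 : 0 ≤ B := (h.pu x).le.trans (hb x (by simp)).1
      refine ⟨le_max_of_le_right (grad_est h.c2u x one_pos (fun z hz => ?_) (fun z hz => ?_) i),
        le_max_of_le_right (grad_est h.c2v x one_pos (fun z hz => ?_) (fun z hz => ?_) i)⟩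
      · rw [abs_of_pos (h.pu z)]; exact (hb z hz).1
      · have hu := h.pu z; have hv := h.pv z; obtain ⟨b1, b2⟩ := hb z hz
        rw [h.eu, abs_of_pos (by positivity)]; gcongr
      · rw [abs_of_pos (h.pv z)]; exact (hb z hz).2
      · have hu := h.pu z; have hv := h.pv z; obtain ⟨b1, b2⟩ := hb z hz
        rw [h.ev, abs_of_pos (by positivity)]; gcongr

end Env

/-! ### The sliding method -/

section Slide
variable {n : ℕ} {u v : Euc n → ℝ}

/-- Where `u` is close to linear with slope `a`, it increases in directions making an acute angle
with `a`. -/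
lemma pos_dir (a τ : Euc n) (hτ : 0 < ⟪a, τ⟫) : ∃ δ : ℝ, 0 < δ ∧ δ ≤ 1 ∧
    ∀ (u v : Euc n → ℝ) (x : Euc n), Pos a δ u v x → ⟪a, τ⟫ / 2 ≤ fderiv ℝ u x τ := by
  have hS : 0 ≤ ∑ i, |τ i| := Finset.sum_nonneg fun i _ => abs_nonneg _
  refine ⟨min 1 (⟪a, τ⟫ / 2 / (∑ i, |τ i| + 1)), by positivity, min_le_left _ _,
    fun u v x P => ?_⟩
  obtain ⟨δ, hδ⟩ : ∃ δ, δ = min 1 (⟪a, τ⟫ / 2 / (∑ i, |τ i| + 1)) := ⟨_, rfl⟩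
  rw [← hδ] at P
  have h1 : δ * (∑ i, |τ i| + 1) ≤ ⟪a, τ⟫ / 2 := by
    rw [← le_div_iff₀ (by positivity), hδ]; exact min_le_right _ _
  have h0 : 0 ≤ δ := by rw [hδ]; positivity
  have h2 : ⟪a, τ⟫ - fderiv ℝ u x τ ≤ δ * ∑ i, |τ i| := by
    rw [fderiv_apply_eq, inner_eq_sum, ← Finset.sum_sub_distrib, Finset.mul_sum]
    refine Finset.sum_le_sum fun i _ => ?_
    have e : a i * τ i - τ i * pd i u x = (-(pd i u x - a i)) * τ i := by ring
    rw [e]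
    refine (le_abs_self _).trans ?_
    rw [abs_mul, abs_neg]
    exact mul_le_mul_of_nonneg_right (P.gu i) (abs_nonneg _)
  linarith

lemma hasDerivAt_ray {f : Euc n → ℝ} (hf : Differentiable ℝ f) (x τ : Euc n) (t : ℝ) :
    HasDerivAt (fun t : ℝ => f (x + t • τ)) (fderiv ℝ f (x + t • τ) τ) t := by
  have h1 : HasDerivAt (fun t : ℝ => x + t • τ) τ t := by
    have := ((hasDerivAt_id t).smul_const τ).const_add x
    simpa using this
  exact (hf (x + t • τ)).hasFDerivAt.comp_hasDerivAt t h1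

lemma line_mono {f : Euc n → ℝ} (hf : Differentiable ℝ f) (x τ : Euc n) {c s : ℝ} (hs : 0 ≤ s)
    (h : ∀ t, 0 ≤ t → t ≤ s → c ≤ fderiv ℝ f (x + t • τ) τ) :
    f x + c * s ≤ f (x + s • τ) := by
  have hd := fun t => hasDerivAt_ray hf x τ t
  have := (convex_Icc (0:ℝ) s).mul_sub_le_image_sub_of_le_deriv
    (f := fun t : ℝ => f (x + t • τ)) (C := c)
    (fun t _ => (hd t).continuousAt.continuousWithinAt)
    (fun t _ => (hd t).differentiableAt.differentiableWithinAt)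
    (fun t ht => by
      rw [interior_Icc] at ht
      rw [(hd t).deriv]; exact h t ht.1.le ht.2.le)
    0 (left_mem_Icc.2 hs) s (right_mem_Icc.2 hs) hs
  simp only [zero_smul, add_zero, sub_zero] at this
  linarith

lemma Env.mono {a τ : Euc n} (E : Env a u v) (hτ : 0 < ⟪a, τ⟫) : ∃ K₀ : ℝ, 1 ≤ K₀ ∧
    ∀ K, K₀ ≤ K → ∀ x, K ≤ u x → v x ≤ 1 ∧ ∀ t : ℝ, 0 ≤ t → u x ≤ u (x + t • τ) := by
  obtain ⟨δ, hδ, hδ1, Hδ⟩ := pos_dir a τ hτ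
  obtain ⟨L, hL, HL⟩ := E.far δ hδ
  obtain ⟨B, hB⟩ := E.near L
  have hdu : Differentiable ℝ u := E.sol.c2u.differentiable (by norm_num)
  refine ⟨max (B + 1) 2, le_max_of_le_right (by norm_num), fun K hK x hx => ?_⟩
  have hK1 : B + 1 ≤ K := (le_max_left _ _).trans hK
  have hK2 : 2 ≤ K := (le_max_right _ _).trans hK
  have hP : ∀ x, K ≤ u x → Pos a δ u v x := fun x hx => by
    have hf : ∀ y, u y = v y → L < ‖x - y‖ := fun y hy => by
      by_contra hcon
      push Not at hcon
      linarith [(hB x y hy hcon).1]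
    rcases HL x hf with P | P
    · exact P
    · linarith [P.small]
  refine ⟨(hP x hx).small.trans hδ1, fun t ht => ?_⟩
  -- the set `{u ≥ K}` is invariant in direction `τ`, because `∂_τ u > 0` on its boundary
  have hinv : ∀ r ∈ Icc (0:ℝ) t, K - u (x + r • τ) ≤ (fun _ : ℝ => (0:ℝ)) r := by
    intro r hr
    have hd := fun r => hasDerivAt_ray hdu x τ r
    refine image_le_of_deriv_right_lt_deriv_boundary (a := 0) (b := t)
      (f := fun r : ℝ => K - u (x + r • τ)) (f' := fun r => - fderiv ℝ u (x + r • τ) τ)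
      (B' := fun _ => 0) ?_ ?_ ?_ (fun r => hasDerivAt_const r (0:ℝ)) ?_ hr
    · exact fun r _ => (continuousAt_const.sub (hd r).continuousAt).continuousWithinAt
    · exact fun r _ => ((hd r).const_sub K).hasDerivWithinAt
    · simpa using hx
    · intro r _ he
      have := Hδ _ _ _ (hP (x + r • τ) (by linarith))
      linarith
  have := line_mono hdu x τ (c := 0) ht (fun r h0 h1 => by
    have := hinv r ⟨h0, h1⟩
    have := Hδ _ _ _ (hP (x + r • τ) (by simp only at this; linarith))
    linarith)
  linarith

/-- The setting of the sliding method in direction `τ`: `{u ≥ K}` and `{v ≥ K}` are pure phases, in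
which the dominant component is monotone along `τ`. -/
structure Dir (a τ : Euc n) (K : ℝ) (u v : Euc n → ℝ) : Prop where
  env : Env a u v
  pos : 0 < ⟪a, τ⟫
  one_le : 1 ≤ K
  mu : ∀ x, K ≤ u x → v x ≤ 1 ∧ ∀ t : ℝ, 0 ≤ t → u x ≤ u (x + t • τ)
  mv : ∀ x, K ≤ v x → u x ≤ 1 ∧ ∀ t : ℝ, 0 ≤ t → v x ≤ v (x + t • (-τ))

lemma Env.exists_dir {a τ : Euc n} (E : Env a u v) (hτ : 0 < ⟪a, τ⟫) : ∃ K, Dir a τ K u v := by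
  obtain ⟨K₁, h1, H₁⟩ := E.mono hτ
  obtain ⟨K₂, h2, H₂⟩ := E.swap.mono (τ := -τ) (by rwa [inner_neg_neg])
  exact ⟨max K₁ K₂, E, hτ, le_max_of_le_left h1, H₁ _ (le_max_left _ _), H₂ _ (le_max_right _ _)⟩

lemma Dir.swap {a τ : Euc n} {K : ℝ} (D : Dir a τ K u v) : Dir (-a) (-τ) K v u :=
  ⟨D.env.swap, by rw [inner_neg_neg]; exact D.pos, D.one_le, D.mv, by
    simpa only [neg_neg] using D.mu⟩

lemma lap_shift {f : Euc n → ℝ} (hf : ContDiff ℝ 2 f) (z x : Euc n) :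
    lap (fun y => f (y + z)) x = lap f (x + z) := by
  have := lap_comp_aff hf z 1 x
  simp only [one_smul, one_pow, one_mul] at this
  simpa only [add_comm] using this

lemma contDiff_shift {f : Euc n → ℝ} (hf : ContDiff ℝ 2 f) (z : Euc n) :
    ContDiff ℝ 2 (fun y => f (y + z)) := hf.comp (contDiff_id.add contDiff_const)

/-- Comparison: wherever `v` fails to decrease, `v(·+sτ) - v` is a bounded subsolution of
`Δf ≥ f`, and hence cannot be positive anywhere. -/
lemma Dir.barrier {a τ : Euc n} {K : ℝ} (D : Dir a τ K u v) (hn : 1 ≤ n) {s : ℝ}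
    (H : ∀ x, v x < v (x + s • τ) → u x ≤ u (x + s • τ) ∧ K ≤ u (x + s • τ)) (x : Euc n) :
    v (x + s • τ) ≤ v x := by
  have h := D.env.sol
  have hK := D.one_le
  have hc : ContDiff ℝ 2 (fun y => v (y + s • τ) - v y) :=
    (contDiff_shift h.c2v (s • τ)).sub h.c2v
  have hb : ∀ ρ : ℝ, 0 < ρ →
      v (x + s • τ) - v x ≤ 3 * 1 * Real.exp (-(1 * ρ / (4 * n))) := by
    intro ρ hρ
    refine barrier_decay hn hc x hρ one_pos zero_le_one (fun y _ => ?_) (fun y _ hy => ?_)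
    · rcases le_or_gt (v (y + s • τ)) (v y) with hle | hlt
      · linarith
      · have := (D.mu _ (H y hlt).2).1
        linarith [h.pv y]
    · obtain ⟨h1, h2⟩ := H y (by linarith)
      rw [lap_sub (contDiff_shift h.c2v _) h.c2v, lap_shift h.c2v, h.ev, h.ev]
      have hu := h.pu y
      have hv := h.pv y
      have e1 : u y ^ 2 ≤ u (y + s • τ) ^ 2 := pow_le_pow_left₀ hu.le h1 2
      have e2 : 1 ≤ u (y + s • τ) ^ 2 := one_le_pow₀ (hK.trans h2)
      have e3 := mul_le_mul_of_nonneg_left e1 hv.le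
      have e4 := mul_le_mul_of_nonneg_right e2 hy.le
      nlinarith
  have hn0 : (0:ℝ) < n := by exact_mod_cast hn
  have hlim : Tendsto (fun ρ : ℝ => 3 * 1 * Real.exp (-(1 * ρ / (4 * n)))) atTop (𝓝 (3 * 1 * 0)) := by
    refine Tendsto.const_mul _ (Real.tendsto_exp_neg_atTop_nhds_zero.comp ?_)
    refine Tendsto.atTop_div_const (by positivity) ?_
    exact tendsto_id.const_mul_atTop one_pos
  have := ge_of_tendsto hlim ((eventually_gt_atTop 0).mono hb)
  linarith

/-- Large translations are ordered. -/
lemma Dir.start {a τ : Euc n} {K : ℝ} (D : Dir a τ K u v) (hn : 1 ≤ n) : ∃ s₁ : ℝ, 0 < s₁ ∧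
    ∀ s, s₁ ≤ s → ∀ x, v (x + s • τ) ≤ v x := by
  have hK := D.one_le
  obtain ⟨L, hL, HL⟩ := D.env.far (1 / (K + 1)) (by positivity)
  obtain ⟨s₁, hs₁, Hs⟩ := D.env.dir τ D.pos L (1 / (K + 1)) (by positivity)
  refine ⟨s₁, hs₁, fun s hs => D.barrier hn fun x hx => ?_⟩
  have hs0 : 0 ≤ s := by linarith
  have hmono : K ≤ u (x + s • τ) → u x ≤ u (x + s • τ) ∧ K ≤ u (x + s • τ) := fun hk => by
    refine ⟨?_, hk⟩
    rcases le_total K (u x) with h | h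
    · exact (D.mu x h).2 s hs0
    · exact h.trans hk
  by_cases hfar : ∀ y, u y = v y → L < ‖x - y‖
  · rcases HL x hfar with P | P
    · have := P.big
      rw [one_div_one_div] at this
      exact hmono (by linarith [(D.mu x (by linarith)).2 s hs0])
    · exfalso
      have := P.big
      rw [one_div_one_div] at this
      have := (D.mv (x + s • τ) (by linarith)).2 s hs0
      rw [smul_neg, add_neg_cancel_right] at this
      linarith
  · push Not at hfar
    obtain ⟨y, hy, hxy⟩ := hfar
    have := (Hs x y hy hxy s hs).1.big
    rw [one_div_one_div] at this
    exact hmono (by linarith)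

/-- The maximum principle reduces the ordering to the region where `u` and the translate of `v`
are both at most `K`. -/
lemma Dir.slide {a τ : Euc n} {K : ℝ} (D : Dir a τ K u v) (hn : 1 ≤ n) {s : ℝ} (hs : 0 ≤ s)
    (H : ∀ x, u x ≤ K → v (x + s • τ) ≤ K → v (x + s • τ) ≤ v x) (x : Euc n) :
    v (x + s • τ) ≤ v x := by
  refine D.barrier hn (fun x hx => ?_) x
  rcases le_or_gt K (v (x + s • τ)) with h1 | h1
  · have := (D.mv _ h1).2 s hs
    rw [smul_neg, add_neg_cancel_right] at this
    linarith
  rcases le_or_gt K (u x) with h2 | h2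
  · have := (D.mu x h2).2 s hs
    exact ⟨this, h2.trans this⟩
  · linarith [H x h2.le h1.le]

/-- Where neither `u` nor the translate of `v` is large, the translated solution is uniformly
separated from the original one. -/
lemma Dir.gap {a τ : Euc n} {K : ℝ} (D : Dir a τ K u v) {s : ℝ} (hs : 0 < s)
    (G : ∀ x, v (x + s • τ) ≤ v x) (G' : ∀ x, u x ≤ u (x + s • τ)) :
    ∃ c₀ : ℝ, 0 < c₀ ∧ ∀ x, u x ≤ K + 1 → v (x + s • τ) ≤ K + 1 → c₀ ≤ v x - v (x + s • τ) := by
  have h := D.env.sol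
  have hK := D.one_le
  obtain ⟨L, hL, HL⟩ := D.env.far (1 / (K + 2)) (by positivity)
  obtain ⟨L', hL'⟩ : ∃ L', L' = L + s * ‖τ‖ := ⟨_, rfl⟩
  have hst : ‖s • τ‖ = s * ‖τ‖ := by rw [norm_smul, Real.norm_eq_abs, abs_of_pos hs]
  -- the region in question lies within bounded distance of the nodal set
  have hclose : ∀ x, u x ≤ K + 1 → v (x + s • τ) ≤ K + 1 → ∃ y, u y = v y ∧ ‖x - y‖ ≤ L' := by
    intro x hx1 hx2
    by_cases c1 : ∀ y, u y = v y → L < ‖x - y‖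
    · rcases HL x c1 with P | P
      · have := P.big
        rw [one_div_one_div] at this
        linarith
      · by_cases c2 : ∀ y, u y = v y → L < ‖x + s • τ - y‖
        · rcases HL _ c2 with Q | Q
          · obtain ⟨y, hy, t, ht, hyt⟩ := h.zero_between Q.lt.le P.lt.le
            refine ⟨y, hy, ?_⟩
            have e : x - y = (t - 1) • (s • τ) := by rw [hyt]; module
            have : |t - 1| ≤ 1 := abs_le.2 ⟨by linarith [ht.1], by linarith [ht.2]⟩
            rw [e, norm_smul, hst, Real.norm_eq_abs]
            have : 0 ≤ s * ‖τ‖ := by positivity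
            nlinarith
          · have := Q.big
            rw [one_div_one_div] at this
            linarith
        · push Not at c2
          obtain ⟨y, hy, hxy⟩ := c2
          refine ⟨y, hy, ?_⟩
          have e : x - y = (x + s • τ - y) - s • τ := by abel
          rw [e]; refine (norm_sub_le _ _).trans ?_; rw [hst]; linarith
    · push Not at c1
      obtain ⟨y, hy, hxy⟩ := c1
      have : 0 ≤ s * ‖τ‖ := by positivity
      exact ⟨y, hy, by linarith⟩
  obtain ⟨δ, hδ, -, Hδ⟩ := pos_dir (-a) (-τ) D.swap.pos
  obtain ⟨t₁, ht₁, Ht⟩ := D.env.dir τ D.pos (L' + 1) δ hδ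
  obtain ⟨T, hT⟩ : ∃ T, T = t₁ + s := ⟨_, rfl⟩
  have hT0 : 0 < T := by linarith
  have hTn : ‖T • τ‖ = T * ‖τ‖ := by rw [norm_smul, Real.norm_eq_abs, abs_of_pos hT0]
  obtain ⟨R, hR⟩ : ∃ R, R = 2 * (T * ‖τ‖ + 1) := ⟨_, rfl⟩
  have hTτ : 0 ≤ T * ‖τ‖ := by positivity
  have hR0 : 0 < R := by linarith
  obtain ⟨B, hB⟩ := D.env.near (R + T * ‖τ‖ + L')
  have hc1 : 0 < ⟪-a, -τ⟫ / 2 := by have := D.swap.pos; positivity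
  have hA : 0 < (n:ℝ) + B ^ 2 + 1 := by positivity
  refine ⟨⟪-a, -τ⟫ / 2 * s * (Real.exp (-(((n:ℝ) + B ^ 2 + 1) * R ^ 2 / 4))
    - Real.exp (-(((n:ℝ) + B ^ 2 + 1) * R ^ 2))), ?_, fun x hx1 hx2 => ?_⟩
  · refine mul_pos (by positivity) (sub_pos.2 (Real.exp_lt_exp.2 ?_))
    have : 0 < ((n:ℝ) + B ^ 2 + 1) * R ^ 2 := by positivity
    linarith
  obtain ⟨y, hy, hxy⟩ := hclose x hx1 hx2
  have hc : ContDiff ℝ 2 (fun y => v y - v (y + s • τ)) :=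
    h.c2v.sub (contDiff_shift h.c2v (s • τ))
  refine weak_harnack hc (x - T • τ) (ρ := 1) (C := B ^ 2) one_pos (by positivity)
    (mul_pos hc1 hs) hA ?_ hR0 (fun w _ => by linarith [G w]) (fun w hw => ?_) (fun w hw => ?_)
    x ?_
  · have : (0:ℝ) ≤ n := by positivity
    nlinarith [sq_nonneg B, mul_nonneg this (sq_nonneg B)]
  · rw [lap_sub h.c2v (contDiff_shift h.c2v _), lap_shift h.c2v, h.ev, h.ev]
    have hwB := (hB w y hy (by
      have e : w - y = (w - (x - T • τ)) - T • τ + (x - y) := by abel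
      rw [e]
      refine (norm_add_le _ _).trans ?_
      have := norm_sub_le (w - (x - T • τ)) (T • τ)
      rw [hTn] at this
      linarith)).1
    have hu := h.pu w
    have hv := h.pv (w + s • τ)
    have e1 : u w ^ 2 ≤ u (w + s • τ) ^ 2 := pow_le_pow_left₀ hu.le (G' w) 2
    have e2 : u w ^ 2 ≤ B ^ 2 := pow_le_pow_left₀ hu.le hwB 2
    have e3 := mul_le_mul_of_nonneg_left e1 hv.le
    have e4 := mul_le_mul_of_nonneg_right e2 (sub_nonneg.2 (G w))
    nlinarith
  · have hp : w + s • τ + s • (-τ) = w := by rw [smul_neg, add_neg_cancel_right]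
    have := line_mono (h.c2v.differentiable (by norm_num)) (w + s • τ) (-τ)
      (c := ⟪-a, -τ⟫ / 2) hs.le (fun t h0 h1 => by
        have P := (Ht (w + T • τ) y hy (by
          have e : w + T • τ - y = (w - (x - T • τ)) + (x - y) := by abel
          rw [e]; refine (norm_add_le _ _).trans ?_; linarith) (t₁ + t) (by linarith)).2
        have e : w + s • τ + t • (-τ) = w + T • τ - (t₁ + t) • τ := by rw [hT]; module
        rw [e]
        exact Hδ _ _ _ P)
    rw [hp] at this
    linarith
  · rw [sub_sub_cancel, hTn, hR]; linarith

lemma Env.lip {a : Euc n} (E : Env a u v) (τ : Euc n) : ∃ M : ℝ, 0 ≤ M ∧ ∀ (x : Euc n) (s t : ℝ),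
    |v (x + s • τ) - v (x + t • τ)| ≤ M * |s - t| := by
  obtain ⟨Λ, hΛ⟩ := E.grad
  refine ⟨n * |Λ| * ‖τ‖, by positivity, fun x s t => ?_⟩
  have := lip_of_pd (E.sol.c2v.differentiable (by norm_num)) (x + t • τ) (L := |Λ|)
    (fun y _ i => (hΛ y i).2.trans (le_abs_self _)) (x + s • τ) le_rfl
  have e : x + s • τ - (x + t • τ) = (s - t) • τ := by module
  rw [e, norm_smul, Real.norm_eq_abs] at this
  linarith

/-- An ordered translation length can be decreased a little. -/
lemma Dir.push {a τ : Euc n} {K : ℝ} (D : Dir a τ K u v) (hn : 1 ≤ n) {s : ℝ} (hs : 0 < s)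
    (G : ∀ x, v (x + s • τ) ≤ v x) (G' : ∀ x, u x ≤ u (x + s • τ)) :
    ∃ ε : ℝ, 0 < ε ∧ ∀ t, 0 ≤ t → s - ε ≤ t → t ≤ s → ∀ x, v (x + t • τ) ≤ v x := by
  obtain ⟨c, hc, H⟩ := D.gap hs G G'
  obtain ⟨M, hM, HM⟩ := D.env.lip τ
  obtain ⟨ε, hε⟩ : ∃ ε, ε = min 1 c / (M + 1) := ⟨_, rfl⟩
  have hε0 : 0 < ε := by rw [hε]; positivity
  have hMε : M * ε ≤ min 1 c := by
    have : ε * (M + 1) = min 1 c := by rw [hε]; field_simp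
    nlinarith
  refine ⟨ε, hε0, fun t ht0 ht1 ht2 => D.slide hn ht0 fun x hx1 hx2 => ?_⟩
  have h1 := HM x s t
  have h2 : M * |s - t| ≤ min 1 c := by
    refine le_trans ?_ hMε
    rw [abs_of_nonneg (by linarith)]
    gcongr; linarith
  have h3 := abs_le.1 (h1.trans h2)
  have m1 : min 1 c ≤ 1 := min_le_left _ _
  have m2 : min 1 c ≤ c := min_le_right _ _
  have := H x (by linarith) (by linarith)
  linarith

lemma Dir.push_both {a τ : Euc n} {K : ℝ} (D : Dir a τ K u v) (hn : 1 ≤ n) {s : ℝ} (hs : 0 < s)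
    (G : ∀ x, v (x + s • τ) ≤ v x ∧ u x ≤ u (x + s • τ)) :
    ∃ ε : ℝ, 0 < ε ∧ ∀ t, 0 ≤ t → s - ε ≤ t → t ≤ s →
      ∀ x, v (x + t • τ) ≤ v x ∧ u x ≤ u (x + t • τ) := by
  obtain ⟨ε₁, h1, H1⟩ := D.push hn hs (fun x => (G x).1) (fun x => (G x).2)
  obtain ⟨ε₂, h2, H2⟩ := D.swap.push hn hs
    (fun x => by
      have := (G (x + s • (-τ))).2
      rwa [smul_neg, neg_add_cancel_right, ← smul_neg] at this)
    (fun x => by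
      have := (G (x + s • (-τ))).1
      rwa [smul_neg, neg_add_cancel_right, ← smul_neg] at this)
  refine ⟨min ε₁ ε₂, lt_min h1 h2, fun t ht0 ht1 ht2 x => ⟨H1 t ht0 ?_ ht2 x, ?_⟩⟩
  · have := min_le_left ε₁ ε₂; linarith
  · have := H2 t ht0 (by have := min_le_right ε₁ ε₂; linarith) ht2 (x + t • τ)
    rwa [smul_neg, add_neg_cancel_right] at this

/-- Monotonicity in every direction `τ` with `⟪a, τ⟫ > 0`. -/
lemma Dir.all {a τ : Euc n} {K : ℝ} (D : Dir a τ K u v) (hn : 1 ≤ n) {s : ℝ} (hs : 0 ≤ s)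
    (x : Euc n) : v (x + s • τ) ≤ v x ∧ u x ≤ u (x + s • τ) := by
  have h := D.env.sol
  obtain ⟨s₁, hs₁, H1⟩ := D.start hn
  obtain ⟨s₂, hs₂, H2⟩ := D.swap.start hn
  let S : Set ℝ := {s | 0 ≤ s ∧ ∀ t, s ≤ t → ∀ x, v (x + t • τ) ≤ v x ∧ u x ≤ u (x + t • τ)}
  have hne : max s₁ s₂ ∈ S := ⟨le_max_of_le_left hs₁.le, fun t ht x =>
    ⟨H1 t ((le_max_left _ _).trans ht) x, by
      have := H2 t ((le_max_right _ _).trans ht) (x + t • τ)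
      rwa [smul_neg, add_neg_cancel_right] at this⟩⟩
  have hbdd : BddBelow S := ⟨0, fun s hs => hs.1⟩
  obtain ⟨m, hm⟩ : ∃ m, m = sInf S := ⟨_, rfl⟩
  have hm0 : 0 ≤ m := by rw [hm]; exact le_csInf ⟨_, hne⟩ fun s hs => hs.1
  have hgt : ∀ t, m < t → ∀ x, v (x + t • τ) ≤ v x ∧ u x ≤ u (x + t • τ) := fun t ht x => by
    rw [hm] at ht
    obtain ⟨s, hs, hst⟩ := exists_lt_of_csInf_lt ⟨_, hne⟩ ht
    exact hs.2 t hst.le x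
  have hcv : ∀ x, Continuous fun t : ℝ => v (x + t • τ) := fun x =>
    h.pgv.continuous.comp (by fun_prop)
  have hcu : ∀ x, Continuous fun t : ℝ => u (x + t • τ) := fun x =>
    h.pgu.continuous.comp (by fun_prop)
  have hGm : ∀ x, v (x + m • τ) ≤ v x ∧ u x ≤ u (x + m • τ) := fun x =>
    ⟨le_of_tendsto ((hcv x).continuousWithinAt (s := Ioi m) (x := m))
      (eventually_mem_nhdsWithin.mono fun t ht => (hgt t ht x).1),
     ge_of_tendsto ((hcu x).continuousWithinAt (s := Ioi m) (x := m))
      (eventually_mem_nhdsWithin.mono fun t ht => (hgt t ht x).2)⟩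
  have hge : ∀ t, m ≤ t → ∀ x, v (x + t • τ) ≤ v x ∧ u x ≤ u (x + t • τ) := fun t ht => by
    rcases ht.eq_or_lt with rfl | ht
    · exact hGm
    · exact hgt t ht
  have hm_zero : m = 0 := by
    by_contra hne0
    have hmpos : 0 < m := lt_of_le_of_ne hm0 (Ne.symm hne0)
    obtain ⟨ε, hε, H⟩ := D.push_both hn hmpos hGm
    have hmem : m - min ε m ∈ S := by
      have h1 := min_le_left ε m
      have h2 := min_le_right ε m
      refine ⟨by linarith, fun t ht => ?_⟩
      rcases le_total t m with h3 | h3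
      · exact H t (by linarith) (by linarith) h3
      · exact hge t h3
    have := csInf_le hbdd hmem
    rw [← hm] at this
    have : 0 < min ε m := lt_min hε hmpos
    linarith
  exact hge s (by rw [hm_zero]; exact hs) x

lemma Sol.symmetric (h : Sol u v) (hn : 1 ≤ n) :
    ∃ (e : Euc n) (f g : ℝ → ℝ), ‖e‖ = 1 ∧ (∀ x, u x = f ⟪e, x⟫) ∧ (∀ x, v x = g ⟪e, x⟫) := by
  obtain ⟨a, ha, E⟩ := h.env hn
  have hα : 0 < ‖a‖ := norm_pos_iff.2 ha
  have h1 : ∀ τ : Euc n, 0 < ⟪a, τ⟫ → ∀ x, v (x + τ) ≤ v x ∧ u x ≤ u (x + τ) := fun τ hτ x => by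
    obtain ⟨K, D⟩ := E.exists_dir hτ
    have := D.all hn zero_le_one x
    rwa [one_smul] at this
  -- directions orthogonal to `a` are limits of directions `τ + ε a`
  have h2 : ∀ τ : Euc n, ⟪a, τ⟫ = 0 → ∀ x, v (x + τ) ≤ v x ∧ u x ≤ u (x + τ) := fun τ hτ x => by
    have hc : Continuous fun t : ℝ => x + (τ + t • a) := by fun_prop
    have hcv := (h.pgv.continuous.comp hc).continuousWithinAt (s := Ioi 0) (x := 0)
    have hcu := (h.pgu.continuous.comp hc).continuousWithinAt (s := Ioi 0) (x := 0)
    have hpos : ∀ t : ℝ, 0 < t → 0 < ⟪a, τ + t • a⟫ := fun t ht => by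
      rw [inner_add_right, hτ, real_inner_smul_right, real_inner_self_eq_norm_sq]; positivity
    have r1 := le_of_tendsto hcv
      (eventually_mem_nhdsWithin.mono fun t ht => (h1 _ (hpos t ht) x).1)
    have r2 := ge_of_tendsto hcu
      (eventually_mem_nhdsWithin.mono fun t ht => (h1 _ (hpos t ht) x).2)
    simp only [Function.comp_apply, zero_smul, add_zero] at r1 r2
    exact ⟨r1, r2⟩
  have h3 : ∀ τ : Euc n, ⟪a, τ⟫ = 0 → ∀ x, v (x + τ) = v x ∧ u (x + τ) = u x := fun τ hτ x => by
    have r1 := h2 τ hτ x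
    have r2 := h2 (-τ) (by rw [inner_neg_right, hτ, neg_zero]) (x + τ)
    rw [add_neg_cancel_right] at r2
    exact ⟨le_antisymm r1.1 r2.1, le_antisymm r2.2 r1.2⟩
  obtain ⟨e, he⟩ : ∃ e : Euc n, e = ‖a‖⁻¹ • a := ⟨_, rfl⟩
  have hen : ‖e‖ = 1 := by
    rw [he, norm_smul, norm_inv, norm_norm, inv_mul_cancel₀ hα.ne']
  have hae : a = ‖a‖ • e := by rw [he, smul_smul, mul_inv_cancel₀ hα.ne', one_smul]
  have hort : ∀ x : Euc n, ⟪a, ⟪e, x⟫ • e - x⟫ = 0 := fun x => by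
    rw [hae, real_inner_smul_left, inner_sub_right, real_inner_smul_right,
      real_inner_self_eq_norm_sq, hen]; ring
  refine ⟨e, fun s => u (s • e), fun s => v (s • e), hen, fun x => ?_, fun x => ?_⟩
  · have := (h3 _ (hort x) x).2
    rw [add_sub_cancel] at this; exact this.symm
  · have := (h3 _ (hort x) x).1
    rw [add_sub_cancel] at this; exact this.symm

end Slide

end PhaseSep

theorem one_dimensional_symmetry (n : ℕ) (hn : 2 ≤ n)
    (u v : Euc n → ℝ)
    (hu : ContDiff ℝ (⊤ : ℕ∞) u) (hv : ContDiff ℝ (⊤ : ℕ∞) v)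
    (hupos : ∀ x, 0 < u x) (hvpos : ∀ x, 0 < v x)
    (hequ : ∀ x, lap u x = u x * v x ^ 2)
    (heqv : ∀ x, lap v x = v x * u x ^ 2)
    (C₀ : ℝ) (hC₀ : 0 < C₀)
    (hgrowth : ∀ x, u x + v x ≤ C₀ * (1 + ‖x‖)) :
    ∃ (e : Euc n) (f g : ℝ → ℝ), ‖e‖ = 1 ∧
      (∀ x, u x = f ⟪e, x⟫) ∧ (∀ x, v x = g ⟪e, x⟫) := by
  exact PhaseSep.Sol.symmetric ⟨hu, hv, hupos, hvpos, hequ, heqv, C₀, hgrowth⟩ (by omega)
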